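/- Let d ≥ 2 and m ≥ 2 be integers and let 0 < δ₀ < 1/(4m). There exists δ = δ(m, δ₀) > 0 with the following property: for every f ∈ C_c^∞(ℝ^{m−1}) and every ε > 0 there exists Q₀ such that for every integer q ≥ Q₀ whose squarefree part satisfies q̃ ≥ q^{1−δ}, every integer b coprime to q, and every integer N with q^{1−1/(2m)+δ₀} ≤ N ≤ q^{1−δ₀}, one has |R^{(m)}(N, d, b/q, f) − ∫_{ℝ^{m−1}} f(x) dx| ≤ ε. -/

import Mathlib

/-!
Write `m = k + 1`. Unfolding the periodization (`corrPow_eq`) turns the correlation sum into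
`1/N` times a sum over integer vectors `s` with entries `O(q / N)` of the number of solutions
`n ∈ [1, N] ^ m` of `b (n_i ^ d - n_j ^ d) ≡ s_i - s_j` modulo `q`, weighted by `f` at the
differences of `s` scaled by `N / q`. One splits `q = q₁ q₂` with `q₁` squarefree, `q₂` coprime to
`q₁` and smaller than a small power of `q`, so that trivial estimates suffice at `q₂`.

* *Boxes.* For distinct `s_i`, Fourier expansion compares the count in the box with its expected
  value, through complete exponential sums. These factor over the primes of `q₁`, and each factor
  is `O(√p)` up to gcds that are bounded on average over `s` (`full_SS`, `cnt_bound`). The error is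
  acceptable because `N` exceeds `q ^ (1 - 1 / (2 m))` by a power of `q`.
* *Weil bound.* Modulo `p` the sum runs over the curve `n_j ^ d = x ^ d + a_j`. Its coordinate ring
  is an iterated Kummer extension of `F[x]`, shown directly to be a Dedekind domain, with an
  explicit filtration by pole order at infinity. Dimension counts in this filtration make the
  `L`-function of an additive character a polynomial of bounded degree (`A_eq_zero`) and that of
  the trivial character a rational function (`A_add`). Newton's identities then upgrade any bound
  `O(p ^ (n / 2))` for the sums over the fields of `p ^ n` elements to a bound uniform in `p`
  (`weil_char`, `weil_count`). Such a bound comes from Stepanov's method (`stepanov'`) for the curve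
  and its Artin–Schreier covers, with lower bounds obtained by averaging over twists (`le_count`).
* *Main term.* The expected values are products of local densities, each `1` up to a power saving
  in `p` unless two entries of `s` agree modulo `p`. Expanding into deviations over sets of primes,
  small sets are evaluated by periodicity in `s` and large sets are negligible (`main_term`), which
  leaves `∫ f`.
* *Degenerate tuples.* When two entries of `s` coincide, two of the `n_i` are distinct with
  congruent `d`-th powers. Such pairs are rare by counting points of the lattices `x ≡ ζ y`, and a
  moment inequality bounds the number of tuples extending them (`degen_le`).
-/

open Filter MeasureTheory
open scoped BigOperators Classical

/-- The `m`-level correlation sum `R^(m)(N, 𝒩, f)` of a sequence `x` (the paper's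
`F_N` is unfolded as a sum over the integer lattice). -/
noncomputable def corrGen (m N : ℕ) (x : ℕ → ℝ) (f : (Fin (m - 1) → ℝ) → ℝ) : ℝ :=
  (1 / (N : ℝ)) *
    ∑ n ∈ (Fintype.piFinset fun _ : Fin m => Finset.Icc 1 N).filter
        (fun n => Function.Injective n),
      ∑' ℓ : Fin (m - 1) → ℤ,
        f (fun i =>
          (N : ℝ) * ((ℓ i : ℝ) +
            (x (n ⟨i.1, by have := i.isLt; omega⟩) -
             x (n ⟨i.1 + 1, by have := i.isLt; omega⟩))))

/-- `f ∈ C_c^∞(ℝ^m)`. -/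
def SmoothCpt (m : ℕ) (f : (Fin m → ℝ) → ℝ) : Prop :=
  ContDiff ℝ (⊤ : ℕ∞) f ∧ HasCompactSupport f

/-- The `m`-level correlation sum `R^(m)(N, d, α, f)` of `n^d α mod 1`. -/
noncomputable def corrPow (m N d : ℕ) (α : ℝ) (f : (Fin (m - 1) → ℝ) → ℝ) : ℝ :=
  corrGen m N (fun n => (n : ℝ) ^ d * α) f

/-- `n^d α mod 1` is Poissonian along the sequence `Nseq`. -/
def PoissonianAlong (d : ℕ) (α : ℝ) (Nseq : ℕ → ℕ) : Prop :=
  ∀ m : ℕ, 2 ≤ m → ∀ f : (Fin (m - 1) → ℝ) → ℝ, SmoothCpt (m - 1) f →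
    Tendsto (fun j => corrPow m (Nseq j) d α f) atTop
      (nhds (∫ y : Fin (m - 1) → ℝ, f y))

/-- `n^d α mod 1` is Poissonian with respect to the sequence of rationals `b j / q j`. -/
def PoissonianWrt (d : ℕ) (α : ℝ) (q : ℕ → ℕ) : Prop :=
  ∃ Nseq : ℕ → ℕ, Tendsto Nseq atTop atTop ∧
    Tendsto (fun j => Real.log (Nseq j) / Real.log (q j)) atTop (nhds 1) ∧
    PoissonianAlong d α Nseq

namespace KW

open Finset hiding card card_fin
open Fintype (card card_fin piFinset mem_piFinset card_piFinset)
open Function (Injective Surjective)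
open Ideal (span mem_span_singleton_self span_singleton_le_iff_mem)
open Ideal.Quotient (mk_surjective eq_zero_iff_mem)
open AdjoinRoot (root)
open Algebra (trace)
open LinearMap (mulLeft)
open Nat (cast_nonneg)
open ZMod (stdAddChar castHom chineseRemainder)

/-! ### Power sums of complex numbers -/

section PowerSums
open Polynomial

/-- A linear combination of geometric progressions that is `O(R ^ k)` only involves ratios of modulus
at most `R`: a recurrence operator that annihilates all the others isolates each of them. -/
lemma norm_le_of_powerSum_bound (s : Finset ℂ) (c : ℂ → ℂ) (hc : ∀ z ∈ s, c z ≠ 0)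
    (R C : ℝ) (hR : 0 < R)
    (h : ∀ k : ℕ, 1 ≤ k → ‖∑ z ∈ s, c z*z^k‖ ≤ C*R^k) : ∀ z ∈ s, ‖z‖ ≤ R := by
  intro z0 hz0
  by_contra! hlt
  set Q : ℂ[X] := ∏ z ∈ s.erase z0, (X-Polynomial.C z) with hQ
  have hQ0 : Q.eval z0 ≠ 0 := by
    rw [hQ, eval_prod, prod_ne_zero_iff]
    intro z hz
    simp only [eval_sub, eval_X, eval_C, ne_eq, sub_eq_zero]
    exact fun e => (mem_erase.1 hz).1 e.symm
  have hQz : ∀ z ∈ s, z ≠ z0 → Q.eval z = 0 := by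
    intro z hz hne
    rw [hQ, eval_prod]
    exact prod_eq_zero (mem_erase.2 ⟨hne, hz⟩) (by simp)
  -- the linear recurrence operator attached to `Q` isolates the term of `z0`
  have key : ∀ k : ℕ, ∑ j ∈ range (Q.natDegree+1), Q.coeff j*∑ z ∈ s, c z*z^(k+j)
      = c z0*Q.eval z0*z0^k := by
    intro k
    have : ∀ z ∈ s, c z*z^k*Q.eval z = if z = z0 then c z0*Q.eval z0*z0^k else 0 := by
      grind
    rw [← sum_ite_eq' s z0 (fun _ => c z0*Q.eval z0*z0^k) |>.trans (if_pos hz0)]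
    rw [← sum_congr rfl this]
    simp_rw [mul_sum]
    rw [sum_comm]
    refine sum_congr rfl fun z _ => ?_
    rw [eval_eq_sum_range, mul_sum]
    grind
  set C' := ∑ j ∈ range (Q.natDegree+1), ‖Q.coeff j‖*(C*R^j) with hC'
  have hb : ∀ k : ℕ, 1 ≤ k → ‖c z0*Q.eval z0‖*‖z0‖^k ≤ C'*R^k := by
    intro k hk
    rw [← norm_pow, ← norm_mul, ← key k, hC', sum_mul]
    refine (norm_sum_le _ _).trans (sum_le_sum fun j _ => ?_)
    rw [norm_mul, mul_assoc]
    refine mul_le_mul_of_nonneg_left ?_ (norm_nonneg _)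
    refine (h (k+j) (by omega)).trans (le_of_eq ?_)
    rw [pow_add]; ring
  have hpos : 0 < ‖c z0*Q.eval z0‖ := norm_pos_iff.2 (mul_ne_zero (hc z0 hz0) hQ0)
  have ht : Tendsto (fun k : ℕ => (‖z0‖/R)^k) atTop atTop :=
    tendsto_pow_atTop_atTop_of_one_lt ((one_lt_div hR).2 hlt)
  obtain ⟨k, hk1, hk2⟩ := ((ht.eventually_gt_atTop (C'/‖c z0*Q.eval z0‖)).and
    (eventually_ge_atTop 1)).exists
  have := hb k hk2
  rw [div_lt_iff₀ hpos, div_pow, div_mul_eq_mul_div, lt_div_iff₀ (pow_pos hR k)] at hk1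
  linarith

/-- If a difference of two multiset power sums is `O(R ^ k)`, then every number that survives
cancellation has modulus at most `R`, so the first difference is at most `R` times the
number of terms. -/
lemma powerSum_diff_bound (H W : Multiset ℂ) (R C : ℝ) (hR : 0 < R)
    (h : ∀ k : ℕ, 1 ≤ k → ‖(H.map (·^k)).sum-(W.map (·^k)).sum‖ ≤ C*R^k) :
    ‖H.sum-W.sum‖ ≤ (H.card+W.card : ℕ)*R := by
  set s := (H+W).toFinset with hs
  set c : ℂ → ℂ := fun z => (H.count z : ℂ)-W.count z with hc
  have e : ∀ f : ℂ → ℂ, (H.map f).sum-(W.map f).sum = ∑ z ∈ s, c z*f z := by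
    intro f
    rw [sum_multiset_map_count, sum_multiset_map_count]
    rw [sum_subset (s₁ := H.toFinset) (s₂ := s),
      sum_subset (s₁ := W.toFinset) (s₂ := s), ← sum_sub_distrib]
    · refine sum_congr rfl fun z _ => ?_
      simp [hc, sub_mul]
    · grind
    · intro z _ hz
      rw [Multiset.mem_toFinset] at hz
      simp [Multiset.count_eq_zero_of_notMem hz]
    · grind
    · intro z _ hz
      rw [Multiset.mem_toFinset] at hz
      simp [Multiset.count_eq_zero_of_notMem hz]
  set s' := s.filter (fun z => c z ≠ 0) with hs'
  have e' : ∀ f : ℂ → ℂ, ∑ z ∈ s, c z*f z = ∑ z ∈ s', c z*f z := by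
    intro f
    rw [hs', sum_filter]
    grind
  have hle := norm_le_of_powerSum_bound s' c (fun z hz => (mem_filter.1 hz).2) R C hR
    (fun k hk => by rw [← e' (·^k), ← e]; exact h k hk)
  have h1 := e id
  rw [Multiset.map_id, Multiset.map_id, e'] at h1
  rw [h1]
  refine (norm_sum_le _ _).trans ?_
  have h2 : ∑ z ∈ s', ‖c z*id z‖ ≤ ∑ z ∈ s', ((H.count z+W.count z : ℕ) : ℝ)*R := by
    refine sum_le_sum fun z hz => ?_
    rw [norm_mul]
    refine mul_le_mul ?_ (hle z hz) (norm_nonneg _) (cast_nonneg _)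
    refine (norm_sub_le _ _).trans ?_
    simp
  refine h2.trans ?_
  rw [← sum_mul]
  refine mul_le_mul_of_nonneg_right ?_ hR.le
  rw [← Nat.cast_sum]
  refine Nat.cast_le.2 ?_
  calc ∑ z ∈ s', (H.count z+W.count z) ≤ ∑ z ∈ s, (H+W).count z := by
        refine (sum_le_sum_of_subset (filter_subset _ _)).trans_eq ?_
        exact sum_congr rfl fun z _ => (Multiset.count_add z H W).symm
    _ = (H+W).card := Multiset.toFinset_sum_count_eq _
    _ = _ := Multiset.card_add _ _

/-- The generating series `∑_{k ≥ 1} p_k T^k` of the power sums of a multiset. -/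
noncomputable def pSeries (W : Multiset ℂ) : PowerSeries ℂ :=
  PowerSeries.mk fun k => if k = 0 then 0 else (W.map (·^k)).sum

lemma X_mul_derivative_prod (W : Multiset ℂ) : PowerSeries.X*PowerSeries.derivative ℂ
      (((W.map fun w => (1-Polynomial.C w*X : ℂ[X])).prod : ℂ[X]) : PowerSeries ℂ)
    = - pSeries W*(((W.map fun w => (1-Polynomial.C w*X : ℂ[X])).prod : ℂ[X]) : PowerSeries ℂ) := by
  induction W using Multiset.induction_on with
  | empty =>
    have : pSeries 0 = 0 := by ext k; simp [pSeries]
    simp [this]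
  | cons w W ih =>
    have h1 : pSeries (w ::ₘ W) = pSeries {w} + pSeries W := by
      ext k; simp only [pSeries, PowerSeries.coeff_mk, map_add]; split_ifs <;> simp
    have h2 : pSeries {w}*((1-Polynomial.C w*X : ℂ[X]) : PowerSeries ℂ)
        = PowerSeries.C w*PowerSeries.X := by
      ext k
      simp only [Polynomial.coe_sub, Polynomial.coe_one, Polynomial.coe_mul, Polynomial.coe_C,
        Polynomial.coe_X, mul_sub, mul_one, map_sub]
      rw [mul_comm (PowerSeries.C w), ← mul_assoc]
      rcases k with _ | k
      · simp [pSeries]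
      · rw [PowerSeries.coeff_mul_C, PowerSeries.coeff_succ_mul_X, PowerSeries.coeff_mul_C,
          PowerSeries.coeff_X]
        rcases k with _ | k
        · simp [pSeries]
        · simp [pSeries]; ring
    have h3 : PowerSeries.derivative ℂ ((1-Polynomial.C w*X : ℂ[X]) : PowerSeries ℂ)
        = - PowerSeries.C w := by
      rw [PowerSeries.derivative_coe]; simp
    rw [Multiset.map_cons, Multiset.prod_cons, Polynomial.coe_mul, Derivation.leibniz, h1]
    simp only [smul_eq_mul]
    rw [mul_add, mul_left_comm PowerSeries.X, ih, h3]
    linear_combination ((1 : PowerSeries ℂ)*(((W.map fun w => (1-Polynomial.C w*X : ℂ[X])).prod : ℂ[X]) :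
        PowerSeries ℂ))*h2

lemma exists_prod_form (P : ℂ[X]) (hP : P.coeff 0 = 1) : ∃ W : Multiset ℂ, W.card ≤ P.natDegree ∧
      P = (W.map fun w => (1-Polynomial.C w*X : ℂ[X])).prod := by
  have hP0 : P ≠ 0 := by rintro rfl; simp at hP
  have hs := (IsAlgClosed.splits P).eq_prod_roots
  refine ⟨P.roots.map (·⁻¹), by simpa using P.card_roots', ?_⟩
  have hr : ∀ r ∈ P.roots, r ≠ 0 := by
    rintro r hr rfl
    rw [mem_roots hP0, IsRoot.def, ← coeff_zero_eq_eval_zero, hP] at hr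
    exact one_ne_zero hr
  have h1 : ∀ W : Multiset ℂ, (∀ r ∈ W, r ≠ 0) → (W.map fun r => X-Polynomial.C r).prod =
      Polynomial.C ((W.map fun r => -r).prod) *
        ((W.map (·⁻¹)).map fun w => (1-Polynomial.C w*X : ℂ[X])).prod := by
    intro W
    induction W using Multiset.induction_on with
    | empty => simp
    | cons r W ih =>
      intro h
      have hr0 := h r (Multiset.mem_cons_self _ _)
      simp only [Multiset.map_cons, Multiset.prod_cons, map_mul,
        ih fun r' hr' => h r' (Multiset.mem_cons_of_mem hr')]
      have : (X-Polynomial.C r : ℂ[X]) = Polynomial.C (-r)*(1-Polynomial.C r⁻¹*X) := by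
        rw [mul_sub, ← mul_assoc, ← C_mul]
        simp [hr0]; ring
      rw [this]; ring
  rw [h1 _ hr, ← mul_assoc, ← C_mul] at hs
  have h2 := congrArg (fun p => p.coeff 0) hs
  have h3 : (((P.roots.map (·⁻¹)).map fun w => (1-Polynomial.C w*X : ℂ[X])).prod).coeff 0 = 1 := by
    rw [coeff_zero_eq_eval_zero, eval_multiset_prod]
    simp
  grind

/-- A rational generating series `A = P / Q` turns Newton's recursion
`n A_n = ∑ S_k A_{n-k}` into a formula for `S_k` as a difference of power sums. -/
lemma newton_powerSums (A S : ℕ → ℂ) (P Q : ℂ[X]) (hP : P.coeff 0 = 1) (hQ : Q.coeff 0 = 1)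
    (hAQ : PowerSeries.mk A*(Q : PowerSeries ℂ) = (P : PowerSeries ℂ))
    (hN : ∀ n : ℕ, (n:ℂ)*A n = ∑ k ∈ Icc 1 n, S k*A (n-k)) :
    ∃ H W : Multiset ℂ, H.card ≤ Q.natDegree ∧ W.card ≤ P.natDegree ∧
      ∀ k : ℕ, 1 ≤ k → S k = (H.map (·^k)).sum-(W.map (·^k)).sum := by
  obtain ⟨W, hW, hPW⟩ := exists_prod_form P hP
  obtain ⟨H, hH, hQH⟩ := exists_prod_form Q hQ
  refine ⟨H, W, hH, hW, ?_⟩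
  have dP := X_mul_derivative_prod W
  have dQ := X_mul_derivative_prod H
  rw [← hPW] at dP
  rw [← hQH] at dQ
  set 𝒮 : PowerSeries ℂ := PowerSeries.mk fun k => if k = 0 then 0 else S k with h𝒮
  have dA : PowerSeries.X*PowerSeries.derivative ℂ (PowerSeries.mk A) = 𝒮*PowerSeries.mk A := by
    ext n
    have hl : PowerSeries.coeff n (PowerSeries.X*PowerSeries.derivative ℂ (PowerSeries.mk A))
        = n*A n := by
      rcases n with _ | n
      · simp
      · rw [PowerSeries.coeff_succ_X_mul, PowerSeries.coeff_derivative]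
        simp; ring
    rw [hl, hN, PowerSeries.coeff_mul, Nat.sum_antidiagonal_eq_sum_range_succ_mk]
    simp only [h𝒮, PowerSeries.coeff_mk]
    rw [range_eq_Ico, sum_eq_sum_Ico_succ_bot (by omega)]
    simp only [if_true, zero_mul, zero_add]
    refine sum_congr ?_ ?_
    · ext; simp
    · grind
  have d1 := congrArg (fun f => PowerSeries.X*PowerSeries.derivative ℂ f) hAQ
  simp only [Derivation.leibniz, smul_eq_mul] at d1
  have hP0 : (P : PowerSeries ℂ) ≠ 0 := by
    intro h; have := congrArg (PowerSeries.coeff 0) h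
    rw [Polynomial.coeff_coe, hP] at this; simp at this
  have hQ0 : (Q : PowerSeries ℂ) ≠ 0 := by grind
  have fin : 𝒮 = pSeries H-pSeries W := by
    refine mul_right_cancel₀ hP0 ?_
    linear_combination dP+d1-PowerSeries.mk A*dQ-(Q : PowerSeries ℂ)*dA + (pSeries H-𝒮)*hAQ
  intro k hk
  have := congrArg (PowerSeries.coeff k) fin
  have hk0 : k ≠ 0 := by omega
  simpa [h𝒮, pSeries, hk0] using this

end PowerSums

/-! ### Adjoining a root to a Dedekind domain -/

section DedekindStep
open Polynomial

/-- `P` vanishes to order at most one at every maximal ideal. -/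
def Reduced' {S : Type} [CommRing S] (P : S) : Prop := ∀ 𝔭 : Ideal S, 𝔭.IsMaximal → P ∈ 𝔭 → P ∉ 𝔭^2

lemma prime_of_monic_irreducible {S : Type} [CommRing S] [IsDomain S] [IsIntegrallyClosed S]
    {f : S[X]} (hm : f.Monic) (hf : Irreducible f) : Prime f := by
  have h1 := (hm.irreducible_iff_irreducible_map_fraction_map (K := FractionRing S)).1 hf
  have h2 := h1.prime
  refine ⟨hm.ne_zero, hf.not_isUnit, fun a b hab => ?_⟩
  have h3 : f.map (algebraMap S (FractionRing S)) ∣ a.map (algebraMap S (FractionRing S)) *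
      b.map (algebraMap S (FractionRing S)) := by
    rw [← Polynomial.map_mul]; exact Polynomial.map_dvd _ hab
  have hi := IsFractionRing.injective S (FractionRing S)
  exact (h2.dvd_or_dvd h3).imp (Polynomial.map_dvd_map _ hi hm).1 (Polynomial.map_dvd_map _ hi hm).1

lemma isDedekind_of_local {S : Type} [CommRing S] [IsDomain S] [IsNoetherianRing S]
    (hmax : ∀ P : Ideal S, P.IsPrime → P ≠ ⊥ → P.IsMaximal)
    (h : ∀ M : Ideal S, M.IsMaximal → ∃ t ∈ M, M ≤ span {t} ⊔ M^2) :
    IsDedekindDomain S := by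
  have : IsDedekindDomainDvr S := by
    refine { is_dvr_at_nonzero_prime := fun P hP hPp => ?_ }
    obtain ⟨t, ht, hM⟩ := h P (hmax P hPp hP)
    set L := Localization.AtPrime P with hL
    have hnf : ¬ IsField L := by
      rw [IsLocalRing.isField_iff_maximalIdeal_eq, ← Localization.AtPrime.map_eq_maximalIdeal]
      intro hbot
      obtain ⟨x, hx, hx0⟩ := Submodule.exists_mem_ne_zero_of_ne_bot hP
      have := Ideal.mem_map_of_mem (algebraMap S L) hx
      rw [hbot, Ideal.mem_bot] at this
      have hinj : Injective (algebraMap S L) :=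
        IsLocalization.injective L P.primeCompl_le_nonZeroDivisors
      exact hx0 (hinj (by rw [this, map_zero]))
    have : IsNoetherianRing L := IsLocalization.isNoetherianRing P.primeCompl L inferInstance
    refine ((IsDiscreteValuationRing.TFAE L hnf).out 4 0).1 ?_
    refine ⟨⟨algebraMap S L t, ?_⟩⟩
    have e := Localization.AtPrime.map_eq_maximalIdeal (I := P)
    refine le_antisymm ?_ ?_
    · refine Submodule.le_of_le_smul_of_le_jacobson_bot (I := IsLocalRing.maximalIdeal L)
        (IsNoetherian.noetherian _) (IsLocalRing.maximalIdeal_le_jacobson _) ?_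
      conv_lhs => rw [← e]
      refine (Ideal.map_mono hM).trans ?_
      rw [Ideal.map_sup, Ideal.map_pow, e, Ideal.map_span, Set.image_singleton, pow_two]
      exact le_rfl
    · rw [Submodule.span_singleton_le_iff_mem, ← e]
      exact Ideal.mem_map_of_mem _ ht
  infer_instance

lemma sq_ne_self_of_dedekind {S : Type} [CommRing S] [IsDedekindDomain S] {M : Ideal S}
    (hM : M.IsMaximal) (hb : M ≠ ⊥) : ¬ M ≤ M^2 := by
  intro h
  have := Ideal.pow_right_strictAnti M hb hM.ne_top (show 1 < 2 by norm_num)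
  simp only [pow_one] at this
  exact absurd h (not_le_of_gt this)

lemma eq_span_sup_sq {S : Type} [CommRing S] [IsDedekindDomain S] {M : Ideal S}
    (hM : M.IsMaximal) (hb : M ≠ ⊥) {t : S} (ht : t ∈ M) (ht2 : t ∉ M^2) :
    span {t} ⊔ M^2 = M := by
  have h1 : M^(1+1) < span {t} ⊔ M^2 := by
    refine lt_of_le_of_ne le_sup_right fun e => ht2 ?_
    have : t ∈ span {t} ⊔ M^2 := Ideal.mem_sup_left (mem_span_singleton_self t)
    rw [← e] at this; exact this
  have h2 : span {t} ⊔ M^2 ≤ M^1 := by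
    rw [pow_one]
    exact sup_le ((span_singleton_le_iff_mem _).2 ht) (Ideal.pow_le_self two_ne_zero)
  have := hM.isPrime
  have := Ideal.eq_prime_pow_of_succ_lt_of_le hb h1 h2
  rwa [pow_one] at this

/-- The polynomial `X ^ d - P`. -/
noncomputable abbrev kum {S : Type} [CommRing S] (d:ℕ) (P : S) : S[X] := X^d-C P

lemma kum_monic {S : Type} [CommRing S] {d : ℕ} {P : S} (hd0 : d ≠ 0) : (kum d P).Monic :=
  monic_X_pow_sub_C P hd0

variable {S : Type} [CommRing S] [IsDedekindDomain S] {d : ℕ} {P : S}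

lemma kum_prime (hd0 : d ≠ 0) (hPu : ¬ IsUnit P) (hsq : Reduced' P) : Prime (kum d P) := by
  obtain ⟨𝔭, h𝔭, hP⟩ := exists_max_ideal_of_mem_nonunits hPu
  refine prime_of_monic_irreducible (kum_monic hd0) ?_
  have hdeg : (kum d P).degree = d := degree_X_pow_sub_C (pos_of_ne_zero hd0) P
  refine irreducible_of_eisenstein_criterion h𝔭.isPrime ?_ ?_ ?_ ?_ (kum_monic hd0).isPrimitive
  · rw [(kum_monic hd0).leadingCoeff]; exact fun h => h𝔭.ne_top ((Ideal.eq_top_iff_one _).2 h)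
  · intro n hn
    rw [hdeg, Nat.cast_lt] at hn
    rw [coeff_sub, coeff_X_pow, if_neg hn.ne, coeff_C, zero_sub, neg_mem_iff]
    split_ifs
    · exact hP
    · exact zero_mem _
  · rw [hdeg]; exact_mod_cast pos_of_ne_zero hd0
  · rw [coeff_sub, coeff_X_pow, if_neg hd0.symm, coeff_C_zero, zero_sub, neg_mem_iff]
    exact hsq 𝔭 h𝔭 hP

/-- Away from the zeros of `P` the extension `S[X]/(X ^ d - P)` is unramified. -/
lemma unram (hd0 : d ≠ 0) (hd : IsUnit (d : S)) (M : Ideal (AdjoinRoot (kum d P)))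
    (hM : M.IsMaximal) (hP : P ∉ M.comap (algebraMap S _)) :
    M ≤ (M.comap (algebraMap S _)).map (algebraMap S _) ⊔ M^2 := by
  have hmon := kum_monic (P := P) hd0
  have := hmon.finite_adjoinRoot
  set 𝔭 := M.comap (algebraMap S (AdjoinRoot (kum d P))) with h𝔭
  have h𝔭m : 𝔭.IsMaximal := Ideal.isMaximal_comap_of_isIntegral_of_isMaximal M
  let : Field (S ⧸ 𝔭) := Ideal.Quotient.field 𝔭
  set π := Ideal.Quotient.mk 𝔭 with hπ
  have hsep : (X^d-C (π P) : (S ⧸ 𝔭)[X]).Separable := by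
    refine separable_X_pow_sub_C _ ?_ ?_
    · have := (hd.map π).ne_zero; simpa using this
    · intro h; exact hP (eq_zero_iff_mem.1 h)
  let : Field (AdjoinRoot (kum d P) ⧸ M) := Ideal.Quotient.field M
  -- the residue field of `M` is generated by the image `ν` of the root
  let j : (S ⧸ 𝔭) →+* (AdjoinRoot (kum d P) ⧸ M) :=
    Ideal.quotientMap M (algebraMap S (AdjoinRoot (kum d P))) le_rfl
  set ν := Ideal.Quotient.mk M (root (kum d P)) with hν
  have hev : ∀ F : S[X], Ideal.Quotient.mk M (AdjoinRoot.mk _ F) = (F.map π).eval₂ j ν := by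
    intro F
    rw [eval₂_map]
    have : (Ideal.Quotient.mk M).comp (AdjoinRoot.mk (kum d P)) = eval₂RingHom (j.comp π) ν := by
      refine Polynomial.ringHom_ext ?_ ?_
      · intro a
        simp only [RingHom.comp_apply, coe_eval₂RingHom, eval₂_C]
        rfl
      · simp [hν]
    exact congrArg (fun f => f F) this
  let : Algebra (S ⧸ 𝔭) (AdjoinRoot (kum d P) ⧸ M) := j.toAlgebra
  have hroot : aeval ν (X^d-C (π P) : (S ⧸ 𝔭)[X]) = 0 := by
    have := hev (kum d P)
    rw [AdjoinRoot.mk_self, map_zero] at this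
    rw [aeval_def]
    rw [RingHom.algebraMap_toAlgebra]
    simpa using this.symm
  obtain ⟨g, hg⟩ := minpoly.dvd (S ⧸ 𝔭) ν hroot
  set h := minpoly (S ⧸ 𝔭) ν with hh
  have hcop : IsCoprime h g := by rw [hg] at hsep; exact hsep.isCoprime
  obtain ⟨a, b, hab⟩ := hcop
  obtain ⟨h', hh'⟩ := Polynomial.map_surjective π mk_surjective h
  obtain ⟨a', ha'⟩ := Polynomial.map_surjective π mk_surjective a
  have hmk : ∀ F : S[X], F.map π = 0 → AdjoinRoot.mk (kum d P) F ∈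
      𝔭.map (algebraMap S (AdjoinRoot (kum d P))) := by
    intro F hF
    have h1 : F ∈ 𝔭.map (C : S →+* S[X]) := by
      rw [Ideal.mem_map_C_iff]
      intro n
      have := congrArg (fun q => q.coeff n) hF
      simp only [coeff_map, coeff_zero] at this
      exact eq_zero_iff_mem.1 this
    have h2 := Ideal.mem_map_of_mem (AdjoinRoot.mk (kum d P)) h1
    rwa [Ideal.map_map] at h2
  have hh'M : AdjoinRoot.mk (kum d P) h' ∈ M := by
    rw [← eq_zero_iff_mem, hev, hh']
    exact minpoly.aeval (S ⧸ 𝔭) ν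
  have hh2 : AdjoinRoot.mk (kum d P) h' ∈ 𝔭.map (algebraMap S (AdjoinRoot (kum d P))) ⊔ M^2 := by
    obtain ⟨b', hb'⟩ := Polynomial.map_surjective π mk_surjective b
    obtain ⟨g', hg'⟩ := Polynomial.map_surjective π mk_surjective g
    have e1 : AdjoinRoot.mk (kum d P) (h'-a'*h'^2) ∈
        𝔭.map (algebraMap S (AdjoinRoot (kum d P))) := by
      have e2 : AdjoinRoot.mk (kum d P) (h'-a'*h'^2) =
          AdjoinRoot.mk (kum d P) (h'-a'*h'^2-b'*(kum d P)) := by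
        simp
      rw [e2]
      apply hmk
      have e3 : (kum d P).map π = h*g := by rw [← hg]; simp
      rw [Polynomial.map_sub, Polynomial.map_mul _ (p := b'), e3]
      simp only [Polynomial.map_sub, Polynomial.map_mul, Polynomial.map_pow, hh', ha', hb']
      linear_combination (-h)*hab
    rw [map_sub] at e1
    have e4 : AdjoinRoot.mk (kum d P) (a'*h'^2) ∈ M^2 := by
      rw [map_mul, map_pow]
      exact Ideal.mul_mem_left _ _ (Ideal.pow_mem_pow hh'M 2)
    have := Ideal.add_mem _ (Ideal.mem_sup_left (T := M^2) e1)
      (Ideal.mem_sup_right (S := 𝔭.map (algebraMap S (AdjoinRoot (kum d P)))) e4)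
    simpa using this
  intro f hf
  obtain ⟨F, rfl⟩ := AdjoinRoot.mk_surjective f
  have h1 : h ∣ F.map π := by
    apply minpoly.dvd
    rw [← eq_zero_iff_mem, hev] at hf
    exact hf
  obtain ⟨c, hc⟩ := h1
  obtain ⟨c', hc'⟩ := Polynomial.map_surjective π mk_surjective c
  have e5 := hmk (F-h'*c') (by rw [Polynomial.map_sub, Polynomial.map_mul, hh', hc', hc, sub_self])
  have := Ideal.add_mem _ (Ideal.mem_sup_left (T := M^2) e5)
    (Ideal.mul_mem_right (AdjoinRoot.mk (kum d P) c') _ hh2)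
  simpa using this

/-- Over the zeros of `P` the extension is totally ramified with uniformizer the root. -/
lemma ram (hd0 : d ≠ 0) (hP0 : P ≠ 0) (hsq : Reduced' P) (M : Ideal (AdjoinRoot (kum d P)))
    (hM : M.IsMaximal) (hP : P ∈ M.comap (algebraMap S _)) :
    root (kum d P) ∈ M ∧ M ≤ span {root (kum d P)} ⊔ M^2 := by
  have hmon := kum_monic (P := P) hd0
  have := hmon.finite_adjoinRoot
  set 𝔭 := M.comap (algebraMap S (AdjoinRoot (kum d P))) with h𝔭
  have h𝔭m : 𝔭.IsMaximal := Ideal.isMaximal_comap_of_isIntegral_of_isMaximal M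
  have hn : root (kum d P)^d = algebraMap S _ P := by
    have := AdjoinRoot.mk_self (f := kum d P)
    rw [map_sub, map_pow, AdjoinRoot.mk_X, sub_eq_zero] at this
    exact this
  have hroot : root (kum d P) ∈ M := by
    refine hM.isPrime.mem_of_pow_mem d ?_
    rw [hn]; exact hP
  refine ⟨hroot, ?_⟩
  have hb : 𝔭 ≠ ⊥ := fun h => hP0 (by rw [h] at hP; exact hP)
  have h𝔭e := eq_span_sup_sq h𝔭m hb hP (hsq 𝔭 h𝔭m hP)
  have h𝔭M : 𝔭.map (algebraMap S (AdjoinRoot (kum d P))) ≤ span {root (kum d P)} ⊔ M^2 := by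
    rw [← h𝔭e, Ideal.map_sup]
    refine sup_le_sup ?_ ?_
    · rw [Ideal.map_span, Set.image_singleton, span_singleton_le_iff_mem, ← hn]
      exact Ideal.pow_mem_of_mem _ (mem_span_singleton_self _) _ (pos_of_ne_zero hd0)
    · rw [Ideal.map_pow]
      exact Ideal.pow_right_mono Ideal.map_comap_le 2
  intro f hf
  obtain ⟨F, rfl⟩ := AdjoinRoot.mk_surjective f
  have hF : F = C (F.coeff 0)+X*F.divX := by rw [add_comm]; exact (X_mul_divX_add F).symm
  have e1 : AdjoinRoot.mk (kum d P) F = algebraMap S _ (F.coeff 0) +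
      root (kum d P)*AdjoinRoot.mk _ F.divX := by
    conv_lhs => rw [hF]
    rw [map_add, map_mul, AdjoinRoot.mk_X]; rfl
  rw [e1] at hf ⊢
  have e2 : F.coeff 0 ∈ 𝔭 := by
    rw [h𝔭, Ideal.mem_comap]
    exact (Ideal.add_mem_iff_left _ (Ideal.mul_mem_right _ _ hroot)).1 hf
  refine Ideal.add_mem _ (h𝔭M (Ideal.mem_map_of_mem _ e2)) (Ideal.mem_sup_left ?_)
  exact Ideal.mul_mem_right _ _ (mem_span_singleton_self _)

/-- Adjoining a `d`-th root of a "squarefree" nonunit to a Dedekind domain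
in which `d` is invertible gives a Dedekind domain. -/
theorem dedekind_step (hd0 : d ≠ 0) (hd : IsUnit (d : S)) (hP0 : P ≠ 0) (hPu : ¬ IsUnit P)
    (hsq : Reduced' P) : IsDedekindDomain (AdjoinRoot (kum d P)) := by
  have hmon := kum_monic (P := P) hd0
  have := hmon.finite_adjoinRoot
  have : IsDomain (AdjoinRoot (kum d P)) := AdjoinRoot.isDomain_of_prime (kum_prime hd0 hPu hsq)
  have : IsNoetherianRing (AdjoinRoot (kum d P)) := IsNoetherianRing.of_finite S _
  have hSM : ∀ M : Ideal (AdjoinRoot (kum d P)), M ≠ ⊥ → M.comap (algebraMap S _) ≠ ⊥ := by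
    intro M hb
    obtain ⟨x, hx, hx0⟩ := Submodule.exists_mem_ne_zero_of_ne_bot hb
    exact Ideal.comap_ne_bot_of_integral_mem hx0 hx (Algebra.IsIntegral.isIntegral x)
  refine isDedekind_of_local ?_ ?_
  · intro M hMp hb
    have : (M.comap (algebraMap S (AdjoinRoot (kum d P)))).IsMaximal :=
      Ring.DimensionLEOne.maximalOfPrime (hSM M hb) inferInstance
    exact Ideal.isMaximal_of_isIntegral_of_isMaximal_comap (R := S) M this
  · intro M hM
    by_cases hP : P ∈ M.comap (algebraMap S _)
    · exact ⟨_, ram hd0 hP0 hsq M hM hP⟩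
    · by_cases hb : M = ⊥
      · exact ⟨0, zero_mem _, by rw [hb]; exact bot_le⟩
      have h1 := hSM M hb
      have h𝔭m : (M.comap (algebraMap S (AdjoinRoot (kum d P)))).IsMaximal :=
        Ideal.isMaximal_comap_of_isIntegral_of_isMaximal M
      have h2 := sq_ne_self_of_dedekind h𝔭m h1
      obtain ⟨t, ht, ht2⟩ := SetLike.not_le_iff_exists.1 h2
      refine ⟨algebraMap S _ t, ht, ?_⟩
      refine (unram hd0 hd M hM hP).trans (sup_le ?_ le_sup_right)
      conv_lhs => rw [← eq_span_sup_sq h𝔭m h1 ht ht2]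
      rw [Ideal.map_sup, Ideal.map_pow, Ideal.map_span, Set.image_singleton]
      exact sup_le_sup le_rfl (Ideal.pow_right_mono Ideal.map_comap_le 2)

/-- The remaining radicands stay reduced after one root has been adjoined. -/
theorem reduced_step (hd0 : d ≠ 0) (hd : IsUnit (d : S)) (hP0 : P ≠ 0) (hPu : ¬ IsUnit P)
    (hsq : Reduced' P) {P' : S} (hP'0 : P' ≠ 0) (hcop : IsCoprime P P') (hsq' : Reduced' P') :
    Reduced' (algebraMap S (AdjoinRoot (kum d P)) P') := by
  intro M hM hP'M hP'2
  have := dedekind_step hd0 hd hP0 hPu hsq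
  have hmon := kum_monic (P := P) hd0
  have := hmon.finite_adjoinRoot
  have h𝔭m : (M.comap (algebraMap S (AdjoinRoot (kum d P)))).IsMaximal :=
    Ideal.isMaximal_comap_of_isIntegral_of_isMaximal M
  have hP : P ∉ M.comap (algebraMap S _) := by
    intro hP
    obtain ⟨a, b, hab⟩ := hcop
    refine h𝔭m.ne_top ((Ideal.eq_top_iff_one _).2 ?_)
    rw [← hab]
    exact Ideal.add_mem _ (Ideal.mul_mem_left _ _ hP) (Ideal.mul_mem_left _ _ hP'M)
  have hb : M.comap (algebraMap S (AdjoinRoot (kum d P))) ≠ ⊥ :=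
    fun h => hP'0 (by rw [← Ideal.mem_bot, ← h]; exact hP'M)
  have hMb : M ≠ ⊥ := by
    rintro rfl
    apply hb
    rw [eq_bot_iff]
    intro x hx
    rw [Ideal.mem_comap, Ideal.mem_bot] at hx
    have := hmon.free_adjoinRoot
    exact (FaithfulSMul.algebraMap_injective S (AdjoinRoot (kum d P))) (by rw [hx, map_zero])
  refine sq_ne_self_of_dedekind hM hMb ?_
  refine (unram hd0 hd M hM hP).trans (sup_le ?_ le_rfl)
  rw [← eq_span_sup_sq h𝔭m hb hP'M (hsq' _ h𝔭m hP'M), Ideal.map_sup, Ideal.map_pow,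
    Ideal.map_span, Set.image_singleton]
  exact sup_le ((span_singleton_le_iff_mem _).2 hP'2) (Ideal.pow_right_mono Ideal.map_comap_le 2)

end DedekindStep

/-! ### Iterated Kummer extensions -/

section Kummer
open Polynomial

/-- An iterated Kummer extension `R = B[n₁, …, n_k]` with `n_i ^ d = P_i`, free over `B` on the
monomials `∏ n_i ^ (α i)`, `0 ≤ α i < d`, together with its universal property. -/
structure KummerData (d:ℕ) (B R : Type) [CommRing B] [CommRing R] [Algebra B R] (k:ℕ)
    (P : Fin k → B) where
  n : Fin k → R
  pow_n : ∀ i, n i^d = algebraMap B R (P i)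
  basis : Module.Basis (Fin k → Fin d) B R
  basis_apply : ∀ α, basis α = ∏ i, n i^(α i : ℕ)
  lift : ∀ (T : Type) [CommRing T] (ρ : B →+* T) (v : Fin k → T), (∀ i, v i^d = ρ (P i)) →
    ∃ φ : R →+* T, φ.comp (algebraMap B R) = ρ ∧ ∀ i, φ (n i) = v i

variable {d : ℕ} [NeZero d] {B R : Type} [CommRing B] [CommRing R] [Algebra B R] {k : ℕ}

/-- The trivial Kummer extension. -/
noncomputable def KummerData.zero (P : Fin 0 → B) : KummerData d B B 0 P where
  n := Fin.elim0
  pow_n i := i.elim0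
  basis := Module.Basis.singleton _ _
  basis_apply α := by simp
  lift T _ ρ v _ := ⟨ρ, by ext; simp, fun i => i.elim0⟩

/-- Adjoining one more root. -/
noncomputable def KummerData.step [Nontrivial R] {P : Fin (k+1) → B}
    (D : KummerData d B R k (fun i => P i.castSucc)) :
    KummerData d B (AdjoinRoot (kum d (algebraMap B R (P (Fin.last k))))) (k+1) P where
  n := Fin.snoc (fun i => algebraMap R _ (D.n i)) (root _)
  pow_n := by
    intro i
    refine Fin.lastCases ?_ (fun i => ?_) i
    · have := AdjoinRoot.mk_self (f := kum d (algebraMap B R (P (Fin.last k))))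
      rw [map_sub, map_pow, AdjoinRoot.mk_X, sub_eq_zero] at this
      rw [Fin.snoc_last, this]; rfl
    · rw [Fin.snoc_castSucc, ← map_pow, D.pow_n]; rfl
  basis := (D.basis.smulTower ((AdjoinRoot.powerBasis' (kum_monic (NeZero.ne d))).basis.reindex
    (finCongr (natDegree_X_pow_sub_C (n := d) (r := algebraMap B R (P (Fin.last k))))))).reindex
    ((Equiv.prodComm _ _).trans (Fin.snocEquiv (fun _ => Fin d)))
  basis_apply := by
    intro α
    rw [Module.Basis.reindex_apply, Module.Basis.smulTower_apply, Fin.prod_univ_castSucc]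
    simp only [Fin.snoc_castSucc, Fin.snoc_last, Equiv.symm_trans_apply, Equiv.prodComm_symm,
      Equiv.prodComm_apply, Module.Basis.reindex_apply, PowerBasis.basis_eq_pow, D.basis_apply]
    rw [Algebra.smul_def, map_prod]
    congr 1
    exact prod_congr rfl fun i _ => by rw [map_pow]; rfl
  lift := by
    intro T _ ρ v hv
    obtain ⟨φ, h1, h2⟩ := D.lift T ρ (fun i => v i.castSucc) (fun i => hv _)
    have h1' : ∀ x, φ (algebraMap B R x) = ρ x := fun x => by rw [← h1]; rfl
    refine ⟨AdjoinRoot.lift φ (v (Fin.last k)) ?_, ?_, ?_⟩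
    · simp [h1', hv]
    · ext x
      have e : algebraMap B (AdjoinRoot (kum d (algebraMap B R (P (Fin.last k))))) x
        = AdjoinRoot.of _ (algebraMap B R x) := rfl
      rw [RingHom.comp_apply, e, AdjoinRoot.lift_of, h1']
    · intro i
      refine Fin.lastCases ?_ (fun i => ?_) i
      · rw [Fin.snoc_last, AdjoinRoot.lift_root]
      · rw [Fin.snoc_castSucc, AdjoinRoot.algebraMap_eq, AdjoinRoot.lift_of, h2]

theorem exists_kummer (d:ℕ) [NeZero d] (B : Type) [CommRing B] [Nontrivial B] (k:ℕ)
    (P : Fin k → B) : ∃ (R : Type) (_ : CommRing R) (_ : Algebra B R)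
      (_ : KummerData d B R k P), Nontrivial R := by
  induction k with
  | zero => exact ⟨B, inferInstance, inferInstance, KummerData.zero P, inferInstance⟩
  | succ k ih =>
    obtain ⟨R, i1, i2, D, i3⟩ := ih (fun i => P i.castSucc)
    refine ⟨_, inferInstance, inferInstance, D.step, ?_⟩
    exact (D.step.basis.repr.toEquiv.nontrivial :)

/-- For pairwise coprime separable radicands the iterated Kummer extension is a Dedekind domain. -/
theorem exists_kummer_dedekind {F : Type} [Field F] (d:ℕ) [NeZero d] (hd : (d : F) ≠ 0) (k:ℕ)
    (P : Fin k → F[X]) (hP : ∀ i, (P i).Separable) (hPu : ∀ i, ¬ IsUnit (P i))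
    (hcop : Pairwise fun i j => IsCoprime (P i) (P j)) :
    ∃ (R : Type) (_ : CommRing R) (_ : Algebra F[X] R) (_ : KummerData d F[X] R k P),
      IsDedekindDomain R := by
  suffices H : ∃ (R : Type) (_ : CommRing R) (_ : Algebra F[X] R) (_ : KummerData d F[X] R k P),
      IsDedekindDomain R ∧ ∀ Q : F[X], Q ≠ 0 → (∀ i, IsCoprime (P i) Q) → Reduced' Q →
        Reduced' (algebraMap F[X] R Q) by
    obtain ⟨R, i1, i2, D, h, -⟩ := H
    exact ⟨R, i1, i2, D, h⟩
  induction k with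
  | zero =>
    refine ⟨F[X], inferInstance, inferInstance, KummerData.zero P, inferInstance, ?_⟩
    intro Q _ _ h; simpa using h
  | succ k ih =>
    obtain ⟨R, i1, i2, D, hR, hred⟩ := ih (fun i => P i.castSucc) (fun i => hP _) (fun i => hPu _)
      (fun i j hij => hcop (by simpa using hij))
    have : Module.Free F[X] R := Module.Free.of_basis D.basis
    have : Module.Finite F[X] R := Module.Finite.of_basis D.basis
    have hinj : Injective (algebraMap F[X] R) := FaithfulSMul.algebraMap_injective _ _
    have hd0 : d ≠ 0 := NeZero.ne d
    have hdu : IsUnit (d : R) := by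
      have h1 : IsUnit ((d : F)) := IsUnit.mk0 _ hd
      have := (h1.map (C : F →+* F[X])).map (algebraMap F[X] R)
      simpa using this
    set p := P (Fin.last k) with hp
    have hp0 : p ≠ 0 := (hP _).ne_zero
    have hq0 : algebraMap F[X] R p ≠ 0 := by
      rw [Ne, map_eq_zero_iff _ hinj]; exact hp0
    have sq : ∀ Q : F[X], Q.Separable → Reduced' Q := by
      intro Q hQ 𝔭 h𝔭 h1 h2
      obtain ⟨a, b, hab⟩ := hQ
      refine h𝔭.ne_top ((Ideal.eq_top_iff_one _).2 ?_)
      rw [← hab]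
      refine Ideal.add_mem _ (Ideal.mul_mem_left _ _ h1) (Ideal.mul_mem_left _ _ ?_)
      obtain ⟨g, hg⟩ := (IsPrincipalIdealRing.principal 𝔭).principal
      rw [hg, Ideal.submodule_span_eq, Ideal.span_singleton_pow, Ideal.mem_span_singleton] at h2
      obtain ⟨c, rfl⟩ := h2
      rw [hg, Ideal.submodule_span_eq, Ideal.mem_span_singleton]
      rw [pow_two]
      simp only [derivative_mul]
      exact ⟨2*derivative g*c+g*derivative c, by ring⟩
    have hpr : Reduced' (algebraMap F[X] R p) :=
      hred p hp0 (fun i => hcop (Fin.castSucc_lt_last i).ne) (sq p (hP _))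
    have hpu : ¬ IsUnit (algebraMap F[X] R p) := by
      intro h
      exact hPu _ ((algebraMap_isIntegral_iff.2 inferInstance : (algebraMap F[X] R).IsIntegral).isLocalHom hinj |>.map_nonunit _ h)
    have hD := dedekind_step hd0 hdu hq0 hpu hpr
    refine ⟨_, inferInstance, inferInstance, D.step, hD, ?_⟩
    intro Q hQ0 hQc hQr
    have h1 := hred Q hQ0 (fun i => hQc _) hQr
    exact reduced_step hd0 hdu hq0 hpu hpr (fun h => hQ0 ((map_eq_zero_iff _ hinj).1 h))
      ((hQc (Fin.last k)).map (algebraMap F[X] R)) h1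

end Kummer

/-! ### The filtration by pole order at infinity -/

section Filtration
open Polynomial

/-- The weight `∑ α i` of an exponent vector. -/
def wt {d k : ℕ} (α : Fin k → Fin d) : ℕ := ∑ i, (α i : ℕ)

/-- The coordinates in which adding two reduced exponent vectors overflows. -/
def carry {d k : ℕ} (α β : Fin k → Fin d) : Finset (Fin k) := univ.filter fun i => d ≤ (α i : ℕ)+β i

lemma wt_le {d k : ℕ} (α : Fin k → Fin d) : wt α ≤ (d-1)*k := by
  unfold wt
  refine (sum_le_card_nsmul _ _ (d-1) fun i _ => by have := (α i).2; omega).trans ?_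
  simp [mul_comm]

lemma add_val_carry {d : ℕ} [NeZero d] (x y : Fin d) :
    (x:ℕ)+y = (x+y : Fin d)+if d ≤ (x:ℕ)+y then d else 0 := by
  have hx := x.2
  have hy := y.2
  rw [Fin.val_add]
  split_ifs with h
  · rw [Nat.mod_eq_sub_mod h, Nat.mod_eq_of_lt (by omega)]; omega
  · rw [Nat.mod_eq_of_lt (by omega)]; omega

lemma wt_add {d k : ℕ} [NeZero d] (α β : Fin k → Fin d) :
    wt α+wt β = wt (α+β)+(carry α β).card*d := by
  unfold wt carry
  rw [← sum_add_distrib, card_eq_sum_ones, sum_filter, sum_mul, ← sum_add_distrib]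
  refine sum_congr rfl fun i _ => ?_
  have := add_val_carry (α i) (β i)
  rw [Pi.add_apply]
  grind

variable {d : ℕ} [NeZero d] {k : ℕ}

lemma KummerData.basis_mul {B R : Type} [CommRing B] [CommRing R] [Algebra B R] {P : Fin k → B}
    (D : KummerData d B R k P) (α β : Fin k → Fin d) :
    D.basis α*D.basis β = (∏ i ∈ carry α β, P i) • D.basis (α+β) := by
  simp only [D.basis_apply, carry]
  rw [Algebra.smul_def, map_prod, prod_filter, ← prod_mul_distrib, ← prod_mul_distrib]
  refine prod_congr rfl fun i _ => ?_
  have := add_val_carry (α i) (β i)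
  rw [← pow_add, Pi.add_apply]
  by_cases h : d ≤ (α i : ℕ)+β i
  · rw [if_pos h] at this ⊢; rw [this, pow_add, D.pow_n]; ring
  · grind

/-- The affine curve `n_i ^ d = κ_i x ^ d + a_i` with coordinate ring `R` over `F[x]`, together
with the algebra `E = F[y]/(y_i ^ d - κ_i)` of functions on its points at infinity. -/
structure Curve (d k : ℕ) [NeZero d] (F R E : Type) [Field F] [CommRing R] [Algebra F[X] R]
    [Algebra F R] [IsScalarTower F F[X] R] [CommRing E] [Algebra F E] where
  κ : Fin k → F
  a : Fin k → F
  D : KummerData d F[X] R k (fun i => C (κ i)*X^d+C (a i))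
  DE : KummerData d F E k κ

variable {F R E : Type} [Field F] [CommRing R] [Algebra F[X] R]
    [Algebra F R] [IsScalarTower F F[X] R] [CommRing E] [Algebra F E]

namespace Curve

variable (M : Curve d k F R E)

/-- Coefficient of the monomial `x ^ j * ∏ n_i ^ α_i`. -/
noncomputable def cf (j:ℕ) (α : Fin k → Fin d) : R →ₗ[F] F where
  toFun f := (M.D.basis.repr f α).coeff j
  map_add' f g := by simp
  map_smul' c f := by
    rw [← algebraMap_smul F[X] c f]
    simp

/-- Functions with poles of order at most `l` at infinity, in the sense that every monomial
`x ^ j * ∏ n_i ^ α_i` occurring has total degree at most `l`. -/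
noncomputable def V (l:ℕ) : Submodule F R :=
  ⨅ (j:ℕ) (α : Fin k → Fin d) (_ : l < j+wt α), LinearMap.ker (M.cf j α)

lemma mem_V {l : ℕ} {f : R} : f ∈ M.V l ↔ ∀ j α, l < j+wt α → M.cf j α f = 0 := by
  simp [V]

/-- The leading part at infinity in degree `l`. -/
noncomputable def lc (l:ℕ) : R →ₗ[F] E := ∑ α ∈ univ.filter (fun α => wt α ≤ l),
    (LinearMap.toSpanSingleton F E (M.DE.basis α)).comp (M.cf (l-wt α) α)

lemma lc_apply (l:ℕ) (f : R) : M.lc l f = ∑ α ∈ univ.filter (fun α => wt α ≤ l),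
    M.cf (l-wt α) α f • M.DE.basis α := by
  simp [lc, LinearMap.sum_apply]

lemma lc_repr (l:ℕ) (f : R) (α) : M.DE.basis.repr (M.lc l f) α =
    if wt α ≤ l then M.cf (l-wt α) α f else 0 := by
  rw [lc_apply, sum_filter]
  simp only [map_sum, Finsupp.coe_finsetSum, Finset.sum_apply]
  rw [sum_eq_single α]
  · split_ifs <;> simp
  · intro β _ hβ
    split_ifs <;> simp [hβ]
  · simp

lemma V_mono {l m : ℕ} (h : l ≤ m) : M.V l ≤ M.V m := by
  intro f hf
  rw [mem_V] at hf ⊢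
  exact fun j α hj => hf j α (by omega)

/-- The element `p(x) * ∏ n_i ^ α_i`. -/
noncomputable def pm (p : F[X]) (α : Fin k → Fin d) : R := p • M.D.basis α

lemma cf_pm (p : F[X]) (α β : Fin k → Fin d) (j:ℕ) :
    M.cf j β (M.pm p α) = if β = α then p.coeff j else 0 := by
  simp only [cf, pm, LinearMap.coe_mk, AddHom.coe_mk, map_smul, Module.Basis.repr_self,
    Finsupp.smul_single, smul_eq_mul, mul_one, Finsupp.single_apply]
  split_ifs with h1 h2 h2
  · rfl
  · exact absurd h1.symm h2
  · exact absurd h2.symm h1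
  · simp

lemma pm_mem {l : ℕ} {p : F[X]} {α : Fin k → Fin d} (h : p.natDegree+wt α ≤ l) :
    M.pm p α ∈ M.V l := by
  rw [mem_V]
  intro j β hj
  rw [cf_pm]
  split_ifs with e
  · subst e; exact coeff_eq_zero_of_natDegree_lt (by omega)
  · rfl

lemma lc_pm {l : ℕ} {p : F[X]} {α : Fin k → Fin d} (h : p.natDegree+wt α ≤ l) :
    M.lc l (M.pm p α) = p.coeff (l-wt α) • M.DE.basis α := by
  rw [lc_apply, sum_eq_single α]
  · rw [cf_pm, if_pos rfl]
  · intro β _ hβ; rw [cf_pm, if_neg hβ, zero_smul]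
  · grind

lemma sum_pm (f : R) : ∑ α, M.pm (M.D.basis.repr f α) α = f := M.D.basis.sum_repr f

lemma natDegree_of_mem {l : ℕ} {f : R} (hf : f ∈ M.V l) (α) (h0 : M.D.basis.repr f α ≠ 0) :
    (M.D.basis.repr f α).natDegree+wt α ≤ l := by
  by_contra! h
  exact h0 (leadingCoeff_eq_zero.1 ((M.mem_V.1 hf) _ α h))

lemma pm_induct {l : ℕ} {p : R → Prop} (h0 : p 0) (hadd : ∀ f g, p f → p g → p (f+g))
    (hpm : ∀ q α, q.natDegree+wt α ≤ l → p (M.pm q α)) {f : R} (hf : f ∈ M.V l) : p f := by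
  rw [← M.sum_pm f]
  refine sum_induction _ p hadd h0 fun α _ => ?_
  by_cases h : M.D.basis.repr f α = 0
  · rw [h]; simpa [pm] using h0
  · exact hpm _ _ (M.natDegree_of_mem hf α h)

lemma pm_mul (p q : F[X]) (α β : Fin k → Fin d) : M.pm p α*M.pm q β =
    M.pm (p*q*∏ i ∈ carry α β, (C (M.κ i)*X^d+C (M.a i))) (α+β) := by
  simp only [pm]
  rw [smul_mul_smul_comm, M.D.basis_mul, smul_smul]

lemma natDegree_P (i : Fin k) : (C (M.κ i)*X^d+C (M.a i)).natDegree ≤ d := by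
  refine (natDegree_add_le _ _).trans (max_le ?_ (by simp))
  exact (natDegree_C_mul_X_pow_le _ _)

lemma natDegree_carry (s : Finset (Fin k)) :
    (∏ i ∈ s, (C (M.κ i)*X^d+C (M.a i))).natDegree ≤ s.card*d :=
  (natDegree_prod_le _ _).trans ((sum_le_card_nsmul _ _ d fun i _ => M.natDegree_P i))

lemma coeff_carry (s : Finset (Fin k)) :
    (∏ i ∈ s, (C (M.κ i)*X^d+C (M.a i))).coeff (s.card*d) = ∏ i ∈ s, M.κ i := by
  rw [coeff_prod_of_natDegree_le _ _ d fun i _ => M.natDegree_P i]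
  refine prod_congr rfl fun i _ => ?_
  simp [coeff_C, NeZero.ne d]

lemma pm_mul_mem {l m : ℕ} {p q : F[X]} {α β : Fin k → Fin d} (hp : p.natDegree+wt α ≤ l)
    (hq : q.natDegree+wt β ≤ m) : (p*q*∏ i ∈ carry α β,
      (C (M.κ i)*X^d+C (M.a i))).natDegree+wt (α+β) ≤ l+m := by
  have h1 := M.natDegree_carry (carry α β)
  have h2 := wt_add α β
  have h3 : (p*q*∏ i ∈ carry α β, (C (M.κ i)*X^d+C (M.a i))).natDegree ≤
    p.natDegree+q.natDegree+(carry α β).card*d :=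
    natDegree_mul_le.trans (add_le_add natDegree_mul_le h1)
  omega

/-- The leading part at infinity is multiplicative. -/
lemma mul_mem_lc {l m : ℕ} {f g : R} (hf : f ∈ M.V l) (hg : g ∈ M.V m) :
    f*g ∈ M.V (l+m) ∧ M.lc (l+m) (f*g) = M.lc l f*M.lc m g := by
  refine M.pm_induct (p := fun f => f*g ∈ M.V (l+m) ∧
    M.lc (l+m) (f*g) = M.lc l f*M.lc m g) ?_ ?_ ?_ hf
  · simp
  · intro f1 f2 h1 h2
    rw [add_mul]
    exact ⟨add_mem h1.1 h2.1, by rw [map_add, map_add, h1.2, h2.2, add_mul]⟩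
  intro p α hp
  refine M.pm_induct (p := fun g => M.pm p α*g ∈ M.V (l+m) ∧
    M.lc (l+m) (M.pm p α*g) = M.lc l (M.pm p α)*M.lc m g) ?_ ?_ ?_ hg
  · simp
  · intro f1 f2 h1 h2
    rw [mul_add]
    exact ⟨add_mem h1.1 h2.1, by rw [map_add, map_add, h1.2, h2.2, mul_add]⟩
  intro q β hq
  have hd := M.pm_mul_mem hp hq
  rw [pm_mul]
  refine ⟨M.pm_mem hd, ?_⟩
  rw [M.lc_pm hd, M.lc_pm hp, M.lc_pm hq, smul_mul_smul_comm, M.DE.basis_mul, smul_smul,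
    ← M.coeff_carry]
  congr 1
  have h2 := wt_add α β
  have e : l+m-wt (α+β) = ((l-wt α)+(m-wt β))+(carry α β).card*d := by omega
  rw [e, coeff_mul_add_eq_of_natDegree_le ?_ (M.natDegree_carry _),
    coeff_mul_add_eq_of_natDegree_le (by omega) (by omega)]
  exact natDegree_mul_le.trans (by omega)

lemma mul_mem {l m : ℕ} {f g : R} (hf : f ∈ M.V l) (hg : g ∈ M.V m) : f*g ∈ M.V (l+m) :=
  (M.mul_mem_lc hf hg).1

lemma lc_mul {l m : ℕ} {f g : R} (hf : f ∈ M.V l) (hg : g ∈ M.V m) :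
    M.lc (l+m) (f*g) = M.lc l f*M.lc m g := (M.mul_mem_lc hf hg).2

lemma lc_eq_zero {l m : ℕ} (h : l < m) {f : R} (hf : f ∈ M.V l) : M.lc m f = 0 := by
  rw [lc_apply]
  refine sum_eq_zero fun α hα => ?_
  rw [M.mem_V.1 hf, zero_smul]
  have := (mem_filter.1 hα).2
  omega

lemma mem_of_lc_eq_zero {l : ℕ} {f : R} (hf : f ∈ M.V (l+1)) (h : M.lc (l+1) f = 0) :
    f ∈ M.V l := by
  rw [mem_V]
  intro j α hj
  by_cases hj' : l+1 < j+wt α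
  · exact M.mem_V.1 hf j α hj'
  · have := M.lc_repr (l+1) f α
    grind

lemma exists_mem (f : R) : ∃ l, f ∈ M.V l := by
  refine ⟨∑ α, ((M.D.basis.repr f α).natDegree+wt α), ?_⟩
  rw [mem_V]
  intro j α hj
  show (M.D.basis.repr f α).coeff j = 0
  refine coeff_eq_zero_of_natDegree_lt ?_
  have : (M.D.basis.repr f α).natDegree+wt α ≤ ∑ α, ((M.D.basis.repr f α).natDegree+wt α) :=
    single_le_sum (f := fun α => (M.D.basis.repr f α).natDegree+wt α)
      (fun _ _ => Nat.zero_le _) (mem_univ α)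
  omega

lemma one_mem : (1 : R) ∈ M.V 0 := by
  have : (1 : R) = M.pm 1 0 := by simp [pm, M.D.basis_apply]
  rw [this]; exact M.pm_mem (by simp [wt])

lemma lc_one : M.lc 0 1 = 1 := by
  have : (1 : R) = M.pm 1 0 := by simp [pm, M.D.basis_apply]
  rw [this, M.lc_pm (by simp [wt])]
  simp [wt, M.DE.basis_apply]

lemma lc_surj {l : ℕ} (hl : (d-1)*k ≤ l) (e : E) : ∃ f ∈ M.V l, M.lc l f = e := by
  have hw : ∀ α : Fin k → Fin d, wt α ≤ l := fun α => (wt_le α).trans hl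
  have hmon : ∀ α : Fin k → Fin d,
      (C (M.DE.basis.repr e α)*X^(l-wt α)).natDegree+wt α ≤ l := fun α => by
    have := natDegree_C_mul_X_pow_le (M.DE.basis.repr e α) (l-wt α)
    have := hw α
    omega
  refine ⟨∑ α, M.pm (C (M.DE.basis.repr e α)*X^(l-wt α)) α,
    sum_mem fun α _ => M.pm_mem (hmon α), ?_⟩
  rw [map_sum]
  conv_rhs => rw [← M.DE.basis.sum_repr e]
  refine sum_congr rfl fun α _ => ?_
  rw [M.lc_pm (hmon α)]
  simp

/-- `V l` is the product over `α` of spaces of polynomials of bounded degree. -/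
noncomputable def equivV (l:ℕ) : M.V l ≃ₗ[F] ∀ α : Fin k → Fin d, degreeLT F (l+1-wt α) where
  toFun f α := ⟨M.D.basis.repr f.1 α, by
    rw [mem_degreeLT, degree_lt_iff_coeff_zero]
    intro j hj
    exact M.mem_V.1 f.2 j α (by omega)⟩
  map_add' f g := by ext; simp
  map_smul' c f := by
    ext α : 2
    simp only [Submodule.coe_smul, RingHom.id_apply, Pi.smul_apply]
    rw [← algebraMap_smul F[X] c f.1, map_smul, Finsupp.smul_apply, algebraMap_smul]
  invFun p := ⟨∑ α, M.pm (p α).1 α, by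
    rw [mem_V]
    intro j β hj
    rw [map_sum, sum_eq_single β]
    · rw [cf_pm, if_pos rfl]
      have := (p β).2
      rw [mem_degreeLT, degree_lt_iff_coeff_zero] at this
      exact this j (by omega)
    · intro α _ h; rw [cf_pm, if_neg h.symm]
    · simp⟩
  left_inv f := by ext; exact M.sum_pm f.1
  right_inv p := by
    ext β : 2
    simp only [pm]
    rw [M.D.basis.repr_sum_self (fun α => ((p α).1 : F[X]))]

instance finV (l:ℕ) : Module.Finite F (M.V l) := Module.Finite.equiv (M.equivV l).symm

lemma finrank_V (l:ℕ) : Module.finrank F (M.V l) = ∑ α : Fin k → Fin d, (l+1-wt α) := by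
  rw [(M.equivV l).finrank_eq, Module.finrank_pi_fintype]
  refine sum_congr rfl fun α _ => ?_
  rw [(degreeLTEquiv F _).finrank_eq, Module.finrank_fin_fun]

lemma finrank_V_add {l : ℕ} (hl : (d-1)*k ≤ l+1) (s:ℕ) :
    Module.finrank F (M.V (l+s)) = Module.finrank F (M.V l)+d^k*s := by
  rw [finrank_V, finrank_V]
  have : ∀ α : Fin k → Fin d, l+s+1-wt α = (l+1-wt α)+s := fun α => by
    have := wt_le α; omega
  simp_rw [this, sum_add_distrib]
  simp

end Curve

end Filtration

/-! ### Dimension counts of Riemann–Roch type -/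

section RR
open Polynomial Module

/-- Additivity of the trace in short exact sequences. -/
lemma trace_exact {F A V B : Type*} [Field F] [AddCommGroup A] [Module F A] [AddCommGroup V]
    [Module F V] [AddCommGroup B] [Module F B] [Module.Finite F A] [Module.Finite F V]
    [Module.Finite F B] (i : A →ₗ[F] V) (π : V →ₗ[F] B) (hi : Injective i)
    (hπ : Surjective π) (hex : ∀ v, π v = 0 → ∃ a, i a = v) (hz : ∀ a, π (i a) = 0)
    (T : V →ₗ[F] V) (T' : A →ₗ[F] A) (S : B →ₗ[F] B) (h1 : ∀ a, T (i a) = i (T' a))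
    (h2 : ∀ v, π (T v) = S (π v)) :
    LinearMap.trace F V T = LinearMap.trace F A T'+LinearMap.trace F B S := by
  obtain ⟨s, hs⟩ := LinearMap.exists_rightInverse_of_surjective π (LinearMap.range_eq_top.2 hπ)
  have hs' : ∀ b, π (s b) = b := fun b => LinearMap.congr_fun hs b
  obtain ⟨ρ, hρ⟩ := LinearMap.exists_leftInverse_of_injective i (LinearMap.ker_eq_bot.2 hi)
  have hρ' : ∀ a, ρ (i a) = a := fun a => LinearMap.congr_fun hρ a
  -- a retraction vanishing on the image of the section
  set ρ' : V →ₗ[F] A := ρ-ρ.comp (s.comp π) with hρd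
  have hρi : ∀ a, ρ' (i a) = a := fun a => by simp [hρd, hρ', hz]
  have hid : ∀ v, i (ρ' v)+s (π v) = v := by
    intro v
    obtain ⟨a, ha⟩ := hex (v-s (π v)) (by simp [hs'])
    have : ρ' v = a := by
      simp only [hρd, LinearMap.sub_apply, LinearMap.comp_apply]
      rw [← map_sub, ← ha, hρ']
    rw [this, ha]; abel
  have hT : T = (T.comp i).comp ρ'+(T.comp s).comp π := by
    ext v
    simp only [LinearMap.add_apply, LinearMap.comp_apply]
    rw [← map_add, hid]
  rw [hT, map_add, LinearMap.trace_comp_comm' ρ', LinearMap.trace_comp_comm' π]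
  congr 2
  · ext a; simp only [LinearMap.comp_apply]; rw [h1, hρi]
  · ext b; simp only [LinearMap.comp_apply]; rw [h2, hs']

lemma finrank_map_inj {F A V : Type*} [Field F] [AddCommGroup A] [Module F A] [AddCommGroup V]
    [Module F V] {f : A →ₗ[F] V} (hf : Injective f) (p : Submodule F A) :
    finrank F (p.map f) = finrank F p := (Submodule.equivMapOfInjective f hf p).finrank_eq.symm

variable {d : ℕ} [NeZero d] {k : ℕ}
variable {F R E : Type} [Field F] [CommRing R] [Algebra F[X] R]
    [Algebra F R] [IsScalarTower F F[X] R] [CommRing E] [Algebra F E]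

namespace Curve

variable (M : Curve d k F R E)

/-- The bound `(d - 1) * k` for the weights of the basis monomials. -/
def kap (_ : Curve d k F R E) : ℕ := (d-1)*k

/-- The coordinate function `x`. -/
noncomputable def x (_ : Curve d k F R E) : R := algebraMap F[X] R X

lemma x_mul (g : R) : M.x*g = (X : F[X]) • g := (Algebra.smul_def _ _).symm

lemma cf_x_mul (j:ℕ) (α) (g : R) : M.cf (j+1) α (M.x*g) = M.cf j α g := by
  rw [x_mul]
  simp [cf]

lemma cf_zero_x_mul (α) (g : R) : M.cf 0 α (M.x*g) = 0 := by
  rw [x_mul]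
  simp [cf]

lemma x_mul_mem {l : ℕ} {g : R} : M.x*g ∈ M.V (l+1) ↔ g ∈ M.V l := by
  simp only [mem_V]
  constructor
  · intro h j α hj
    rw [← cf_x_mul]; exact h _ _ (by omega)
  · intro h j α hj
    cases j with
    | zero => exact M.cf_zero_x_mul _ _
    | succ j => rw [cf_x_mul]; exact h _ _ (by omega)

lemma x_mem : M.x ∈ M.V 1 := by
  have := M.x_mul_mem.2 M.one_mem
  simpa using this

/-- Reduction modulo `I` of functions of degree at most `l`. -/
noncomputable def toQuot (l:ℕ) (I : Ideal R) : M.V l →ₗ[F] R ⧸ I :=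
  (Ideal.Quotient.mkₐ F I).toLinearMap.comp (M.V l).subtype

lemma toQuot_apply (l:ℕ) (I : Ideal R) (w) : M.toQuot l I w = Ideal.Quotient.mk I w.1 := rfl

lemma toQuot_surj {l : ℕ} {I : Ideal R} (h : M.V l ⊔ I.restrictScalars F = ⊤) :
    Surjective (M.toQuot l I) := by
  intro z
  obtain ⟨z, rfl⟩ := mk_surjective z
  have : z ∈ M.V l ⊔ I.restrictScalars F := h ▸ Submodule.mem_top
  obtain ⟨a, ha, b, hb, rfl⟩ := Submodule.mem_sup.1 this
  refine ⟨⟨a, ha⟩, ?_⟩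
  rw [toQuot_apply, map_add, eq_zero_iff_mem.2 (show b ∈ I from hb), add_zero]

variable [IsDomain R]

lemma x_ne_zero : M.x ≠ 0 := by
  intro h
  have h1 := M.cf_x_mul 0 0 1
  have : (1 : R) = M.pm 1 0 := by simp [pm, M.D.basis_apply]
  rw [h, this, cf_pm] at h1
  simp at h1

/-- An ideal containing a nonzero function gains at least as much as the whole filtration in each
large degree. -/
lemma finrank_inf_succ (I : Ideal R) {s l : ℕ} {f : R} (hf : f ≠ 0) (hfs : f ∈ M.V s)
    (hfI : f ∈ I) (hl : s+M.kap ≤ l) :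
    finrank F ↥(M.V l ⊓ I.restrictScalars F)+d^k ≤
      finrank F ↥(M.V (l+1) ⊓ I.restrictScalars F) := by
  have hfin : ∀ (l:ℕ) (W : Submodule F R), Module.Finite F ↥(M.V l ⊓ W) := fun l W =>
    Submodule.finiteDimensional_inf_left _ _
  obtain ⟨e, rfl⟩ : ∃ e, l = s+e := ⟨l-s, by omega⟩
  set W : Submodule F R := (span {f}).restrictScalars F with hW
  have hWI : W ≤ I.restrictScalars F := by
    intro w hw
    exact (span_singleton_le_iff_mem I).2 hfI hw
  have hxinj : Injective (mulLeft F M.x) := mul_right_injective₀ M.x_ne_zero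
  have hfinj : Injective (mulLeft F f) := mul_right_injective₀ hf
  -- first comparison: inside the principal ideal
  have key1 : finrank F ↥(M.V (s+e) ⊓ W)+d^k ≤ finrank F ↥(M.V (s+e+1) ⊓ W) := by
    set A := (M.V (s+e) ⊓ W).map (mulLeft F M.x) with hA
    set B := (M.V (e+1)).map (mulLeft F f) with hB
    set C := (M.V e).map (mulLeft F (M.x*f)) with hC
    have fA : finrank F A = finrank F ↥(M.V (s+e) ⊓ W) := finrank_map_inj hxinj _
    have fB : finrank F B = finrank F (M.V (e+1)) := finrank_map_inj hfinj _
    have fC : finrank F C = finrank F (M.V e) :=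
      finrank_map_inj (mul_right_injective₀ (mul_ne_zero M.x_ne_zero hf)) _
    have hle : A ⊔ B ≤ M.V (s+e+1) ⊓ W := by
      refine sup_le ?_ ?_
      · rintro _ ⟨g, ⟨hg1, hg2⟩, rfl⟩
        exact ⟨M.x_mul_mem.2 hg1, Ideal.mul_mem_left _ _ hg2⟩
      · rintro _ ⟨g, hg, rfl⟩
        exact ⟨by simpa [add_assoc] using M.mul_mem hfs hg,
          Ideal.mul_mem_right _ _ (mem_span_singleton_self f)⟩
    have hinf : A ⊓ B ≤ C := by
      rintro _ ⟨⟨g, ⟨hg1, hg2⟩, rfl⟩, ⟨h, hh, he⟩⟩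
      obtain ⟨g', rfl⟩ := Ideal.mem_span_singleton'.1 hg2
      simp only [LinearMap.mulLeft_apply] at he ⊢
      have : M.x*g' = h := by
        refine mul_left_cancel₀ hf ?_
        rw [he]; ring
      refine ⟨g', ?_, by simp only [LinearMap.mulLeft_apply]; ring⟩
      rw [← this] at hh
      exact M.x_mul_mem.1 hh
    have h1 := Submodule.finrank_sup_add_finrank_inf_eq A B
    have h2 := Submodule.finrank_mono hle
    have h3 := Submodule.finrank_mono hinf
    have h4 := M.finrank_V_add (l := e) (by unfold kap at hl; omega) 1
    rw [mul_one] at h4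
    omega
  have h1 := Submodule.finrank_sup_add_finrank_inf_eq (M.V (s+e) ⊓ I.restrictScalars F)
    (M.V (s+e+1) ⊓ W)
  have h2 : finrank F _ ≤ finrank F _ := Submodule.finrank_mono
    (s := (M.V (s+e) ⊓ I.restrictScalars F) ⊔ (M.V (s+e+1) ⊓ W))
    (t := M.V (s+e+1) ⊓ I.restrictScalars F)
    (sup_le (inf_le_inf_right _ (M.V_mono (by omega))) (inf_le_inf_left _ hWI))
  have h3 : finrank F _ ≤ finrank F _ := Submodule.finrank_mono
    (s := (M.V (s+e) ⊓ I.restrictScalars F) ⊓ (M.V (s+e+1) ⊓ W))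
    (t := M.V (s+e) ⊓ W)
    (fun z hz => ⟨hz.1.1, hz.2.2⟩)
  omega

/-- The vanishing part of Riemann-Roch: if `I` contains a nonzero function of degree at most `s`,
then functions of degree `s + (d - 1) * k` already surject onto `R ⧸ I`. -/
lemma sup_eq_top (I : Ideal R) {s l : ℕ} {f : R} (hf : f ≠ 0) (hfs : f ∈ M.V s)
    (hfI : f ∈ I) (hl : s+M.kap ≤ l) : M.V l ⊔ I.restrictScalars F = ⊤ := by
  have hfin : ∀ (l:ℕ) (W : Submodule F R), Module.Finite F ↥(M.V l ⊓ W) := fun l W =>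
    Submodule.finiteDimensional_inf_left _ _
  have step : ∀ l, s+M.kap ≤ l → M.V (l+1) ≤ M.V l ⊔ I.restrictScalars F := by
    intro l hl
    have h0 := M.finrank_inf_succ I hf hfs hfI hl
    have h1 := Submodule.finrank_sup_add_finrank_inf_eq (M.V l) (M.V (l+1) ⊓ I.restrictScalars F)
    have h2 := M.finrank_V_add (l := l) (by unfold kap at hl; omega) 1
    have h3 : M.V l ⊓ (M.V (l+1) ⊓ I.restrictScalars F) = M.V l ⊓ I.restrictScalars F := by
      rw [← inf_assoc, inf_eq_left.2 (M.V_mono (by omega))]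
    have hle : M.V l ⊔ (M.V (l+1) ⊓ I.restrictScalars F) ≤ M.V (l+1) :=
      sup_le (M.V_mono (by omega)) inf_le_left
    rw [h3] at h1
    have := Submodule.eq_of_le_of_finrank_le hle (by omega)
    rw [← this]
    exact sup_le_sup_left inf_le_right _
  have all : ∀ j, M.V (l+j) ≤ M.V l ⊔ I.restrictScalars F := by
    intro j
    induction j with
    | zero => exact le_sup_left
    | succ j ih => exact (step (l+j) (by omega)).trans (sup_le ih le_sup_right)
  rw [eq_top_iff]
  intro z _
  obtain ⟨j, hj⟩ := M.exists_mem z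
  exact all j (M.V_mono (by omega) hj)

lemma finite_quot (M : Curve d k F R E) {I : Ideal R} (hI : I ≠ ⊥) : Module.Finite F (R ⧸ I) := by
  obtain ⟨f, hfI, hf⟩ := Submodule.exists_mem_ne_zero_of_ne_bot hI
  obtain ⟨s, hs⟩ := M.exists_mem f
  exact Module.Finite.of_surjective _ (M.toQuot_surj (M.sup_eq_top I hf hs hfI le_rfl))

lemma sup_eq_top' {I : Ideal R} (hI : I ≠ ⊥) {l : ℕ}
    (hl : finrank F (R ⧸ I)+d^k*(2*M.kap+1) ≤ d^k*l) :
    M.V l ⊔ I.restrictScalars F = ⊤ := by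
  have hfin := M.finite_quot hI
  have hl0 : 2*M.kap+1 ≤ l :=
    Nat.le_of_mul_le_mul_left (le_trans (Nat.le_add_left _ _) hl) (pow_pos (NeZero.pos d) k)
  obtain ⟨j, rfl⟩ : ∃ j, l = 2*M.kap+1+j := ⟨l-(2*M.kap+1), by omega⟩
  have h1 := M.finrank_V_add (l := M.kap) (by unfold kap; omega) (j+1)
  have h2 : finrank F (R ⧸ I) < finrank F (M.V (M.kap+(j+1))) := by
    have := pow_pos (NeZero.pos d) k
    rw [h1]
    nlinarith
  obtain ⟨⟨f, hf⟩, hf0, hne⟩ := Submodule.exists_mem_ne_zero_of_ne_bot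
    (LinearMap.ker_ne_bot_of_finrank_lt (f := M.toQuot _ I) h2)
  refine M.sup_eq_top I (f := f) (fun h => hne (Subtype.ext h)) hf (eq_zero_iff_mem.1 hf0) ?_
  omega

lemma finrank_inf {I : Ideal R} {l : ℕ} (h : M.V l ⊔ I.restrictScalars F = ⊤) :
    finrank F ↥(M.V l ⊓ I.restrictScalars F)+finrank F (R ⧸ I) = finrank F (M.V l) := by
  have h1 := LinearMap.finrank_range_add_finrank_ker (M.toQuot l I)
  rw [LinearMap.range_eq_top.2 (M.toQuot_surj h), finrank_top] at h1
  have h2 : (LinearMap.ker (M.toQuot l I)).map (M.V l).subtype = M.V l ⊓ I.restrictScalars F := by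
    ext z
    simp only [Submodule.mem_map, LinearMap.mem_ker, Submodule.mem_inf]
    constructor
    · rintro ⟨w, hw, rfl⟩
      exact ⟨w.2, eq_zero_iff_mem.1 hw⟩
    · rintro ⟨hz, hz'⟩
      exact ⟨⟨z, hz⟩, eq_zero_iff_mem.2 hz', rfl⟩
  rw [← h2, finrank_map_inj Subtype.val_injective]
  omega

variable [Nontrivial E]

lemma ne_zero_of_lc {l : ℕ} {u : R} (h : IsUnit (M.lc l u)) : u ≠ 0 := by
  rintro rfl
  rw [map_zero] at h
  exact not_isUnit_zero h

lemma mem_of_mul_mem {k' l : ℕ} {u y : R} (hu : u ∈ M.V k') (h : IsUnit (M.lc k' u))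
    (hy : u*y ∈ M.V (k'+l)) : y ∈ M.V l := by
  obtain ⟨j, hj⟩ := M.exists_mem y
  have : ∀ j, y ∈ M.V (l+j) → y ∈ M.V l := by
    intro j
    induction j with
    | zero => exact fun h => h
    | succ j ih =>
      intro hj
      refine ih (M.mem_of_lc_eq_zero hj ?_)
      have h1 := M.lc_mul hu hj
      rw [M.lc_eq_zero (l := k'+l) (by omega) hy] at h1
      exact (h.mul_right_eq_zero).1 h1.symm
  exact this j (M.V_mono (by omega) hj)

lemma finrank_quot_span {k' : ℕ} {u : R} (hu : u ∈ M.V k') (h : IsUnit (M.lc k' u)) :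
    finrank F (R ⧸ span {u}) = d^k*k' := by
  have hu0 := M.ne_zero_of_lc h
  have h1 := M.sup_eq_top (span {u}) hu0 hu (mem_span_singleton_self u) le_rfl
  have h2 := M.finrank_inf h1
  have h3 : M.V (k'+M.kap) ⊓ (span {u}).restrictScalars F = (M.V M.kap).map (mulLeft F u) := by
    ext z
    constructor
    · rintro ⟨hz1, hz2⟩
      obtain ⟨y, rfl⟩ := Ideal.mem_span_singleton'.1 hz2
      exact ⟨y, M.mem_of_mul_mem hu h (by rw [mul_comm]; exact hz1), mul_comm _ _⟩
    · rintro ⟨y, hy, rfl⟩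
      exact ⟨M.mul_mem hu hy, Ideal.mul_mem_right _ _ (mem_span_singleton_self u)⟩
  rw [h3, finrank_map_inj (mul_right_injective₀ hu0), add_comm k',
    M.finrank_V_add (by unfold kap; omega)] at h2
  omega

/-- Changing the second coefficient at infinity of `u` changes the trace of `g` on `R ⧸ (u)` by the
product of that change with the trace at infinity of the leading part of `g`. -/
theorem trace_shift {k' : ℕ} {u v g : R} {c : F} (hu : u ∈ M.V (k'+1))
    (h : IsUnit (M.lc (k'+1) u)) (hv : v ∈ M.V k') (hvc : M.lc k' v = c • M.lc (k'+1) u)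
    (hg : g ∈ M.V 1) :
    trace F (R ⧸ span {u}) (Ideal.Quotient.mk _ g) =
      trace F (R ⧸ span {u+v}) (Ideal.Quotient.mk _ g) + c*trace F E (M.lc 1 g) := by
  set κ := M.kap with hκ
  have hEfin : Module.Finite F E := Module.Finite.of_basis M.DE.basis
  -- a linear section of the leading coefficient map
  let lcr : M.V (κ+1) →ₗ[F] E := (M.lc (κ+1)).comp (M.V (κ+1)).subtype
  have hlcr : Surjective lcr := by
    intro e
    obtain ⟨f, hf, hfe⟩ := M.lc_surj (l := κ+1) (by rw [hκ]; unfold kap; omega) e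
    exact ⟨⟨f, hf⟩, hfe⟩
  obtain ⟨σ, hσ⟩ := LinearMap.exists_rightInverse_of_surjective lcr (LinearMap.range_eq_top.2 hlcr)
  have hσ' : ∀ e, M.lc (κ+1) (σ e).1 = e := fun e => LinearMap.congr_fun hσ e
  obtain ⟨u0, hu0⟩ := h
  set L := k'+1+κ with hL
  let τ : M.V L →ₗ[F] R := (M.V (κ+1)).subtype.comp (σ.comp
    ((mulLeft F (↑u0⁻¹*M.lc 1 g)).comp ((M.lc L).comp (M.V L).subtype)))
  have hτ : ∀ w, τ w = (σ (↑u0⁻¹*M.lc 1 g*M.lc L w.1)).1 := fun w => rfl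
  have hτm : ∀ w, τ w ∈ M.V (κ+1) := fun w => (σ _).2
  have hT : ∀ u' : R, u' ∈ M.V (k'+1) → M.lc (k'+1) u' = u0 → ∀ w : M.V L,
      g*w.1-u'*τ w ∈ M.V L := by
    intro u' hu' hl w
    have m1 : g*w.1 ∈ M.V (1+L) := M.mul_mem hg w.2
    have m2 : u'*τ w ∈ M.V (k'+1+(κ+1)) := M.mul_mem hu' (hτm w)
    have e1 : 1+L = L+1 := by omega
    have e2 : k'+1+(κ+1) = L+1 := by omega
    have l1 := M.lc_mul hg w.2
    have l2 := M.lc_mul hu' (hτm w)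
    rw [e1] at m1 l1
    rw [e2] at m2 l2
    refine M.mem_of_lc_eq_zero (sub_mem m1 m2) ?_
    rw [map_sub, l1, l2, hl, hτ, hσ', ← mul_assoc, ← mul_assoc, Units.mul_inv, one_mul, sub_self]
  let T : ∀ u' : R, u' ∈ M.V (k'+1) → M.lc (k'+1) u' = u0 → (M.V L →ₗ[F] M.V L) :=
    fun u' hu' hl => ((mulLeft F g).comp (M.V L).subtype -
      (mulLeft F u').comp τ).codRestrict (M.V L) (hT u' hu' hl)
  -- the action on multiples of `u'` does not depend on `u'`
  have hT' : ∀ y : M.V κ, g*y.1-(σ (M.lc 1 g*M.lc κ y.1)).1 ∈ M.V κ := by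
    intro y
    have m1 : g*y.1 ∈ M.V (1+κ) := M.mul_mem hg y.2
    have l1 := M.lc_mul hg y.2
    rw [add_comm 1] at m1 l1
    refine M.mem_of_lc_eq_zero (sub_mem m1 (σ _).2) ?_
    rw [map_sub, l1, hσ', sub_self]
  let T' : M.V κ →ₗ[F] M.V κ := ((mulLeft F g).comp (M.V κ).subtype -
      (M.V (κ+1)).subtype.comp (σ.comp ((mulLeft F (M.lc 1 g)).comp
        ((M.lc κ).comp (M.V κ).subtype)))).codRestrict (M.V κ) hT'
  have main : ∀ (u' : R) (hu' : u' ∈ M.V (k'+1)) (hl : M.lc (k'+1) u' = u0),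
      LinearMap.trace F _ (T u' hu' hl) = LinearMap.trace F _ T' +
        trace F (R ⧸ span {u'}) (Ideal.Quotient.mk _ g) := by
    intro u' hu' hl
    have hun : IsUnit (M.lc (k'+1) u') := hl ▸ u0.isUnit
    have hne := M.ne_zero_of_lc hun
    have hsup := M.sup_eq_top (span {u'}) hne hu' (mem_span_singleton_self u') le_rfl
    have hqf : Module.Finite F (R ⧸ span {u'}) := M.finite_quot (by
      rw [Ne, Ideal.span_singleton_eq_bot]; exact hne)
    have hm : ∀ y : M.V κ, u'*y.1 ∈ M.V L := fun y => M.mul_mem hu' y.2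
    refine trace_exact (((mulLeft F u').comp (M.V κ).subtype).codRestrict (M.V L) hm)
      (M.toQuot L (span {u'})) ?_ (M.toQuot_surj hsup) ?_ ?_ _ _ _ ?_ ?_
    · intro y1 y2 h12
      have := congrArg Subtype.val h12
      exact Subtype.ext (mul_left_cancel₀ hne this)
    · intro w hw
      have := eq_zero_iff_mem.1 hw
      obtain ⟨y, hy⟩ := Ideal.mem_span_singleton'.1 this
      refine ⟨⟨y, M.mem_of_mul_mem hu' hun (l := κ) ?_⟩, Subtype.ext ?_⟩
      · rw [mul_comm, hy]; exact w.2
      · exact (mul_comm _ _).trans hy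
    · intro y
      exact eq_zero_iff_mem.2 (Ideal.mul_mem_right _ _ (mem_span_singleton_self u'))
    · intro y
      apply Subtype.ext
      show g*(u'*y.1)-u'*(σ (↑u0⁻¹*M.lc 1 g*M.lc L (u'*y.1))).1 =
        u'*(g*y.1-(σ (M.lc 1 g*M.lc κ y.1)).1)
      have e : ↑u0⁻¹*M.lc 1 g*M.lc L (u'*y.1) = M.lc 1 g*M.lc κ y.1 := by
        rw [hL, M.lc_mul hu' y.2, hl]
        calc _ = (↑u0⁻¹*↑u0)*(M.lc 1 g*M.lc κ y.1) := by ring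
          _ = _ := by rw [Units.inv_mul, one_mul]
      rw [e]; ring
    · intro w
      show Ideal.Quotient.mk _ (g*w.1-u'*τ w) = Ideal.Quotient.mk _ g*Ideal.Quotient.mk _ w.1
      rw [map_sub, map_mul, map_mul, eq_zero_iff_mem.2
        (mem_span_singleton_self u'), zero_mul, sub_zero]
  have hv0 : M.lc (k'+1) v = 0 := M.lc_eq_zero (by omega) hv
  have m1 := main u hu hu0.symm
  have hu'm : u+v ∈ M.V (k'+1) := add_mem hu (M.V_mono (by omega) hv)
  have hu'l : M.lc (k'+1) (u+v) = u0 := by rw [map_add, hv0, add_zero, hu0]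
  have m2 := main (u+v) hu'm hu'l
  -- the difference of the two operators has finite rank, through the leading coefficient
  have hvm : ∀ e : E, v*(σ (↑u0⁻¹*M.lc 1 g*e)).1 ∈ M.V L := fun e => by
    have := M.mul_mem hv (σ (↑u0⁻¹*M.lc 1 g*e)).2
    rwa [show k'+(κ+1) = L by omega] at this
  let ν : E →ₗ[F] M.V L := ((mulLeft F v).comp ((M.V (κ+1)).subtype.comp (σ.comp
    (mulLeft F ((↑u0⁻¹ : E)*M.lc 1 g))))).codRestrict (M.V L) hvm
  have hdiff : T u hu hu0.symm = T (u+v) hu'm hu'l + ν.comp ((M.lc L).comp (M.V L).subtype) := by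
    ext w
    show g*w.1-u*τ w = (g*w.1-(u+v)*τ w)+v*τ w
    ring
  have htr : LinearMap.trace F _ (ν.comp ((M.lc L).comp (M.V L).subtype)) =
      c*trace F E (M.lc 1 g) := by
    rw [LinearMap.trace_comp_comm', ← smul_eq_mul, ← map_smul]
    rw [Algebra.trace_apply]
    congr 1
    ext e
    show M.lc L (v*(σ (↑u0⁻¹*M.lc 1 g*e)).1) = c • M.lc 1 g*e
    have e1 := M.lc_mul hv (σ (↑u0⁻¹*M.lc 1 g*e)).2
    rw [show k'+(κ+1) = L by omega, hσ', hvc, ← hu0] at e1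
    rw [e1, smul_mul_assoc, smul_mul_assoc, ← mul_assoc, ← mul_assoc, Units.mul_inv, one_mul]
  have := congrArg (LinearMap.trace F _) hdiff
  rw [map_add, m1, m2, htr, add_assoc] at this
  exact add_left_cancel this

end Curve
end RR

/-! ### Degrees and characters of ideals -/

section Ideals
open Module

variable {F R : Type} [Field F] [CommRing R] [IsDedekindDomain R] [Algebra F R]

/-- Degree and trace are additive over products of ideals. -/
lemma quot_mul (I J : Ideal R) (hI : I ≠ ⊥) (hJ : J ≠ ⊥) [Module.Finite F (R ⧸ I)]
    [Module.Finite F (R ⧸ J)] [Module.Finite F (R ⧸ (I*J))] (g : R) :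
    finrank F (R ⧸ (I*J)) = finrank F (R ⧸ I)+finrank F (R ⧸ J) ∧
    trace F (R ⧸ (I*J)) (Ideal.Quotient.mk _ g) = trace F (R ⧸ I) (Ideal.Quotient.mk _ g) +
        trace F (R ⧸ J) (Ideal.Quotient.mk _ g) := by
  have hIJ : I*J ≠ ⊥ := mul_ne_zero hI hJ
  obtain ⟨a, ha⟩ := IsDedekindDomain.exists_sup_span_eq (I := I*J) (J := I) Ideal.mul_le_left hIJ
  have haI : a ∈ I := by rw [← ha]; exact Ideal.mem_sup_right (mem_span_singleton_self a)
  obtain ⟨K, hK⟩ : I ∣ span {a} := Ideal.dvd_iff_le.2 ((span_singleton_le_iff_mem I).2 haI)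
  have hKJ : J ⊔ K = ⊤ := by
    have : I*(J ⊔ K) = I*⊤ := by rw [Ideal.mul_sup, ← hK, ha, Ideal.mul_top]
    exact mul_left_cancel₀ hI this
  have hmem : ∀ r, a*r ∈ I*J → r ∈ J := by
    intro r hr
    have h1 : I*(K*span {r}) ≤ I*J := by
      rw [← mul_assoc, ← hK, Ideal.span_singleton_mul_span_singleton]
      exact (span_singleton_le_iff_mem _).2 hr
    have h2 : K*span {r} ≤ J := by
      have := Ideal.dvd_iff_le.2 h1
      exact Ideal.dvd_iff_le.1 ((mul_dvd_mul_iff_left hI).1 this)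
    obtain ⟨j, hj, κ, hκ, e⟩ := Submodule.mem_sup.1 (hKJ ▸ Submodule.mem_top : (1 : R) ∈ J ⊔ K)
    rw [← one_mul r, ← e, add_mul]
    exact J.add_mem (Ideal.mul_mem_right _ _ hj)
      (h2 (Ideal.mul_mem_mul hκ (mem_span_singleton_self r)))
  let i : (R ⧸ J) →ₗ[F] R ⧸ (I*J) := ((Submodule.mapQ J (I*J) (mulLeft R a) (fun r hr =>
      Ideal.mul_mem_mul haI hr) : (R ⧸ J) →ₗ[R] R ⧸ (I*J))).restrictScalars F
  let π : (R ⧸ (I*J)) →ₗ[F] R ⧸ I :=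
    (Ideal.Quotient.factorₐ F (I := I*J) (J := I) Ideal.mul_le_left).toLinearMap
  have hi : Injective i := by
    rw [injective_iff_map_eq_zero]
    intro z hz
    obtain ⟨r, rfl⟩ := mk_surjective z
    exact eq_zero_iff_mem.2 (hmem r (eq_zero_iff_mem.1 hz))
  have hπ : Surjective π := by
    intro z
    obtain ⟨r, rfl⟩ := mk_surjective z
    exact ⟨Ideal.Quotient.mk _ r, rfl⟩
  have hex : ∀ v, π v = 0 → ∃ y, i y = v := by
    intro z hz
    obtain ⟨r, rfl⟩ := mk_surjective z
    have hr : r ∈ I := eq_zero_iff_mem.1 hz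
    rw [← ha] at hr
    obtain ⟨b, hb, c, hc, rfl⟩ := Submodule.mem_sup.1 hr
    obtain ⟨c, rfl⟩ := Ideal.mem_span_singleton'.1 hc
    refine ⟨Ideal.Quotient.mk _ c, ?_⟩
    show Ideal.Quotient.mk _ (a*c) = _
    rw [map_add, eq_zero_iff_mem.2 hb, zero_add, mul_comm a c]
  have hz : ∀ y, π (i y) = 0 := by
    intro z
    obtain ⟨r, rfl⟩ := mk_surjective z
    exact eq_zero_iff_mem.2 (Ideal.mul_mem_right _ _ haI)
  constructor
  · have h1 := LinearMap.finrank_range_add_finrank_ker π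
    have h2 : LinearMap.ker π = LinearMap.range i := by
      ext z
      constructor
      · intro h; exact hex z h
      · rintro ⟨y, rfl⟩; exact hz y
    rw [LinearMap.range_eq_top.2 hπ, finrank_top, h2, LinearMap.finrank_range_of_inj hi] at h1
    exact h1.symm
  · rw [add_comm]
    refine trace_exact i π hi hπ hex hz _ _ _ ?_ ?_
    · intro z
      obtain ⟨r, rfl⟩ := mk_surjective z
      show Ideal.Quotient.mk _ (g*(a*r)) = Ideal.Quotient.mk _ (a*(g*r))
      congr 1; ring
    · intro z
      obtain ⟨r, rfl⟩ := mk_surjective z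
      rfl

/-- The hypothesis that nonzero ideals have finite codimension, in the form used for curves. -/
def FinQuot (F R : Type) [Field F] [CommRing R] [Algebra F R] : Prop :=
  ∀ I : Ideal R, I ≠ ⊥ → Module.Finite F (R ⧸ I)

variable (F) in
/-- The degree of an ideal. -/
noncomputable def dg (I : Ideal R) : ℕ := finrank F (R ⧸ I)

/-- The character of ideals attached to an additive character `ψ` and a function `g`. -/
noncomputable def chi (ψ : AddChar F ℂ) (g : R) (I : Ideal R) : ℂ :=
  ψ (trace F (R ⧸ I) (Ideal.Quotient.mk I g))

lemma dg_mul (hF : FinQuot F R) {I J : Ideal R} (hI : I ≠ ⊥) (hJ : J ≠ ⊥) :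
    dg F (I*J) = dg F I+dg F J := by
  have := hF I hI
  have := hF J hJ
  have := hF (I*J) (mul_ne_zero hI hJ)
  exact (quot_mul I J hI hJ 0).1

lemma chi_mul (hF : FinQuot F R) (ψ : AddChar F ℂ) (g : R) {I J : Ideal R} (hI : I ≠ ⊥)
    (hJ : J ≠ ⊥) : chi ψ g (I*J) = chi ψ g I*chi ψ g J := by
  have := hF I hI
  have := hF J hJ
  have := hF (I*J) (mul_ne_zero hI hJ)
  rw [chi, (quot_mul I J hI hJ g).2, AddChar.map_add_eq_mul]; rfl

lemma chi_ne_zero (ψ : AddChar F ℂ) (g : R) (I : Ideal R) : chi ψ g I ≠ 0 := by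
  have := ψ.map_add_eq_mul (trace F (R ⧸ I) (Ideal.Quotient.mk I g))
    (-(trace F (R ⧸ I) (Ideal.Quotient.mk I g)))
  rw [add_neg_cancel, AddChar.map_zero_eq_one] at this
  intro h
  rw [chi] at h
  rw [h, zero_mul] at this
  exact one_ne_zero this

lemma dg_eq_zero (hF : FinQuot F R) {I : Ideal R} (hI : I ≠ ⊥) : dg F I = 0 ↔ I = ⊤ := by
  have := hF I hI
  rw [dg, finrank_zero_iff, Ideal.Quotient.subsingleton_iff]

lemma dg_top : dg F (⊤ : Ideal R) = 0 := by
  rw [dg]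
  have : Subsingleton (R ⧸ (⊤ : Ideal R)) := Ideal.Quotient.subsingleton_iff.2 rfl
  exact finrank_zero_of_subsingleton

lemma chi_top (ψ : AddChar F ℂ) (g : R) : chi ψ g (⊤ : Ideal R) = 1 := by
  have : Subsingleton (R ⧸ (⊤ : Ideal R)) := Ideal.Quotient.subsingleton_iff.2 rfl
  rw [chi, Subsingleton.elim (Ideal.Quotient.mk _ g) 0, map_zero, AddChar.map_zero_eq_one]

variable [Fintype F]

lemma finite_ideals (hF : FinQuot F R) (t : R) (ht : ∀ n, 0 < n → t^n ≠ 1) (ht0 : t ≠ 0) (n:ℕ) :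
    {I : Ideal R | I ≠ ⊥ ∧ dg F I = n}.Finite := by
  set Q := card F^n with hQ
  set f : R := t^Q*(t^Q.factorial-1) with hf
  have hf0 : f ≠ 0 := mul_ne_zero (pow_ne_zero _ ht0) (sub_ne_zero.2 (ht _ (Nat.factorial_pos _)))
  have hfin : {I : Ideal R | I ∣ span {f}}.Finite := by
    have := UniqueFactorizationMonoid.fintypeSubtypeDvd (span {f}) (by
      rw [Ne, Ideal.zero_eq_bot, Ideal.span_singleton_eq_bot]; exact hf0)
    exact Set.finite_coe_iff.1 (Finite.of_fintype {y // y ∣ span {f}})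
  refine hfin.subset ?_
  rintro I ⟨hI, hn⟩
  rw [Set.mem_ofPred_eq, Ideal.dvd_iff_le, span_singleton_le_iff_mem]
  have := hF I hI
  have : Finite (R ⧸ I) := Module.finite_of_finite F
  have := Fintype.ofFinite (R ⧸ I)
  have hcard : card (R ⧸ I) = Q := by
    rw [Module.card_eq_pow_finrank (K := F)]; exact congrArg _ hn
  -- two of the first powers of `t` agree modulo `I`
  obtain ⟨i, j, hij, he⟩ := Fintype.exists_ne_map_eq_of_card_lt
    (fun i : Fin (Q+1) => (Ideal.Quotient.mk I t)^(i:ℕ)) (by simp [hcard])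
  rw [← eq_zero_iff_mem, hf, map_mul, map_sub, map_pow, map_pow, map_one]
  set s := Ideal.Quotient.mk I t
  wlog hlt : (i:ℕ) < j generalizing i j
  · exact this j i hij.symm he.symm (lt_of_le_of_ne (not_lt.1 hlt) fun h => hij (Fin.ext h.symm))
  have hper : ∀ c, s^((i:ℕ)+c*(j-i)) = s^(i:ℕ) := by
    intro c
    induction c with
    | zero => simp
    | succ c ih =>
      calc s^((i:ℕ)+(c+1)*(j-i)) = s^(c*((j:ℕ)-i))*s^(j:ℕ) := by
            rw [← pow_add]; grind
        _ = s^((i:ℕ)+c*(j-i)) := by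
            rw [show s^(j:ℕ) = s^(i:ℕ) from he.symm, ← pow_add, add_comm]
        _ = _ := ih
  obtain ⟨c, hc⟩ : (j:ℕ)-i ∣ Q.factorial := Nat.dvd_factorial (by omega) (by omega)
  obtain ⟨e, he'⟩ : ∃ e, Q = e+i := ⟨Q-i, by omega⟩
  have h1 : s^Q*s^Q.factorial = s^Q := by
    have e1 : s^Q = s^e*s^(i:ℕ) := by rw [← pow_add, ← he']
    rw [hc, e1, mul_assoc, ← pow_add, mul_comm _ c, hper]
  rw [mul_sub, h1, mul_one, sub_self]

end Ideals

open Real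

/-! ### The `L`-function and its power sums -/

section Newton
open Module UniqueFactorizationMonoid

variable {F R : Type} [Field F] [CommRing R] [IsDedekindDomain R] [Algebra F R]

variable (F R) in
/-- There are finitely many nonzero ideals of each degree, and nonzero ideals have finite
codimension. -/
structure FinIdeals : Prop where
  quot : FinQuot F R
  fin : ∀ n, {I : Ideal R | I ≠ ⊥ ∧ dg F I = n}.Finite

namespace FinIdeals

variable (hF : FinIdeals F R)

/-- The nonzero ideals of degree `n`. -/
noncomputable def idl (n:ℕ) : Finset (Ideal R) := (hF.fin n).toFinset

lemma mem_idl {n : ℕ} {I : Ideal R} : I ∈ hF.idl n ↔ I ≠ ⊥ ∧ dg F I = n := by simp [idl]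

/-- The coefficients of the `L`-function of the character `chi ψ g`. -/
noncomputable def A (ψ : AddChar F ℂ) (g : R) (n:ℕ) : ℂ := ∑ I ∈ hF.idl n, chi ψ g I

/-- The nonzero primes of degree at most `n`. -/
noncomputable def prs (n:ℕ) : Finset (Ideal R) := ((Icc 1 n).biUnion hF.idl).filter Prime

lemma one_le_dg (hF : FinIdeals F R) {P : Ideal R} (hP : Prime P) : 1 ≤ dg F P := by
  rw [Nat.one_le_iff_ne_zero, Ne, dg_eq_zero hF.quot hP.ne_zero]
  rintro rfl
  exact hP.not_isUnit (by rw [← Ideal.one_eq_top]; exact isUnit_one)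

lemma mem_prs {n : ℕ} {P : Ideal R} : P ∈ hF.prs n ↔ Prime P ∧ dg F P ≤ n := by
  simp only [prs, mem_filter, mem_biUnion, mem_Icc, mem_idl]
  constructor
  · rintro ⟨⟨k, ⟨h1, h2⟩, h3, rfl⟩, h4⟩
    exact ⟨h4, h2⟩
  · rintro ⟨h1, h2⟩
    exact ⟨⟨_, ⟨hF.one_le_dg h1, h2⟩, h1.ne_zero, rfl⟩, h1⟩

/-- The power sums attached to the `L`-function. -/
noncomputable def S (ψ : AddChar F ℂ) (g : R) (k:ℕ) : ℂ :=
  ∑ P ∈ (hF.prs k).filter (fun P => dg F P ∣ k), (dg F P : ℂ)*chi ψ g P^(k/dg F P)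

lemma dg_pow (hF : FinIdeals F R) {P : Ideal R} (hP : P ≠ ⊥) (j:ℕ) : dg F (P^j) = j*dg F P := by
  induction j with
  | zero => rw [pow_zero, Ideal.one_eq_top, dg_top, zero_mul]
  | succ j ih => rw [pow_succ, dg_mul hF.quot (pow_ne_zero _ hP) hP, ih]; ring

lemma chi_pow (hF : FinIdeals F R) (ψ : AddChar F ℂ) (g : R) {P : Ideal R} (hP : P ≠ ⊥) (j:ℕ) :
    chi ψ g (P^j) = chi ψ g P^j := by
  induction j with
  | zero => rw [pow_zero, Ideal.one_eq_top, chi_top, pow_zero]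
  | succ j ih => rw [pow_succ, chi_mul hF.quot ψ g (pow_ne_zero _ hP) hP, ih]; ring

lemma dg_mset (hF : FinIdeals F R) (s : Multiset (Ideal R)) (hs : ∀ P ∈ s, P ≠ ⊥) :
    dg F s.prod = (s.map (dg F)).sum := by
  induction s using Multiset.induction_on with
  | empty => simp [dg_top]
  | cons a s ih =>
    rw [Multiset.prod_cons, Multiset.map_cons, Multiset.sum_cons, dg_mul hF.quot (hs a (by simp)),
      ih fun P hP => hs P (by simp [hP])]
    exact Multiset.prod_ne_zero fun h => hs 0 (Multiset.mem_cons_of_mem h) rfl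

lemma dg_eq_sum (hF : FinIdeals F R) {I : Ideal R} (hI : I ≠ ⊥) :
    dg F I = ∑ P ∈ hF.prs (dg F I), (normalizedFactors I).count P*dg F P := by
  have h0 : (normalizedFactors I).prod = I := by
    exact Ideal.prod_normalizedFactors_eq_self hI
  have h1 : dg F I = ((normalizedFactors I).map (dg F)).sum := by
    rw [← hF.dg_mset _ fun P hP => (prime_of_normalized_factor P hP).ne_zero, h0]
  conv_lhs => rw [h1, sum_multiset_map_count]
  simp only [smul_eq_mul]
  refine sum_subset (fun P hP => ?_) fun P _ hP => ?_
  · rw [Multiset.mem_toFinset] at hP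
    refine hF.mem_prs.2 ⟨prime_of_normalized_factor P hP, ?_⟩
    rw [h1]
    exact Multiset.le_sum_of_mem (Multiset.mem_map_of_mem _ hP)
  · rw [Multiset.mem_toFinset] at hP
    rw [Multiset.count_eq_zero_of_notMem hP, zero_mul]

lemma le_count {I P : Ideal R} (hI : I ≠ ⊥) (hP : Prime P) (j:ℕ) :
    j ≤ (normalizedFactors I).count P ↔ P^j ∣ I := by
  rw [pow_dvd_iff_le_emultiplicity, emultiplicity_eq_count_normalizedFactors hP.irreducible hI,
    normalize_eq, Nat.cast_le]

lemma sum_dvd (hF : FinIdeals F R) (ψ : AddChar F ℂ) (g : R) {J : Ideal R} (hJ : J ≠ ⊥) (n:ℕ) :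
    ∑ I ∈ (hF.idl n).filter (J ∣ ·), chi ψ g I =
      if dg F J ≤ n then chi ψ g J*hF.A ψ g (n-dg F J) else 0 := by
  split_ifs with h
  · rw [A, mul_sum]
    symm
    refine sum_bij (fun I _ => J*I) ?_ ?_ ?_ ?_
    · intro I hI
      rw [mem_idl] at hI
      rw [mem_filter, mem_idl]
      refine ⟨⟨mul_ne_zero hJ hI.1, ?_⟩, dvd_mul_right _ _⟩
      rw [dg_mul hF.quot hJ hI.1, hI.2]; omega
    · intro I _ I' _ h
      exact mul_left_cancel₀ hJ h
    · intro I hI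
      rw [mem_filter, mem_idl] at hI
      obtain ⟨⟨h1, h2⟩, I', rfl⟩ := hI
      have hI' : I' ≠ ⊥ := right_ne_zero_of_mul h1
      refine ⟨I', ?_, rfl⟩
      rw [dg_mul hF.quot hJ hI'] at h2
      rw [mem_idl]
      exact ⟨hI', by omega⟩
    · intro I hI
      rw [mem_idl] at hI
      rw [chi_mul hF.quot ψ g hJ hI.1]
  · refine sum_eq_zero fun I hI => ?_
    exfalso
    rw [mem_filter, mem_idl] at hI
    obtain ⟨⟨h1, h2⟩, I', rfl⟩ := hI
    rw [dg_mul hF.quot hJ (right_ne_zero_of_mul h1)] at h2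
    omega

/-- Logarithmic derivative of the Euler product. -/
lemma newton (ψ : AddChar F ℂ) (g : R) (n:ℕ) :
    (n:ℂ)*hF.A ψ g n = ∑ k ∈ Icc 1 n, hF.S ψ g k*hF.A ψ g (n-k) := by
  have h1 : (n:ℂ)*hF.A ψ g n = ∑ P ∈ hF.prs n, ∑ j ∈ Icc 1 n,
      (dg F P : ℂ)*∑ I ∈ (hF.idl n).filter (P^j ∣ ·), chi ψ g I := by
    have : ∀ I ∈ hF.idl n, (n:ℂ)*chi ψ g I = ∑ P ∈ hF.prs n, ∑ j ∈ Icc 1 n,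
        (dg F P : ℂ)*if P^j ∣ I then chi ψ g I else 0 := by
      intro I hI
      rw [mem_idl] at hI
      have e := hF.dg_eq_sum hI.1
      rw [hI.2] at e
      conv_lhs => rw [e, Nat.cast_sum, sum_mul]
      refine sum_congr rfl fun P hP => ?_
      rw [mem_prs] at hP
      have hle : (normalizedFactors I).count P ≤ n := by
        calc _ ≤ (normalizedFactors I).count P*dg F P := Nat.le_mul_of_pos_right _ (hF.one_le_dg hP.1)
          _ ≤ n := by
            conv_rhs => rw [e]
            exact single_le_sum (f := fun P => (normalizedFactors I).count P*dg F P)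
              (fun _ _ => Nat.zero_le _) (hF.mem_prs.2 hP)
      rw [← mul_sum, ← sum_filter, sum_const]
      have : (Icc 1 n).filter (fun j => P^j ∣ I) = Icc 1 ((normalizedFactors I).count P) := by
        ext j
        rw [mem_filter, mem_Icc, mem_Icc, ← le_count hI.1 hP.1]
        omega
      rw [this, Nat.card_Icc, Nat.add_sub_cancel, nsmul_eq_mul]
      push_cast; ring
    rw [A, mul_sum, sum_congr rfl this, sum_comm]
    refine sum_congr rfl fun P _ => ?_
    rw [sum_comm]
    refine sum_congr rfl fun j _ => ?_
    rw [mul_sum, sum_filter]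
    refine sum_congr rfl fun I _ => ?_
    split_ifs <;> simp
  rw [h1]
  have h2 : ∀ k ∈ Icc 1 n, hF.S ψ g k*hF.A ψ g (n-k) = ∑ P ∈ hF.prs n,
      if dg F P ∣ k then (dg F P : ℂ)*chi ψ g P^(k/dg F P)*hF.A ψ g (n-k) else 0 := by
    intro k hk
    rw [mem_Icc] at hk
    rw [S, sum_mul, ← sum_filter]
    refine sum_congr ?_ fun _ _ => rfl
    ext P
    simp only [mem_filter, mem_prs]
    constructor
    · rintro ⟨⟨h1, h2⟩, h3⟩
      exact ⟨⟨h1, by omega⟩, h3⟩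
    · rintro ⟨⟨h1, h2⟩, h3⟩
      exact ⟨⟨h1, Nat.le_of_dvd (by omega) h3⟩, h3⟩
  rw [sum_congr rfl h2]
  conv_rhs => rw [sum_comm]
  refine sum_congr rfl fun P hP => ?_
  rw [mem_prs] at hP
  have hd := hF.one_le_dg hP.1
  rw [← sum_filter]
  have h3 : ∀ j ∈ Icc 1 n, (dg F P : ℂ)*∑ I ∈ (hF.idl n).filter (P^j ∣ ·), chi ψ g I =
      if j*dg F P ≤ n then (dg F P : ℂ)*chi ψ g P^j*hF.A ψ g (n-j*dg F P) else 0 := by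
    intro j _
    rw [hF.sum_dvd ψ g (pow_ne_zero _ hP.1.ne_zero), hF.dg_pow hP.1.ne_zero,
      hF.chi_pow ψ g hP.1.ne_zero]
    split_ifs <;> ring
  rw [sum_congr rfl h3, ← sum_filter]
  refine sum_bij (fun j _ => j*dg F P) ?_ ?_ ?_ ?_
  · intro j hj
    rw [mem_filter, mem_Icc] at hj
    rw [mem_filter, mem_Icc]
    exact ⟨⟨Nat.mul_pos hj.1.1 hd, hj.2⟩, dvd_mul_left _ _⟩
  · intro i _ j _ h
    exact Nat.eq_of_mul_eq_mul_right hd h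
  · intro k hk
    rw [mem_filter, mem_Icc] at hk
    obtain ⟨⟨h1, h2⟩, j, rfl⟩ := hk
    refine ⟨j, ?_, mul_comm _ _⟩
    rw [mem_filter, mem_Icc]
    refine ⟨⟨Nat.pos_of_ne_zero ?_, ?_⟩, by rw [mul_comm]; exact h2⟩
    · rintro rfl; simp at h1
    · exact le_trans (Nat.le_mul_of_pos_left _ hd) h2
  · intro j _
    rw [Nat.mul_div_cancel _ hd]

/-- The power sums `S` count points over the extension of degree `k`. -/
lemma S_eq_sum_points [Infinite R] (ψ : AddChar F ℂ) (g : R) (K : Type) [Field K] [Algebra F K]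
    [Finite K] [Fintype (R →ₐ[F] K)] :
    hF.S ψ g (finrank F K) = ∑ φ : R →ₐ[F] K, ψ (trace F K (φ g)) := by
  have hFfin : Finite F := Finite.of_injective _ (algebraMap F K).injective
  have hKfin : Module.Finite F K := Module.finite_of_finrank_pos Module.finrank_pos
  have hker : ∀ φ : R →ₐ[F] K, Prime (RingHom.ker φ) := by
    intro φ
    have h0 : RingHom.ker φ ≠ ⊥ := fun h =>
      not_injective_infinite_finite φ ((RingHom.injective_iff_ker_eq_bot φ).2 h)
    exact (Ideal.prime_iff_isPrime h0).2 (RingHom.ker_isPrime φ)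
  have key : ∀ φ : R →ₐ[F] K, dg F (RingHom.ker φ) ∣ finrank F K ∧ ψ (trace F K (φ g)) =
        chi ψ g (RingHom.ker φ)^(finrank F K/dg F (RingHom.ker φ)) := by
    intro φ
    have hp := hker φ
    have hpr : (RingHom.ker φ).IsPrime := RingHom.ker_isPrime φ
    have hmax : (RingHom.ker φ).IsMaximal := hpr.isMaximal hp.ne_zero
    let fl : Field (R ⧸ RingHom.ker φ) := Ideal.Quotient.field _
    let ψ' : (R ⧸ RingHom.ker φ) →ₐ[F] K := Ideal.kerLiftAlg φ
    let al : Algebra (R ⧸ RingHom.ker φ) K := ψ'.toRingHom.toAlgebra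
    have st : IsScalarTower F (R ⧸ RingHom.ker φ) K := IsScalarTower.of_algebraMap_eq' ψ'.comp_algebraMap.symm
    have e := Module.finrank_mul_finrank F (R ⧸ RingHom.ker φ) K
    have hfp : 0 < dg F (RingHom.ker φ) := hF.one_le_dg hp
    refine ⟨⟨_, e.symm⟩, ?_⟩
    have e2 : finrank F K/dg F (RingHom.ker φ) = finrank (R ⧸ RingHom.ker φ) K := by
      rw [← e]; exact Nat.mul_div_cancel_left _ hfp
    have hf := hF.quot _ hp.ne_zero
    have : φ g = algebraMap (R ⧸ RingHom.ker φ) K (Ideal.Quotient.mk _ g) := rfl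
    rw [e2, this, ← Algebra.trace_trace (S := R ⧸ RingHom.ker φ), Algebra.trace_algebraMap, map_nsmul,
      AddChar.map_nsmul_eq_pow]
    rfl
  have hmaps : ∀ φ ∈ (univ : Finset (R →ₐ[F] K)), RingHom.ker φ ∈
      (hF.prs (finrank F K)).filter (fun P => dg F P ∣ finrank F K) := by
    intro φ _
    rw [mem_filter, mem_prs]
    exact ⟨⟨hker φ, Nat.le_of_dvd finrank_pos (key φ).1⟩, (key φ).1⟩
  rw [← sum_fiberwise_of_maps_to hmaps, S]
  refine sum_congr rfl fun P hP => ?_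
  rw [mem_filter, mem_prs] at hP
  have h1 : ∀ φ ∈ (univ : Finset (R →ₐ[F] K)).filter (fun φ => RingHom.ker φ = P),
      ψ (trace F K (φ g)) = chi ψ g P^(finrank F K/dg F P) := by grind
  rw [sum_congr rfl h1, sum_const, nsmul_eq_mul]
  congr 2
  have hpr : P.IsPrime := Ideal.isPrime_of_prime hP.1.1
  have hmax : P.IsMaximal := hpr.isMaximal hP.1.1.ne_zero
  let fl : Field (R ⧸ P) := Ideal.Quotient.field _
  have hc := FiniteField.natCard_algHom_of_finrank_dvd (F := F) (K := R ⧸ P) (L := K) hP.2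
  rw [show dg F P = finrank F (R ⧸ P) from rfl, ← hc, ← Fintype.card_coe, ← Nat.card_eq_fintype_card]
  refine Nat.card_congr ⟨fun f => ⟨f.comp (Ideal.Quotient.mkₐ F P), ?_⟩, fun φ =>
    Ideal.Quotient.liftₐ P φ.1 fun a ha => ?_, fun f => ?_, fun φ => ?_⟩
  · rw [mem_filter]
    refine ⟨mem_univ _, ?_⟩
    ext r
    rw [RingHom.mem_ker]
    show f (Ideal.Quotient.mk P r) = 0 ↔ _
    rw [map_eq_zero_iff f f.toRingHom.injective, eq_zero_iff_mem]
  · have := (mem_filter.1 φ.2).2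
    rw [← this] at ha
    exact ha
  · refine AlgHom.ext fun z => ?_
    obtain ⟨r, rfl⟩ := mk_surjective z
    rfl
  · refine Subtype.ext (AlgHom.ext fun r => ?_)
    rfl

end FinIdeals

end Newton

/-! ### Rationality of the `L`-function -/

section Double
open Polynomial Module

variable {d k : ℕ} [NeZero d]
variable {F R E : Type} [Field F] [CommRing R] [Algebra F[X] R]
    [Algebra F R] [IsScalarTower F F[X] R] [CommRing E] [Algebra F E]

namespace Curve

variable (M : Curve d k F R E) [IsDedekindDomain R] [Nontrivial E] [Fintype F]

lemma lc_x : M.lc 1 M.x = 1 := by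
  have : M.x = M.pm X 0 := by simp [pm, M.D.basis_apply, x, Algebra.smul_def]
  rw [this, M.lc_pm (by simp [wt])]
  simp [wt, M.DE.basis_apply]

lemma x_pow (n:ℕ) : M.x^n ∈ M.V n ∧ M.lc n (M.x^n) = 1 := by
  induction n with
  | zero => rw [pow_zero]; exact ⟨M.one_mem, M.lc_one⟩
  | succ n ih =>
    rw [pow_succ]
    refine ⟨M.mul_mem ih.1 M.x_mem, ?_⟩
    rw [M.lc_mul ih.1 M.x_mem, ih.2, lc_x, one_mul]

lemma finIdeals (M : Curve d k F R E) : FinIdeals F R := by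
  have hq : FinQuot F R := fun I hI => M.finite_quot hI
  refine ⟨hq, finite_ideals hq M.x (fun n hn h => ?_) M.x_ne_zero⟩
  have h1 := (M.x_pow n).2
  rw [h, M.lc_eq_zero hn M.one_mem] at h1
  exact zero_ne_one h1

lemma finite_U (K:ℕ) : {u | u ∈ M.V K ∧ IsUnit (M.lc K u)}.Finite := by
  have : Finite (M.V K) := Module.finite_of_finite F
  exact (Set.toFinite (M.V K : Set R)).subset fun u hu => hu.1

/-- Functions of exact degree `K` whose divisor has no part at infinity. -/
noncomputable def U (K:ℕ) : Finset R := (M.finite_U K).toFinset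

lemma mem_U {K : ℕ} {u : R} : u ∈ M.U K ↔ u ∈ M.V K ∧ IsUnit (M.lc K u) := by simp [U]

lemma exists_lc {K : ℕ} (hK : M.kap ≤ K+1) {I : Ideal R}
    (h : M.V K ⊔ I.restrictScalars F = ⊤) (e : E) :
    ∃ v ∈ M.V (K+1), v ∈ I ∧ M.lc (K+1) v = e := by
  obtain ⟨f, hf, hfe⟩ := M.lc_surj (l := K+1) hK e
  obtain ⟨a, ha, b, hb, hab⟩ := Submodule.mem_sup.1 (h ▸ Submodule.mem_top :
    f ∈ M.V K ⊔ I.restrictScalars F)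
  have ha' := M.V_mono (Nat.le_succ K) ha
  have : b = f-a := by rw [← hab]; ring
  refine ⟨b, ?_, hb, ?_⟩
  · rw [this]; exact sub_mem hf ha'
  · rw [this, map_sub, hfe, M.lc_eq_zero (Nat.lt_succ_self K) ha, sub_zero]

lemma card_U {K : ℕ} (hK : M.kap ≤ K+1) {I : Ideal R} (h : M.V K ⊔ I.restrictScalars F = ⊤) :
    ((M.U (K+1)).filter (· ∈ I)).card*card F^dg F I = Nat.card Eˣ*card F^finrank F (M.V K) := by
  have h1 := M.finrank_inf h
  have h2 : Nat.card ↥(M.V K ⊓ I.restrictScalars F) =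
      card F^finrank F ↥(M.V K ⊓ I.restrictScalars F) := by
    rw [Module.natCard_eq_pow_finrank (K := F), Nat.card_eq_fintype_card]
  rw [← h1, pow_add, ← mul_assoc, ← h2, ← Nat.card_prod]
  refine congrArg₂ _ ?_ rfl
  rw [← Fintype.card_coe, ← Nat.card_eq_fintype_card]
  symm
  choose σ hσ1 hσ2 hσ3 using fun e : Eˣ => M.exists_lc hK h (e : E)
  have hz : ∀ w ∈ M.V K ⊓ I.restrictScalars F, M.lc (K+1) w = 0 := fun w hw =>
    M.lc_eq_zero (Nat.lt_succ_self K) hw.1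
  refine Nat.card_congr (Equiv.ofBijective (fun p : Eˣ × ↥(M.V K ⊓ I.restrictScalars F) =>
    (⟨σ p.1+p.2.1, ?_⟩ : {u // u ∈ (M.U (K+1)).filter (· ∈ I)})) ⟨?_, ?_⟩)
  · rw [mem_filter, mem_U]
    refine ⟨⟨add_mem (hσ1 _) (M.V_mono (Nat.le_succ K) p.2.2.1), ?_⟩, I.add_mem (hσ2 _) p.2.2.2⟩
    rw [map_add, hσ3, hz _ p.2.2, add_zero]
    exact p.1.isUnit
  · rintro ⟨e, w⟩ ⟨e', w'⟩ hh
    have hh' : σ e+w.1 = σ e'+w'.1 := congrArg Subtype.val hh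
    have h3 := congrArg (M.lc (K+1)) hh'
    rw [map_add, map_add, hσ3, hσ3, hz _ w.2, hz _ w'.2, add_zero, add_zero] at h3
    have h4 : e = e' := Units.ext h3
    subst h4
    have h5 : w = w' := Subtype.ext (add_left_cancel hh')
    rw [h5]
  · rintro ⟨u, hu⟩
    rw [mem_filter, mem_U] at hu
    obtain ⟨⟨hu1, ⟨e, he⟩⟩, hu2⟩ := hu
    refine ⟨⟨e, ⟨u-σ e, ?_, ?_⟩⟩, Subtype.ext (by simp)⟩
    · refine M.mem_of_lc_eq_zero (sub_mem hu1 (hσ1 e)) ?_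
      rw [map_sub, hσ3, he, sub_self]
    · exact I.sub_mem hu2 (hσ2 e)

/-- Passing to complementary divisors: `I J = (u)` exchanges the ideals of degrees `n` and `n'`
containing `u`. -/
lemma swap {K n n' : ℕ} (hn : n+n' = d^k*K) {u : R} (hu : u ∈ M.U K) (f f' : Ideal R → ℂ)
    (hf : ∀ I J : Ideal R, I ≠ ⊥ → J ≠ ⊥ → I*J = span {u} → f I = f' J) :
    ∑ I ∈ (M.finIdeals.idl n).filter (u ∈ ·), f I =
      ∑ J ∈ (M.finIdeals.idl n').filter (u ∈ ·), f' J := by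
  rw [mem_U] at hu
  have hu0 : span {u} ≠ ⊥ := by
    rw [Ne, Ideal.span_singleton_eq_bot]; exact M.ne_zero_of_lc hu.2
  have hdg := M.finrank_quot_span hu.1 hu.2
  have hex : ∀ I : Ideal R, u ∈ I → ∃ J, I*J = span {u} := by
    intro I hI
    obtain ⟨J, hJ⟩ := Ideal.dvd_iff_le.2 ((span_singleton_le_iff_mem I).2 hI)
    exact ⟨J, hJ.symm⟩
  have hJu : ∀ I J : Ideal R, I*J = span {u} → u ∈ J := fun I J h => by
    have h' : u ∈ I*J := h ▸ mem_span_singleton_self u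
    rw [mul_comm] at h'
    exact Ideal.mul_le_left h'
  have hne : ∀ I J : Ideal R, I*J = span {u} → I ≠ ⊥ ∧ J ≠ ⊥ ∧ dg F I+dg F J = n+n' := by
    intro I J h
    have h1 : I ≠ ⊥ := fun hh => hu0 (by rw [← h, hh, Ideal.bot_mul])
    have h2 : J ≠ ⊥ := fun hh => hu0 (by rw [← h, hh, Ideal.mul_bot])
    refine ⟨h1, h2, ?_⟩
    rw [← dg_mul M.finIdeals.quot h1 h2, h, dg, hdg, hn]
  refine sum_bij' (fun I _ => if h : u ∈ I then (hex I h).choose else I)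
    (fun I _ => if h : u ∈ I then (hex I h).choose else I) ?_ ?_ ?_ ?_ ?_
  · intro I hI
    rw [mem_filter, FinIdeals.mem_idl] at hI
    rw [dif_pos hI.2]
    have h := (hex I hI.2).choose_spec
    rw [mem_filter, FinIdeals.mem_idl]
    have := hne _ _ h
    exact ⟨⟨this.2.1, by omega⟩, hJu _ _ h⟩
  · intro I hI
    rw [mem_filter, FinIdeals.mem_idl] at hI
    rw [dif_pos hI.2]
    have h := (hex I hI.2).choose_spec
    rw [mem_filter, FinIdeals.mem_idl]
    have := hne _ _ h
    exact ⟨⟨this.2.1, by omega⟩, hJu _ _ h⟩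
  · intro I hI
    rw [mem_filter, FinIdeals.mem_idl] at hI
    have h := (hex I hI.2).choose_spec
    have h' := hJu _ _ h
    simp only [dif_pos hI.2, dif_pos h']
    have h2 := (hex _ h').choose_spec
    rw [mul_comm] at h
    exact mul_left_cancel₀ (hne _ _ h).1 (h2.trans h.symm)
  · intro I hI
    rw [mem_filter, FinIdeals.mem_idl] at hI
    have h := (hex I hI.2).choose_spec
    have h' := hJu _ _ h
    simp only [dif_pos hI.2, dif_pos h']
    have h2 := (hex _ h').choose_spec
    rw [mul_comm] at h
    exact mul_left_cancel₀ (hne _ _ h).1 (h2.trans h.symm)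
  · intro I hI
    rw [mem_filter, FinIdeals.mem_idl] at hI
    simp only [dif_pos hI.2]
    have h := (hex I hI.2).choose_spec
    exact hf _ _ (hne _ _ h).1 (hne _ _ h).2.1 h

/-- Sum over pairs of an ideal of degree `n` and a function of degree `K + 1` in it. -/
lemma sum_pairs {K n : ℕ} (hK : n+d^k*(2*M.kap+1) ≤ d^k*K) (w : Ideal R → ℂ) :
    (∑ u ∈ M.U (K+1), ∑ I ∈ (M.finIdeals.idl n).filter (u ∈ ·), w I)*(card F : ℂ)^n =
      (Nat.card Eˣ*(card F : ℂ)^finrank F (M.V K))*∑ I ∈ M.finIdeals.idl n, w I := by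
  have h0 : 2*M.kap+1 ≤ K :=
    Nat.le_of_mul_le_mul_left (le_trans (Nat.le_add_left _ _) hK) (pow_pos (NeZero.pos d) k)
  have h1 : ∑ u ∈ M.U (K+1), ∑ I ∈ (M.finIdeals.idl n).filter (u ∈ ·), w I =
      ∑ I ∈ M.finIdeals.idl n, (((M.U (K+1)).filter (· ∈ I)).card : ℂ)*w I := by
    simp_rw [sum_filter]
    rw [sum_comm]
    refine sum_congr rfl fun I _ => ?_
    rw [← sum_filter, sum_const, nsmul_eq_mul]
  rw [h1, sum_mul, mul_sum]
  refine sum_congr rfl fun I hI => ?_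
  rw [FinIdeals.mem_idl] at hI
  have h2 := M.card_U (K := K) (by omega) (M.sup_eq_top' hI.1 (l := K) (by
    rw [show finrank F (R ⧸ I) = n from hI.2]; exact hK))
  rw [hI.2] at h2
  have h3 : (((M.U (K+1)).filter (· ∈ I)).card : ℂ)*(card F : ℂ)^n =
      Nat.card Eˣ*(card F : ℂ)^finrank F (M.V K) := mod_cast h2
  rw [← h3]; ring

lemma card_units_ne_zero (M : Curve d k F R E) (n:ℕ) : (Nat.card Eˣ*(card F : ℂ)^n) ≠ 0 := by
  have hEfin : Module.Finite F E := Module.Finite.of_basis M.DE.basis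
  have : Finite E := Module.finite_of_finite F
  refine mul_ne_zero ?_ (pow_ne_zero _ ?_)
  · exact_mod_cast Nat.card_pos.ne'
  · exact_mod_cast Fintype.card_ne_zero

/-- If the trace at infinity of the leading part of `g` does not vanish, the `L`-function is a
polynomial. -/
theorem A_eq_zero (ψ : AddChar F ℂ) (hψ : ψ ≠ 1) {g : R} (hg : g ∈ M.V 1)
    (hγ : trace F E (M.lc 1 g) ≠ 0) {n : ℕ} (hn : d^k*(2*M.kap+3) ≤ n) :
    M.finIdeals.A ψ g n = 0 := by
  set κ := M.kap with hκ
  have hr : 0 < d^k := pow_pos (NeZero.pos d) k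
  obtain ⟨c0, hc0⟩ : ∃ c0, ψ c0 ≠ 1 := by
    by_contra hcon
    push Not at hcon
    exact hψ (by ext z; simp [hcon z])
  set c := -c0/trace F E (M.lc 1 g) with hc
  have hc' : c*trace F E (M.lc 1 g) = -c0 := div_mul_cancel₀ _ hγ
  -- take `K + 2` so large that ideals of degree `n` impose independent conditions
  set K := n+2*κ with hK
  have hle : n ≤ d^k*n := Nat.le_mul_of_pos_left _ hr
  set n' := d^k*(K+1+1)-n with hn'
  have hsum : n+n' = d^k*(K+1+1) := by
    have : d^k*(K+1+1) = d^k*n+d^k*(2*κ+2) := by rw [hK]; ring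
    omega
  have h1 := M.sum_pairs (K := K+1) (n := n) (by
    rw [← hκ, show d^k*(K+1) = d^k*n+d^k*(2*κ+1) by rw [hK]; ring]; omega) (chi ψ g)
  suffices h0 : ∑ u ∈ M.U (K+1+1), ∑ I ∈ (M.finIdeals.idl n).filter (u ∈ ·), chi ψ g I = 0 by
    rw [h0, zero_mul] at h1
    exact (mul_eq_zero.1 h1.symm).resolve_left (M.card_units_ne_zero _)
  have h2 : ∀ u ∈ M.U (K+1+1), ∑ I ∈ (M.finIdeals.idl n).filter (u ∈ ·), chi ψ g I =
      ∑ J ∈ (M.finIdeals.idl n').filter (u ∈ ·), chi ψ g (span {u})*(chi ψ g J)⁻¹ := by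
    intro u hu
    refine M.swap hsum hu _ _ fun I J hI hJ e => ?_
    rw [← e, chi_mul M.finIdeals.quot ψ g hI hJ, mul_assoc, mul_inv_cancel₀ (chi_ne_zero ψ g J),
      mul_one]
  rw [sum_congr rfl h2]
  simp_rw [sum_filter]
  rw [sum_comm]
  refine sum_eq_zero fun J hJ => ?_
  rw [FinIdeals.mem_idl] at hJ
  rw [← sum_filter, ← sum_mul]
  refine mul_eq_zero_of_left ?_ _
  -- translation by functions of degree `K + 1` in `J` multiplies the character by `ψ c0`
  have hsup := M.sup_eq_top' hJ.1 (l := K) (by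
    rw [show finrank F (R ⧸ J) = n' from hJ.2, ← hκ]
    have e1 : d^k*(K+1+1)+d^k*(2*κ+1) = d^k*K+d^k*(2*κ+3) := by ring
    omega)
  choose v hv1 hv2 hv3 using M.exists_lc (K := K) (by omega) hsup
  have hlcv : ∀ e, M.lc (K+1+1) (v e) = 0 := fun e =>
    M.lc_eq_zero (Nat.lt_succ_self _) (hv1 e)
  have hchi : ∀ u ∈ M.U (K+1+1), chi ψ g (span {u+v (c • M.lc (K+1+1) u)}) =
      ψ c0*chi ψ g (span {u}) := by
    intro u hu
    rw [mem_U] at hu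
    have := M.trace_shift hu.1 hu.2 (hv1 _) (hv3 (c • M.lc (K+1+1) u)) hg
    rw [hc'] at this
    rw [chi, chi, this, ← AddChar.map_add_eq_mul]
    congr 1; ring
  set T := ∑ u ∈ (M.U (K+1+1)).filter (· ∈ J), chi ψ g (span {u}) with hT
  have h3 : T = ψ c0*T := by
    conv_rhs => rw [hT, mul_sum]
    rw [hT]
    symm
    refine sum_bij' (fun u _ => u+v (c • M.lc (K+1+1) u))
      (fun u _ => u-v (c • M.lc (K+1+1) u)) ?_ ?_ ?_ ?_ ?_
    · intro u hu
      rw [mem_filter, mem_U] at hu ⊢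
      refine ⟨⟨add_mem hu.1.1 (M.V_mono (Nat.le_succ _) (hv1 _)), ?_⟩, J.add_mem hu.2 (hv2 _)⟩
      rw [map_add, hlcv, add_zero]; exact hu.1.2
    · intro u hu
      rw [mem_filter, mem_U] at hu ⊢
      refine ⟨⟨sub_mem hu.1.1 (M.V_mono (Nat.le_succ _) (hv1 _)), ?_⟩, J.sub_mem hu.2 (hv2 _)⟩
      rw [map_sub, hlcv, sub_zero]; exact hu.1.2
    · intro u hu
      simp only [map_add, hlcv, add_zero, add_sub_cancel_right]
    · intro u hu
      simp only [map_sub, hlcv, sub_zero, sub_add_cancel]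
    · intro u hu
      rw [mem_filter] at hu
      rw [hchi u hu.1]
  have h4 : (1-ψ c0)*T = 0 := by rw [sub_mul, one_mul, ← h3, sub_self]
  exact (mul_eq_zero.1 h4).resolve_left (sub_ne_zero.2 (Ne.symm hc0))

/-- A weak functional equation, from passing to complementary divisors. -/
lemma A_symm (ψ : AddChar F ℂ) {K n n' : ℕ} (hsum : n+n' = d^k*(K+1))
    (hn : n+d^k*(2*M.kap+1) ≤ d^k*K)
    (hn' : n'+d^k*(2*M.kap+1) ≤ d^k*K) :
    M.finIdeals.A ψ 0 n*(card F : ℂ)^n' = M.finIdeals.A ψ 0 n'*(card F : ℂ)^n := by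
  have h1 := M.sum_pairs hn (chi ψ 0)
  have h2 := M.sum_pairs hn' (chi ψ 0)
  have h3 : ∑ u ∈ M.U (K+1), ∑ I ∈ (M.finIdeals.idl n).filter (u ∈ ·), chi ψ 0 I =
      ∑ u ∈ M.U (K+1), ∑ I ∈ (M.finIdeals.idl n').filter (u ∈ ·), chi ψ 0 I := by
    refine sum_congr rfl fun u hu => M.swap hsum hu _ _ fun I J _ _ _ => ?_
    simp [chi]
  rw [h3] at h1
  refine mul_left_cancel₀ (M.card_units_ne_zero (finrank F (M.V K))) ?_
  rw [FinIdeals.A, FinIdeals.A, ← mul_assoc, ← h1, ← mul_assoc, ← h2]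
  ring

/-- For the trivial character, the coefficients are eventually geometric along steps of `d ^ k`. -/
theorem A_add (ψ : AddChar F ℂ) {n : ℕ} (hn : d^k*(2*M.kap+2) ≤ n) :
    M.finIdeals.A ψ 0 (n+d^k) = (card F : ℂ)^(d^k)*M.finIdeals.A ψ 0 n := by
  set κ := M.kap with hκ
  have hr : 0 < d^k := pow_pos (NeZero.pos d) k
  have hle : n ≤ d^k*n := Nat.le_mul_of_pos_left _ hr
  set K := n+2*κ+1 with hK
  have e1 : d^k*(K+1) = d^k*n+d^k*(2*κ+2) := by rw [hK]; ring
  have e2 : d^k*K = d^k*n+d^k*(2*κ+1) := by rw [hK]; ring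
  have e3 : d^k*(K+1+1) = d^k*(K+1)+d^k := by ring
  have e4 : d^k*(K+1) = d^k*K+d^k := by ring
  have e5 : d^k*(2*κ+2) = d^k*(2*κ+1)+d^k := by ring
  set n' := d^k*(K+1)-n with hn'
  have h1 := M.A_symm ψ (K := K) (n := n) (n' := n') (by omega) (by rw [← hκ]; omega)
    (by rw [← hκ]; omega)
  have h2 := M.A_symm ψ (K := K+1) (n := n+d^k) (n' := n') (by omega)
    (by rw [← hκ]; omega) (by rw [← hκ]; omega)
  have hq : (card F : ℂ)^n' ≠ 0 := pow_ne_zero _ (mod_cast Fintype.card_ne_zero)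
  refine mul_right_cancel₀ hq ?_
  rw [h2, mul_assoc, h1, pow_add]; ring

lemma A_zero (ψ : AddChar F ℂ) (g : R) : M.finIdeals.A ψ g 0 = 1 := by
  have : M.finIdeals.idl 0 = {⊤} := by
    ext I
    rw [FinIdeals.mem_idl, mem_singleton]
    constructor
    · rintro ⟨h1, h2⟩; exact (dg_eq_zero M.finIdeals.quot h1).1 h2
    · rintro rfl; exact ⟨top_ne_bot, dg_top⟩
  rw [FinIdeals.A, this, sum_singleton, chi_top]

/-! ### The uniform Weil bound -/

/-- Any exponential bound for the character sums over all extensions is automatically uniform. -/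
theorem weil_char (ψ : AddChar F ℂ) (hψ : ψ ≠ 1) {g : R} (hg : g ∈ M.V 1)
    (hγ : trace F E (M.lc 1 g) ≠ 0) (C T : ℝ) (hT : 0 < T)
    (hb : ∀ n, 1 ≤ n → ‖M.finIdeals.S ψ g n‖ ≤ C*T^n) :
    ‖M.finIdeals.S ψ g 1‖ ≤ (d^k*(2*M.kap+3) : ℕ)*T := by
  set N := d^k*(2*M.kap+3) with hN
  set A := M.finIdeals.A ψ g with hA
  let P : ℂ[X] := ∑ n ∈ range N, Polynomial.C (A n)*X^n
  have hcoeff : ∀ n, P.coeff n = A n := by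
    intro n
    simp only [P, finsetSum_coeff, coeff_C_mul, coeff_X_pow]
    by_cases h : n < N
    · rw [sum_eq_single n] <;> simp +contextual [h, eq_comm]
    · rw [hA, M.A_eq_zero ψ hψ hg hγ (not_lt.1 h)]
      refine sum_eq_zero fun j hj => ?_
      rw [if_neg (by rw [mem_range] at hj; omega), mul_zero]
  have hdeg : P.natDegree ≤ N := by
    refine natDegree_sum_le_of_forall_le _ _ fun n hn => ?_
    exact (natDegree_C_mul_X_pow_le _ _).trans (mem_range.1 hn).le
  obtain ⟨H, W, hH, hW, hS⟩ := newton_powerSums A (M.finIdeals.S ψ g) P 1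
    (by rw [hcoeff]; exact M.A_zero ψ g) (by simp) (by
      rw [Polynomial.coe_one, mul_one]
      ext n
      rw [PowerSeries.coeff_mk, Polynomial.coeff_coe, hcoeff]) (M.finIdeals.newton ψ g)
  have hH0 : H = 0 := by
    rw [natDegree_one] at hH
    exact Multiset.card_eq_zero.1 (by omega)
  subst hH0
  have h := powerSum_diff_bound 0 W T C hT (fun n hn => by rw [← hS n hn]; exact hb n hn)
  have h1 := hS 1 le_rfl
  simp only [pow_one, Multiset.map_id'] at h1
  rw [h1]
  refine h.trans (mul_le_mul_of_nonneg_right ?_ hT.le)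
  simp only [Multiset.card_zero, zero_add]
  exact_mod_cast hW.trans hdeg

/-- Any exponential bound for the error in the point counts over all extensions is automatically
uniform. -/
theorem weil_count (ψ : AddChar F ℂ) (C T : ℝ) (hT : 0 < T)
    (hb : ∀ n, 1 ≤ n → ‖M.finIdeals.S ψ 0 n-(card F : ℂ)^n‖ ≤ C*T^n) :
    ‖M.finIdeals.S ψ 0 1-card F‖ ≤ (d^k*(2*M.kap+4)+1 : ℕ)*T := by
  set r := d^k with hr
  set N := r*(2*M.kap+2)+r with hN
  have hr0 : 0 < r := pow_pos (NeZero.pos d) k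
  set q : ℂ := (card F : ℂ) with hq
  set A := M.finIdeals.A ψ (0 : R) with hA
  let Q : ℂ[X] := 1-Polynomial.C (q^r)*X^r
  let B : ℕ → ℂ := fun n => A n-if r ≤ n then q^r*A (n-r) else 0
  have hB : ∀ n, N ≤ n → B n = 0 := by
    intro n hn
    simp only [B]
    rw [if_pos (by omega), sub_eq_zero]
    have := M.A_add ψ (n := n-r) (by rw [← hr]; omega)
    rw [Nat.sub_add_cancel (by omega)] at this
    exact this
  let P : ℂ[X] := ∑ n ∈ range N, Polynomial.C (B n)*X^n
  have hcoeff : ∀ n, P.coeff n = B n := by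
    intro n
    simp only [P, finsetSum_coeff, coeff_C_mul, coeff_X_pow]
    by_cases h : n < N
    · rw [sum_eq_single n] <;> simp +contextual [h, eq_comm]
    · rw [hB n (not_lt.1 h)]
      refine sum_eq_zero fun j hj => ?_
      rw [if_neg (by rw [mem_range] at hj; omega), mul_zero]
  have hdeg : P.natDegree ≤ N := by
    refine natDegree_sum_le_of_forall_le _ _ fun n hn => ?_
    exact (natDegree_C_mul_X_pow_le _ _).trans (mem_range.1 hn).le
  have hQdeg : Q.natDegree ≤ r := by
    refine (natDegree_sub_le _ _).trans ?_
    rw [natDegree_one]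
    exact max_le (by omega) (natDegree_C_mul_X_pow_le _ _)
  obtain ⟨H, W, hH, hW, hS⟩ := newton_powerSums A (M.finIdeals.S ψ 0) P Q (by
      rw [hcoeff]
      simp only [B]
      rw [if_neg (by omega), sub_zero]
      exact M.A_zero ψ 0) (by simp [Q, coeff_X_pow, hr0.ne]) (by
      ext n
      simp only [Q, Polynomial.coe_sub, Polynomial.coe_one, Polynomial.coe_mul, Polynomial.coe_C,
        Polynomial.coe_pow, Polynomial.coe_X, mul_sub, mul_one, map_sub]
      rw [PowerSeries.coeff_mk, Polynomial.coeff_coe, hcoeff, mul_left_comm, PowerSeries.coeff_C_mul,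
        PowerSeries.coeff_mul_X_pow']
      simp only [B, PowerSeries.coeff_mk]
      split_ifs <;> simp) (M.finIdeals.newton ψ 0)
  have h := powerSum_diff_bound H (q ::ₘ W) T C hT (fun n hn => by
    rw [Multiset.map_cons, Multiset.sum_cons, add_comm, ← sub_sub, ← hS n hn]; exact hb n hn)
  have h1 := hS 1 le_rfl
  simp only [pow_one, Multiset.map_id'] at h1
  rw [h1, sub_sub, add_comm W.sum, ← Multiset.sum_cons]
  refine h.trans (mul_le_mul_of_nonneg_right ?_ hT.le)
  rw [Multiset.card_cons]
  have : H.card+(W.card+1) ≤ r*(2*M.kap+4)+1 := by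
    have : r*(2*M.kap+4) = r*(2*M.kap+2)+r+r := by ring
    omega
  exact_mod_cast this

end Curve
end Double

/-! ### Stepanov's method -/

section Stepanov
open Module

variable {F A : Type} [Field F] [CommRing A] [IsDomain A] [Algebra F A]

/-- A filtration of an algebra by finite-dimensional spaces of linearly growing dimension. -/
structure Filt (F A : Type) [Field F] [CommRing A] [Algebra F A] (r c : ℕ) where
  V : ℕ → Submodule F A
  fin : ∀ l, Module.Finite F (V l)
  mono : Monotone V
  mul : ∀ {l m : ℕ} {f g : A}, f ∈ V l → g ∈ V m → f*g ∈ V (l+m)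
  one : (1 : A) ∈ V 0
  exh : ∀ f, ∃ l, f ∈ V l
  low : ∀ l, r*l ≤ finrank F (V l)+c
  upp : ∀ l, finrank F (V l) ≤ r*l+c

namespace Filt

variable {r c : ℕ} (𝓕 : Filt F A r c)

lemma pow {l : ℕ} {f : A} (hf : f ∈ 𝓕.V l) (n:ℕ) : f^n ∈ 𝓕.V (n*l) := by
  induction n with
  | zero => rw [pow_zero, zero_mul]; exact 𝓕.one
  | succ n ih => rw [pow_succ, Nat.add_mul, one_mul]; exact 𝓕.mul ih hf

/-- A quotient space killing all multiples of a function of degree `l` has bounded dimension. -/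
lemma finrank_le {W : Type} [AddCommGroup W] [Module F W] [Module.Finite F W] (T : A →ₗ[F] W)
    (hT : Surjective T) {l : ℕ} {f : A} (hf : f ∈ 𝓕.V l) (hf0 : f ≠ 0)
    (hTf : ∀ a, T (f*a) = 0) : finrank F W ≤ r*l+2*c := by
  let b := Module.finBasis F W
  choose a ha using fun i => hT (b i)
  choose L hL using fun i => 𝓕.exh (a i)
  set m := univ.sup L with hm
  have := 𝓕.fin
  let T' : 𝓕.V (l+m) →ₗ[F] W := T.comp (𝓕.V (l+m)).subtype
  have hT' : LinearMap.range T' = ⊤ := by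
    rw [eq_top_iff, ← b.span_eq, Submodule.span_le]
    rintro _ ⟨i, rfl⟩
    exact ⟨⟨a i, 𝓕.mono (by have := le_sup (f := L) (mem_univ i); omega) (hL i)⟩, ha i⟩
  have h1 := LinearMap.finrank_range_add_finrank_ker T'
  rw [hT', finrank_top] at h1
  let j : 𝓕.V m →ₗ[F] LinearMap.ker T' :=
    LinearMap.codRestrict _ (LinearMap.codRestrict _ ((mulLeft F f).comp (𝓕.V m).subtype)
      (fun w => 𝓕.mul hf w.2)) (fun w => hTf w.1)
  have hj : Injective j := by
    intro w w' h
    have : f*w.1 = f*w'.1 := congrArg (fun z => z.1.1) h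
    exact Subtype.ext (mul_left_cancel₀ hf0 this)
  have h2 := LinearMap.finrank_le_finrank_of_injective hj
  have h3 := 𝓕.low m
  have h4 := 𝓕.upp (l+m)
  rw [mul_add] at h4
  omega

/-- A nonzero function of degree `l` has `O(l)` rational zeros. -/
lemma card_points_le (s : Finset (A →ₐ[F] F)) {l : ℕ} {f : A} (hf : f ∈ 𝓕.V l) (hf0 : f ≠ 0)
    (hs : ∀ φ ∈ s, φ f = 0) : s.card ≤ r*l+2*c := by
  let T : A →ₗ[F] (s → F) := LinearMap.pi fun φ => φ.1.toLinearMap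
  have hT : Surjective T := by
    have hsep : ∀ φ φ' : A →ₐ[F] F, φ ≠ φ' → ∃ a, φ a = 1 ∧ φ' a = 0 := by
      intro φ φ' h
      obtain ⟨b, hb⟩ : ∃ b, φ b ≠ φ' b := by
        by_contra hcon
        push Not at hcon
        exact h (AlgHom.ext hcon)
      refine ⟨(φ b-φ' b)⁻¹ • (b-algebraMap F A (φ' b)), ?_, ?_⟩
      · rw [map_smul, map_sub, AlgHom.commutes, smul_eq_mul]
        exact inv_mul_cancel₀ (sub_ne_zero.2 hb)
      · rw [map_smul, map_sub, AlgHom.commutes]; simp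
    choose! a ha1 ha2 using hsep
    intro w
    refine ⟨∑ φ : s, w φ • ∏ φ' ∈ s.erase φ.1, a φ.1 φ', ?_⟩
    ext φ
    rw [map_sum, Finset.sum_apply, sum_eq_single φ]
    · show φ.1 _ = _
      rw [map_smul, map_prod, prod_eq_one, smul_eq_mul, mul_one]
      intro φ' hφ'
      exact ha1 _ _ (ne_of_mem_erase hφ').symm
    · intro φ' _ hne
      show φ.1 _ = 0
      have hne' : φ'.1 ≠ φ.1 := fun h => hne (Subtype.ext h)
      rw [map_smul, map_prod, prod_eq_zero (i := φ.1), smul_zero]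
      · exact mem_erase.2 ⟨hne'.symm, φ.2⟩
      · exact ha2 _ _ hne'
    · simp
  have := 𝓕.finrank_le T hT hf hf0 fun a => by
    ext φ
    show φ.1 (f*a) = 0
    rw [map_mul, hs φ.1 φ.2, zero_mul]
  rwa [finrank_fintype_fun_eq_card, Fintype.card_coe] at this

variable (θ : A →ₐ[F] PowerSeries F) {t : A} (ht : θ t = PowerSeries.X)

lemma order_le (θ : A →ₐ[F] PowerSeries F) {t : A} (ht : θ t = PowerSeries.X) {l : ℕ} {f : A}
    (hf : f ∈ 𝓕.V l) (hf0 : f ≠ 0) {n : ℕ}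
    (hn : ∀ i < n, PowerSeries.coeff i (θ f) = 0) : n ≤ r*l+2*c := by
  let T : A →ₗ[F] (Fin n → F) := LinearMap.pi fun i =>
    (PowerSeries.coeff (i:ℕ)).comp θ.toLinearMap
  have hTa : ∀ a i, T a i = PowerSeries.coeff (i:ℕ) (θ a) := fun a i => rfl
  have hT : Surjective T := by
    intro w
    refine ⟨∑ i : Fin n, w i • t^(i:ℕ), ?_⟩
    ext j
    rw [hTa, map_sum, map_sum, sum_eq_single j]
    · rw [map_smul, map_pow, ht, map_smul, PowerSeries.coeff_X_pow_self, smul_eq_mul, mul_one]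
    · intro i _ hij
      rw [map_smul, map_pow, ht, map_smul, PowerSeries.coeff_X_pow, if_neg, smul_zero]
      exact fun h => hij (Fin.ext h.symm)
    · simp
  have := 𝓕.finrank_le T hT hf hf0 fun a => by
    ext i
    rw [hTa, map_mul, PowerSeries.coeff_mul, Pi.zero_apply]
    refine sum_eq_zero fun x hx => ?_
    rw [hn, zero_mul]
    have := HasAntidiagonal.mem_antidiagonal.1 hx
    have := i.2
    omega
  simpa using this

lemma theta_ne (𝓕 : Filt F A r c) (θ : A →ₐ[F] PowerSeries F) {t : A}
    (ht : θ t = PowerSeries.X) {f : A} (hf0 : f ≠ 0) : θ f ≠ 0 := by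
  intro h
  obtain ⟨l, hl⟩ := 𝓕.exh f
  have := 𝓕.order_le θ ht hl hf0 (n := r*l+2*c+1) (fun i _ => by rw [h, map_zero])
  omega

/-- Functions with distinct small orders of vanishing are independent over `Q`-th powers. -/
lemma indep (𝓕 : Filt F A r c) (θ : A →ₐ[F] PowerSeries F) {t : A}
    (ht : θ t = PowerSeries.X) (D : Finset ℕ) (Q:ℕ)
    (hD : ∀ e ∈ D, e < Q) (s g : ℕ → A) (hs : ∀ e ∈ D, (θ (s e)).order = e)
    (hg : ∃ e ∈ D, g e ≠ 0) : ∑ e ∈ D, s e*g e^Q ≠ 0 := by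
  intro h0
  have h1 : ∑ e ∈ D.filter (fun e => g e ≠ 0), θ (s e)*θ (g e)^Q = 0 := by
    have h1 := congrArg θ h0
    rw [map_sum, map_zero] at h1
    rw [sum_filter, ← h1]
    refine sum_congr rfl fun e he => ?_
    split_ifs with h
    · rw [map_mul, map_pow]
    · push Not at h
      have hQ : Q ≠ 0 := by have := hD e he; omega
      rw [h, zero_pow hQ, mul_zero, map_zero, h1]
  set D' := D.filter (fun e => g e ≠ 0) with hD'
  have hne : D'.Nonempty := by
    obtain ⟨e, he, hge⟩ := hg
    exact ⟨e, mem_filter.2 ⟨he, hge⟩⟩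
  have hord : ∀ e ∈ D', ∃ n : ℕ, (θ (g e)).order = n := by
    intro e he
    have := 𝓕.theta_ne θ ht (mem_filter.1 he).2
    exact ⟨_, (ENat.natCast_toNat (fun h => this (PowerSeries.order_eq_top.1 h))).symm⟩
  choose! o ho using hord
  have hord2 : ∀ e ∈ D', (θ (s e)*θ (g e)^Q).order = ((e+Q*o e : ℕ) : ℕ∞) := by
    intro e he
    rw [PowerSeries.order_mul, PowerSeries.order_pow, hs e (mem_filter.1 he).1, ho e he]
    simp
  obtain ⟨e0, he0, hmin⟩ := exists_min_image D' (fun e => e+Q*o e) hne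
  have h2 := congrArg (PowerSeries.coeff (e0+Q*o e0)) h1
  rw [map_sum, map_zero, sum_eq_single_of_mem e0 he0] at h2
  · exact (PowerSeries.order_eq_nat.1 (hord2 e0 he0)).1 h2
  · intro e he hne'
    refine PowerSeries.coeff_of_lt_order _ ?_
    rw [hord2 e he, Nat.cast_lt]
    refine lt_of_le_of_ne (hmin e he) fun hh => hne' ?_
    have e1 := hD e (mem_filter.1 he).1
    have e2 := hD e0 (mem_filter.1 he0).1
    have := congrArg (· % Q) hh
    simp only [Nat.add_mul_mod_self_left, Nat.mod_eq_of_lt e1, Nat.mod_eq_of_lt e2] at this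
    exact this.symm

lemma arith (r c Q Q' l m : ℕ) (hQ : Q ≤ Q') (hQ' : 8*c+8+2*r ≤ Q')
    (h2 : Q' < r*l+r+2*c+1) (hm1 : Q+(8*c+6) < r*m) (x y z : ℕ)
    (hx : r*l ≤ x+c) (hy : r*m ≤ y+c) (hz : z ≤ r*(Q*l+m)+c) : z < x*y := by
  have e1 : r*(Q*l+m) = Q*(r*l)+r*m := by ring
  rw [e1] at hz
  generalize r * l = u at *
  generalize r * m = v at *
  have h3 : Q' ≤ 2*u := by omega
  have h4 : 2*c+2 ≤ u := by omega
  obtain ⟨u, rfl⟩ : ∃ u', u = u'+c := ⟨u-c, by omega⟩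
  obtain ⟨v, rfl⟩ : ∃ v', v = v'+c := ⟨v-c, by omega⟩
  have h5 : u*v ≤ x*y := Nat.mul_le_mul (by omega) (by omega)
  refine lt_of_lt_of_le ?_ h5
  obtain ⟨w, rfl⟩ : ∃ w, v = Q+7*c+7+w := ⟨v-(Q+7*c+7), by omega⟩
  obtain ⟨u, rfl⟩ : ∃ u', u = u'+c+2 := ⟨u-c-2, by omega⟩
  have h6 : Q ≤ 2*(u+c+2+c) := by omega
  nlinarith [Nat.zero_le (u*w), Nat.zero_le (c*w), Nat.zero_le (u*c), Nat.zero_le (c*c),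
    Nat.mul_le_mul_left c h6, Nat.zero_le (Q*c)]

/-- Stepanov's bound for the number of rational points. -/
theorem stepanov (𝓕 : Filt F A r c) (p:ℕ) [Fact p.Prime] [CharP F p] [Fintype F] (hr : 1 ≤ r)
    (θ : A →ₐ[F] PowerSeries F) {t : A} (ht : θ t = PowerSeries.X) (a b : ℕ) (hab : a ≤ b)
    (hq : card F = p^a*p^b) (hb : 8*c+8+2*r ≤ p^b)
    (S : Finset (A →ₐ[F] F)) : S.card ≤ card F+(8*c+8+2*r)*p^b := by
  have hp : 0 < p := (Fact.out : p.Prime).pos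
  set Q := p^a with hQ
  set Q' := p^b with hQ'
  have hQQ : Q ≤ Q' := Nat.pow_le_pow_right hp hab
  set l := (Q'-2*c-1)/r with hl
  set m := (Q+(8*c+6))/r+1 with hm
  have hl1 : r*l ≤ Q'-2*c-1 := Nat.mul_div_le _ _
  have hl2 : Q'-2*c-1 < r*l+r := by
    have := Nat.lt_mul_div_succ (Q'-2*c-1) (show 0 < r by omega)
    rwa [mul_add, mul_one] at this
  have hm1 : Q+(8*c+6) < r*m := Nat.lt_mul_div_succ _ (by omega)
  have hm2 : r*m ≤ Q+(8*c+6)+r := by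
    rw [hm, mul_add, mul_one]
    have := Nat.mul_div_le (Q+(8*c+6)) r
    omega
  -- the orders of vanishing of functions of degree at most `l`
  set D := (range Q').filter (fun e : ℕ => ∃ f ∈ 𝓕.V l, (θ f).order = (e : ℕ∞)) with hD
  have hfin := 𝓕.fin
  have hcard : finrank F (𝓕.V l) ≤ D.card := by
    let T : 𝓕.V l →ₗ[F] (D → F) := LinearMap.pi fun e =>
      (PowerSeries.coeff (e.1 : ℕ)).comp (θ.toLinearMap.comp (𝓕.V l).subtype)
    have hT : Injective T := by
      rw [injective_iff_map_eq_zero]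
      rintro ⟨f, hf⟩ h0
      by_contra hne
      have hf0 : f ≠ 0 := fun h => hne (Subtype.ext h)
      have hθ := 𝓕.theta_ne θ ht hf0
      have ho : (θ f).order = ((θ f).order.toNat : ℕ∞) :=
        (ENat.natCast_toNat (fun h => hθ (PowerSeries.order_eq_top.1 h))).symm
      have hlt := 𝓕.order_le θ ht hf hf0 (n := (θ f).order.toNat)
        (fun i hi => PowerSeries.coeff_of_lt_order_toNat i hi)
      have hmem : (θ f).order.toNat ∈ D := mem_filter.2 ⟨mem_range.2 (by omega), f, hf, ho⟩
      exact (PowerSeries.order_eq_nat.1 ho).1 (congrFun h0 ⟨_, hmem⟩)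
    have := LinearMap.finrank_le_finrank_of_injective hT
    rwa [finrank_fintype_fun_eq_card, Fintype.card_coe] at this
  have hex : ∀ e ∈ D, ∃ f ∈ 𝓕.V l, (θ f).order = (e : ℕ∞) := fun e he => (mem_filter.1 he).2
  choose! s hs1 hs2 using hex
  let Φ : (D → 𝓕.V m) →ₗ[F] 𝓕.V (Q*l+m) :=
    { toFun := fun g => ⟨∑ e : D, s e^Q*(g e).1,
        sum_mem fun e _ => 𝓕.mul (𝓕.pow (hs1 e.1 e.2) Q) (g e).2⟩
      map_add' := fun g g' => by
        ext
        simp [mul_add, sum_add_distrib]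
      map_smul' := fun z g => by
        ext
        simp [smul_sum] }
  have hker : LinearMap.ker Φ ≠ ⊥ := by
    refine LinearMap.ker_ne_bot_of_finrank_lt ?_
    rw [Module.finrank_pi_fintype, sum_const, card_univ, Fintype.card_coe, smul_eq_mul]
    refine lt_of_lt_of_le ?_ (Nat.mul_le_mul_right _ hcard)
    exact arith r c Q Q' l m hQQ hb (by omega) hm1 _ _ _ (𝓕.low l) (𝓕.low m) (𝓕.upp _)
  obtain ⟨g, hg, hg0⟩ := Submodule.exists_mem_ne_zero_of_ne_bot hker
  let g' : ℕ → A := fun e => if h : e ∈ D then (g ⟨e, h⟩).1 else 0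
  have hg1 : ∀ e : D, g' e = (g e).1 := fun e => dif_pos e.2
  have hg2 : ∀ e ∈ D, g' e ∈ 𝓕.V m := fun e he => by
    have := hg1 ⟨e, he⟩
    simp only at this
    rw [this]; exact (g _).2
  have hzero : ∑ e ∈ D, s e^Q*g' e = 0 := by
    rw [← sum_coe_sort D]
    simp_rw [hg1]
    exact congrArg Subtype.val hg
  have hne : ∑ e ∈ D, s e*g' e^Q' ≠ 0 := by
    refine 𝓕.indep θ ht D Q' (fun e he => mem_range.1 (mem_filter.1 he).1) s g'
      (fun e he => hs2 e he) ?_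
    by_contra hcon
    push Not at hcon
    refine hg0 (funext fun e => Subtype.ext ?_)
    rw [← hg1, hcon e.1 e.2]; rfl
  have hmem : ∑ e ∈ D, s e*g' e^Q' ∈ 𝓕.V (l+Q'*m) :=
    sum_mem fun e he => 𝓕.mul (hs1 e he) (𝓕.pow (hg2 e he) Q')
  have hpts := 𝓕.card_points_le S hmem hne fun φ _ => by
    have : (φ (∑ e ∈ D, s e*g' e^Q'))^Q = 0 := by
      rw [map_sum, hQ, sum_pow_char_pow, ← map_zero φ, ← hzero, map_sum]
      refine sum_congr rfl fun e _ => ?_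
      rw [map_mul, map_mul, map_pow, map_pow, mul_pow, ← pow_mul, mul_comm Q', ← hQ, ← hq,
        FiniteField.pow_card]
    exact (pow_eq_zero_iff (pow_pos hp a).ne').1 this
  refine hpts.trans ?_
  rw [hq]
  have h1 := Nat.mul_le_mul_left Q' hm2
  have h2 : r*l+2*c+1 ≤ Q' := by omega
  have h3 : Q'*(Q+(8*c+6)+r)+Q'+Q'+Q'*r = Q*Q'+(8*c+8+2*r)*Q' := by
    ring
  have h4 := Nat.zero_le (Q'*r)
  rw [show r*(l+Q'*m) = r*l+Q'*(r*m) by ring]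
  omega

/-- A bound linear in the size of the field. -/
theorem trivial_bound (𝓕 : Filt F A r c) [Fintype F]
    (θ : A →ₐ[F] PowerSeries F) {t : A} (ht : θ t = PowerSeries.X) {l : ℕ} (htl : t ∈ 𝓕.V l)
    (S : Finset (A →ₐ[F] F)) : S.card ≤ r*(card F*l)+2*c := by
  have hq1 : 1 < card F := Fintype.one_lt_card
  have h1 : t^card F-t ≠ 0 := by
    intro h
    have h2 := congrArg θ h
    rw [map_sub, map_pow, ht, map_zero, sub_eq_zero] at h2
    have h3 := congrArg (PowerSeries.coeff 1) h2
    rw [PowerSeries.coeff_X_pow, if_neg (by omega), PowerSeries.coeff_one_X] at h3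
    exact zero_ne_one h3
  refine 𝓕.card_points_le S (l := card F*l) ?_ h1 fun φ _ => ?_
  · refine sub_mem (𝓕.pow htl _) (𝓕.mono ?_ htl)
    exact Nat.le_mul_of_pos_left _ (by omega)
  · rw [map_sub, map_pow, FiniteField.pow_card, sub_self]

/-- Stepanov's bound in a form valid for all extension degrees. -/
theorem stepanov' (𝓕 : Filt F A r c) (p:ℕ) [Fact p.Prime] [CharP F p] [Fintype F] (hr : 1 ≤ r)
    (θ : A →ₐ[F] PowerSeries F) {t : A} (ht : θ t = PowerSeries.X) {l : ℕ} (htl : t ∈ 𝓕.V l)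
    (n:ℕ) (hq : card F = p^n) (S : Finset (A →ₐ[F] F)) :
    (S.card : ℝ) ≤ card F + (((8*c+8+2*r)*(r*l+1)+2*c)*p : ℕ)*√p^n := by
  have hp : 1 ≤ p := (Fact.out : p.Prime).one_le
  have hp1 : (1:ℝ) ≤ p := mod_cast hp
  have hsq : (1:ℝ) ≤ √p := one_le_sqrt.2 hp1
  set X := 8*c+8+2*r with hX
  obtain ⟨a, b, hab, hba, rfl⟩ : ∃ a b, a ≤ b ∧ b ≤ a+1 ∧ n = a+b :=
    ⟨n/2, n-n/2, by omega, by omega, by omega⟩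
  have hpb : (p:ℝ)^b ≤ p*√p^(a+b) := by
    have h1 : (p:ℝ)^b = √p^(2*b) := by rw [pow_mul, sq_sqrt (by positivity)]
    have h2 : (p:ℝ)*√p^(a+b) = √p^(a+b+2) := by
      rw [pow_add _ _ 2, sq_sqrt (by positivity), mul_comm]
    rw [h1, h2]
    exact pow_le_pow_right₀ hsq (by omega)
  have key : S.card ≤ card F+(X*(r*l+1)+2*c)*p^b := by
    by_cases h : X ≤ p^b
    · refine (𝓕.stepanov p hr θ ht a b hab (by rw [hq, pow_add]) h S).trans ?_
      have : X*p^b ≤ (X*(r*l+1)+2*c)*p^b := Nat.mul_le_mul_right _ (by grind)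
      exact Nat.add_le_add_left this _
    · refine (𝓕.trivial_bound θ ht htl S).trans ?_
      have h1 : card F ≤ p^b*X := by
        rw [hq, pow_add]
        have : p^a ≤ X := (Nat.pow_le_pow_right hp hab).trans (by omega)
        rw [mul_comm]
        exact Nat.mul_le_mul_left _ this
      have h2 : 1 ≤ p^b := Nat.one_le_pow _ _ hp
      have h3 := Nat.mul_le_mul_left (r*l) h1
      nlinarith
  have key' : (S.card : ℝ) ≤ card F+((X*(r*l+1)+2*c : ℕ) : ℝ)*(p:ℝ)^b := by
    exact_mod_cast key
  refine key'.trans (add_le_add le_rfl ?_)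
  push_cast
  rw [mul_assoc (_+_)]
  gcongr

end Filt
end Stepanov

/-! ### Artin–Schreier polynomials -/

section ArtinSchreier
open Polynomial Module

/-- The Artin–Schreier polynomial `Y ^ p - Y - a`. -/
noncomputable def asp {S : Type} [CommRing S] (p:ℕ) (a : S) : S[X] := X^p-X-C a

lemma asp_natDegree {S : Type} [CommRing S] [Nontrivial S] {p : ℕ} (hp : 1 < p) (a : S) :
    (asp p a).natDegree = p := by
  have h : (X+C a : S[X]).degree < ((p:ℕ) : WithBot ℕ) := by
    rw [degree_X_add_C]; exact_mod_cast hp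
  rw [asp, sub_sub, natDegree_sub_eq_left_of_natDegree_lt] <;> simp [hp]

lemma asp_monic {S : Type} [CommRing S] [Nontrivial S] {p : ℕ} (hp : 1 < p) (a : S) :
    (asp p a).Monic := by
  rw [asp, sub_sub]
  refine monic_X_pow_sub ?_
  rw [degree_X_add_C]; exact_mod_cast hp

lemma exists_zmod {L : Type} [Field L] (p:ℕ) [hp : Fact p.Prime] [CharP L p] {x : L}
    (hx : x^p = x) : ∃ c : ZMod p, castHom dvd_rfl L c = x := by
  by_contra! h
  let s : Finset L := univ.image (castHom dvd_rfl L : ZMod p → L)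
  have hs : s.card = p := by
    rw [card_image_of_injective _ (RingHom.injective _), card_univ, ZMod.card]
  have hxs : x ∉ s := by simpa [s] using h
  have hne := FiniteField.X_pow_card_sub_X_ne_zero L hp.out.one_lt
  have := card_le_degree_of_subset_roots (Z := insert x s) (p := (X^p-X : L[X])) (by
    intro y hy
    rw [mem_val, mem_insert] at hy
    rw [mem_roots hne, IsRoot.def, eval_sub, eval_pow, eval_X, sub_eq_zero]
    rcases hy with rfl | hy
    · exact hx
    · obtain ⟨c, -, rfl⟩ := mem_image.1 hy
      rw [← map_pow, ZMod.pow_card])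
  rw [card_insert_of_notMem hxs, hs, FiniteField.X_pow_card_sub_X_natDegree_eq L hp.out.one_lt]
    at this
  omega

/-- Over a field of characteristic `p` an Artin–Schreier polynomial without roots is irreducible:
the sum of the roots of a factor of degree `n` is `n` times a root up to an element of the prime
field. -/
lemma asp_irreducible {K : Type} [Field K] (p:ℕ) [hp : Fact p.Prime] [CharP K p] (a : K)
    (h : ∀ y : K, y^p-y ≠ a) : Irreducible (asp p a) := by
  have hp1 := hp.out.one_lt
  have hm := asp_monic hp1 a
  have hne : asp p a ≠ 1 := by
    intro h1
    have := asp_natDegree hp1 a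
    rw [h1, natDegree_one] at this
    omega
  rw [hm.irreducible_iff_natDegree']
  refine ⟨hne, ?_⟩
  intro f g hf hg hfg hmem
  rw [asp_natDegree hp1, mem_Ioc] at hmem
  let L := AlgebraicClosure K
  let ι := algebraMap K L
  have : CharP L p := charP_of_injective_algebraMap ι.injective p
  have hroot : ∀ y ∈ (g.map ι).roots, y^p-y = ι a := by
    intro y hy
    have h1 : (g.map ι).IsRoot y := isRoot_of_mem_roots hy
    have h2 : ((asp p a).map ι).IsRoot y := by
      rw [← hfg, Polynomial.map_mul]
      exact h1.dvd (dvd_mul_left _ _)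
    rw [asp, IsRoot.def] at h2
    simp only [Polynomial.map_sub, Polynomial.map_pow, map_X, map_C, eval_sub, eval_pow, eval_X,
      eval_C] at h2
    exact sub_eq_zero.1 h2
  have hsplit : (g.map ι).Splits := IsAlgClosed.splits _
  have hcard : Multiset.card (g.map ι).roots = g.natDegree := by
    rw [← hsplit.natDegree_eq_card_roots, natDegree_map]
  obtain ⟨y, hy⟩ : ∃ y, y ∈ (g.map ι).roots := by
    apply Multiset.card_pos_iff_exists_mem.1; omega
  have hsum : ∃ c : ZMod p, (g.map ι).roots.sum = g.natDegree*y+castHom dvd_rfl L c := by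
    rw [← hcard]
    have : ∀ s : Multiset L, (∀ z ∈ s, z^p-z = ι a) →
        ∃ c : ZMod p, s.sum = Multiset.card s*y+castHom dvd_rfl L c := by
      intro s
      induction s using Multiset.induction with
      | empty => intro _; exact ⟨0, by simp⟩
      | cons z s ih =>
        intro hs
        obtain ⟨c, hc⟩ := ih fun w hw => hs w (Multiset.mem_cons_of_mem hw)
        have h1 := hs z (Multiset.mem_cons_self z s)
        have h2 : (z-y)^p = z-y := by
          rw [sub_pow_char]
          linear_combination h1-hroot y hy
        obtain ⟨c', hc'⟩ : ∃ c' : ZMod p, castHom dvd_rfl L c' = z-y := by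
          exact exists_zmod p h2
        refine ⟨c+c', ?_⟩
        rw [Multiset.sum_cons, hc, Multiset.card_cons, map_add, hc']
        push_cast; ring
    exact this _ hroot
  obtain ⟨c, hc⟩ := hsum
  have hn : (g.natDegree : K) ≠ 0 := by
    rw [Ne, CharP.cast_eq_zero_iff K p]
    intro h1
    have := Nat.le_of_dvd hmem.1 h1
    omega
  have hs : (g.map ι).roots.sum = ι (-g.nextCoeff) := by
    have := hsplit.nextCoeff_eq_neg_sum_roots_of_monic (hg.map ι)
    rw [nextCoeff_map ι.injective] at this
    rw [map_neg, this, neg_neg]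
  have hyK : y = ι ((-g.nextCoeff-castHom dvd_rfl K c)/g.natDegree) := by
    have h3 : ι (castHom dvd_rfl K c) = castHom dvd_rfl L c := by
      rw [← RingHom.comp_apply]; congr 1; exact Subsingleton.elim _ _
    rw [map_div₀, map_sub, h3, ← hs, hc, map_natCast]
    have : (g.natDegree : L) ≠ 0 := by
      intro h4; apply hn; apply ι.injective; rw [map_natCast, h4, map_zero]
    rw [eq_div_iff this]; ring
  have hz := hroot y hy
  rw [hyK, ← map_pow, ← map_sub] at hz
  exact h _ (ι.injective hz)

variable {d : ℕ} [NeZero d] {k : ℕ}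

/-- In characteristic prime to `d` the algebra of functions at infinity has no elements killed by
Frobenius: the `p`-th powers of the monomials are nonzero multiples of distinct monomials. -/
lemma KummerData.pow_ne_zero {F E : Type} [Field F] [CommRing E] [Algebra F E] {κ : Fin k → F}
    (D : KummerData d F E k κ) (hκ : ∀ i, κ i ≠ 0) (p:ℕ) [hp : Fact p.Prime] [CharP F p]
    (hpd : p.Coprime d) {e : E} (he : e ≠ 0) : e^p ≠ 0 := by
  have : Nontrivial E := ⟨e, 0, he⟩
  have : CharP E p := charP_of_injective_algebraMap (algebraMap F E).injective p
  have hb : ∀ α : Fin k → Fin d, ∃ u : F, u ≠ 0 ∧ D.basis α^p = u • D.basis (p • α) := by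
    intro α
    have : ∀ n : ℕ, ∃ u : F, u ≠ 0 ∧ D.basis α^n = u • D.basis (n • α) := by
      intro n
      induction n with
      | zero => exact ⟨1, one_ne_zero, by simp [D.basis_apply]⟩
      | succ n ih =>
        obtain ⟨u, hu, h⟩ := ih
        refine ⟨u*∏ i ∈ carry (n • α) α, κ i,
          mul_ne_zero hu (prod_ne_zero_iff.2 fun i _ => hκ i), ?_⟩
        rw [pow_succ, h, smul_mul_assoc, D.basis_mul, smul_smul, succ_nsmul]
    exact this p
  choose u hu0 hu using hb
  have hinj : Injective (fun α : Fin k → Fin d => p • α) := by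
    intro α β h
    funext i
    have h1 : p • α i = p • β i := congrFun h i
    rw [← sub_eq_zero, ← nsmul_sub] at h1
    have h2 : d • (α i-β i) = 0 := by
      have := card_nsmul_eq_zero (G := Fin d) (x := α i-β i)
      rwa [card_fin] at this
    have h3 := Nat.dvd_gcd (addOrderOf_dvd_of_nsmul_eq_zero h1) (addOrderOf_dvd_of_nsmul_eq_zero h2)
    rw [hpd] at h3
    exact sub_eq_zero.1 (AddMonoid.addOrderOf_eq_one_iff.1 (Nat.dvd_one.1 h3))
  intro h0
  apply he
  have h1 : ∑ α, ((D.basis.repr e α)^p*u α) • D.basis (p • α) = 0 := by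
    rw [← h0]
    conv_rhs => rw [← D.basis.sum_repr e]
    rw [sum_pow_char]
    refine sum_congr rfl fun α _ => ?_
    rw [_root_.smul_pow, hu, smul_smul]
  have hli := D.basis.linearIndependent.comp _ hinj
  rw [Fintype.linearIndependent_iff] at hli
  have h2 := hli _ h1
  apply D.basis.repr.injective
  rw [map_zero]
  ext α
  have := h2 α
  rw [mul_eq_zero, or_iff_left (hu0 α)] at this
  simpa using (pow_eq_zero_iff hp.out.ne_zero).1 this

namespace Curve

variable {F R E : Type} [Field F] [CommRing R] [Algebra F[X] R]
    [Algebra F R] [IsScalarTower F F[X] R] [CommRing E] [Algebra F E]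
variable (M : Curve d k F R E)

/-- A function with a simple pole at some point at infinity is not of the form `y ^ p - y`. -/
lemma as_ne (hκ : ∀ i, M.κ i ≠ 0) (p:ℕ) [hp : Fact p.Prime] [CharP F p] (hpd : p.Coprime d)
    {G : R} (hG : M.lc 1 G ≠ 0) (hG1 : G ∈ M.V 1) (y : R) : y^p-y ≠ G := by
  have hp1 := hp.out.one_lt
  intro h
  obtain ⟨l, hl⟩ := M.exists_mem y
  have hpow : ∀ l, y ∈ M.V l → ∀ n : ℕ, y^n ∈ M.V (n*l) ∧ M.lc (n*l) (y^n) = M.lc l y^n := by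
    intro l hl n
    induction n with
    | zero => simpa using ⟨M.one_mem, M.lc_one⟩
    | succ n ih =>
      rw [pow_succ, Nat.add_mul, one_mul, pow_succ]
      exact ⟨M.mul_mem ih.1 hl, by rw [M.lc_mul ih.1 hl, ih.2]⟩
  have h0 : ∀ l, y ∈ M.V l → y ∈ M.V 0 := by
    intro l
    induction l with
    | zero => exact id
    | succ l ih =>
      intro hl
      refine ih (M.mem_of_lc_eq_zero hl ?_)
      by_contra hne
      refine M.DE.pow_ne_zero hκ p hpd hne ?_
      rw [← (hpow _ hl p).2, show y^p = y+G by rw [← h]; ring, map_add,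
        M.lc_eq_zero ?_ hl, M.lc_eq_zero ?_ hG1, add_zero]
      · nlinarith
      · nlinarith
  have hy0 := h0 l hl
  have : G ∈ M.V 0 := by
    rw [← h]
    refine sub_mem ?_ hy0
    simpa using (hpow _ hy0 p).1
  exact hG (M.lc_eq_zero one_pos this)

/-- The coordinate ring of the Artin–Schreier cover is a domain. -/
lemma as_domain [IsDomain R] [IsIntegrallyClosed R] (hκ : ∀ i, M.κ i ≠ 0) (p:ℕ)
    [hp : Fact p.Prime] [CharP F p] (hpd : p.Coprime d)
    {G : R} (hG : M.lc 1 G ≠ 0) (hG1 : G ∈ M.V 1) : IsDomain (AdjoinRoot (asp p G)) := by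
  have hp1 := hp.out.one_lt
  have : CharP R p := charP_of_injective_algebraMap (algebraMap F R).injective p
  let K := FractionRing R
  have : CharP K p := charP_of_injective_algebraMap (IsFractionRing.injective R K) p
  have hm := asp_monic (S := R) hp1 G
  refine AdjoinRoot.isDomain_of_prime (prime_of_monic_irreducible hm ?_)
  rw [hm.irreducible_iff_irreducible_map_fraction_map (K := K)]
  have e : (asp p G).map (algebraMap R K) = asp p (algebraMap R K G) := by
    simp [asp]
  rw [e]
  refine asp_irreducible p _ fun y hy => ?_
  obtain ⟨z, rfl⟩ : ∃ z, algebraMap R K z = y := by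
    refine IsIntegrallyClosed.isIntegral_iff.1 ⟨asp p G, hm, ?_⟩
    rw [← eval_map, e, asp]
    simp [hy]
  rw [← map_pow, ← map_sub] at hy
  exact M.as_ne hκ p hpd hG hG1 z (IsFractionRing.injective R K hy)

end Curve

end ArtinSchreier

/-! ### Filtrations of the curve and of its Artin–Schreier covers -/

section ASFilt
open Polynomial Module

variable {d : ℕ} [NeZero d] {k : ℕ} {F R E : Type} [Field F] [CommRing R] [Algebra F[X] R]
    [Algebra F R] [IsScalarTower F F[X] R] [CommRing E] [Algebra F E]

namespace Curve

variable (M : Curve d k F R E)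

lemma finrank_V_le (l:ℕ) : finrank F (M.V l) ≤ d^k*(l+1) := by
  rw [finrank_V]
  refine (sum_le_card_nsmul _ _ (l+1) fun α _ => Nat.sub_le _ _).trans ?_
  simp

lemma le_finrank_V (l:ℕ) : d^k*l ≤ finrank F (M.V l)+d^k*M.kap := by
  rw [finrank_V]
  have : d^k*l ≤ ∑ α : Fin k → Fin d, ((l+1-wt α)+M.kap) := by
    have := card_nsmul_le_sum (univ : Finset (Fin k → Fin d))
      (fun α => (l+1-wt α)+M.kap) l fun α _ => by
        have := wt_le α
        show l ≤ _+(d-1)*k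
        omega
    simpa using this
  rw [sum_add_distrib] at this
  simpa using this

/-- The filtration of the coordinate ring by pole order at infinity. -/
noncomputable def filt : Filt F R (d^k) (d^k*(M.kap+1)) where
  V := M.V
  fin l := inferInstance
  mono _ _ h := M.V_mono h
  mul hf hg := M.mul_mem hf hg
  one := M.one_mem
  exh := M.exists_mem
  low l := by have := M.le_finrank_V l; rw [mul_add]; omega
  upp l := by
    refine (M.finrank_V_le l).trans ?_
    rw [mul_add, mul_add, mul_one]
    omega

section
variable [Nontrivial R] (p:ℕ) [hp : Fact p.Prime] (G : R)

/-- The basis `1, y, …, y ^ (p - 1)` of the Artin–Schreier cover. -/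
noncomputable def asBasis (R : Type) [CommRing R] [Nontrivial R] (p:ℕ) [hp : Fact p.Prime]
    (G : R) : Basis (Fin p) R (AdjoinRoot (asp p G)) :=
  (AdjoinRoot.powerBasis' (asp_monic hp.out.one_lt G)).basis.reindex
    (finCongr (asp_natDegree hp.out.one_lt G))

lemma asBasis_apply (i : Fin p) : asBasis R p G i = root (asp p G)^(i:ℕ) := by
  rw [asBasis, Basis.reindex_apply, PowerBasis.basis_eq_pow]
  rfl

lemma as_root : root (asp p G)^p = root (asp p G)+algebraMap R (AdjoinRoot (asp p G)) G := by
  have := AdjoinRoot.mk_self (f := asp p G)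
  rw [asp, map_sub, map_sub, map_pow] at this
  have h2 : root (asp p G)^p-root (asp p G) - algebraMap R (AdjoinRoot (asp p G)) G = 0 := this
  linear_combination h2

/-- The possible coefficients of `y ^ i` in a function of degree at most `l`, when `y` has
degree `1` and functions of degree `m` on the base have degree `p * m`. -/
noncomputable def W (l i : ℕ) : Submodule F R := if i ≤ l then M.V ((l-i)/p) else ⊥

lemma W_le {l i : ℕ} (h : i ≤ l) : M.W p l i = M.V ((l-i)/p) := if_pos h

lemma W_gt {l i : ℕ} (h : ¬ i ≤ l) : M.W p l i = ⊥ := if_neg h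

/-- The filtration of the Artin–Schreier cover. -/
noncomputable def VA (l:ℕ) : Submodule F (AdjoinRoot (asp p G)) :=
  ⨅ i : Fin p, (M.W p l i).comap (((asBasis R p G).coord i).restrictScalars F)

lemma mem_VA {l : ℕ} {a : AdjoinRoot (asp p G)} :
    a ∈ M.VA p G l ↔ ∀ i : Fin p, (asBasis R p G).repr a i ∈ M.W p l i := by
  simp [VA]

lemma VA_mono : Monotone (M.VA p G) := by
  intro l m h a ha
  rw [mem_VA] at ha ⊢
  intro i
  have := ha i
  unfold W at this ⊢
  split_ifs at this with h1
  · rw [if_pos (by omega)]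
    exact M.V_mono (Nat.div_le_div_right (by omega)) this
  · rw [(Submodule.mem_bot F).1 this]; exact zero_mem _

lemma single_mem {G : R} (hG : G ∈ M.V 1) (i:ℕ) : ∀ {l m : ℕ} {f : R}, f ∈ M.V m →
    p*m+i ≤ l → f • root (asp p G)^i ∈ M.VA p G l := by
  induction i using Nat.strong_induction_on with
  | _ i ih =>
    intro l m f hf hl
    have hp1 := hp.out.one_lt
    by_cases hi : i < p
    · rw [mem_VA]
      intro j
      have := asBasis_apply p G ⟨i, hi⟩
      simp only at this
      rw [← this, map_smul, Basis.repr_self, Finsupp.smul_single, smul_eq_mul, mul_one,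
        Finsupp.single_apply]
      split_ifs with h
      · subst h
        simp only [W]
        rw [if_pos (by omega)]
        refine M.V_mono ?_ hf
        rw [Nat.le_div_iff_mul_le (by omega), mul_comm]
        omega
      · exact zero_mem _
    · obtain ⟨j, rfl⟩ : ∃ j, i = j+p := ⟨i-p, by omega⟩
      have e : f • root (asp p G)^(j+p) = f • root (asp p G)^(j+1) + (f*G) • root (asp p G)^j := by
        rw [pow_add, as_root]
        simp only [Algebra.smul_def, map_mul]
        ring
      rw [e]
      refine add_mem (ih _ (by omega) hf (by omega)) (ih _ (by omega) (M.mul_mem hf hG) ?_)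
      rw [mul_add, mul_one]; omega

lemma VA_sum {l : ℕ} {a : AdjoinRoot (asp p G)} (ha : a ∈ M.VA p G l) (i : Fin p) :
    (asBasis R p G).repr a i = 0 ∨ ∃ m, (asBasis R p G).repr a i ∈ M.V m ∧ p*m+i ≤ l := by
  have := (M.mem_VA p G).1 ha i
  unfold W at this
  split_ifs at this with h1
  · refine Or.inr ⟨_, this, ?_⟩
    have := Nat.mul_div_le (l-i) p
    omega
  · exact Or.inl ((Submodule.mem_bot F).1 this)

lemma VA_mul {G : R} (hG : G ∈ M.V 1) {l m : ℕ} {f g : AdjoinRoot (asp p G)}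
    (hf : f ∈ M.VA p G l) (hg : g ∈ M.VA p G m) : f*g ∈ M.VA p G (l+m) := by
  have e : f*g = ∑ i, ∑ j, ((asBasis R p G).repr f i*(asBasis R p G).repr g j) •
      root (asp p G)^((i:ℕ)+j) := by
    conv_lhs => rw [← (asBasis R p G).sum_repr f, ← (asBasis R p G).sum_repr g]
    rw [sum_mul_sum]
    refine sum_congr rfl fun i _ => sum_congr rfl fun j _ => ?_
    rw [asBasis_apply, asBasis_apply, smul_mul_smul_comm, pow_add]
  rw [e]
  refine sum_mem fun i _ => sum_mem fun j _ => ?_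
  rcases M.VA_sum p G hf i with h | ⟨u, hu, hu'⟩
  · rw [h, zero_mul, zero_smul]; exact zero_mem _
  rcases M.VA_sum p G hg j with h | ⟨v, hv, hv'⟩
  · rw [h, mul_zero, zero_smul]; exact zero_mem _
  refine M.single_mem p hG _ (M.mul_mem hu hv) ?_
  rw [mul_add]; omega

/-- Coordinates identify the filtration with a product. -/
noncomputable def equivVA (l:ℕ) : M.VA p G l ≃ₗ[F] ∀ i : Fin p, M.W p l i where
  toFun a i := ⟨(asBasis R p G).repr a.1 i, (M.mem_VA p G).1 a.2 i⟩
  map_add' f g := by ext; simp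
  map_smul' c f := by
    ext i
    simp only [Submodule.coe_smul, RingHom.id_apply, Pi.smul_apply]
    rw [← algebraMap_smul R c f.1, map_smul, Finsupp.smul_apply, algebraMap_smul]
  invFun w := ⟨∑ i, (w i).1 • asBasis R p G i, by
    rw [mem_VA]
    intro i
    rw [(asBasis R p G).repr_sum_self (fun i => ((w i).1 : R))]
    exact (w i).2⟩
  left_inv a := by ext; exact (asBasis R p G).sum_repr a.1
  right_inv w := by
    ext i
    simp only
    rw [(asBasis R p G).repr_sum_self (fun i => ((w i).1 : R))]

instance finW (l i : ℕ) : Module.Finite F (M.W p l i) := by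
  by_cases h : i ≤ l
  · rw [M.W_le p h]; infer_instance
  · rw [M.W_gt p h]; infer_instance

/-- The filtration of the Artin–Schreier cover, with linearly growing dimensions. -/
noncomputable def filtA {G : R} (hG : G ∈ M.V 1) :
    Filt F (AdjoinRoot (asp p G)) (d^k) (p*(d^k*(M.kap+2))) where
  V := M.VA p G
  fin l := Module.Finite.equiv (M.equivVA p G l).symm
  mono := M.VA_mono p G
  mul hf hg := M.VA_mul p hG hf hg
  one := by
    have := M.single_mem p hG 0 (l := 0) M.one_mem (by simp)
    rwa [pow_zero, one_smul] at this
  exh a := by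
    choose L hL using fun i : Fin p => M.exists_mem ((asBasis R p G).repr a i)
    refine ⟨p*(∑ i, L i)+p, ?_⟩
    rw [← (asBasis R p G).sum_repr a]
    refine sum_mem fun i _ => ?_
    rw [asBasis_apply]
    refine M.single_mem p hG _ (hL i) ?_
    have h1 : L i ≤ ∑ i, L i := single_le_sum (f := L) (fun _ _ => Nat.zero_le _) (mem_univ i)
    have := Nat.mul_le_mul_left p h1
    have := i.2
    omega
  low l := by
    have hp0 := hp.out.pos
    rw [(M.equivVA p G l).finrank_eq, Module.finrank_pi_fintype]
    have h1 : ∀ i : Fin p, d^k*(l/p) ≤ finrank F (M.W p l i)+d^k*(M.kap+1) := by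
      intro i
      by_cases h : (i:ℕ) ≤ l
      · rw [M.W_le p h]
        have h3 : l/p ≤ (l-i)/p+1 := by
          rw [← Nat.add_div_right _ hp0]
          exact Nat.div_le_div_right (by have := i.2; omega)
        have h4 := Nat.mul_le_mul_left (d^k) h3
        have h5 := M.le_finrank_V ((l-i)/p)
        rw [mul_add] at h4 ⊢
        omega
      · rw [Nat.div_eq_of_lt (by have := i.2; omega)]; simp
    have h2 := card_nsmul_le_sum (univ : Finset (Fin p)) _ _ fun i _ => h1 i
    rw [sum_add_distrib] at h2
    simp only [card_univ, card_fin, smul_eq_mul, sum_const] at h2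
    have h3 : l ≤ p*(l/p)+p := by
      have := Nat.mod_lt l hp0
      have := Nat.div_add_mod l p
      omega
    have h4 := Nat.mul_le_mul_left (d^k) h3
    grind
  upp l := by
    have hp0 := hp.out.pos
    rw [(M.equivVA p G l).finrank_eq, Module.finrank_pi_fintype]
    have h1 : ∀ i : Fin p, finrank F (M.W p l i) ≤ d^k*(l/p+1) := by
      intro i
      by_cases h : (i:ℕ) ≤ l
      · rw [M.W_le p h]
        refine (M.finrank_V_le _).trans (Nat.mul_le_mul_left _ ?_)
        exact Nat.add_le_add_right (Nat.div_le_div_right (Nat.sub_le _ _)) _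
      · rw [M.W_gt p h, finrank_bot]; exact Nat.zero_le _
    have h2 := sum_le_card_nsmul (univ : Finset (Fin p)) _ _ fun i _ => h1 i
    simp only [card_univ, card_fin, smul_eq_mul] at h2
    have h4 := Nat.mul_le_mul_left (d^k) (Nat.mul_div_le l p)
    grind

end

/-! ### Points of the curve -/

/-- Points of the curve are homomorphisms out of the coordinate ring. -/
lemma exists_hom {T : Type} [CommRing T] [Algebra F T] (x : T) (v : Fin k → T)
    (h : ∀ i, v i^d = algebraMap F T (M.κ i)*x^d+algebraMap F T (M.a i)) :
    ∃ φ : R →ₐ[F] T, φ M.x = x ∧ ∀ i, φ (M.D.n i) = v i := by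
  obtain ⟨φ, h1, h2⟩ := M.D.lift T (aeval x : F[X] →ₐ[F] T).toRingHom v fun i => by
    rw [h]; simp
  have h1' : ∀ f : F[X], φ (algebraMap F[X] R f) = aeval x f := fun f => by
    rw [← RingHom.comp_apply, h1]; rfl
  refine ⟨{ φ with commutes' := fun c => ?_ }, ?_, h2⟩
  · show φ (algebraMap F R c) = _
    rw [IsScalarTower.algebraMap_apply F F[X] R, h1']
    simp
  · show φ (algebraMap F[X] R X) = x
    rw [h1', aeval_X]

lemma hom_ext {T : Type} [CommRing T] [Algebra F T] {φ φ' : R →ₐ[F] T} (hx : φ M.x = φ' M.x)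
    (hn : ∀ i, φ (M.D.n i) = φ' (M.D.n i)) : φ = φ' := by
  have h1 : ∀ f : F[X], φ (algebraMap F[X] R f) = φ' (algebraMap F[X] R f) := by
    intro f
    have : (φ.comp (IsScalarTower.toAlgHom F F[X] R)) = φ'.comp (IsScalarTower.toAlgHom F F[X] R) := by
      apply Polynomial.algHom_ext
      exact hx
    exact congrArg (fun z : F[X] →ₐ[F] T => z f) this
  ext f
  rw [← M.D.basis.sum_repr f, map_sum, map_sum]
  refine sum_congr rfl fun α _ => ?_
  rw [Algebra.smul_def, map_mul, map_mul, h1, M.D.basis_apply, map_prod, map_prod]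
  congr 1
  exact prod_congr rfl fun i _ => by rw [map_pow, map_pow, hn]

lemma hom_pt {T : Type} [CommRing T] [Algebra F T] (φ : R →ₐ[F] T) (i : Fin k) :
    φ (M.D.n i)^d = algebraMap F T (M.κ i)*φ M.x^d+algebraMap F T (M.a i) := by
  rw [← map_pow, M.D.pow_n, map_add, map_add, map_mul, map_mul, map_pow, map_pow]
  have : ∀ c : F, φ (algebraMap F[X] R (C c)) = algebraMap F T c := by
    intro c
    rw [← φ.commutes, IsScalarTower.algebraMap_apply F F[X] R]; rfl
  rw [this, this]; rfl

end Curve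

lemma ps_root (f : (PowerSeries F)[X]) (hm : f.Monic) (a : F)
    (h0 : PowerSeries.constantCoeff (f.eval (PowerSeries.C a)) = 0)
    (h1 : PowerSeries.constantCoeff (f.derivative.eval (PowerSeries.C a)) ≠ 0) :
    ∃ w : PowerSeries F, f.eval w = 0 ∧ PowerSeries.constantCoeff w = a := by
  have hI : ∀ w : PowerSeries F, w ∈ span {(PowerSeries.X : PowerSeries F)} ↔
      PowerSeries.constantCoeff w = 0 := fun w => by
    rw [Ideal.mem_span_singleton, PowerSeries.X_dvd_iff]
  obtain ⟨w, hw, hw'⟩ := HenselianRing.is_henselian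
    (I := span {(PowerSeries.X : PowerSeries F)}) f hm (PowerSeries.C a) ((hI _).2 h0)
    (((PowerSeries.isUnit_iff_constantCoeff.2 (isUnit_iff_ne_zero.2 h1))).map _)
  refine ⟨w, hw, ?_⟩
  have := (hI _).1 hw'
  rwa [map_sub, sub_eq_zero, PowerSeries.constantCoeff_C] at this

lemma ps_pow_root (hd : (d : F) ≠ 0) (u : PowerSeries F) {a : F} (ha : a ≠ 0)
    (hu : PowerSeries.constantCoeff u = a^d) :
    ∃ w : PowerSeries F, w^d = u ∧ PowerSeries.constantCoeff w = a := by
  obtain ⟨w, h1, h2⟩ := ps_root (X^d-C u) (monic_X_pow_sub_C u (NeZero.ne d)) a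
    (by simp [hu]) (by simp [derivative_X_pow, hd, ha])
  refine ⟨w, ?_, h2⟩
  simpa [sub_eq_zero] using h1

lemma ps_as_root (p:ℕ) [hp : Fact p.Prime] [CharP F p] (u : PowerSeries F) {a : F}
    (hu : PowerSeries.constantCoeff u = a^p-a) :
    ∃ w : PowerSeries F, w^p-w = u ∧ PowerSeries.constantCoeff w = a := by
  have hpF : (p : F) = 0 := CharP.cast_eq_zero F p
  obtain ⟨w, h1, h2⟩ := ps_root (asp p u) (asp_monic hp.out.one_lt u) a
    (by simp [asp, hu]) (by simp [asp, derivative_X_pow])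
  refine ⟨w, ?_, h2⟩
  simpa [asp, sub_eq_zero] using h1

namespace Curve

variable (M : Curve d k F R E)

/-- Expansion of functions in the local parameter `x - x₀` at an unramified point. -/
lemma exists_theta (hd : (d : F) ≠ 0) (x : F) (v : Fin k → F) (hv0 : ∀ i, v i ≠ 0)
    (hv : ∀ i, v i^d = M.κ i*x^d+M.a i) :
    ∃ θ : R →ₐ[F] PowerSeries F, θ (M.x-algebraMap F R x) = PowerSeries.X ∧
      PowerSeries.constantCoeff (θ M.x) = x ∧
      ∀ i, PowerSeries.constantCoeff (θ (M.D.n i)) = v i := by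
  choose w hw1 hw2 using fun i => ps_pow_root (d := d) hd
    (algebraMap F (PowerSeries F) (M.κ i)*(PowerSeries.X+algebraMap F (PowerSeries F) x)^d
      + algebraMap F (PowerSeries F) (M.a i)) (hv0 i)
    (by simp [hv])
  obtain ⟨θ, h1, h2⟩ := M.exists_hom _ w hw1
  refine ⟨θ, ?_, ?_, fun i => by rw [h2, hw2]⟩
  · rw [map_sub, AlgHom.commutes, h1]; ring
  · rw [h1]; simp

end Curve

/-- The `F`-points of the curve. -/
noncomputable def Pts [Fintype F] (d:ℕ) (κ a : Fin k → F) : Finset (F × (Fin k → F)) :=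
  univ.filter fun z => ∀ i, z.2 i^d = κ i*z.1^d+a i

lemma card_pow_eq_le [Fintype F] (hd : d ≠ 0) (c : F) :
    (univ.filter fun x : F => x^d = c).card ≤ d := by
  refine le_trans (card_le_card ?_) ((Multiset.toFinset_card_le _).trans (card_nthRoots d c))
  intro x hx
  rw [Multiset.mem_toFinset, mem_nthRoots (pos_of_ne_zero hd)]
  exact (mem_filter.1 hx).2

lemma card_fiber_le [Fintype F] (hd : d ≠ 0) (c : Fin k → F) :
    (univ.filter fun v : Fin k → F => ∀ i, v i^d = c i).card ≤ d^k := by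
  have : (univ.filter fun v : Fin k → F => ∀ i, v i^d = c i) =
      piFinset fun i => univ.filter fun x : F => x^d = c i := by
    ext v; simp
  rw [this, card_piFinset]
  refine (prod_le_pow_card _ _ d fun i _ => card_pow_eq_le hd _).trans ?_
  simp

/-- There are few points at which some coordinate vanishes. -/
lemma card_bad_le [Fintype F] (hd : d ≠ 0) (κ a : Fin k → F) (hκ : ∀ i, κ i ≠ 0) :
    ((Pts d κ a).filter fun z => ∃ i, z.2 i = 0).card ≤ k*d*d^k := by
  let B : Finset F := univ.biUnion fun i : Fin k =>
    univ.filter fun x : F => x^d = - a i/κ i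
  have hB : B.card ≤ k*d := by
    refine card_biUnion_le.trans ?_
    refine (sum_le_card_nsmul _ _ d fun i _ => card_pow_eq_le hd _).trans ?_
    simp
  refine (card_le_mul_card_image_of_maps_to (f := Prod.fst) (t := B) ?_ (d^k) ?_).trans ?_
  · rintro ⟨x, v⟩ hz
    obtain ⟨h1, i, hi⟩ := mem_filter.1 hz
    have h2 := (mem_filter.1 h1).2 i
    simp only at h2 hi
    rw [hi, zero_pow hd] at h2
    refine mem_biUnion.2 ⟨i, mem_univ _, (mem_filter_univ _).2 ?_⟩
    rw [eq_div_iff (hκ i)]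
    linear_combination -h2
  · intro x _
    refine le_trans ?_ (card_fiber_le hd fun i => κ i*x^d+a i)
    refine card_le_card_of_injOn Prod.snd ?_ ?_
    · rintro ⟨x', v⟩ hz
      obtain ⟨h1, rfl⟩ := mem_filter.1 hz
      have h2 := (mem_filter.1 (mem_filter.1 h1).1).2
      exact mem_coe.2 (mem_filter.2 ⟨mem_univ _, h2⟩)
    · rintro ⟨x', v⟩ hz ⟨x'', v'⟩ hz' h
      grind
  · rw [mul_comm]
    exact Nat.mul_le_mul_right _ hB

/-- Nondegeneracy of the parameters of a curve. -/
structure Good (κ a : Fin k → F) : Prop where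
  κ0 : ∀ i, κ i ≠ 0
  a0 : ∀ i, a i ≠ 0
  ne : ∀ i j, i ≠ j → κ j*a i ≠ κ i*a j

/-- The coordinate ring of a nondegenerate curve exists and is a Dedekind domain. -/
lemma exists_curve (hd : (d : F) ≠ 0) {κ a : Fin k → F} (h : Good κ a) :
    ∃ (R E : Type) (_ : CommRing R) (_ : Algebra F[X] R) (_ : Algebra F R)
      (_ : IsScalarTower F F[X] R) (_ : CommRing E) (_ : Algebra F E) (M : Curve d k F R E),
      IsDedekindDomain R ∧ Nontrivial E ∧ M.κ = κ ∧ M.a = a := by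
  have hdn : d ≠ 0 := NeZero.ne d
  obtain ⟨R, _, _, D, hR⟩ := exists_kummer_dedekind (F := F) d hd k
    (fun i => C (κ i)*X^d+C (a i)) (fun i => by
      refine ⟨C (a i)⁻¹, - C ((a i)⁻¹*(d : F)⁻¹)*X, ?_⟩
      have e : (X : F[X])^d = X*X^(d-1) := by
        rw [← pow_succ', Nat.sub_add_cancel (pos_of_ne_zero hdn)]
      have e1 : (C (a i)⁻¹*C (a i) : F[X]) = 1 := by
        rw [← C_mul, inv_mul_cancel₀ (h.a0 i), C_1]
      have e2 : (C (d : F)⁻¹*(d : F[X]) : F[X]) = 1 := by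
        rw [← map_natCast (C : F →+* F[X]), ← C_mul, inv_mul_cancel₀ hd, C_1]
      simp only [derivative_add, derivative_mul, derivative_C, derivative_X_pow, zero_mul, zero_add,
        add_zero, map_natCast, C_mul]
      rw [e]
      linear_combination e1-C (a i)⁻¹*C (κ i)*X*X^(d-1)*e2)
    (fun i hu => by
      have h1 := natDegree_eq_zero_of_isUnit hu
      have h2 : (C (κ i)*X^d+C (a i)).natDegree = d := by
        rw [natDegree_add_C, natDegree_C_mul_X_pow _ _ (h.κ0 i)]
      omega)
    (fun i j hij => by
      have hne : κ j*a i-κ i*a j ≠ 0 := sub_ne_zero.2 (h.ne i j hij)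
      refine ⟨C ((κ j*a i-κ i*a j)⁻¹*κ j), - C ((κ j*a i-κ i*a j)⁻¹*κ i), ?_⟩
      have e1 : (C (κ j*a i-κ i*a j)⁻¹*C (κ j*a i-κ i*a j) : F[X]) = 1 := by
        rw [← C_mul, inv_mul_cancel₀ hne, C_1]
      simp only [C_mul, C_sub] at e1 ⊢
      linear_combination e1)
  obtain ⟨E, _, _, DE, hE⟩ := exists_kummer d F k κ
  let iA : Algebra F R := ((algebraMap F[X] R).comp C).toAlgebra
  have iT : IsScalarTower F F[X] R := IsScalarTower.of_algebraMap_eq fun x => rfl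
  exact ⟨R, E, _, _, iA, iT, _, _, ⟨κ, a, D, DE⟩, hR, hE, rfl, rfl⟩

/-! ### Upper bounds for the number of points -/

lemma KummerData.basis_single {B S : Type} [CommRing B] [CommRing S] [Algebra B S] {P : Fin k → B}
    (D : KummerData d B S k P) (hd2 : 2 ≤ d) (j : Fin k) : D.basis (Pi.single j 1) = D.n j := by
  have h1 : ((1 : Fin d) : ℕ) = 1 := by
    rw [Fin.val_one', Nat.mod_eq_of_lt hd2]
  rw [D.basis_apply, prod_eq_single j]
  · rw [Pi.single_eq_same, h1, pow_one]
  · intro i _ hi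
    rw [Pi.single_eq_of_ne hi]; simp
  · simp

lemma wt_single (hd2 : 2 ≤ d) (j : Fin k) : wt (Pi.single j 1 : Fin k → Fin d) = 1 := by
  have h1 : ((1 : Fin d) : ℕ) = 1 := by
    rw [Fin.val_one', Nat.mod_eq_of_lt hd2]
  unfold wt
  rw [sum_eq_single j]
  · rw [Pi.single_eq_same, h1]
  · grind
  · simp

lemma KummerData.trace_n {κ : Fin k → F} (D : KummerData d F E k κ) (hd2 : 2 ≤ d) (j : Fin k) :
    trace F E (D.n j) = 0 := by
  rw [Algebra.trace_eq_matrix_trace D.basis, Matrix.trace]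
  refine sum_eq_zero fun β _ => ?_
  rw [Matrix.diag_apply, Algebra.leftMulMatrix_eq_repr_mul, ← D.basis_single hd2, D.basis_mul,
    map_smul, Basis.repr_self, Finsupp.smul_single, Finsupp.single_apply, if_neg]
  intro h
  have h2 := congrFun (add_eq_right.1 h) j
  rw [Pi.single_eq_same, Pi.zero_apply] at h2
  have h1 : ((1 : Fin d) : ℕ) = 1 := by
    rw [Fin.val_one', Nat.mod_eq_of_lt hd2]
  rw [h2] at h1
  simp at h1

lemma KummerData.trace_one {κ : Fin k → F} (D : KummerData d F E k κ) :
    trace F E 1 = (d : F)^k := by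
  rw [Algebra.trace_eq_matrix_trace D.basis, map_one, Matrix.trace_one]
  simp

namespace Curve

variable (M : Curve d k F R E)

/-- A linear form in the coordinates. -/
noncomputable def lin (h₁ : F) (h : Fin k → F) : R := h₁ • M.x+∑ j, h j • M.D.n j

lemma n_mem (hd2 : 2 ≤ d) (j : Fin k) : M.D.n j ∈ M.V 1 ∧ M.lc 1 (M.D.n j) = M.DE.n j := by
  have e : M.D.n j = M.pm 1 (Pi.single j 1) := by
    rw [pm, one_smul, M.D.basis_single hd2]
  have h : (1 : F[X]).natDegree+wt (Pi.single j 1 : Fin k → Fin d) ≤ 1 := by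
    rw [wt_single hd2]; simp
  rw [e]
  refine ⟨M.pm_mem h, ?_⟩
  rw [M.lc_pm h, wt_single hd2, M.DE.basis_single hd2]
  simp

lemma lin_mem (hd2 : 2 ≤ d) (h₁ : F) (h : Fin k → F) : M.lin h₁ h ∈ M.V 1 :=
  add_mem (Submodule.smul_mem _ _ M.x_mem)
    (sum_mem fun j _ => Submodule.smul_mem _ _ (M.n_mem hd2 j).1)

lemma lin_trace (hd2 : 2 ≤ d) (hd : (d : F) ≠ 0) {h₁ : F} (h1 : h₁ ≠ 0) (h : Fin k → F) :
    trace F E (M.lc 1 (M.lin h₁ h)) ≠ 0 := by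
  have e : M.lc 1 M.x = 1 := by
    rw [← M.lc_one]
    have := M.lc_pm (l := 1) (p := X) (α := 0) (by simp [wt])
    simp only [pm, M.D.basis_apply, M.DE.basis_apply] at this
    rw [M.lc_one]
    simpa [wt, Algebra.smul_def, Curve.x] using this
  rw [lin, map_add, map_smul, map_sum, e, map_add, map_smul, M.DE.trace_one, map_sum,
    sum_eq_zero, add_zero]
  · exact mul_ne_zero h1 (pow_ne_zero _ hd)
  · intro j _
    rw [map_smul, map_smul, (M.n_mem hd2 j).2, M.DE.trace_n hd2, smul_zero]

lemma hom_lin {T : Type} [CommRing T] [Algebra F T] (φ : R →ₐ[F] T) (h₁ : F) (h : Fin k → F) :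
    φ (M.lin h₁ h) = h₁ • φ M.x+∑ j, h j • φ (M.D.n j) := by
  simp [lin]

end Curve

/-- The constant in the upper bound for the number of points. -/
def CR (d k p : ℕ) : ℕ := ((8*(d^k*((d-1)*k+1))+8+2*d^k)*(d^k*1+1) + 2*(d^k*((d-1)*k+1)))*p+k*d*d^k

/-- The constant in the upper bound for the number of points on Artin–Schreier covers. -/
def CA (d k p : ℕ) : ℕ := ((8*(p*(d^k*((d-1)*k+2)))+8+2*d^k)*(d^k*p+1) +
    2*(p*(d^k*((d-1)*k+2))))*p+k*d*d^k*p

variable (p:ℕ) [hp : Fact p.Prime] [CharP F p] [Fintype F]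

lemma one_le_sqrt_pow (n:ℕ) : (1:ℝ) ≤ √p^n := one_le_pow₀ (one_le_sqrt.2 (mod_cast hp.out.one_le))

/-- Upper bound for the number of points. -/
theorem count_le (hd : (d : F) ≠ 0) {κ a : Fin k → F} (h : Good κ a) (n:ℕ) (hq : card F = p^n) :
    ((Pts d κ a).card : ℝ) ≤ card F+CR d k p*√p^n := by
  have hs := one_le_sqrt_pow p n
  have hsplit : (CR d k p : ℝ)*√p^n = ((((8*(d^k*((d-1)*k+1))+8+2*d^k)*(d^k*1+1) +
      2*(d^k*((d-1)*k+1)))*p : ℕ) : ℝ)*√p^n +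
      ((k*d*d^k : ℕ) : ℝ)*√p^n := by
    rw [CR, Nat.cast_add, add_mul]
  rw [hsplit]
  by_cases hgood : ∃ z ∈ Pts d κ a, ∀ i, z.2 i ≠ 0
  · obtain ⟨⟨x, v⟩, hz, hv0⟩ := hgood
    have hv := (mem_filter.1 hz).2
    obtain ⟨R, E, _, _, _, _, _, _, M, hR, hE, rfl, rfl⟩ := exists_curve hd h
    obtain ⟨θ, hθ, -, -⟩ := M.exists_theta hd x v hv0 hv
    have hne : Nonempty (R →ₐ[F] F) := ⟨(M.exists_hom x v hv).choose⟩
    choose! φ hφ1 hφ2 using fun z : F × (Fin k → F) =>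
      fun hz : z ∈ Pts d M.κ M.a => M.exists_hom z.1 z.2 (mem_filter.1 hz).2
    have hcard : ((Pts d M.κ M.a).image φ).card = (Pts d M.κ M.a).card := by
      refine card_image_of_injOn fun z hz z' hz' he => ?_
      refine Prod.ext ?_ (funext fun i => ?_)
      · rw [← hφ1 z hz, ← hφ1 z' hz', he]
      · rw [← hφ2 z hz, ← hφ2 z' hz', he]
    have := M.filt.stepanov' p (Nat.one_le_pow _ _ (NeZero.pos d)) θ hθ (l := 1)
      (sub_mem M.x_mem (by
        rw [Algebra.algebraMap_eq_smul_one]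
        exact Submodule.smul_mem _ _ (M.V_mono (Nat.zero_le 1) M.one_mem))) n hq
      ((Pts d M.κ M.a).image φ)
    rw [hcard] at this
    refine this.trans ?_
    rw [← add_assoc]
    refine le_add_of_le_of_nonneg le_rfl (by positivity)
  · have h1 : (Pts d κ a).card ≤ k*d*d^k := by
      refine le_trans (card_le_card ?_) (card_bad_le (NeZero.ne d) κ a h.κ0)
      grind
    have h2 : ((Pts d κ a).card : ℝ) ≤ (k*d*d^k : ℕ) := mod_cast h1
    have h3 : ((k*d*d^k : ℕ) : ℝ)*1 ≤ ((k*d*d^k : ℕ) : ℝ)*√p^n := by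
      gcongr
    have h4 : (0:ℝ) ≤ card F := by positivity
    refine le_trans ?_ (add_le_add h4 (add_le_add (by positivity) h3))
    linarith

/-- Points of the Artin–Schreier cover `y ^ p - y = h₁ x + ∑ h_j n_j - β`. -/
noncomputable def PtsA (p d : ℕ) (κ a : Fin k → F) (h₁ : F) (h : Fin k → F) (β : F) :
    Finset ((F × (Fin k → F)) × F) :=
  univ.filter fun z => z.1 ∈ Pts d κ a ∧ z.2^p-z.2 = h₁*z.1.1+∑ j, h j*z.1.2 j-β

/-- Upper bound for the number of points of Artin–Schreier covers. -/
theorem as_le (hd2 : 2 ≤ d) (hd : (d : F) ≠ 0) {κ a : Fin k → F} (hg : Good κ a) {h₁ : F}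
    (h1 : h₁ ≠ 0) (h : Fin k → F) (β : F) (n:ℕ) (hq : card F = p^n) :
    ((PtsA p d κ a h₁ h β).card : ℝ) ≤ card F+CA d k p*√p^n := by
  have hs := one_le_sqrt_pow p n
  have hsplit : (CA d k p : ℝ)*√p^n = ((((8*(p*(d^k*((d-1)*k+2)))+8+2*d^k)*(d^k*p+1) +
    2*(p*(d^k*((d-1)*k+2))))*p : ℕ) : ℝ)*√p^n + ((k*d*d^k*p : ℕ) : ℝ)*√p^n := by
    rw [CA, Nat.cast_add, add_mul]
  rw [hsplit]
  have hpd : p.Coprime d := by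
    rw [hp.out.coprime_iff_not_dvd, ← CharP.cast_eq_zero_iff F p]
    exact hd
  by_cases hgood : ∃ z ∈ PtsA p d κ a h₁ h β, ∀ i, z.1.2 i ≠ 0
  · obtain ⟨⟨⟨x, v⟩, y⟩, hz, hv0⟩ := hgood
    have hz' := (mem_filter.1 hz).2
    have hv := (mem_filter.1 hz'.1).2
    have hy := hz'.2
    simp only at hv hv0 hy
    obtain ⟨R, E, _, _, _, _, _, _, M, hR, hE, rfl, rfl⟩ := exists_curve hd hg
    obtain ⟨θ, hθ, hθx, hθn⟩ := M.exists_theta hd x v hv0 hv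
    have hβ : algebraMap F R β ∈ M.V 0 := by
      rw [Algebra.algebraMap_eq_smul_one]
      exact Submodule.smul_mem _ _ M.one_mem
    set G : R := M.lin h₁ h-algebraMap F R β with hG
    have hG1 : G ∈ M.V 1 := sub_mem (M.lin_mem hd2 _ _) (M.V_mono (Nat.zero_le 1) hβ)
    have hG0 : M.lc 1 G ≠ 0 := by
      rw [hG, map_sub, M.lc_eq_zero one_pos hβ, sub_zero]
      intro h0
      apply M.lin_trace hd2 hd h1 h
      rw [h0, map_zero]
    have hdom := M.as_domain hg.κ0 p hpd hG0 hG1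
    obtain ⟨w, hw, -⟩ := ps_as_root (F := F) p (θ G) (a := y) (by
      rw [hG, map_sub, map_sub, M.hom_lin, map_add, map_sum, AlgHom.commutes]
      simp only [PowerSeries.constantCoeff_smul, hθx, hθn, hy]
      simp)
    let A := AdjoinRoot (asp p G)
    have hlift : ∀ (T : Type) [CommRing T] [Algebra F T] (ρ : R →ₐ[F] T) (w : T),
        w^p-w = ρ G → ∃ Φ : A →ₐ[F] T, (∀ r, Φ (algebraMap R A r) = ρ r) ∧
          Φ (root (asp p G)) = w := by
      intro T _ _ ρ w hw
      have h0 : (asp p G).eval₂ ρ.toRingHom w = 0 := by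
        simp only [asp, eval₂_sub, eval₂_X_pow, eval₂_X, eval₂_C, hw]
        exact sub_self _
      refine ⟨{ AdjoinRoot.lift ρ.toRingHom w h0 with commutes' := fun c => ?_ }, fun r => ?_, ?_⟩
      · show AdjoinRoot.lift ρ.toRingHom w h0 (algebraMap F A c) = _
        rw [IsScalarTower.algebraMap_apply F R A, AdjoinRoot.algebraMap_eq, AdjoinRoot.lift_of]
        exact ρ.commutes c
      · exact AdjoinRoot.lift_of h0
      · exact AdjoinRoot.lift_root h0
    obtain ⟨Θ, hΘ, -⟩ := hlift _ θ w hw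
    have hne : Nonempty (R →ₐ[F] F) := ⟨(M.exists_hom x v hv).choose⟩
    choose! φ hφ1 hφ2 using fun z : F × (Fin k → F) =>
      fun hz : z ∈ Pts d M.κ M.a => M.exists_hom z.1 z.2 (mem_filter.1 hz).2
    have hval : ∀ z : (F × (Fin k → F)) × F, z ∈ PtsA p d M.κ M.a h₁ h β → z.2^p-z.2 = φ z.1 G := by
      intro z hz
      have hz' := (mem_filter.1 hz).2
      rw [hz'.2, hG, map_sub, M.hom_lin, AlgHom.commutes, hφ1 _ hz'.1]
      simp only [hφ2 _ hz'.1, smul_eq_mul, Algebra.algebraMap_self, RingHom.id_apply]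
    have hneA : Nonempty (A →ₐ[F] F) := ⟨(hlift F (φ (x, v)) y (hval _ hz)).choose⟩
    choose! Φ hΦ1 hΦ2 using fun z : (F × (Fin k → F)) × F =>
      fun hz : z ∈ PtsA p d M.κ M.a h₁ h β => hlift F (φ z.1) z.2 (hval z hz)
    have hcard : ((PtsA p d M.κ M.a h₁ h β).image Φ).card = (PtsA p d M.κ M.a h₁ h β).card := by
      refine card_image_of_injOn fun z hz z' hz' he => ?_
      have e1 := (mem_filter.1 hz).2.1
      have e2 := (mem_filter.1 hz').2.1
      refine Prod.ext (Prod.ext ?_ (funext fun i => ?_)) ?_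
      · rw [← hφ1 _ e1, ← hφ1 _ e2, ← hΦ1 z hz, ← hΦ1 z' hz', he]
      · rw [← hφ2 _ e1, ← hφ2 _ e2, ← hΦ1 z hz, ← hΦ1 z' hz', he]
      · rw [← hΦ2 z hz, ← hΦ2 z' hz', he]
    have ht : M.x-algebraMap F R x ∈ M.V 1 := sub_mem M.x_mem (by
        rw [Algebra.algebraMap_eq_smul_one]
        exact Submodule.smul_mem _ _ (M.V_mono (Nat.zero_le 1) M.one_mem))
    have ht' := M.single_mem p hG1 0 (l := p) ht (by simp)
    have := (M.filtA p hG1).stepanov' p (Nat.one_le_pow _ _ (NeZero.pos d)) Θ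
      (t := (M.x-algebraMap F R x) • root (asp p G)^0)
      (by rw [pow_zero, ← Algebra.algebraMap_eq_smul_one]; rw [← hθ]; exact hΘ _) (l := p)
      ht' n hq ((PtsA p d M.κ M.a h₁ h β).image Φ)
    rw [hcard] at this
    refine this.trans ?_
    rw [← add_assoc]
    refine le_add_of_le_of_nonneg le_rfl (by positivity)
  · have h1 : (PtsA p d κ a h₁ h β).card ≤ k*d*d^k*p := by
      have h0 := card_bad_le (NeZero.ne d) κ a hg.κ0
      refine le_trans (card_le_mul_card_image_of_maps_to (f := Prod.fst)
        (t := (Pts d κ a).filter fun z => ∃ i, z.2 i = 0) ?_ p ?_) ?_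
      · intro z hz
        push Not at hgood
        exact mem_filter.2 ⟨(mem_filter.1 hz).2.1, hgood z hz⟩
      · intro z _
        have hm := asp_monic hp.out.one_lt (h₁*z.1+∑ j, h j*z.2 j-β)
        refine le_trans (card_le_card_of_injOn
          (t := (asp p (h₁*z.1+∑ j, h j*z.2 j-β)).roots.toFinset) Prod.snd ?_ ?_) ?_
        · rintro ⟨z', y⟩ hz'
          obtain ⟨h1, rfl⟩ := mem_filter.1 hz'
          have h2 := (mem_filter.1 h1).2.2
          rw [mem_coe, Multiset.mem_toFinset, mem_roots hm.ne_zero]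
          simp only [asp, IsRoot.def, eval_sub, eval_pow, eval_X, eval_C]
          exact sub_eq_zero.2 h2
        · rintro ⟨z', y⟩ hz ⟨z'', y'⟩ hz' he
          grind
        · refine (Multiset.toFinset_card_le _).trans ((card_roots' _).trans ?_)
          rw [asp_natDegree hp.out.one_lt]
      · rw [mul_comm]
        exact Nat.mul_le_mul_right _ h0
    have h2 : ((PtsA p d κ a h₁ h β).card : ℝ) ≤ (k*d*d^k*p : ℕ) := mod_cast h1
    have h3 : ((k*d*d^k*p : ℕ) : ℝ)*1 ≤ ((k*d*d^k*p : ℕ) : ℝ)*√p^n := by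
      gcongr
    have h4 : (0:ℝ) ≤ card F := by positivity
    refine le_trans ?_ (add_le_add h4 (add_le_add (by positivity) h3))
    linarith

end ASFilt

/-! ### Lower bounds by twisting -/

section Lower
open Polynomial Module

variable {d : ℕ} [NeZero d] {k : ℕ} {F : Type} [Field F] [Fintype F]

lemma Good.twist {κ a : Fin k → F} (h : Good κ a) (c : Fin k → Fˣ) :
    Good (fun i => (c i : F)⁻¹*κ i) (fun i => (c i : F)⁻¹*a i) where
  κ0 i := mul_ne_zero (inv_ne_zero (c i).ne_zero) (h.κ0 i)
  a0 i := mul_ne_zero (inv_ne_zero (c i).ne_zero) (h.a0 i)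
  ne i j hij he := h.ne i j hij (by
    have h1 := (c i).ne_zero
    have h2 := (c j).ne_zero
    field_simp at he
    linear_combination he)

lemma card_Pts (κ a : Fin k → F) : (Pts d κ a).card =
    ∑ x : F, ∏ i, (univ.filter fun y : F => y^d = κ i*x^d+a i).card := by
  have h : ∀ x : F, ∏ i, (univ.filter fun y : F => y^d = κ i*x^d+a i).card =
      ((Pts d κ a).filter fun z => z.1 = x).card := by
    intro x
    rw [← card_piFinset]
    refine card_bij (fun v _ => (x, v)) ?_ ?_ ?_
    · intro v hv
      simpa [Pts] using hv
    · intro v _ v' _ h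
      exact (Prod.mk.inj h).2
    · rintro ⟨x', v⟩ hz
      obtain ⟨h1, rfl⟩ := mem_filter.1 hz
      exact ⟨v, by simpa [Pts] using h1, rfl⟩
  simp_rw [h]
  exact card_eq_sum_card_fiberwise (fun _ _ => mem_univ _)

lemma sum_twist_aux (P : F) : ∑ c : Fˣ, (univ.filter fun y : F => y^d = (c : F)⁻¹*P).card =
      card F-1 := by
  rw [← Fintype.card_units]
  by_cases hP : P = 0
  · have : ∀ c : Fˣ, (univ.filter fun y : F => y^d = (c : F)⁻¹*P).card = 1 := by
      intro c
      rw [card_eq_one]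
      refine ⟨0, ?_⟩
      ext y
      simp [hP, NeZero.ne d]
    simp [this]
  · rw [← card_sigma, ← card_univ (α := Fˣ)]
    symm
    refine card_bij (fun u _ => ⟨Units.mk0 P hP*(u^d)⁻¹, (u : F)⟩) ?_ ?_ ?_
    · intro u _
      have := u.ne_zero
      simp only [mem_sigma, mem_univ, mem_filter, true_and]
      simp
      field_simp
    · intro u _ u' _ h
      simp only [Sigma.mk.injEq, heq_eq_eq] at h
      exact Units.ext h.2
    · rintro ⟨c, y⟩ h
      simp only [mem_sigma, mem_univ, mem_filter, true_and] at h
      have hy : y ≠ 0 := by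
        rintro rfl
        rw [zero_pow (NeZero.ne d)] at h
        exact mul_ne_zero (inv_ne_zero c.ne_zero) hP h.symm
      refine ⟨Units.mk0 y hy, mem_univ _, ?_⟩
      simp only [Sigma.mk.injEq, Units.val_mk0, heq_eq_eq, and_true]
      ext
      simp only [Units.val_mul, Units.val_mk0, Units.val_inv_eq_inv_val, Units.val_pow_eq_pow_val, h]
      field_simp

/-- The total number of points on all twists of the curve. -/
lemma sum_twist (κ a : Fin k → F) :
    ∑ c : Fin k → Fˣ, (Pts d (fun i => (c i : F)⁻¹*κ i) (fun i => (c i : F)⁻¹*a i)).card =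
      card F*(card F-1)^k := by
  simp_rw [card_Pts]
  rw [sum_comm]
  have : ∀ x : F, ∑ c : Fin k → Fˣ, ∏ i, (univ.filter fun y : F =>
      y^d = (c i : F)⁻¹*κ i*x^d+(c i : F)⁻¹*a i).card =
      (card F-1)^k := by
    intro x
    rw [← Fintype.prod_sum (fun i (c : Fˣ) => (univ.filter fun y : F =>
      y^d = (c : F)⁻¹*κ i*x^d+(c : F)⁻¹*a i).card)]
    have : ∀ i : Fin k, ∑ c : Fˣ, (univ.filter fun y : F =>
      y^d = (c : F)⁻¹*κ i*x^d+(c : F)⁻¹*a i).card = card F-1 := by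
      intro i
      rw [← sum_twist_aux (d := d) (κ i*x^d+a i)]
      simp only [mul_add, mul_assoc]
    simp [this]
  simp [this]

/-- Twisting by `d`-th powers does not change the number of points. -/
lemma card_twist_pow (κ a : Fin k → F) (l : Fin k → Fˣ) :
    (Pts d (fun i => (((l^d) i : Fˣ) : F)⁻¹*κ i) (fun i => (((l^d) i : Fˣ) : F)⁻¹*a i)).card =
      (Pts d κ a).card := by
  refine card_bij (fun z _ => (z.1, fun i => (l i : F)*z.2 i)) ?_ ?_ ?_
  · intro z hz
    simp only [Pts, mem_filter_univ] at hz ⊢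
    intro i
    have := (l i).ne_zero
    rw [mul_pow, hz i]
    simp only [Pi.pow_apply, Units.val_pow_eq_pow_val]
    field_simp
  · intro z _ z' _ h
    obtain ⟨h1, h2⟩ := Prod.mk.inj h
    exact Prod.ext h1 (funext fun i => mul_left_cancel₀ (l i).ne_zero (congrFun h2 i))
  · intro z hz
    refine ⟨(z.1, fun i => (l i : F)⁻¹*z.2 i), ?_, ?_⟩
    · simp only [Pts, mem_filter_univ] at hz ⊢
      intro i
      have := (l i).ne_zero
      rw [mul_pow, hz i, inv_pow]
      simp only [Pi.pow_apply, Units.val_pow_eq_pow_val]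
      field_simp
    · refine Prod.ext rfl (funext fun i => ?_)
      have := (l i).ne_zero
      simp only
      field_simp

lemma card_units_pow_le (c : Fin k → Fˣ) :
    (univ.filter fun l : Fin k → Fˣ => l^d = c).card ≤ d^k := by
  have h1 : (univ.filter fun l : Fin k → Fˣ => l^d = c) =
      piFinset fun i => univ.filter fun u : Fˣ => u^d = c i := by
    ext l
    simp [funext_iff]
  rw [h1, card_piFinset]
  refine (prod_le_prod' (g := fun _ => d) fun i _ => ?_).trans (by simp)
  refine le_trans (card_le_card_of_injOn (fun u : Fˣ => (u : F)) ?_ ?_)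
    (card_pow_eq_le (NeZero.ne d) ((c i : Fˣ) : F))
  · intro u hu
    have := (mem_filter.1 hu).2
    simp [← this]
  · intro u _ u' _ h
    exact Units.ext h

variable (p:ℕ) [hp : Fact p.Prime] [CharP F p]

/-- Lower bound for the number of points. -/
theorem le_count (hd : (d : F) ≠ 0) {κ a : Fin k → F} (h : Good κ a) (n:ℕ) (hq : card F = p^n) :
    (card F : ℝ)-d^k*CR d k p*√p^n ≤ (Pts d κ a).card := by
  have hs := one_le_sqrt_pow p n
  set q : ℝ := ((card F : ℕ) : ℝ) with hqd
  set B : ℝ := CR d k p*√p^n with hB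
  have hB0 : 0 ≤ B := by positivity
  let N : (Fin k → Fˣ) → ℝ := fun c =>
    ((Pts d (fun i => (c i : F)⁻¹*κ i) (fun i => (c i : F)⁻¹*a i)).card : ℝ)
  have hle : ∀ c, 0 ≤ q+B-N c := fun c => by
    have := count_le p hd (h.twist c) n hq
    simp only [N]
    linarith
  have hcard1 : 1 ≤ card F := Fintype.card_pos
  have hU : ((card (Fin k → Fˣ) : ℕ) : ℝ) = (q-1)^k := by
    rw [Fintype.card_fun, Fintype.card_units, card_fin]
    push_cast [Nat.cast_sub hcard1]
    rfl
  have hsum : ∑ c, (q+B-N c) = (q-1)^k*B := by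
    have h1 : ∑ c, N c = q*(q-1)^k := by
      have := sum_twist (d := d) κ a
      have h2 := congrArg (fun t : ℕ => (t:ℝ)) this
      push_cast [Nat.cast_sub hcard1] at h2
      exact h2
    rw [sum_sub_distrib, h1, sum_const, card_univ, nsmul_eq_mul, hU]
    ring
  have hN1 : ∀ l : Fin k → Fˣ, N (l^d) = (Pts d κ a).card := fun l => by
    simp only [N]
    exact_mod_cast card_twist_pow κ a l
  have h3 : ∑ l : Fin k → Fˣ, (q+B-N (l^d)) ≤ d^k*∑ c, (q+B-N c) := by
    rw [← sum_fiberwise' (univ) (fun l : Fin k → Fˣ => l^d) (fun c => q+B-N c), mul_sum]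
    refine sum_le_sum fun c _ => ?_
    rw [sum_const, nsmul_eq_mul]
    refine mul_le_mul_of_nonneg_right ?_ (hle c)
    exact_mod_cast card_units_pow_le c
  rw [hsum] at h3
  simp only [hN1, sum_const, card_univ, nsmul_eq_mul, hU] at h3
  have hpos : 0 < (q-1)^k := by
    rw [← hU]
    exact_mod_cast Fintype.card_pos
  have h4 : q+B-(Pts d κ a).card ≤ d^k*B := by
    refine le_of_mul_le_mul_left ?_ hpos
    linarith
  grind

end Lower

/-! ### Character sums over arbitrary finite fields -/

section ASTrace
open Polynomial Module

variable (p:ℕ) [hp : Fact p.Prime] {F : Type} [Field F] [Fintype F] [Algebra (ZMod p) F]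

/-- The Artin–Schreier map `y ↦ y ^ p - y`, as a linear map over the prime field. -/
noncomputable def asMap : F →ₗ[ZMod p] F :=
  (FiniteField.frobeniusAlgEquivOfAlgebraic (ZMod p) F).toLinearMap-LinearMap.id

lemma asMap_apply (y : F) : asMap p y = y^p-y := by
  simp [asMap, ZMod.card]

lemma card_asMap_fiber_le (c : F) : (univ.filter fun y : F => y^p-y = c).card ≤ p := by
  have hm := asp_monic hp.out.one_lt c
  refine le_trans (card_le_card (t := (asp p c).roots.toFinset) ?_) ?_
  · intro y hy
    have h2 := (mem_filter.1 hy).2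
    rw [Multiset.mem_toFinset, mem_roots hm.ne_zero]
    simp only [asp, IsRoot.def, eval_sub, eval_pow, eval_X, eval_C]
    exact sub_eq_zero.2 h2
  · refine (Multiset.toFinset_card_le _).trans ((card_roots' _).trans ?_)
    rw [asp_natDegree hp.out.one_lt]

/-- Additive Hilbert 90 for finite fields. -/
lemma exists_as {c : F} (hc : trace (ZMod p) F c = 0) : ∃ y : F, y^p-y = c := by
  have hfin : Module.Finite (ZMod p) F := Module.Finite.of_finite
  have hle : LinearMap.range (asMap p (F := F)) ≤ LinearMap.ker (trace (ZMod p) F) := by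
    rintro _ ⟨y, rfl⟩
    rw [LinearMap.mem_ker, asMap, LinearMap.sub_apply, map_sub, sub_eq_zero]
    exact Algebra.trace_eq_of_algEquiv (FiniteField.frobeniusAlgEquivOfAlgebraic (ZMod p) F) y
  have h1 : finrank (ZMod p) (LinearMap.ker (asMap p (F := F))) ≤ 1 := by
    have h2 : Nat.card (LinearMap.ker (asMap p (F := F))) ≤ p := by
      refine le_trans (le_of_eq ?_) (card_asMap_fiber_le p (0 : F))
      rw [Nat.card_eq_fintype_card, Fintype.card_subtype]
      congr 1
      ext y
      simp only [mem_filter_univ, LinearMap.mem_ker, asMap_apply]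
    rw [Module.natCard_eq_pow_finrank (K := ZMod p), Nat.card_zmod] at h2
    by_contra hlt
    push Not at hlt
    have := Nat.pow_lt_pow_right hp.out.one_lt hlt
    rw [pow_one] at this
    omega
  have h2 := LinearMap.finrank_range_add_finrank_ker (asMap p (F := F))
  have h3 := LinearMap.finrank_range_add_finrank_ker (trace (ZMod p) F)
  have h4 : finrank (ZMod p) (LinearMap.range (trace (ZMod p) F)) = 1 := by
    rw [LinearMap.range_eq_top.2 (Algebra.trace_surjective (ZMod p) F), finrank_top, finrank_self]
  have h5 := Submodule.eq_of_le_of_finrank_le hle (by omega)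
  have h6 : c ∈ LinearMap.range (asMap p (F := F)) := by rw [h5]; exact hc
  obtain ⟨y, hy⟩ := h6
  exact ⟨y, by rw [← hy, asMap_apply]⟩

lemma card_as_fiber {c : F} (hc : trace (ZMod p) F c = 0) :
    p ≤ (univ.filter fun y : F => y^p-y = c).card := by
  obtain ⟨y, hy⟩ := exists_as p hc
  have h1 : (univ : Finset (ZMod p)).card = p := by rw [card_univ, ZMod.card]
  conv_lhs => rw [← h1]
  refine card_le_card_of_injOn (fun t => y+algebraMap (ZMod p) F t) ?_ ?_
  · intro t _
    have hc : CharP F p := charP_of_injective_algebraMap (algebraMap (ZMod p) F).injective p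
    simp only [coe_filter, mem_univ, true_and, Set.mem_ofPred_eq]
    rw [add_pow_char, ← map_pow, ZMod.pow_card, ← hy]
    ring
  · intro t _ t' _ h
    exact (algebraMap (ZMod p) F).injective (add_left_cancel h)

variable {d : ℕ} [NeZero d] {k : ℕ}

/-- Character sums over the points of the curve, over an arbitrary finite field. The bound depends on
`p`. -/
theorem char_le (hd2 : 2 ≤ d) (hd : (d : F) ≠ 0) {κ a : Fin k → F} (hg : Good κ a) {h₁ : F}
    (h1 : h₁ ≠ 0) (h : Fin k → F) (n:ℕ) (hq : card F = p^n)
    (ψ : AddChar (ZMod p) ℂ) (hψ : ψ ≠ 1) :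
    ‖∑ z ∈ Pts d κ a, ψ (trace (ZMod p) F (h₁*z.1+∑ j, h j*z.2 j))‖ ≤
      (d^k*CR d k p+CA d k p : ℕ)*√p^n := by
  have hc : CharP F p := charP_of_injective_algebraMap (algebraMap (ZMod p) F).injective p
  have hp0 : (0:ℝ) < p := mod_cast hp.out.pos
  set q : ℝ := ((card F : ℕ) : ℝ) with hqd
  let T : F × (Fin k → F) → ZMod p := fun z =>
    trace (ZMod p) F (h₁*z.1+∑ j, h j*z.2 j)
  let nb : ZMod p → ℝ := fun b => ((Pts d κ a).filter fun z => T z = b).card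
  set B : ℝ := CA d k p*√p^n with hB
  have hub : ∀ b, p*nb b ≤ q+B := by
    intro b
    obtain ⟨β, hβ⟩ := Algebra.trace_surjective (ZMod p) F b
    refine le_trans ?_ (as_le p hd2 hd hg h1 h β n hq)
    have h2 : ((Pts d κ a).filter fun z => T z = b).card*p ≤ (PtsA p d κ a h₁ h β).card := by
      have h3 : PtsA p d κ a h₁ h β = PtsA p d κ a h₁ h β := rfl
      rw [card_eq_sum_card_fiberwise (s := PtsA p d κ a h₁ h β) (f := Prod.fst)
        (t := Pts d κ a) (fun z hz => (mem_filter.1 hz).2.1)]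
      refine le_trans ?_ (sum_le_sum_of_subset (filter_subset (fun z => T z = b) _))
      rw [← smul_eq_mul]
      refine card_nsmul_le_sum _ _ _ fun z hz => ?_
      obtain ⟨hz1, hz2⟩ := mem_filter.1 hz
      have h4 := card_as_fiber p (c := h₁*z.1+∑ j, h j*z.2 j-β) (by
        rw [map_sub, hβ, sub_eq_zero]; exact hz2)
      refine h4.trans (card_le_card_of_injOn (fun y => (z, y)) ?_ ?_)
      · intro y hy
        have := (mem_filter.1 hy).2
        simp only [coe_filter, Set.mem_ofPred_eq, and_true]
        exact mem_filter.2 ⟨mem_univ _, hz1, this⟩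
      · intro y _ y' _ h
        exact (Prod.mk.inj h).2
    simp only [nb]
    rw [mul_comm]
    exact_mod_cast h2
  have hS : ∑ z ∈ Pts d κ a, ψ (T z) = ∑ b, (nb b : ℂ)*ψ b := by
    rw [← sum_fiberwise' (Pts d κ a) T (fun b => ψ b)]
    refine sum_congr rfl fun b _ => ?_
    rw [sum_const, nsmul_eq_mul]
    simp [nb]
  have hsum0 : ∑ b, ψ b = 0 := AddChar.sum_eq_zero_of_ne_one hψ
  have hS2 : ∑ z ∈ Pts d κ a, ψ (T z) = - ∑ b, (((q+B)/p-nb b : ℝ) : ℂ)*ψ b := by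
    rw [hS]
    simp only [Complex.ofReal_sub, sub_mul, sum_sub_distrib, ← mul_sum, hsum0]
    simp
  have htot : ∑ b, nb b = (Pts d κ a).card := by
    simp only [nb]
    exact_mod_cast (card_eq_sum_card_fiberwise (fun _ _ => mem_univ _)).symm
  change ‖∑ z ∈ Pts d κ a, ψ (T z)‖ ≤ _
  rw [hS2, norm_neg]
  refine (norm_sum_le _ _).trans ?_
  have h5 : ∀ b, ‖(((q+B)/p-nb b : ℝ) : ℂ)*ψ b‖ ≤ (q+B)/p-nb b := by
    intro b
    rw [norm_mul, Complex.norm_real, AddChar.norm_apply, mul_one, norm_of_nonneg]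
    rw [sub_nonneg, le_div_iff₀ hp0, mul_comm]
    exact hub b
  refine (sum_le_sum fun b _ => h5 b).trans ?_
  rw [sum_sub_distrib, htot, sum_const, card_univ, ZMod.card, nsmul_eq_mul,
    mul_div_cancel₀ _ hp0.ne']
  have h6 := le_count p hd hg n hq
  grind

/-- Point counts over an arbitrary finite field. The bound depends on `p`. -/
theorem count_abs_le (hd : (d : F) ≠ 0) {κ a : Fin k → F} (hg : Good κ a)
    (n:ℕ) (hq : card F = p^n) :
    |((Pts d κ a).card : ℝ)-card F| ≤ (d^k*CR d k p : ℕ)*√p^n := by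
  have hc : CharP F p := charP_of_injective_algebraMap (algebraMap (ZMod p) F).injective p
  have h1 := le_count p hd hg n hq
  have h2 := count_le p hd hg n hq
  have hs := one_le_sqrt_pow p n
  have h3 : (CR d k p : ℝ)*√p^n ≤ (d^k*CR d k p : ℕ)*√p^n := by
    refine mul_le_mul_of_nonneg_right ?_ (by positivity)
    exact_mod_cast Nat.le_mul_of_pos_left _ (pow_pos (NeZero.pos d) _)
  grind

end ASTrace

/-! ### The Weil bound over a prime field -/

section LocalWeil
open Polynomial Module

variable {d : ℕ} [NeZero d] {k : ℕ} (p:ℕ) [hp : Fact p.Prime]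

namespace Curve

variable {R E : Type} [CommRing R] [Algebra (ZMod p)[X] R] [Algebra (ZMod p) R]
  [IsScalarTower (ZMod p) (ZMod p)[X] R] [CommRing E] [Algebra (ZMod p) E]

/-- Character sums over a curve as sums over points. -/
lemma S_eq (M : Curve d k (ZMod p) R E) [IsDedekindDomain R] [Nontrivial E]
    (ψ : AddChar (ZMod p) ℂ) (h₁:ZMod p) (h : Fin k → ZMod p)
    (K : Type) [Field K] [Algebra (ZMod p) K] [Fintype K] :
    M.finIdeals.S ψ (M.lin h₁ h) (finrank (ZMod p) K) =
      ∑ z ∈ Pts d (fun i => algebraMap (ZMod p) K (M.κ i)) (fun i => algebraMap (ZMod p) K (M.a i)),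
        ψ (trace (ZMod p) K (algebraMap (ZMod p) K h₁*z.1 +
          ∑ j, algebraMap (ZMod p) K (h j)*z.2 j)) := by
  let e : (R →ₐ[ZMod p] K) → K × (Fin k → K) := fun φ => (φ M.x, fun i => φ (M.D.n i))
  have he : Injective e := by
    intro φ φ' h
    obtain ⟨h1, h2⟩ := Prod.mk.inj h
    exact M.hom_ext h1 (fun i => congrFun h2 i)
  have hft : Fintype (R →ₐ[ZMod p] K) := Fintype.ofInjective e he
  have hinf : Infinite R := Infinite.of_injective _ M.D.basis.algebraMap_injective
  rw [FinIdeals.S_eq_sum_points]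
  refine sum_bij (fun φ _ => e φ) ?_ (fun _ _ _ _ h => he h) ?_ ?_
  · intro φ _
    exact mem_filter.2 ⟨mem_univ _, fun i => M.hom_pt φ i⟩
  · intro z hz
    obtain ⟨φ, h1, h2⟩ := M.exists_hom z.1 z.2 (mem_filter.1 hz).2
    exact ⟨φ, mem_univ _, Prod.ext h1 (funext h2)⟩
  · intro φ _
    rw [M.hom_lin]
    simp only [e, Algebra.smul_def]

end Curve

lemma Good.map {F K : Type} [Field F] [Field K] (f : F →+* K) {κ a : Fin k → F} (h : Good κ a) :
    Good (fun i => f (κ i)) (fun i => f (a i)) where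
  κ0 i := by simpa using h.κ0 i
  a0 i := by simpa using h.a0 i
  ne i j hij he := h.ne i j hij (by
    rw [← map_mul, ← map_mul] at he
    exact f.injective he)

/-- The Weil bound for character sums along the curve over a prime field. -/
theorem weil_pts_char (hd2 : 2 ≤ d) (hd : ¬ p ∣ d) {κ a : Fin k → ZMod p} (hg : Good κ a)
    {h₁ : ZMod p} (h1 : h₁ ≠ 0) (h : Fin k → ZMod p) (ψ : AddChar (ZMod p) ℂ) (hψ : ψ ≠ 1) :
    ‖∑ z ∈ Pts d κ a, ψ (h₁*z.1+∑ j, h j*z.2 j)‖ ≤ (d^k*(2*((d-1)*k)+3) : ℕ)*√p := by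
  have hd' : ((d:ℕ) : ZMod p) ≠ 0 := by rwa [Ne, ZMod.natCast_eq_zero_iff]
  obtain ⟨R, E, _, _, _, _, _, _, M, hR, hE, rfl, rfl⟩ := exists_curve hd' hg
  have h2 := M.S_eq p ψ h₁ h (ZMod p)
  rw [finrank_self] at h2
  simp only [Algebra.algebraMap_self, RingHom.id_apply, Algebra.trace_self_apply] at h2
  rw [← h2]
  have := M.weil_char ψ hψ (M.lin_mem hd2 h₁ h) (M.lin_trace hd2 hd' h1 h)
    (d^k*CR d k p+CA d k p : ℕ) (√p)
    (sqrt_pos.2 (mod_cast hp.out.pos)) (by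
      intro n hn
      let K := GaloisField p n
      have hfK : Fintype K := Fintype.ofFinite _
      have hK : finrank (ZMod p) K = n := GaloisField.finrank p (by omega)
      have h3 := M.S_eq p ψ h₁ h K
      rw [hK] at h3
      rw [h3]
      have hinj := (algebraMap (ZMod p) K).injective
      refine char_le p hd2 ?_ (hg.map (algebraMap (ZMod p) K)) ?_ _ n ?_ ψ hψ
      · rw [← map_natCast (algebraMap (ZMod p) K)]
        rwa [Ne, map_eq_zero]
      · rwa [Ne, map_eq_zero]
      · rw [← Nat.card_eq_fintype_card, GaloisField.card p n (by omega)])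
  exact this

/-- The Weil bound for the number of points of the curve over a prime field. -/
theorem weil_pts_count (hd : ¬ p ∣ d) {κ a : Fin k → ZMod p} (hg : Good κ a) :
    |((Pts d κ a).card : ℝ)-p| ≤ (d^k*(2*((d-1)*k)+4)+1 : ℕ)*√p := by
  have hd' : ((d:ℕ) : ZMod p) ≠ 0 := by rwa [Ne, ZMod.natCast_eq_zero_iff]
  obtain ⟨R, E, _, _, _, _, _, _, M, hR, hE, rfl, rfl⟩ := exists_curve hd' hg
  have hS : ∀ (K : Type) [Field K] [Algebra (ZMod p) K] [Fintype K],
      M.finIdeals.S (1 : AddChar (ZMod p) ℂ) 0 (finrank (ZMod p) K) =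
      ((Pts d (fun i => algebraMap (ZMod p) K (M.κ i))
        (fun i => algebraMap (ZMod p) K (M.a i))).card : ℂ) := by
    intro K _ _ _
    have := M.S_eq p 1 0 0 K
    have h0 : M.lin 0 0 = 0 := by simp [Curve.lin]
    rw [h0] at this
    rw [this]
    simp
  have h2 := hS (ZMod p)
  rw [finrank_self] at h2
  simp only [Algebra.algebraMap_self, RingHom.id_apply] at h2
  have := M.weil_count (1 : AddChar (ZMod p) ℂ) (d^k*CR d k p : ℕ) (√p)
    (sqrt_pos.2 (mod_cast hp.out.pos)) (by
      intro n hn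
      let K := GaloisField p n
      have hfK : Fintype K := Fintype.ofFinite _
      have hK : finrank (ZMod p) K = n := GaloisField.finrank p (by omega)
      have h3 := hS K
      rw [hK] at h3
      rw [h3]
      have hcard : card K = p^n := by
        rw [← Nat.card_eq_fintype_card, GaloisField.card p n (by omega)]
      have h4 := count_abs_le p (F := K) (d := d) (by
        rw [← map_natCast (algebraMap (ZMod p) K)]
        rwa [Ne, map_eq_zero]) (hg.map (algebraMap (ZMod p) K)) n hcard
      rw [hcard] at h4
      refine le_trans (le_of_eq ?_) h4
      rw [ZMod.card, ← norm_eq_abs, ← Complex.norm_real]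
      push_cast
      rfl)
  rw [h2, ZMod.card] at this
  refine le_trans (le_of_eq ?_) this
  rw [← norm_eq_abs, ← Complex.norm_real]
  push_cast
  rfl

end LocalWeil

/-! ### Coinciding shifts -/

section Coincide

variable {d : ℕ} [NeZero d] (p:ℕ) [hp : Fact p.Prime]

lemma mem_Pts {F : Type} [Field F] [Fintype F] {k : ℕ} {κ a : Fin k → F} {z : F × (Fin k → F)} :
    z ∈ Pts d κ a ↔ ∀ i, z.2 i^d = κ i*z.1^d+a i := by
  simp [Pts]

lemma card_Pts_le {F : Type} [Field F] [Fintype F] {k : ℕ} (κ a : Fin k → F) :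
    (Pts d κ a).card ≤ d^k*card F := by
  rw [card_Pts]
  refine (sum_le_card_nsmul _ _ (d^k) fun x _ => ?_).trans ?_
  · refine (prod_le_prod' (g := fun _ => d) fun i _ => ?_).trans (by simp)
    exact card_pow_eq_le (NeZero.ne d) _
  · rw [smul_eq_mul, card_univ, mul_comm]

lemma le_mul_sqrt_of_dvd (hd : p ∣ d) : (p:ℝ) ≤ d*√p := by
  have h1 : p ≤ d := Nat.le_of_dvd (NeZero.pos d) hd
  have h2 : (p:ℝ) ≤ d := mod_cast h1
  have h3 : √p*√p = p := mul_self_sqrt (by positivity)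
  have h4 : (1:ℝ) ≤ √p := one_le_sqrt.2 (mod_cast hp.out.one_le)
  calc (p:ℝ) = p*1 := (mul_one _).symm
    _ ≤ d*√p := by gcongr

lemma norm_sum_pts_le {k : ℕ} (κ a : Fin k → ZMod p) (ψ : AddChar (ZMod p) ℂ)
    (g : ZMod p × (Fin k → ZMod p) → ZMod p) :
    ‖∑ z ∈ Pts d κ a, ψ (g z)‖ ≤ d^k*p := by
  refine (norm_sum_le _ _).trans ?_
  simp only [AddChar.norm_apply, sum_const, nsmul_eq_mul, mul_one]
  have := card_Pts_le (d := d) κ a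
  rw [ZMod.card] at this
  exact_mod_cast this

/-- The sum over the last variable when two of the equations coincide: away from the zeros of
`w`, the solutions of `y ^ d = w ^ d` are the `ζ w` with `ζ ^ d = 1`. -/
lemma sum_root_eq {F : Type} [Field F] [Fintype F] (G : F → ℂ) {w : F} (hw : w ≠ 0) :
    ∑ y ∈ univ.filter (fun y : F => y^d = w^d), G y =
      ∑ ζ ∈ univ.filter (fun ζ : F => ζ^d = 1), G (ζ*w) := by
  symm
  refine sum_bij (fun ζ _ => ζ*w) ?_ ?_ ?_ (fun _ _ => rfl)
  · intro ζ hζ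
    have := (mem_filter.1 hζ).2
    simp [mul_pow, this]
  · intro ζ _ ζ' _ h
    exact mul_right_cancel₀ hw h
  · intro y hy
    have := (mem_filter.1 hy).2
    refine ⟨y/w, ?_, div_mul_cancel₀ _ hw⟩
    simp only [mem_filter_univ, div_pow, this]
    exact div_self (pow_ne_zero _ hw)

lemma sum_Pts_succ {F : Type} [Field F] [Fintype F] {k : ℕ} (κ a : Fin (k+1) → F)
    (j : Fin (k+1)) (G : F × (Fin (k+1) → F) → ℂ) :
    ∑ z ∈ Pts d κ a, G z = ∑ z ∈ Pts d (fun i => κ (j.succAbove i)) (fun i => a (j.succAbove i)),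
        ∑ y ∈ univ.filter (fun y : F => y^d = κ j*z.1^d+a j), G (z.1, j.insertNth y z.2) := by
  rw [sum_sigma']
  refine sum_bij' (fun z _ => ⟨(z.1, fun i => z.2 (j.succAbove i)), z.2 j⟩)
    (fun w _ => (w.1.1, j.insertNth w.2 w.1.2)) ?_ ?_ ?_ ?_ ?_
  · intro z hz
    have := (mem_filter.1 hz).2
    simp only [mem_sigma, Pts, mem_filter_univ]
    exact ⟨fun i => this _, this j⟩
  · intro w hw
    simp only [mem_sigma, Pts, mem_filter_univ] at hw ⊢
    intro i
    refine Fin.succAboveCases j ?_ (fun i => ?_) i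
    · simpa using hw.2
    · simpa using hw.1 i
  · intro z _
    refine Prod.ext rfl ?_
    exact Fin.insertNth_self_removeNth j z.2
  · intro w _
    simp
  · intro z _
    congr 1
    refine Prod.ext rfl ?_
    exact (Fin.insertNth_self_removeNth j z.2).symm

/-- The character sum bound without the hypothesis that the other shifts are distinct. -/
theorem local_char (hd2 : 2 ≤ d) (k:ℕ) : ∃ C : ℝ, 0 ≤ C ∧ ∀ (p:ℕ) [Fact p.Prime]
    (a : Fin k → ZMod p), (∀ j, a j ≠ 0) → ∀ h₁ : ZMod p, h₁ ≠ 0 → ∀ (h : Fin k → ZMod p)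
    (ψ : AddChar (ZMod p) ℂ), ψ ≠ 1 →
    ‖∑ z ∈ Pts d (fun _ => 1) a, ψ (h₁*z.1+∑ j, h j*z.2 j)‖ ≤ C*√p := by
  induction k with
  | zero =>
    refine ⟨d^0*d+(d^0*(2*((d-1)*0)+3) : ℕ), by positivity, ?_⟩
    intro p hp a ha h₁ h1 h ψ hψ
    have hs := sqrt_nonneg (p:ℝ)
    by_cases hd : p ∣ d
    · refine (norm_sum_pts_le p _ a ψ _).trans ?_
      have := le_mul_sqrt_of_dvd p hd
      grind
    · refine (weil_pts_char p hd2 hd ⟨fun i => one_ne_zero, ha, fun i => i.elim0⟩ h1 h ψ hψ).trans ?_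
      gcongr
      exact le_add_of_nonneg_left (by positivity)
  | succ k ih =>
    obtain ⟨C, hC, ih⟩ := ih
    refine ⟨d^(k+1)*d+(d^(k+1)*(2*((d-1)*(k+1))+3) : ℕ) +
      (d*C+(k*d*d^k*(1+d) : ℕ)), by positivity, ?_⟩
    intro p hp a ha h₁ h1 h ψ hψ
    have hs := sqrt_nonneg (p:ℝ)
    have hs1 : (1:ℝ) ≤ √p := one_le_sqrt.2 (mod_cast hp.out.one_le)
    by_cases hd : p ∣ d
    · refine (norm_sum_pts_le p _ a ψ _).trans ?_
      have := le_mul_sqrt_of_dvd p hd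
      have h2 : (d:ℝ)^(k+1)*p ≤ d^(k+1)*(d*√p) := by gcongr
      refine h2.trans ?_
      rw [add_assoc, add_mul, ← mul_assoc]
      exact le_add_of_nonneg_right (by positivity)
    by_cases hinj : Injective a
    · refine (weil_pts_char p hd2 hd ⟨fun i => one_ne_zero, ha, fun i j hij => by
        simpa using hinj.ne hij⟩ h1 h ψ hψ).trans ?_
      gcongr
      rw [add_right_comm]
      exact le_add_of_nonneg_left (by positivity)
    · simp only [Injective, not_forall] at hinj
      obtain ⟨i, j, haij, hij⟩ := hinj
      obtain ⟨i', rfl⟩ := Fin.exists_succAbove_eq hij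
      set a' : Fin k → ZMod p := fun i => a (j.succAbove i) with ha'
      set h' : Fin k → ZMod p := fun i => h (j.succAbove i) with hh'
      let μ : Finset (ZMod p) := univ.filter fun ζ => ζ^d = 1
      have hμ : μ.card ≤ d := by
        convert card_pow_eq_le (F := ZMod p) (NeZero.ne d) 1
      let P := Pts d (fun _ : Fin k => (1:ZMod p)) a'
      have hκ : P = Pts d (fun i => (fun _ : Fin (k+1) => (1:ZMod p)) (j.succAbove i))
        (fun i => a (j.succAbove i)) := rfl
      let L : ZMod p × (Fin k → ZMod p) → ZMod p := fun z => h₁*z.1+∑ l, h' l*z.2 l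
      have hval : ∀ (z : ZMod p × (Fin k → ZMod p)) (y:ZMod p),
          h₁*z.1+∑ l, h l*(j.insertNth y z.2 : Fin (k+1) → ZMod p) l = L z+h j*y := by
        intro z y
        rw [Fin.sum_univ_succAbove _ j]
        simp only [Fin.insertNth_apply_same, Fin.insertNth_apply_succAbove, L, hh']
        ring
      let A : ZMod p × (Fin k → ZMod p) → ℂ := fun z =>
        ∑ y ∈ univ.filter (fun y : ZMod p => y^d = z.2 i'^d), ψ (L z+h j*y)
      let B : ZMod p × (Fin k → ZMod p) → ℂ := fun z => ∑ ζ ∈ μ, ψ (L z+h j*(ζ*z.2 i'))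
      have hS : ∑ z ∈ Pts d (fun _ => 1) a, ψ (h₁*z.1+∑ j, h j*z.2 j) = ∑ z ∈ P, A z := by
        rw [sum_Pts_succ _ a j, ← hκ]
        refine sum_congr rfl fun z hz => ?_
        have hz' := mem_Pts.1 hz i'
        simp only [A, hval]
        rw [hz']
        simp only [ha', haij]
        congr!
      have hB : ∑ z ∈ P, B z = ∑ ζ ∈ μ, ∑ z ∈ P,
          ψ (h₁*z.1+∑ l, (h'+Pi.single i' (h j*ζ) : Fin k → ZMod p) l*z.2 l) := by
        simp only [B]
        rw [sum_comm]
        refine sum_congr rfl fun ζ _ => sum_congr rfl fun z _ => ?_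
        congr 1
        simp only [Pi.add_apply, add_mul, sum_add_distrib, L]
        have : ∑ l, (Pi.single i' (h j*ζ) : Fin k → ZMod p) l*z.2 l = h j*ζ*z.2 i' := by
          rw [sum_eq_single i']
          · rw [Pi.single_eq_same]
          · intro l _ hl
            rw [Pi.single_eq_of_ne hl, zero_mul]
          · simp
        rw [this]
        ring
      have hB' : ‖∑ z ∈ P, B z‖ ≤ d*C*√p := by
        rw [hB]
        refine (norm_sum_le _ _).trans ?_
        refine (sum_le_card_nsmul _ _ (C*√p) fun ζ _ =>
          ih p a' (fun l => ha _) h₁ h1 _ ψ hψ).trans ?_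
        rw [nsmul_eq_mul, mul_assoc]
        gcongr
      have hAB : ‖∑ z ∈ P, (A z-B z)‖ ≤ (k*d*d^k*(1+d) : ℕ) := by
        rw [← sum_filter_add_sum_filter_not P (fun z => ∃ i, z.2 i = 0)]
        have h0 : ∑ z ∈ P with ¬ ∃ i, z.2 i = 0, (A z-B z) = 0 := by
          refine sum_eq_zero fun z hz => ?_
          have hz' := (mem_filter.1 hz).2
          push Not at hz'
          rw [sub_eq_zero]
          convert sum_root_eq (d := d) (fun y => ψ (L z+h j*y)) (hz' i')
        rw [h0, add_zero]
        refine (norm_sum_le _ _).trans ?_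
        refine (sum_le_card_nsmul _ _ ((1+d : ℕ) : ℝ) fun z hz => ?_).trans ?_
        · have hA1 : ‖A z‖ ≤ (d:ℝ) := by
            refine (norm_sum_le _ _).trans ?_
            simp only [AddChar.norm_apply, sum_const, nsmul_eq_mul, mul_one]
            have := card_pow_eq_le (F := ZMod p) (NeZero.ne d) (z.2 i'^d)
            have h6 : (univ.filter (fun y : ZMod p => y^d = z.2 i'^d)).card ≤ d := by
              convert this
            exact_mod_cast h6
          have hB1 : ‖B z‖ ≤ (d:ℝ) := by
            refine (norm_sum_le _ _).trans ?_
            simp only [AddChar.norm_apply, sum_const, nsmul_eq_mul, mul_one]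
            exact_mod_cast hμ
          by_cases hzi : z.2 i' = 0
          · have hA2 : ‖A z‖ ≤ 1 := by
              simp only [A, hzi]
              rw [zero_pow (NeZero.ne d)]
              have : (univ.filter fun y : ZMod p => y^d = 0) = {0} := by
                ext y
                simp [NeZero.ne d]
              rw [this, sum_singleton, AddChar.norm_apply]
            refine (norm_sub_le _ _).trans ?_
            push_cast
            linarith
          · have : A z = B z := by
              convert sum_root_eq (d := d) (fun y => ψ (L z+h j*y)) hzi
            rw [this, sub_self, norm_zero]
            positivity
        · rw [nsmul_eq_mul, ← Nat.cast_mul]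
          have := card_bad_le (NeZero.ne d) (fun _ : Fin k => (1:ZMod p)) a' (fun _ => one_ne_zero)
          exact_mod_cast Nat.mul_le_mul_right _ this
      rw [hS]
      have h3 : ∑ z ∈ P, A z = ∑ z ∈ P, (A z-B z)+∑ z ∈ P, B z := by
        rw [← sum_add_distrib]
        simp
      rw [h3]
      refine (norm_add_le _ _).trans ((add_le_add hAB hB').trans ?_)
      have h4 : ((k*d*d^k*(1+d) : ℕ) : ℝ) ≤ ((k*d*d^k*(1+d) : ℕ) : ℝ)*√p := by
        exact le_mul_of_one_le_right (by positivity) hs1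
      have h5 : 0 ≤ ((d:ℝ)^(k+1)*d+(d^(k+1)*(2*((d-1)*(k+1))+3) : ℕ)) * √p := by positivity
      linarith

/-- The Weil bound for point counts at all primes. -/
theorem local_count (k:ℕ) : ∃ C : ℝ, 0 ≤ C ∧ ∀ (p:ℕ) [Fact p.Prime]
    (a : Fin k → ZMod p), (∀ j, a j ≠ 0) → Injective a →
    |((Pts d (fun _ => 1) a).card : ℝ)-p| ≤ C*√p := by
  refine ⟨(d^k+1)*d+(d^k*(2*((d-1)*k)+4)+1 : ℕ), by positivity, ?_⟩
  intro p hp a ha hinj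
  have hs := sqrt_nonneg (p:ℝ)
  by_cases hd : p ∣ d
  · have h1 := card_Pts_le (d := d) (fun _ : Fin k => (1:ZMod p)) a
    rw [ZMod.card] at h1
    have h1' : ((Pts d (fun _ => 1) a).card : ℝ) ≤ d^k*p := mod_cast h1
    have := le_mul_sqrt_of_dvd p hd
    have h2 : ((d:ℝ)^k+1)*p ≤ (d^k+1)*(d*√p) := by gcongr
    have h3 : 0 ≤ ((d^k*(2*((d-1)*k)+4)+1 : ℕ) : ℝ)*√p := by positivity
    grind
  · refine (weil_pts_count p hd ⟨fun i => one_ne_zero, ha, fun i j hij => by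
        simpa using hinj.ne hij⟩).trans ?_
    gcongr
    exact le_add_of_nonneg_left (by positivity)

end Coincide

/-! ### Complete sums to composite moduli -/

section Crt

variable {d : ℕ} {k : ℕ}

/-- Solutions in `A` of the system `b (n_i ^ d - n_j ^ d) = s_i - s_j`. -/
noncomputable def Sol (A : Type) [CommRing A] [Fintype A] (d:ℕ) (b:ℤ) (s : Fin (k+1) → ℤ) :
    Finset (Fin (k+1) → A) :=
  univ.filter fun n => ∀ i j, (b : A)*(n i^d-n j^d) = ((s i-s j : ℤ) : A)

lemma mem_Sol {A : Type} [CommRing A] [Fintype A] {b : ℤ} {s : Fin (k+1) → ℤ}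
    {n : Fin (k+1) → A} :
    n ∈ Sol A d b s ↔ ∀ i j, (b : A)*(n i^d-n j^d) = ((s i-s j : ℤ) : A) := by
  simp [Sol]

/-- Complete exponential sums over the solutions. -/
noncomputable def SS (A : Type) [CommRing A] [Fintype A] (d:ℕ) (b:ℤ) (s h : Fin (k+1) → ℤ)
    (ψ : AddChar A ℂ) : ℂ :=
  ∑ n ∈ Sol A d b s, ψ (∑ i, (h i : A)*n i)

lemma sum_Sol_prod {A A₁ A₂ : Type} [CommRing A] [Fintype A] [CommRing A₁] [Fintype A₁]
    [CommRing A₂] [Fintype A₂] (e : A ≃+* A₁ × A₂) (b:ℤ) (s : Fin (k+1) → ℤ)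
    (G : (Fin (k+1) → A₁) → (Fin (k+1) → A₂) → ℂ) :
    ∑ n ∈ Sol A d b s, G (fun i => (e (n i)).1) (fun i => (e (n i)).2) =
      ∑ n₁ ∈ Sol A₁ d b s, ∑ n₂ ∈ Sol A₂ d b s, G n₁ n₂ := by
  rw [← sum_product']
  refine sum_bij' (fun n _ => (fun i => (e (n i)).1, fun i => (e (n i)).2))
    (fun n _ => fun i => e.symm (n.1 i, n.2 i)) ?_ ?_ ?_ ?_ ?_
  · intro n hn
    rw [mem_Sol] at hn
    rw [mem_product, mem_Sol, mem_Sol]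
    constructor
    · intro i j
      have := congrArg (fun z => (e z).1) (hn i j)
      simpa using this
    · intro i j
      have := congrArg (fun z => (e z).2) (hn i j)
      simpa using this
  · intro n hn
    rw [mem_product, mem_Sol, mem_Sol] at hn
    rw [mem_Sol]
    intro i j
    apply e.injective
    refine Prod.ext ?_ ?_
    · simpa using hn.1 i j
    · simpa using hn.2 i j
  · intro n _
    simp
  · intro n _
    simp
  · intro n _
    rfl

lemma card_Sol_prod {A A₁ A₂ : Type} [CommRing A] [Fintype A] [CommRing A₁] [Fintype A₁]
    [CommRing A₂] [Fintype A₂] (e : A ≃+* A₁ × A₂) (b:ℤ) (s : Fin (k+1) → ℤ) :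
    (Sol A d b s).card = (Sol A₁ d b s).card*(Sol A₂ d b s).card := by
  have := sum_Sol_prod (d := d) e b s (fun _ _ => 1)
  simp only [sum_const, nsmul_eq_mul, mul_one] at this
  exact_mod_cast this

/-- The components of an additive character of a product. -/
noncomputable def fstChar {A A₁ A₂ : Type} [CommRing A] [CommRing A₁] [CommRing A₂]
    (e : A ≃+* A₁ × A₂) (ψ : AddChar A ℂ) : AddChar A₁ ℂ :=
  ψ.compAddMonoidHom (e.symm.toAddMonoidHom.comp (AddMonoidHom.inl A₁ A₂))

noncomputable def sndChar {A A₁ A₂ : Type} [CommRing A] [CommRing A₁] [CommRing A₂]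
    (e : A ≃+* A₁ × A₂) (ψ : AddChar A ℂ) : AddChar A₂ ℂ :=
  ψ.compAddMonoidHom (e.symm.toAddMonoidHom.comp (AddMonoidHom.inr A₁ A₂))

section
variable {A A₁ A₂ : Type} [CommRing A] [CommRing A₁] [CommRing A₂] (e : A ≃+* A₁ × A₂)
  (ψ : AddChar A ℂ)

lemma fstChar_apply (u : A₁) : fstChar e ψ u = ψ (e.symm (u, 0)) := rfl

lemma sndChar_apply (u : A₂) : sndChar e ψ u = ψ (e.symm (0, u)) := rfl

lemma char_eq (x : A) : ψ x = fstChar e ψ (e x).1*sndChar e ψ (e x).2 := by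
  rw [fstChar_apply, sndChar_apply, ← AddChar.map_add_eq_mul, ← map_add]
  simp

lemma fstChar_primitive (hψ : ψ.IsPrimitive) : (fstChar e ψ).IsPrimitive := by
  intro a ha h
  refine hψ (a := e.symm (a, 0)) ?_ ?_
  · intro h0
    rw [map_eq_zero_iff _ e.symm.injective] at h0
    exact ha (Prod.mk.inj h0).1
  · ext x
    have := DFunLike.congr_fun h (e x).1
    rw [AddChar.mulShift_apply, fstChar_apply] at this
    rw [AddChar.mulShift_apply]
    have h2 : e.symm (a, 0)*x = e.symm (a*(e x).1, 0) := by
      apply e.injective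
      ext <;> simp
    rw [h2, this]
    rfl

lemma sndChar_primitive (hψ : ψ.IsPrimitive) : (sndChar e ψ).IsPrimitive := by
  intro a ha h
  refine hψ (a := e.symm (0, a)) ?_ ?_
  · intro h0
    rw [map_eq_zero_iff _ e.symm.injective] at h0
    exact ha (Prod.mk.inj h0).2
  · ext x
    have := DFunLike.congr_fun h (e x).2
    rw [AddChar.mulShift_apply, sndChar_apply] at this
    rw [AddChar.mulShift_apply]
    have h2 : e.symm (0, a)*x = e.symm (0, a*(e x).2) := by
      apply e.injective
      ext <;> simp
    rw [h2, this]
    rfl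

lemma SS_prod [Fintype A] [Fintype A₁] [Fintype A₂] (b:ℤ) (s h : Fin (k+1) → ℤ) :
    SS A d b s h ψ = SS A₁ d b s h (fstChar e ψ)*SS A₂ d b s h (sndChar e ψ) := by
  have := sum_Sol_prod (d := d) e b s (fun n₁ n₂ => fstChar e ψ (∑ i, (h i : A₁)*n₁ i) *
    sndChar e ψ (∑ i, (h i : A₂)*n₂ i))
  rw [SS, SS, SS, sum_mul_sum, ← this]
  refine sum_congr rfl fun n _ => ?_
  rw [char_eq e ψ]
  simp only [map_sum, map_mul, map_intCast, Prod.fst_sum, Prod.snd_sum, Prod.fst_mul, Prod.snd_mul,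
    Prod.fst_intCast, Prod.snd_intCast]

lemma norm_SS_le [Fintype A] (b:ℤ) (s h : Fin (k+1) → ℤ) :
    ‖SS A d b s h ψ‖ ≤ (card A : ℝ)^(k+1) := by
  have : ∀ x, ‖ψ x‖ = 1 := fun x => by
    have hf : Finite A := inferInstance
    exact AddChar.norm_apply ψ x
  refine (norm_sum_le _ _).trans ?_
  simp only [this, sum_const, nsmul_eq_mul, mul_one]
  have := (card_le_univ (Sol A d b s))
  rw [Fintype.card_fun, card_fin] at this
  exact_mod_cast this

end

/-- Over a field, the system is parametrised by the points of a curve. -/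
lemma sum_Sol_field {F : Type} [Field F] [Fintype F] {b : ℤ} (hb : (b : F) ≠ 0)
    (s : Fin (k+1) → ℤ) (i₀ : Fin (k+1)) (G : (Fin (k+1) → F) → ℂ) :
    ∑ n ∈ Sol F d b s, G n =
      ∑ z ∈ Pts d (fun _ => 1) (fun j => (b : F)⁻¹*((s (i₀.succAbove j)-s i₀ : ℤ) : F)),
        G (i₀.insertNth z.1 z.2) := by
  refine sum_bij' (fun n _ => (n i₀, fun j => n (i₀.succAbove j)))
    (fun z _ => i₀.insertNth z.1 z.2) ?_ ?_ ?_ ?_ ?_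
  · intro n hn
    rw [mem_Sol] at hn
    simp only [Pts, mem_filter_univ]
    grind
  · intro z hz
    simp only [Pts, mem_filter_univ] at hz
    rw [mem_Sol]
    have key : ∀ i, (b : F)*((i₀.insertNth z.1 z.2 : Fin (k+1) → F) i^d-z.1^d) =
        ((s i-s i₀ : ℤ) : F) := by
      intro i
      refine Fin.succAboveCases i₀ ?_ (fun i => ?_) i
      · simp
      · rw [Fin.insertNth_apply_succAbove, hz i]
        field_simp
        ring
    grind
  · intro n _
    exact Fin.insertNth_self_removeNth i₀ n
  · intro z _
    simp
  · intro n _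
    congr 1
    exact (Fin.insertNth_self_removeNth i₀ n).symm

/-- The greatest common divisor of an integer with a modulus. -/
def gc (x:ℤ) (Q:ℕ) : ℕ := Nat.gcd x.natAbs Q

lemma gc_mul {Q Q' : ℕ} (h : Q.Coprime Q') (x:ℤ) : gc x (Q*Q') = gc x Q*gc x Q' := h.gcd_mul _

lemma one_le_gc (x:ℤ) {Q : ℕ} (hQ : 0 < Q) : 1 ≤ gc x Q := Nat.gcd_pos_of_pos_right _ hQ

lemma gc_prime {p : ℕ} (hp : p.Prime) {x : ℤ} (h : (x:ZMod p) = 0) : gc x p = p := by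
  have : NeZero p := ⟨hp.ne_zero⟩
  rw [ZMod.intCast_zmod_eq_zero_iff_dvd] at h
  exact Nat.gcd_eq_right (Int.natCast_dvd.1 h)

lemma one_le_sqrt_gc (x:ℤ) {Q : ℕ} (hQ : 0 < Q) : 1 ≤ √(gc x Q) :=
  one_le_sqrt.2 (mod_cast one_le_gc x hQ)

lemma squarefree_induction {P : ℕ → Prop} (h1 : P 1)
    (hm : ∀ p Q : ℕ, p.Prime → p.Coprime Q → Squarefree Q → P Q → P (p*Q)) :
    ∀ Q : ℕ, Squarefree Q → P Q := by
  intro Q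
  induction Q using Nat.strong_induction_on with
  | _ Q ih =>
    intro hQ
    by_cases hQ1 : Q = 1
    · rw [hQ1]; exact h1
    · have hp := Nat.minFac_prime hQ1
      obtain ⟨Q', hQ'⟩ := Nat.minFac_dvd Q
      have hQ0 : Q ≠ 0 := hQ.ne_zero
      have hQ'0 : 0 < Q' := by grind
      have hcop : Q.minFac.Coprime Q' := by
        rw [hQ'] at hQ
        exact Nat.coprime_of_squarefree_mul hQ
      have hsq : Squarefree Q' := hQ.squarefree_of_dvd ⟨Q.minFac, by rw [mul_comm]; exact hQ'⟩
      have hlt : Q' < Q := by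
        have := Nat.mul_lt_mul_of_pos_right hp.one_lt hQ'0
        omega
      have := hm _ _ hp hcop hsq (ih Q' hlt hsq)
      rwa [← hQ'] at this

/-- The number of prime factors. -/
def om (Q:ℕ) : ℕ := Q.primeFactors.card

lemma om_mul {p Q : ℕ} (hp : p.Prime) (h : p.Coprime Q) : om (p*Q) = om Q+1 := by
  rw [om, h.primeFactors_mul, card_union_of_disjoint h.disjoint_primeFactors,
    hp.primeFactors, card_singleton, add_comm, om]

variable [NeZero d]

/-- The bound for complete sums to a prime modulus, valid without restriction. -/
theorem prime_SS (hd2 : 2 ≤ d) (k:ℕ) : ∃ C : ℝ, 1 ≤ C ∧ ∀ (p:ℕ) [Fact p.Prime] (b:ℤ),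
    (b:ZMod p) ≠ 0 → ∀ (s h : Fin (k+1) → ℤ) (i₀ : Fin (k+1)) (ψ : AddChar (ZMod p) ℂ),
    ψ.IsPrimitive → ‖SS (ZMod p) d b s h ψ‖ ≤ C*(√p*√(gc (h i₀) p) *
      ∏ j : Fin k, √(gc (s (i₀.succAbove j)-s i₀) p)) := by
  obtain ⟨C, hC, hloc⟩ := local_char (d := d) hd2 k
  refine ⟨C+d^k+1, by linarith [pow_nonneg (cast_nonneg d : (0:ℝ) ≤ d) k], ?_⟩
  intro p hp b hb s h i₀ ψ hψ
  have hp0 := hp.out.pos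
  have hψ1 : ψ ≠ 1 := by
    intro h1
    refine hψ (a := 1) one_ne_zero ?_
    rw [AddChar.mulShift_one, h1]
  have hsum : SS (ZMod p) d b s h ψ = ∑ z ∈ Pts d (fun _ => 1) (fun j => (b:ZMod p)⁻¹ *
      ((s (i₀.succAbove j)-s i₀ : ℤ) : ZMod p)), ψ ((h i₀ : ZMod p)*z.1 +
        ∑ j, (h (i₀.succAbove j) : ZMod p)*z.2 j) := by
    rw [SS, sum_Sol_field hb s i₀]
    refine sum_congr rfl fun z _ => ?_
    rw [Fin.sum_univ_succAbove _ i₀]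
    simp
  have hs : √p*√p = p := mul_self_sqrt (by positivity)
  have hs0 := sqrt_nonneg (p:ℝ)
  have hprod1 : ∀ t : Finset (Fin k), 1 ≤ ∏ j ∈ t, √(gc (s (i₀.succAbove j)-s i₀) p) := fun t =>
    prod_induction _ (fun x => 1 ≤ x) (fun _ _ => one_le_mul_of_one_le_of_one_le) le_rfl
      fun j _ => one_le_sqrt_gc _ hp0
  have hg1 := one_le_sqrt_gc (h i₀) hp0
  set Pr := ∏ j : Fin k, √(gc (s (i₀.succAbove j)-s i₀) p) with hPr
  have hPr1 : 1 ≤ Pr := hprod1 _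
  -- the trivial bound suffices as soon as one of the gcds is `p`
  have htriv : √p ≤ √(gc (h i₀) p)*Pr → ‖SS (ZMod p) d b s h ψ‖ ≤
      (C+d^k+1)*(√p*√(gc (h i₀) p)*Pr) := by
    intro hle
    rw [hsum]
    refine (norm_sum_pts_le p _ _ ψ _).trans ?_
    have h1 : (p:ℝ) ≤ √p*√(gc (h i₀) p)*Pr := by
      rw [mul_assoc]
      calc (p:ℝ) = √p*√p := hs.symm
        _ ≤ _ := by gcongr
    calc (d:ℝ)^k*p ≤ d^k*(√p*√(gc (h i₀) p)*Pr) := by gcongr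
      _ ≤ _ := by
        refine mul_le_mul_of_nonneg_right ?_ (by positivity)
        linarith
  by_cases hh : (h i₀ : ZMod p) = 0
  · apply htriv
    rw [gc_prime hp.out hh]
    exact le_mul_of_one_le_right hs0 hPr1
  by_cases hsj : ∀ j, ((s (i₀.succAbove j)-s i₀ : ℤ) : ZMod p) ≠ 0
  · rw [hsum]
    refine (hloc p _ (fun j => mul_ne_zero (inv_ne_zero hb) (hsj j)) _ hh _ ψ hψ1).trans ?_
    have h2 : √p ≤ √p*√(gc (h i₀) p)*Pr := by
      rw [mul_assoc]
      exact le_mul_of_one_le_right hs0 (one_le_mul_of_one_le_of_one_le hg1 hPr1)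
    calc C*√p ≤ C*(√p*√(gc (h i₀) p)*Pr) := by gcongr
      _ ≤ _ := by
        refine mul_le_mul_of_nonneg_right ?_ (by positivity)
        linarith [pow_nonneg (cast_nonneg d : (0:ℝ) ≤ d) k]
  · push Not at hsj
    obtain ⟨j, hj⟩ := hsj
    apply htriv
    have h3 : √p ≤ Pr := by
      rw [hPr, ← mul_prod_erase _ _ (mem_univ j), gc_prime hp.out hj]
      exact le_mul_of_one_le_right hs0 (hprod1 _)
    exact h3.trans (le_mul_of_one_le_left (by positivity) hg1)

/-- The bound for complete sums to a squarefree modulus. -/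
theorem sqfree_SS (hd2 : 2 ≤ d) (k:ℕ) : ∃ C : ℝ, 1 ≤ C ∧ ∀ (Q:ℕ), Squarefree Q → ∀ [NeZero Q]
    (b:ℤ), IsUnit (b:ZMod Q) → ∀ (s h : Fin (k+1) → ℤ) (i₀ : Fin (k+1))
    (ψ : AddChar (ZMod Q) ℂ), ψ.IsPrimitive → ‖SS (ZMod Q) d b s h ψ‖ ≤ C^om Q *
      (√Q*√(gc (h i₀) Q) *
      ∏ j : Fin k, √(gc (s (i₀.succAbove j)-s i₀) Q)) := by
  obtain ⟨C, hC, hpr⟩ := prime_SS (d := d) hd2 k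
  refine ⟨C, hC, ?_⟩
  apply squarefree_induction
  · intro _ b _ s h i₀ ψ _
    refine (norm_SS_le ψ b s h).trans ?_
    simp [om, gc]
  · intro p Q hp hcop hsq ih hne b hb s h i₀ ψ hψ
    have hpf : Fact p.Prime := ⟨hp⟩
    have hQ0 : NeZero Q := ⟨hsq.ne_zero⟩
    let e := chineseRemainder hcop
    have hb' : IsUnit ((b:ZMod p), (b:ZMod Q)) := by
      have := hb.map e
      rwa [map_intCast] at this
    rw [Prod.isUnit_iff] at hb'
    have h1 := hpr p b hb'.1.ne_zero s h i₀ (fstChar e ψ) (fstChar_primitive e ψ hψ)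
    have h2 := ih b hb'.2 s h i₀ (sndChar e ψ) (sndChar_primitive e ψ hψ)
    rw [SS_prod e ψ, norm_mul, om_mul hp hcop]
    refine (mul_le_mul h1 h2 (norm_nonneg _) (by positivity)).trans (le_of_eq ?_)
    simp only [gc_mul hcop, Nat.cast_mul, sqrt_mul (cast_nonneg _), prod_mul_distrib]
    ring

/-- The bound for complete sums, with a trivial estimate at the part `q₂` of the modulus. -/
theorem full_SS (hd2 : 2 ≤ d) (k:ℕ) : ∃ C : ℝ, 1 ≤ C ∧ ∀ (q₁ q₂ : ℕ), Squarefree q₁ →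
    q₁.Coprime q₂ → ∀ [NeZero (q₁*q₂)]
    (b:ℤ), IsUnit (b : ZMod (q₁*q₂)) → ∀ (s h : Fin (k+1) → ℤ) (i₀ : Fin (k+1))
    (ψ : AddChar (ZMod (q₁*q₂)) ℂ), ψ.IsPrimitive →
    ‖SS (ZMod (q₁*q₂)) d b s h ψ‖ ≤ C^om q₁*(q₂:ℝ)^(k+1) * (√q₁*√(gc (h i₀) q₁) *
      ∏ j : Fin k, √(gc (s (i₀.succAbove j)-s i₀) q₁)) := by
  obtain ⟨C, hC, hpr⟩ := sqfree_SS (d := d) hd2 k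
  refine ⟨C, hC, ?_⟩
  intro q₁ q₂ hsq hcop hne b hb s h i₀ ψ hψ
  have hQ0 : NeZero q₁ := ⟨hsq.ne_zero⟩
  have hQ2 : NeZero q₂ := ⟨fun h0 => hne.out (by rw [h0, mul_zero])⟩
  let e := chineseRemainder hcop
  have hb' : IsUnit ((b:ZMod q₁), (b:ZMod q₂)) := by
    have := hb.map e
    rwa [map_intCast] at this
  rw [Prod.isUnit_iff] at hb'
  have h1 := hpr q₁ hsq b hb'.1 s h i₀ (fstChar e ψ) (fstChar_primitive e ψ hψ)
  have h2 := norm_SS_le (d := d) (sndChar e ψ) b s h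
  rw [ZMod.card] at h2
  rw [SS_prod e ψ, norm_mul]
  refine (mul_le_mul h1 h2 (norm_nonneg _) (by positivity)).trans (le_of_eq ?_)
  ring

end Crt

/-! ### Averages of gcds -/

section GcdSums

lemma gc_natCast (t Q : ℕ) : gc (t:ℤ) Q = Nat.gcd t Q := by simp [gc]

lemma gc_neg (t:ℤ) (Q:ℕ) : gc (-t) Q = gc t Q := by simp [gc]

lemma sum_sqrt_gc {Q : ℕ} (hQ : 0 < Q) (T:ℕ) (w : ℕ → ℝ) (hw : ∀ t, 0 ≤ w t) :
    ∑ t ∈ Icc 1 T, √(gc (t:ℤ) Q)*w t ≤ ∑ e ∈ Q.divisors, √e*∑ t ∈ Icc 1 (T/e), w (e*t) := by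
  have h1 : ∀ t ∈ Icc 1 T, √(gc (t:ℤ) Q)*w t ≤ ∑ e ∈ Q.divisors, if e ∣ t then √e*w t else 0 := by
    intro t _
    have hm : Nat.gcd t Q ∈ Q.divisors := Nat.mem_divisors.2 ⟨Nat.gcd_dvd_right _ _, hQ.ne'⟩
    refine le_trans ?_ (single_le_sum (f := fun e : ℕ => if e ∣ t then √e*w t else 0) ?_ hm)
    · simp only [Nat.gcd_dvd_left, if_true, gc_natCast, le_refl]
    · intro e _
      split_ifs
      · exact mul_nonneg (sqrt_nonneg _) (hw t)
      · exact le_rfl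
  refine (sum_le_sum h1).trans (le_of_eq ?_)
  rw [sum_comm]
  refine sum_congr rfl fun e he => ?_
  have he0 : 0 < e := Nat.pos_of_mem_divisors he
  rw [← sum_filter, mul_sum]
  symm
  refine sum_bij (fun t _ => e*t) ?_ ?_ ?_ ?_
  · intro t ht
    rw [mem_Icc] at ht
    rw [mem_filter, mem_Icc]
    refine ⟨⟨Nat.mul_pos he0 ht.1, ?_⟩, dvd_mul_right _ _⟩
    rw [mul_comm]
    exact (Nat.le_div_iff_mul_le he0).1 ht.2
  · intro t _ t' _ h
    exact Nat.eq_of_mul_eq_mul_left he0 h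
  · intro t ht
    rw [mem_filter, mem_Icc] at ht
    obtain ⟨⟨h1, h2⟩, t', rfl⟩ := ht
    refine ⟨t', ?_, rfl⟩
    rw [mem_Icc]
    refine ⟨Nat.pos_of_mul_pos_left h1, ?_⟩
    rw [Nat.le_div_iff_mul_le he0, mul_comm]
    exact h2
  · intro t _
    rfl

lemma sqrt_div_self_le {e : ℕ} (he : 0 < e) : √e/e ≤ 1 := by
  rw [div_le_one (by positivity)]
  have h1 : (1:ℝ) ≤ e := mod_cast he
  rw [sqrt_le_left (by positivity)]
  nlinarith

lemma sum_sqrt_gc_div {Q : ℕ} (hQ : 0 < Q) {T : ℕ} (hT : 0 < T) :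
    ∑ t ∈ Icc 1 T, √(gc (t:ℤ) Q)*(1/t) ≤ Q.divisors.card*(1+log T) := by
  refine (sum_sqrt_gc hQ T (fun t => 1/(t:ℝ)) (fun t => by positivity)).trans ?_
  rw [← nsmul_eq_mul]
  refine sum_le_card_nsmul _ _ _ fun e he => ?_
  have he0 : 0 < e := Nat.pos_of_mem_divisors he
  have h2 : ∑ t ∈ Icc 1 (T/e), (1/((e*t : ℕ) : ℝ)) = (1/e)*∑ t ∈ Icc 1 (T/e), (1/(t:ℝ)) := by
    rw [mul_sum]
    grind
  have h3 : ∑ t ∈ Icc 1 (T/e), (1/(t:ℝ)) ≤ 1+log T := by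
    refine le_trans (sum_le_sum_of_subset_of_nonneg
      (Icc_subset_Icc_right (Nat.div_le_self T e)) (fun _ _ _ => by positivity)) ?_
    have := harmonic_le_one_add_log T
    rw [harmonic_eq_sum_Icc] at this
    push_cast at this
    simpa using this
  have h4 : 0 ≤ ∑ t ∈ Icc 1 (T/e), (1/(t:ℝ)) := sum_nonneg fun _ _ => by positivity
  rw [h2, ← mul_assoc, mul_one_div]
  calc √e/e*∑ t ∈ Icc 1 (T/e), (1/(t:ℝ))
      ≤ 1*∑ t ∈ Icc 1 (T/e), (1/(t:ℝ)) := mul_le_mul_of_nonneg_right (sqrt_div_self_le he0) h4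
    _ ≤ _ := by rw [one_mul]; exact h3

lemma sum_sqrt_gc_one {Q : ℕ} (hQ : 0 < Q) (T:ℕ) :
    ∑ t ∈ Icc 1 T, √(gc (t:ℤ) Q) ≤ Q.divisors.card*T := by
  have := sum_sqrt_gc hQ T (fun t => 1) (fun t => zero_le_one)
  simp only [mul_one] at this
  refine this.trans ?_
  rw [← nsmul_eq_mul]
  refine sum_le_card_nsmul _ _ _ fun e he => ?_
  have he0 : 0 < e := Nat.pos_of_mem_divisors he
  simp only [sum_const, Nat.card_Icc, add_tsub_cancel_right, nsmul_eq_mul, mul_one]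
  have h5 : ((T/e : ℕ) : ℝ) ≤ T/e := Nat.cast_div_le
  calc √e*((T/e : ℕ) : ℝ) ≤ √e*(T/e) := by gcongr
    _ = √e/e*T := by ring
    _ ≤ 1*T := mul_le_mul_of_nonneg_right (sqrt_div_self_le he0) (by positivity)
    _ = T := one_mul _

lemma card_divisors_squarefree : ∀ Q : ℕ, Squarefree Q → Q.divisors.card = 2^om Q := by
  apply squarefree_induction
  · simp [om]
  · intro p Q hp hcop _ ih
    rw [hcop.card_divisors_mul, ih, om_mul hp hcop, hp.divisors,
      card_pair hp.one_lt.ne, pow_succ, mul_comm]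

/-- Nonzero integers of size at most `R`. -/
noncomputable def punc (R:ℕ) : Finset ℤ := (Icc (-(R:ℤ)) R).erase 0

lemma mem_punc {R : ℕ} {t : ℤ} : t ∈ punc R ↔ t ≠ 0 ∧ |t| ≤ R := by
  rw [punc, mem_erase, mem_Icc, abs_le]

/-- Splitting a sum over nonzero integers of bounded size according to the sign. -/
lemma sum_punc (R:ℕ) (w : ℤ → ℝ) (hw : ∀ t, w (-t) = w t) :
    ∑ t ∈ punc R, w t = 2*∑ t ∈ Icc 1 R, w (t:ℤ) := by
  have h1 : punc R = (Icc 1 R).image (fun t : ℕ => (t:ℤ)) ∪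
      (Icc 1 R).image (fun t : ℕ => -(t:ℤ)) := by
    ext t
    simp only [mem_punc, mem_union, mem_image, mem_Icc]
    constructor
    · rintro ⟨h0, h⟩
      rw [abs_le] at h
      rcases lt_or_gt_of_ne h0 with h' | h'
      · exact Or.inr ⟨t.natAbs, by omega, by omega⟩
      · exact Or.inl ⟨t.natAbs, by omega, by omega⟩
    · grind
  rw [h1, sum_union, sum_image, sum_image, two_mul]
  · simp only [hw]
  · intro a _ b _ h
    simpa using h
  · intro a _ b _ h
    simpa using h
  · rw [disjoint_left]
    grind

lemma sum_punc_sqrt_gc {Q : ℕ} (hQ : 0 < Q) (R:ℕ) :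
    ∑ t ∈ punc R, √(gc t Q) ≤ 2*(Q.divisors.card*R) := by
  rw [sum_punc R (fun t => √(gc t Q)) (fun t => by rw [gc_neg])]
  exact mul_le_mul_of_nonneg_left (sum_sqrt_gc_one hQ R) two_pos.le

end GcdSums

/-! ### Families of difference vectors -/

section Families

variable {k : ℕ}

/-- Vectors `s` normalised by `s 0 = 0` with all differences at most `R`. -/
noncomputable def Fam (k R : ℕ) : Finset (Fin (k+1) → ℤ) :=
  (piFinset fun _ => Icc (-(R:ℤ)) R).filter fun s => s 0 = 0 ∧ ∀ i j, |s i-s j| ≤ R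

lemma mem_Fam {R : ℕ} {s : Fin (k+1) → ℤ} : s ∈ Fam k R ↔ s 0 = 0 ∧ ∀ i j, |s i-s j| ≤ R := by
  rw [Fam, mem_filter, mem_piFinset]
  refine ⟨fun h => h.2, fun h => ⟨fun i => ?_, h⟩⟩
  have := h.2 i 0
  rw [h.1, sub_zero, abs_le] at this
  exact mem_Icc.2 this

/-- The members of `Fam` with pairwise distinct entries. -/
noncomputable def NFam (k R : ℕ) : Finset (Fin (k+1) → ℤ) := (Fam k R).filter fun s => Injective s

lemma mem_NFam {R : ℕ} {s : Fin (k+1) → ℤ} :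
    s ∈ NFam k R ↔ (s 0 = 0 ∧ ∀ i j, |s i-s j| ≤ R) ∧ Injective s := by
  rw [NFam, mem_filter, mem_Fam]

/-- The vector of differences with one chosen entry. -/
def diffs (i₀ : Fin (k+1)) (s : Fin (k+1) → ℤ) : Fin k → ℤ := fun j => s (i₀.succAbove j)-s i₀

lemma diffs_injOn (i₀ : Fin (k+1)) {s s' : Fin (k+1) → ℤ} (h0 : s 0 = 0) (h0' : s' 0 = 0)
    (h : diffs i₀ s = diffs i₀ s') : s = s' := by
  have key : ∀ i, s i-s i₀ = s' i-s' i₀ := by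
    intro i
    refine Fin.succAboveCases i₀ ?_ (fun j => ?_) i
    · simp
    · exact congrFun h j
  grind

lemma sum_diffs_le (S : Finset (Fin (k+1) → ℤ)) (hS : ∀ s ∈ S, s 0 = 0) (i₀ : Fin (k+1))
    (Bx : Finset (Fin k → ℤ)) (hBx : ∀ s ∈ S, diffs i₀ s ∈ Bx) (g : (Fin k → ℤ) → ℝ)
    (hg : ∀ u, 0 ≤ g u) : ∑ s ∈ S, g (diffs i₀ s) ≤ ∑ u ∈ Bx, g u := by
  rw [← sum_image (s := S) (f := g) (g := diffs i₀)]
  · refine sum_le_sum_of_subset_of_nonneg ?_ fun u _ _ => hg u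
    grind
  · intro s hs s' hs' h
    exact diffs_injOn i₀ (hS s hs) (hS s' hs') h

lemma card_diffs_le (S : Finset (Fin (k+1) → ℤ)) (hS : ∀ s ∈ S, s 0 = 0) (i₀ : Fin (k+1))
    (Bx : Finset (Fin k → ℤ)) (hBx : ∀ s ∈ S, diffs i₀ s ∈ Bx) : S.card ≤ Bx.card := by
  refine card_le_card_of_injOn (diffs i₀) hBx ?_
  intro s hs s' hs' h
  exact diffs_injOn i₀ (hS s hs) (hS s' hs') h

lemma diffs_mem_punc {R : ℕ} {s : Fin (k+1) → ℤ} (hs : s ∈ NFam k R) (i₀ : Fin (k+1)) :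
    diffs i₀ s ∈ piFinset fun _ : Fin k => punc R := by
  rw [mem_NFam] at hs
  rw [mem_piFinset]
  intro j
  rw [mem_punc]
  refine ⟨?_, hs.1.2 _ _⟩
  intro h
  exact Fin.succAbove_ne i₀ j (hs.2 (sub_eq_zero.1 h))

lemma diffs_mem_box {R : ℕ} {s : Fin (k+1) → ℤ} (hs : s ∈ Fam k R) (i₀ : Fin (k+1)) :
    diffs i₀ s ∈ piFinset fun _ : Fin k => Icc (-(R:ℤ)) R := by
  rw [mem_Fam] at hs
  rw [mem_piFinset]
  intro j
  rw [mem_Icc, ← abs_le]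
  exact hs.2 _ _

/-- The average of the gcd factors in the complete sum estimate. -/
lemma sum_prod_sqrt_gc {Q : ℕ} (hQ : 0 < Q) (R:ℕ) (i₀ : Fin (k+1)) :
    ∑ s ∈ NFam k R, ∏ j : Fin k, √(gc (s (i₀.succAbove j)-s i₀) Q) ≤ (2*(Q.divisors.card*R))^k := by
  refine (sum_diffs_le (NFam k R) (fun s hs => (mem_NFam.1 hs).1.1) i₀ _
    (fun s hs => diffs_mem_punc hs i₀) (fun u => ∏ j, √(gc (u j) Q))
    (fun u => by positivity)).trans ?_
  rw [sum_prod_piFinset (punc R) (fun _ t => √(gc t Q))]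
  rw [prod_const, card_univ, card_fin]
  exact pow_le_pow_left₀ (sum_nonneg fun _ _ => sqrt_nonneg _) (sum_punc_sqrt_gc hQ R) k

lemma card_Fam_le (R:ℕ) : (Fam k R).card ≤ (2*R+1)^k := by
  refine (card_diffs_le _ (fun s hs => (mem_Fam.1 hs).1) 0 _
    (fun s hs => diffs_mem_box hs 0)).trans (le_of_eq ?_)
  rw [card_piFinset]
  simp only [Int.card_Icc, prod_const, card_univ, card_fin]
  congr 1
  omega

/-- Few members of `Fam` have a repeated entry. -/
lemma card_deg_le (R:ℕ) : ((Fam k R).filter fun s => ¬ Injective s).card ≤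
    (k+1)*k*(2*R+1)^(k-1) := by
  have hsub : ((Fam k R).filter fun s => ¬ Injective s) ⊆
      univ.biUnion fun i₀ : Fin (k+1) => univ.biUnion fun j : Fin k =>
        (Fam k R).filter fun s => diffs i₀ s j = 0 := by
    intro s hs
    rw [mem_filter] at hs
    obtain ⟨hs, hinj⟩ := hs
    simp only [Injective, not_forall] at hinj
    obtain ⟨i, i', heq, hne⟩ := hinj
    obtain ⟨j, hj⟩ := Fin.exists_succAbove_eq (Ne.symm hne)
    simp only [mem_biUnion, mem_univ, true_and, mem_filter]
    exact ⟨i, j, hs, by rw [diffs, hj, heq, sub_self]⟩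
  refine (card_le_card hsub).trans ?_
  refine card_biUnion_le.trans ?_
  have : ∀ i₀ : Fin (k+1), (univ.biUnion fun j : Fin k =>
      (Fam k R).filter fun s => diffs i₀ s j = 0).card ≤ k*(2*R+1)^(k-1) := by
    intro i₀
    refine card_biUnion_le.trans ?_
    have : ∀ j : Fin k, ((Fam k R).filter fun s => diffs i₀ s j = 0).card ≤ (2*R+1)^(k-1) := by
      intro j
      refine (card_diffs_le _ (fun s hs => (mem_Fam.1 (mem_filter.1 hs).1).1) i₀
        (piFinset fun j' : Fin k => if j' = j then {0} else Icc (-(R:ℤ)) R)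
        ?_).trans (le_of_eq ?_)
      · intro s hs
        rw [mem_filter] at hs
        have h1 := diffs_mem_box hs.1 i₀
        grind
      · rw [card_piFinset, ← mul_prod_erase _ _ (mem_univ j)]
        rw [prod_congr rfl (g := fun _ => 2*R+1)]
        · simp
        · intro j' hj'
          rw [if_neg (ne_of_mem_erase hj'), Int.card_Icc]
          omega
    refine (sum_le_sum fun j _ => this j).trans (le_of_eq ?_)
    simp
  refine (sum_le_sum fun j _ => this j).trans (le_of_eq ?_)
  simp [mul_assoc]

end Families

/-! ### Fourier expansion of box counts -/

section Fourier

variable {d k : ℕ}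

/-- The number of solutions of the system in a box `[1, N] ^ (k + 1)`. -/
noncomputable def cnt (q d : ℕ) (b:ℤ) (N:ℕ) (s : Fin (k+1) → ℤ) : ℕ :=
  ((piFinset fun _ : Fin (k+1) => Icc 1 N).filter fun n =>
    ∀ i j, (b:ZMod q)*((n i : ZMod q)^d-(n j : ZMod q)^d) = ((s i-s j : ℤ) : ZMod q)).card

/-- The Fourier coefficients of an interval. -/
noncomputable def ch (q:ℕ) [NeZero q] (N:ℕ) (h:ZMod q) : ℂ :=
  ∑ n ∈ Icc 1 N, stdAddChar (-(h*(n:ZMod q)))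

lemma char_sum_eq_prod {ι A : Type} [AddCommGroup A] (ψ : AddChar A ℂ) (t : Finset ι) (x : ι → A) :
    ψ (∑ i ∈ t, x i) = ∏ i ∈ t, ψ (x i) := by
  induction t using Finset.induction_on with
  | empty => simp
  | insert a t ha ih => rw [sum_insert ha, prod_insert ha, AddChar.map_add_eq_mul, ih]

variable {q : ℕ} [NeZero q]

lemma ch_zero (N:ℕ) : ch q N 0 = N := by simp [ch]

lemma norm_char_sub_one (h:ZMod q) : 4*|(h.valMinAbs : ℝ)| / q ≤ ‖stdAddChar h-(1:ℂ)‖ := by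
  have hq : (0:ℝ) < q := mod_cast Nat.pos_of_neZero q
  conv_rhs => rw [← ZMod.coe_valMinAbs h]
  set t := h.valMinAbs with ht
  rw [ZMod.stdAddChar_coe]
  have h1 : (2*(π:ℂ)*Complex.I*(t:ℂ)/(q:ℂ)) = Complex.I*((2*π*t/q : ℝ) : ℂ) := by
    push_cast
    ring
  rw [h1, Complex.norm_exp_I_mul_ofReal_sub_one, norm_mul, norm_eq_abs, norm_eq_abs, abs_two]
  have h2 : 2*π*t/q/2 = π*(t/q) := by ring
  rw [h2]
  have hm := ZMod.valMinAbs_mem_Ioc h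
  rw [← ht] at hm
  have h3 : |(t:ℝ)/q| ≤ 1/2 := by
    have e1 : -(q:ℝ) < t*2 := mod_cast hm.1
    have e2 : (t:ℝ)*2 ≤ q := mod_cast hm.2
    rw [abs_le]
    constructor
    · rw [le_div_iff₀ hq]; linarith
    · rw [div_le_iff₀ hq]; linarith
  have h4 : |π*((t:ℝ)/q)| = π*|(t:ℝ)/q| := by
    rw [abs_mul, abs_of_pos pi_pos]
  have h5 := mul_abs_le_abs_sin (x := π*((t:ℝ)/q)) (by
    rw [h4]; nlinarith [pi_pos])
  rw [h4, ← mul_assoc, div_mul_cancel₀ _ pi_pos.ne', abs_div, abs_of_pos hq] at h5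
  grind

lemma norm_ch_le (N:ℕ) {h : ZMod q} (hh : h ≠ 0) : ‖ch q N h‖ ≤ q/2*(1 / |(h.valMinAbs : ℝ)|) := by
  have hq : (0:ℝ) < q := mod_cast Nat.pos_of_neZero q
  set z : ℂ := stdAddChar (-h) with hz
  have ht0 : 0 < |((-h).valMinAbs : ℝ)| := by
    rw [abs_pos]
    have : (-h).valMinAbs ≠ 0 := by
      rw [Ne, ZMod.valMinAbs_eq_zero]
      exact neg_ne_zero.2 hh
    exact_mod_cast this
  have habs : |((-h).valMinAbs : ℝ)| = |(h.valMinAbs : ℝ)| := by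
    have := ZMod.natAbs_valMinAbs_neg h
    have h2 : |(-h).valMinAbs| = |h.valMinAbs| := by
      rw [Int.abs_eq_natAbs, Int.abs_eq_natAbs, this]
    exact_mod_cast h2
  have hlow := norm_char_sub_one (-h)
  rw [← hz] at hlow
  have hpow : ∀ n : ℕ, (stdAddChar (-(h*(n:ZMod q))) : ℂ) = z^n := by
    intro n
    rw [hz, ← AddChar.map_nsmul_eq_pow, nsmul_eq_mul]
    congr 1
    ring
  have hnz : ‖z‖ = 1 := by rw [hz]; exact AddChar.norm_apply _ _
  have hsum : ch q N h*(z-1) = z*(z^N-1) := by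
    rw [ch, sum_congr rfl (fun n _ => hpow n)]
    have hind : ∀ M : ℕ, (∑ n ∈ Icc 1 M, z^n)*(z-1) = z*(z^M-1) := by
      intro M
      induction M with
      | zero => simp
      | succ M ih =>
        rw [sum_Icc_succ_top (by omega), add_mul, ih]
        ring
    exact hind N
  have hle : ‖ch q N h‖*‖z-1‖ ≤ 2 := by
    rw [← norm_mul, hsum, norm_mul, hnz, one_mul]
    refine (norm_sub_le _ _).trans ?_
    rw [norm_pow, hnz, one_pow, norm_one]
    norm_num
  rw [habs] at hlow ht0
  have h7 : ‖ch q N h‖*(4*|(h.valMinAbs : ℝ)| / q) ≤ 2 :=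
    (mul_le_mul_of_nonneg_left hlow (norm_nonneg _)).trans hle
  rw [← mul_div_assoc, div_le_iff₀ hq] at h7
  rw [mul_one_div, le_div_iff₀ ht0]
  linarith

lemma norm_ch_le_self (N:ℕ) (h:ZMod q) : ‖ch q N h‖ ≤ N := by
  refine (norm_sum_le _ _).trans ?_
  simp [AddChar.norm_apply]

/-- The Fourier expansion of the number of solutions in a box. -/
lemma cnt_eq (b:ℤ) (N:ℕ) (s : Fin (k+1) → ℤ) :
    (cnt q d b N s : ℂ) = (1/(q:ℂ))^(k+1)*∑ η : Fin (k+1) → ZMod q,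
      (∏ i, ch q N (η i))*SS (ZMod q) d b s (fun i => (η i).valMinAbs) stdAddChar := by
  have hq : (q:ℂ) ≠ 0 := mod_cast NeZero.ne q
  have h1 : (cnt q d b N s : ℂ) = ∑ n ∈ piFinset fun _ : Fin (k+1) => Icc 1 N,
      ∑ x ∈ Sol (ZMod q) d b s, ∏ i, if x i-(n i : ZMod q) = 0 then (1:ℂ) else 0 := by
    rw [cnt, card_eq_sum_ones, sum_filter, Nat.cast_sum]
    refine sum_congr rfl fun n _ => ?_
    have h2 : ∀ x : Fin (k+1) → ZMod q, (∏ i, if x i-(n i : ZMod q) = 0 then (1:ℂ) else 0) =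
          if x = (fun i => (n i : ZMod q)) then 1 else 0 := by
      intro x
      rw [prod_ite_zero]
      simp only [mem_univ, true_implies, prod_const_one, sub_eq_zero, funext_iff]
    simp only [h2]
    rw [sum_ite_eq']
    simp only [mem_Sol]
    push_cast
    rfl
  have h3 : ∀ x : Fin (k+1) → ZMod q, ∑ n ∈ piFinset fun _ : Fin (k+1) => Icc 1 N,
        (∏ i, if x i-(n i : ZMod q) = 0 then (1:ℂ) else 0) =
      (1/(q:ℂ))^(k+1)*∑ η : Fin (k+1) → ZMod q, (∏ i, ch q N (η i)) *
        stdAddChar (∑ i, η i*x i) := by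
    intro x
    have h4 : ∀ y : ZMod q, (if y = 0 then (1:ℂ) else 0) =
        (1/(q:ℂ))*∑ h : ZMod q, stdAddChar (h*y) := by
      intro y
      rw [AddChar.sum_mulShift y (ZMod.isPrimitive_stdAddChar q), ZMod.card]
      split_ifs with h
      · field_simp
      · simp
    have h5 : ∀ i, ∑ n ∈ Icc 1 N, (if x i-(n:ZMod q) = 0 then (1:ℂ) else 0) =
        (1/(q:ℂ))*∑ h : ZMod q, ch q N h*stdAddChar (h*x i) := by
      intro i
      simp only [h4]
      rw [← mul_sum, sum_comm]
      congr 1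
      refine sum_congr rfl fun h _ => ?_
      rw [ch, sum_mul]
      refine sum_congr rfl fun n _ => ?_
      rw [← AddChar.map_add_eq_mul]
      congr 1
      ring
    rw [← prod_univ_sum (fun _ => Icc 1 N) (fun i n => if x i-(n:ZMod q) = 0 then (1:ℂ) else 0)]
    simp only [h5]
    rw [prod_mul_distrib, prod_const, card_univ, card_fin, prod_univ_sum, Fintype.piFinset_univ]
    congr 1
    refine sum_congr rfl fun η _ => ?_
    rw [prod_mul_distrib, char_sum_eq_prod]
  rw [h1, sum_comm, sum_congr rfl (fun x _ => h3 x), ← mul_sum, sum_comm]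
  congr 1
  refine sum_congr rfl fun η _ => ?_
  rw [← mul_sum, SS]
  simp only [ZMod.coe_valMinAbs]

/-- The weighted `ℓ¹` norm of the nonzero Fourier coefficients. -/
lemma sum_ch_le (N:ℕ) {Q : ℕ} (hQ : 0 < Q) :
    ∑ h : ZMod q, (if h = 0 then 0 else ‖ch q N h‖*√(gc h.valMinAbs Q)) ≤
      q*(Q.divisors.card*(1+log q)) := by
  have hq : (0:ℝ) < q := mod_cast Nat.pos_of_neZero q
  have h1 : ∀ h : ZMod q, (if h = 0 then 0 else ‖ch q N h‖*√(gc h.valMinAbs Q)) ≤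
      if h = 0 then 0 else q/2*(1 / |(h.valMinAbs : ℝ)| * √(gc h.valMinAbs Q)) := by
    intro h
    split_ifs with h0
    · exact le_rfl
    · rw [← mul_assoc]
      exact mul_le_mul_of_nonneg_right (norm_ch_le N h0) (sqrt_nonneg _)
  refine (sum_le_sum fun h _ => h1 h).trans ?_
  have h2 : ∑ h : ZMod q, (if h = 0 then 0 else
      (q/2*(1 / |(h.valMinAbs : ℝ)| * √(gc h.valMinAbs Q)) : ℝ)) ≤
      ∑ t ∈ punc q, q/2*(1 / |(t:ℝ)| * √(gc t Q)) := by
    have e1 : ∀ h : ZMod q, (if h = 0 then 0 else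
      (q/2*(1 / |(h.valMinAbs : ℝ)| * √(gc h.valMinAbs Q)) : ℝ)) =
      if h ≠ 0 then (q/2*(1 / |(h.valMinAbs : ℝ)| * √(gc h.valMinAbs Q)) : ℝ) else 0 := by
      intro h
      split_ifs <;> simp_all
    simp only [e1]
    rw [← sum_filter, ← sum_image (s := univ.filter fun h : ZMod q => h ≠ 0)
      (f := fun t : ℤ => (q/2*(1 / |(t:ℝ)| * √(gc t Q)) : ℝ))
      (g := ZMod.valMinAbs) (fun _ _ _ _ h => ZMod.injective_valMinAbs h)]
    refine sum_le_sum_of_subset_of_nonneg ?_ fun t _ _ => by positivity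
    intro t ht
    obtain ⟨h, hh, rfl⟩ := mem_image.1 ht
    rw [mem_filter] at hh
    rw [mem_punc]
    refine ⟨fun h0 => hh.2 ((ZMod.valMinAbs_eq_zero _).1 h0), ?_⟩
    have := ZMod.natAbs_valMinAbs_le h
    rw [Int.abs_eq_natAbs]
    omega
  refine h2.trans ?_
  rw [sum_punc q (fun t => q/2*(1 / |(t:ℝ)| * √(gc t Q)))
    (fun t => by rw [gc_neg]; push_cast; rw [abs_neg]), ← mul_sum, ← mul_assoc]
  have h3 := sum_sqrt_gc_div hQ (Nat.pos_of_neZero q)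
  have h4 : ∑ t ∈ Icc 1 q, (1 / |((t:ℤ) : ℝ)| * √(gc (t:ℤ) Q)) =
      ∑ t ∈ Icc 1 q, √(gc (t:ℤ) Q)*(1/t) := by
    refine sum_congr rfl fun t _ => ?_
    rw [Int.cast_natCast, Nat.abs_cast, mul_comm]
  rw [h4]
  calc 2*((q:ℝ)/2)*∑ t ∈ Icc 1 q, √(gc (t:ℤ) Q)*(1/t)
      ≤ 2*((q:ℝ)/2)*(Q.divisors.card*(1+log q)) := by gcongr
    _ = _ := by ring

lemma sum_ch_le' {N : ℕ} (hN : N ≤ q) : ∑ h : ZMod q, ‖ch q N h‖ ≤ 2*(q*(1+log q)) := by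
  have hq : (1:ℝ) ≤ q := mod_cast Nat.pos_of_neZero q
  have h1 := sum_ch_le (q := q) N (Q := 1) one_pos
  simp only [Nat.divisors_one, card_singleton, Nat.cast_one, one_mul, gc, Nat.gcd_one_right,
    sqrt_one, mul_one] at h1
  have h2 : ∑ h : ZMod q, ‖ch q N h‖ = ‖ch q N 0‖ +
      ∑ h : ZMod q, (if h = 0 then 0 else ‖ch q N h‖) := by
    rw [← add_sum_erase _ _ (mem_univ (0:ZMod q)),
      ← add_sum_erase (f := fun h => if h = 0 then 0 else ‖ch q N h‖) _ (mem_univ (0:ZMod q))]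
    simp only [if_true, zero_add]
    congr 1
    refine sum_congr rfl fun h hh => ?_
    rw [if_neg (ne_of_mem_erase hh)]
  have h3 := norm_ch_le_self (q := q) N 0
  have h4 : (N:ℝ) ≤ q := mod_cast hN
  have h5 := log_nonneg hq
  rw [h2]
  nlinarith

end Fourier

/-! ### Box counts on average -/

section BoxCount

variable {d k : ℕ}

lemma SS_zero {A : Type} [CommRing A] [Fintype A] (b:ℤ) (s h : Fin (k+1) → ℤ)
    (ψ : AddChar A ℂ) (hh : ∀ i, (h i : A) = 0) : SS A d b s h ψ = (Sol A d b s).card := by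
  simp [SS, hh]

/-- The number of solutions in a box against its expected value, for one system. -/
lemma cnt_sub_le {q : ℕ} [NeZero q] (b:ℤ) (N:ℕ) (s : Fin (k+1) → ℤ) (A:ℝ) (P : Fin (k+1) → ℝ) (Q:ℕ)
    (hSS : ∀ η : Fin (k+1) → ZMod q, ∀ i₀, ‖SS (ZMod q) d b s (fun i => (η i).valMinAbs)
      stdAddChar‖ ≤ A*√(gc (η i₀).valMinAbs Q)*P i₀) (hA : 0 ≤ A)
    (hP : ∀ i, 0 ≤ P i) :
    |(cnt q d b N s : ℝ)-((N:ℝ)/q)^(k+1)*(Sol (ZMod q) d b s).card| ≤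
      (1/(q:ℝ))^(k+1)*∑ i₀ : Fin (k+1), A*P i₀ *
        ((∑ h : ZMod q, (if h = 0 then 0 else ‖ch q N h‖*√(gc h.valMinAbs Q))) *
          (∑ h : ZMod q, ‖ch q N h‖)^k) := by
  have hq : (q:ℂ) ≠ 0 := mod_cast NeZero.ne q
  have h1 : (((cnt q d b N s : ℝ)-((N:ℝ)/q)^(k+1)*(Sol (ZMod q) d b s).card : ℝ) : ℂ) =
      (1/(q:ℂ))^(k+1)*∑ η ∈ (univ : Finset (Fin (k+1) → ZMod q)).erase 0,
      (∏ i, ch q N (η i))*SS (ZMod q) d b s (fun i => (η i).valMinAbs) stdAddChar := by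
    push_cast
    rw [cnt_eq, ← add_sum_erase _ _ (mem_univ (0 : Fin (k+1) → ZMod q)), SS_zero b s _ _ (by simp)]
    simp only [Pi.zero_apply, ch_zero, prod_const, card_univ, card_fin]
    rw [mul_add]
    have e1 : ((N:ℂ)/q)^(k+1) = (1/(q:ℂ))^(k+1)*(N:ℂ)^(k+1) := by
      rw [← mul_pow, one_div_mul_eq_div]
    rw [e1]
    ring
  rw [← norm_eq_abs, ← Complex.norm_real, h1, norm_mul, norm_pow, norm_div, norm_one,
    Complex.norm_natCast]
  refine mul_le_mul_of_nonneg_left ?_ (by positivity)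
  refine (norm_sum_le _ _).trans ?_
  have h2 : ∀ η ∈ (univ : Finset (Fin (k+1) → ZMod q)).erase 0,
      ‖(∏ i, ch q N (η i))*SS (ZMod q) d b s (fun i => (η i).valMinAbs) stdAddChar‖ ≤
      ∑ i₀ : Fin (k+1), A*P i₀*∏ i, (if i = i₀ then
        (if η i = 0 then 0 else ‖ch q N (η i)‖*√(gc (η i).valMinAbs Q)) else ‖ch q N (η i)‖) := by
    intro η hη
    have hne := ne_of_mem_erase hη
    obtain ⟨i₀, hi₀⟩ := Function.ne_iff.1 hne
    rw [Pi.zero_apply] at hi₀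
    refine le_trans ?_ (single_le_sum (f := fun i₀ : Fin (k+1) => A*P i₀ * ∏ i, (if i = i₀ then
        (if η i = 0 then 0 else ‖ch q N (η i)‖*√(gc (η i).valMinAbs Q)) else
          ‖ch q N (η i)‖)) ?_ (mem_univ i₀))
    · rw [norm_mul, norm_prod]
      refine (mul_le_mul_of_nonneg_left (hSS η i₀) (by positivity)).trans (le_of_eq ?_)
      rw [← mul_prod_erase _ _ (mem_univ i₀), ← mul_prod_erase (f := fun i => if i = i₀ then
        (if η i = 0 then 0 else ‖ch q N (η i)‖*√(gc (η i).valMinAbs Q)) else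
          ‖ch q N (η i)‖) _ (mem_univ i₀)]
      rw [if_pos rfl, if_neg hi₀, prod_congr rfl
        (g := fun i => ‖ch q N (η i)‖) (s₁ := univ.erase i₀)
        (f := fun i => if i = i₀ then
        (if η i = 0 then 0 else ‖ch q N (η i)‖*√(gc (η i).valMinAbs Q)) else
          ‖ch q N (η i)‖) (fun i hi => if_neg (ne_of_mem_erase hi))]
      ring
    · intro i _
      refine mul_nonneg (mul_nonneg hA (hP i)) (prod_nonneg fun j _ => ?_)
      split_ifs <;> positivity
  refine (sum_le_sum h2).trans ?_
  refine (sum_le_sum_of_subset_of_nonneg (erase_subset _ _) ?_).trans (le_of_eq ?_)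
  · intro η _ _
    refine sum_nonneg fun i _ => mul_nonneg (mul_nonneg hA (hP i)) (prod_nonneg fun j _ => ?_)
    split_ifs <;> positivity
  · rw [sum_comm]
    refine sum_congr rfl fun i₀ _ => ?_
    rw [← mul_sum]
    congr 1
    have := prod_univ_sum (fun _ : Fin (k+1) => (univ : Finset (ZMod q))) (fun i h => if i = i₀ then
        (if h = 0 then 0 else ‖ch q N h‖*√(gc h.valMinAbs Q)) else ‖ch q N h‖)
    rw [Fintype.piFinset_univ] at this
    rw [← this, ← mul_prod_erase _ _ (mem_univ i₀)]
    simp only [if_true]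
    congr 1
    rw [prod_congr rfl (g := fun _ => ∑ h : ZMod q, ‖ch q N h‖)]
    · rw [prod_const, card_erase_of_mem (mem_univ _), card_univ, card_fin, Nat.add_sub_cancel]
    · grind

variable [NeZero d]

/-- On average over systems, the number of solutions in a box is close to its expected value. -/
theorem cnt_bound (hd2 : 2 ≤ d) (k:ℕ) : ∃ C : ℝ, 1 ≤ C ∧ ∀ (q₁ q₂ : ℕ), Squarefree q₁ →
    q₁.Coprime q₂ → ∀ [NeZero (q₁*q₂)] (b:ℤ), IsUnit (b : ZMod (q₁*q₂)) →
    ∀ N : ℕ, N ≤ q₁*q₂ → ∀ R : ℕ,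
    ∑ s ∈ NFam k R, |(cnt (q₁*q₂) d b N s : ℝ)-((N:ℝ)/(q₁*q₂ : ℕ))^(k+1) *
      (Sol (ZMod (q₁*q₂)) d b s).card| ≤
    (k+1)*(C^om q₁*(q₂:ℝ)^(k+1)*√q₁)*(2^k*2^om q₁ *
      (1+log (q₁*q₂ : ℕ))^(k+1))*(2*(2^om q₁*R))^k := by
  obtain ⟨C, hC, hfull⟩ := full_SS (d := d) hd2 k
  refine ⟨C, hC, ?_⟩
  intro q₁ q₂ hsq hcop hne b hb N hN R
  have hq1 : 0 < q₁ := pos_of_ne_zero hsq.ne_zero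
  have hq : (1:ℝ) ≤ (q₁*q₂ : ℕ) := mod_cast Nat.pos_of_neZero (q₁*q₂)
  set L := 1+log (q₁*q₂ : ℕ) with hL
  have hL0 : 0 ≤ L := by have := log_nonneg hq; linarith
  set A := C^om q₁*(q₂:ℝ)^(k+1)*√q₁ with hA
  have hA0 : 0 ≤ A := by positivity
  have hτ : (q₁.divisors.card : ℝ) = 2^om q₁ := by
    rw [card_divisors_squarefree q₁ hsq]; push_cast; rfl
  set q := q₁*q₂ with hqd
  have hF1 := sum_ch_le (q := q) N hq1
  have hF2 := sum_ch_le' (q := q) hN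
  rw [hτ, ← hL] at hF1
  rw [← hL] at hF2
  have hF : (∑ h : ZMod q, (if h = 0 then 0 else ‖ch q N h‖*√(gc h.valMinAbs q₁))) *
      (∑ h : ZMod q, ‖ch q N h‖)^k ≤ q^(k+1)*(2^k*2^om q₁*L^(k+1)) := by
    calc _ ≤ (q*(2^om q₁*L))*(2*(q*L))^k := by
          refine mul_le_mul hF1 (pow_le_pow_left₀ ?_ hF2 k) ?_ (by positivity)
          · exact sum_nonneg fun _ _ => norm_nonneg _
          · exact pow_nonneg (sum_nonneg fun _ _ => norm_nonneg _) _
      _ = _ := by ring_nf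
  have hone : ∀ s ∈ NFam k R, |(cnt q d b N s : ℝ)-((N:ℝ)/q)^(k+1) *
      (Sol (ZMod q) d b s).card| ≤ ∑ i₀ : Fin (k+1), A*(2^k*2^om q₁*L^(k+1)) *
        ∏ j : Fin k, √(gc (s (i₀.succAbove j)-s i₀) q₁) := by
    intro s _
    refine (cnt_sub_le b N s A (fun i₀ => ∏ j : Fin k, √(gc (s (i₀.succAbove j)-s i₀) q₁)) q₁ ?_ hA0
      (fun i => by positivity)).trans ?_
    · intro η i₀
      refine (hfull q₁ q₂ hsq hcop b hb s (fun i => (η i).valMinAbs) i₀ stdAddChar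
        (ZMod.isPrimitive_stdAddChar q)).trans (le_of_eq ?_)
      rw [hA]
      ring
    · rw [mul_sum]
      refine sum_le_sum fun i₀ _ => ?_
      have hP : 0 ≤ ∏ j : Fin k, √(gc (s (i₀.succAbove j)-s i₀) q₁) := by positivity
      calc _ ≤ (1/(q:ℝ))^(k+1)*(A*(∏ j : Fin k, √(gc (s (i₀.succAbove j)-s i₀) q₁)) *
            (q^(k+1)*(2^k*2^om q₁*L^(k+1)))) := by gcongr
        _ = _ := by
          have e1 : (1/(q:ℝ))^(k+1)*(q:ℝ)^(k+1) = 1 := by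
            rw [← mul_pow, one_div_mul_cancel (by positivity), one_pow]
          linear_combination (A*(∏ j : Fin k, √(gc (s (i₀.succAbove j)-s i₀) q₁)) *
            (2^k*2^om q₁*L^(k+1)))*e1
  refine (sum_le_sum hone).trans ?_
  rw [sum_comm]
  have htwo : ∀ i₀ : Fin (k+1), ∑ s ∈ NFam k R, A*(2^k*2^om q₁*L^(k+1)) *
        ∏ j : Fin k, √(gc (s (i₀.succAbove j)-s i₀) q₁) ≤
        A*(2^k*2^om q₁*L^(k+1))*(2*(2^om q₁*R))^k := by
    intro i₀
    rw [← mul_sum]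
    have := sum_prod_sqrt_gc hq1 R i₀
    rw [hτ] at this
    gcongr
  refine (sum_le_sum fun i₀ _ => htwo i₀).trans (le_of_eq ?_)
  rw [sum_const, card_univ, card_fin, nsmul_eq_mul]
  push_cast
  ring

/-! ### The number of solutions to a full modulus -/

lemma card_Sol_prime (p:ℕ) [Fact p.Prime] {b : ℤ} (hb : (b:ZMod p) ≠ 0)
    (s : Fin (k+1) → ℤ) : (Sol (ZMod p) d b s).card ≤ d^k*p := by
  have := sum_Sol_field (d := d) hb s 0 (fun _ => 1)
  simp only [sum_const, nsmul_eq_mul, mul_one] at this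
  rw [Nat.cast_inj] at this
  rw [this]
  refine (card_Pts_le _ _).trans (le_of_eq ?_)
  rw [ZMod.card]

lemma card_Sol_sqfree (k:ℕ) : ∀ Q : ℕ, Squarefree Q → ∀ [NeZero Q] (b:ℤ),
    IsUnit (b:ZMod Q) → ∀ s : Fin (k+1) → ℤ,
    (Sol (ZMod Q) d b s).card ≤ (d^k)^om Q*Q := by
  apply squarefree_induction
  · intro _ b _ s
    refine (card_le_univ _).trans ?_
    simp [om]
  · intro p Q hp hcop hsq ih hne b hb s
    have hpf : Fact p.Prime := ⟨hp⟩
    have hQ0 : NeZero Q := ⟨hsq.ne_zero⟩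
    let e := chineseRemainder hcop
    have hb' : IsUnit ((b:ZMod p), (b:ZMod Q)) := by
      have := hb.map e
      rwa [map_intCast] at this
    rw [Prod.isUnit_iff] at hb'
    have h1 := card_Sol_prime (d := d) p hb'.1.ne_zero s
    have h2 := ih b hb'.2 s
    rw [card_Sol_prod e, om_mul hp hcop]
    refine (Nat.mul_le_mul h1 h2).trans (le_of_eq ?_)
    ring

lemma card_Sol_full {q₁ q₂ : ℕ} (hsq : Squarefree q₁) (hcop : q₁.Coprime q₂)
    [NeZero (q₁*q₂)] (b:ℤ) (hb : IsUnit (b : ZMod (q₁*q₂))) (s : Fin (k+1) → ℤ) :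
    (Sol (ZMod (q₁*q₂)) d b s).card ≤ (d^k)^om q₁*q₁*q₂^(k+1) := by
  have hQ0 : NeZero q₁ := ⟨hsq.ne_zero⟩
  have hQ2 : NeZero q₂ := ⟨fun h0 => NeZero.ne (q₁*q₂) (by rw [h0, mul_zero])⟩
  let e := chineseRemainder hcop
  have hb' : IsUnit ((b:ZMod q₁), (b:ZMod q₂)) := by
    have := hb.map e
    rwa [map_intCast] at this
  rw [Prod.isUnit_iff] at hb'
  have h1 := card_Sol_sqfree (d := d) k q₁ hsq b hb'.1 s
  have h2 : (Sol (ZMod q₂) d b s).card ≤ q₂^(k+1) := by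
    refine (card_le_univ _).trans (le_of_eq ?_)
    rw [Fintype.card_fun, card_fin, ZMod.card]
  rw [card_Sol_prod e]
  exact Nat.mul_le_mul h1 h2

end BoxCount

/-! ### Riemann sums -/

section Riemann

variable {k : ℕ}

/-- The half-open cell of side `η` with corner `η ℓ + ξ`. -/
def cell (η:ℝ) (ξ : Fin k → ℝ) (ℓ : Fin k → ℤ) : Set (Fin k → ℝ) :=
  Set.pi Set.univ fun i => Set.Ico (η*ℓ i+ξ i) (η*ℓ i+ξ i+η)

lemma mem_cell {η : ℝ} (hη : 0 < η) {ξ : Fin k → ℝ} {ℓ : Fin k → ℤ} {x : Fin k → ℝ} :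
    x ∈ cell η ξ ℓ ↔ ∀ i, ⌊(x i-ξ i)/η⌋ = ℓ i := by
  rw [cell, Set.mem_univ_pi]
  refine forall_congr' fun i => ?_
  rw [Int.floor_eq_iff, Set.mem_Ico, le_div_iff₀ hη, div_lt_iff₀ hη]
  grind

lemma measurableSet_cell (η:ℝ) (ξ : Fin k → ℝ) (ℓ : Fin k → ℤ) :
    MeasurableSet (cell η ξ ℓ) := MeasurableSet.univ_pi fun _ => measurableSet_Ico

lemma volume_cell {η : ℝ} (hη : 0 < η) (ξ : Fin k → ℝ) (ℓ : Fin k → ℤ) :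
    volume (cell η ξ ℓ) = ENNReal.ofReal (η^k) := by
  rw [cell, volume_pi_pi]
  simp only [volume_Ico, add_sub_cancel_left, prod_const, card_univ, card_fin]
  rw [ENNReal.ofReal_pow hη.le]

lemma card_Icc_ceil_floor_le {x y : ℝ} (h : x ≤ y) : ((Icc ⌈x⌉ ⌊y⌋).card : ℝ) ≤ y-x+1 := by
  rw [Int.card_Icc]
  have h1 : x ≤ ⌈x⌉ := Int.le_ceil x
  have h2 : (⌊y⌋ : ℝ) ≤ y := Int.floor_le y
  rcases le_total 0 (⌊y⌋+1-⌈x⌉) with h3 | h3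
  · have : (((⌊y⌋+1-⌈x⌉).toNat : ℤ) : ℝ) = ((⌊y⌋+1-⌈x⌉ : ℤ) : ℝ) := by
      rw [Int.toNat_of_nonneg h3]
    rw [Int.cast_natCast] at this
    grind
  · rw [Int.toNat_of_nonpos h3]
    simp
    linarith

/-- A Riemann sum over a shifted lattice, with a rate that does not depend on the shift. -/
lemma riemann {f : (Fin k → ℝ) → ℝ} {L X : ℝ} (hL0 : 0 ≤ L) (hX0 : 0 ≤ X)
    (hL : ∀ x y, |f x-f y| ≤ L*‖x-y‖) (hX : ∀ x, f x ≠ 0 → ∀ i, |x i| ≤ X)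
    (hint : Integrable f) {η : ℝ} (hη : 0 < η) (hη1 : η ≤ 1) (ξ : Fin k → ℝ)
    (T : Finset (Fin k → ℤ)) (hT : ∀ ℓ : Fin k → ℤ, f (fun i => η*ℓ i+ξ i) ≠ 0 → ℓ ∈ T) :
    |η^k*∑ ℓ ∈ T, f (fun i => η*ℓ i+ξ i) - ∫ x, f x| ≤ (2*X+3)^k*L*η := by
  let S : Finset (Fin k → ℤ) := piFinset fun i =>
    Icc ⌈(-(X+1)-ξ i)/η⌉ ⌊(X+1-ξ i)/η⌋
  have hS : ∀ ℓ : Fin k → ℤ, (∀ i, |η*ℓ i+ξ i| ≤ X+1) → ℓ ∈ S := by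
    intro ℓ hℓ
    rw [mem_piFinset]
    intro i
    have := abs_le.1 (hℓ i)
    rw [mem_Icc, Int.ceil_le, Int.le_floor, div_le_iff₀ hη, le_div_iff₀ hη]
    constructor <;> linarith [this.1, this.2]
  have hScard : (S.card : ℝ) ≤ ((2*X+3)/η)^k := by
    rw [card_piFinset]
    push_cast
    have hpk : ((2*X+3)/η)^k = ∏ _i : Fin k, (2*X+3)/η := by
      rw [prod_const, card_univ, card_fin]
    rw [hpk]
    refine prod_le_prod (fun i _ => cast_nonneg _) fun i _ => ?_
    refine (card_Icc_ceil_floor_le ?_).trans ?_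
    · gcongr
      linarith
    · rw [le_div_iff₀ hη, add_mul, sub_mul, div_mul_cancel₀ _ hη.ne', div_mul_cancel₀ _ hη.ne']
      linarith
  have hsumT : ∑ ℓ ∈ T, f (fun i => η*ℓ i+ξ i) = ∑ ℓ ∈ S, f (fun i => η*ℓ i+ξ i) := by
    have h1 : ∑ ℓ ∈ T, f (fun i => η*ℓ i+ξ i) = ∑ ℓ ∈ T ∪ S, f (fun i => η*ℓ i+ξ i) := by
      refine sum_subset subset_union_left fun ℓ _ hn => ?_
      by_contra h
      exact hn (hT ℓ h)
    have h2 : ∑ ℓ ∈ S, f (fun i => η*ℓ i+ξ i) = ∑ ℓ ∈ T ∪ S, f (fun i => η*ℓ i+ξ i) := by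
      refine sum_subset subset_union_right fun ℓ _ hn => ?_
      by_contra h
      exact hn (hS ℓ fun i => (hX _ h i).trans (by linarith))
    rw [h1, h2]
  have hintS : ∫ x, f x = ∑ ℓ ∈ S, ∫ x in cell η ξ ℓ, f x := by
    rw [← integral_biUnion_finset S (fun ℓ _ => measurableSet_cell η ξ ℓ) ?_
      (fun ℓ _ => hint.integrableOn)]
    · symm
      refine setIntegral_eq_integral_of_forall_compl_eq_zero fun x hx => ?_
      by_contra h
      apply hx
      rw [Set.mem_iUnion₂]
      refine ⟨fun i => ⌊(x i-ξ i)/η⌋, hS _ fun i => ?_, (mem_cell hη).2 fun i => rfl⟩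
      have h1 := abs_le.1 (hX x h i)
      have h2 := Int.floor_le ((x i-ξ i)/η)
      have h3 := Int.lt_floor_add_one ((x i-ξ i)/η)
      rw [le_div_iff₀ hη] at h2
      rw [div_lt_iff₀ hη] at h3
      rw [abs_le]
      constructor <;> nlinarith [h1.1, h1.2]
    · intro ℓ _ ℓ' _ hne
      rw [Function.onFun, Set.disjoint_left]
      intro x h1 h2
      rw [mem_cell hη] at h1 h2
      exact hne (funext fun i => (h1 i).symm.trans (h2 i))
  have hcell : ∀ ℓ, |η^k*f (fun i => η*ℓ i+ξ i) - ∫ x in cell η ξ ℓ, f x| ≤ L*η*η^k := by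
    intro ℓ
    have hv : volume.real (cell η ξ ℓ) = η^k := by
      rw [Measure.real, volume_cell hη, ENNReal.toReal_ofReal (by positivity)]
    have hfin : volume (cell η ξ ℓ) < ⊤ := by rw [volume_cell hη]; exact ENNReal.ofReal_lt_top
    have h1 : η^k*f (fun i => η*ℓ i+ξ i) = ∫ x in cell η ξ ℓ, f (fun i => η*ℓ i+ξ i) := by
      rw [setIntegral_const, hv, smul_eq_mul]
    have hc : IntegrableOn (fun _ : Fin k → ℝ => f (fun i => η*ℓ i+ξ i)) (cell η ξ ℓ) volume :=
      integrableOn_const (hs := hfin.ne) (hC := enorm_ne_top)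
    rw [h1, ← integral_sub hc hint.integrableOn, ← norm_eq_abs]
    have h2 := norm_setIntegral_le_of_norm_le_const (μ := volume) (s := cell η ξ ℓ)
      (f := fun x => f (fun i => η*ℓ i+ξ i)-f x) (C := L*η) hfin (fun x hx => ?_)
    · rwa [hv] at h2
    · rw [norm_eq_abs]
      refine (hL _ _).trans (mul_le_mul_of_nonneg_left ?_ hL0)
      rw [pi_norm_le_iff_of_nonneg hη.le]
      intro i
      rw [cell, Set.mem_univ_pi] at hx
      have := hx i
      rw [Set.mem_Ico] at this
      rw [Pi.sub_apply, norm_eq_abs, abs_le]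
      constructor <;> linarith [this.1, this.2]
  rw [hsumT, hintS, mul_sum, ← sum_sub_distrib]
  refine (abs_sum_le_sum_abs _ _).trans ?_
  refine (sum_le_sum fun ℓ _ => hcell ℓ).trans ?_
  rw [sum_const, nsmul_eq_mul]
  calc (S.card : ℝ)*(L*η*η^k) ≤ ((2*X+3)/η)^k*(L*η*η^k) := by gcongr
    _ = (2*X+3)^k*L*η := by
      rw [div_pow]
      field_simp

end Riemann

/-! ### Averages to small moduli -/

section SmallModuli

variable {k d : ℕ}

/-- Consecutive differences. -/
def avec (s : Fin (k+1) → ℤ) : Fin k → ℤ := fun i => s i.castSucc-s i.succ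

/-- The normalised vector with given consecutive differences. -/
def svec (a : Fin k → ℤ) : Fin (k+1) → ℤ := fun i => -∑ l : Fin k, if l.castSucc < i then a l else 0

lemma svec_zero (a : Fin k → ℤ) : svec a 0 = 0 := by simp [svec]

lemma avec_svec (a : Fin k → ℤ) : avec (svec a) = a := by
  funext i
  simp only [avec, svec]
  rw [neg_sub_neg, ← sum_sub_distrib, sum_eq_single i]
  · rw [if_pos Fin.castSucc_lt_succ, if_neg (lt_irrefl _), sub_zero]
  · grind
  · simp

lemma avec_injOn {s s' : Fin (k+1) → ℤ} (h0 : s 0 = 0) (h0' : s' 0 = 0)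
    (h : avec s = avec s') : s = s' := by
  funext i
  refine Fin.induction (motive := fun i => s i = s' i) (h0.trans h0'.symm) (fun i ih => ?_) i
  have := congrFun h i
  simp only [avec] at this
  omega

lemma abs_svec_sub_le (a : Fin k → ℤ) (i j : Fin (k+1)) :
    |svec a i-svec a j| ≤ ∑ l, |a l| := by
  simp only [svec]
  rw [neg_sub_neg, ← sum_sub_distrib]
  refine (abs_sum_le_sum_abs _ _).trans (sum_le_sum fun l _ => ?_)
  split_ifs <;> simp

lemma mem_Sol_iff {A : Type} [CommRing A] [Fintype A] {b : ℤ} {s : Fin (k+1) → ℤ}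
    {n : Fin (k+1) → A} : n ∈ Sol A d b s ↔
      ∀ i : Fin k, (b : A)*(n i.castSucc^d-n i.succ^d) = ((avec s i : ℤ) : A) := by
  rw [mem_Sol]
  refine ⟨fun h i => h _ _, fun h => ?_⟩
  have key : ∀ i : Fin (k+1), (b : A)*(n 0^d-n i^d) = ((s 0-s i : ℤ) : A) := by
    intro i
    refine Fin.induction (motive := fun i => (b : A)*(n 0^d-n i^d) =
      ((s 0-s i : ℤ) : A)) (by simp) (fun i ih => ?_) i
    have := h i
    simp only [avec] at this
    push_cast at this ih ⊢
    linear_combination ih+this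
  grind

lemma sum_Fam_eq {f : (Fin k → ℝ) → ℝ} {X M : ℝ} (hM : 0 < M)
    (hX : ∀ x, f x ≠ 0 → ∀ i, |x i| ≤ X) {R : ℕ} (hR : k*(X*M) ≤ R)
    (w : (Fin (k+1) → ℤ) → ℝ) :
    ∑ s ∈ Fam k R, f (fun i => (avec s i : ℝ)/M)*w s =
      ∑ a ∈ piFinset fun _ : Fin k => Icc (-(R:ℤ)) R, f (fun i => (a i : ℝ)/M)*w (svec a) := by
  have h1 : ∀ s ∈ Fam k R, svec (avec s) = s := fun s hs =>
    avec_injOn (svec_zero _) (mem_Fam.1 hs).1 (avec_svec _)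
  rw [← sum_subset (s₁ := (Fam k R).image avec)]
  · rw [sum_image]
    · exact sum_congr rfl fun s hs => by rw [h1 s hs]
    · intro s hs s' hs' h
      rw [← h1 s hs, ← h1 s' hs', h]
  · intro a ha
    obtain ⟨s, hs, rfl⟩ := mem_image.1 ha
    rw [mem_piFinset]
    intro i
    rw [mem_Icc, ← abs_le]
    exact (mem_Fam.1 hs).2 _ _
  · intro a _ hn
    by_contra h
    have hf : f (fun i => (a i : ℝ)/M) ≠ 0 := fun h0 => h (by rw [h0, zero_mul])
    apply hn
    refine mem_image.2 ⟨svec a, mem_Fam.2 ⟨svec_zero a, fun i j => ?_⟩, avec_svec a⟩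
    refine (abs_svec_sub_le a i j).trans ?_
    have : (∑ l, |(a l : ℝ)|) ≤ R := by
      refine le_trans ?_ hR
      refine (sum_le_card_nsmul _ _ (X*M) fun l _ => ?_).trans (le_of_eq ?_)
      · have := hX _ hf l
        rwa [abs_div, abs_of_pos hM, div_le_iff₀ hM] at this
      · simp
    exact_mod_cast this

/-- Averages of the number of solutions to a small modulus. -/
lemma sum_small {f : (Fin k → ℝ) → ℝ} {L X : ℝ} (hL0 : 0 ≤ L) (hX0 : 0 ≤ X)
    (hL : ∀ x y, |f x-f y| ≤ L*‖x-y‖) (hX : ∀ x, f x ≠ 0 → ∀ i, |x i| ≤ X)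
    (hint : Integrable f) {Y : ℕ} [NeZero Y] {M : ℝ} (hY : (Y:ℝ) ≤ M) {R : ℕ} (hXR : X*M ≤ R)
    (hR : k*(X*M) ≤ R) (b:ℤ) :
    |∑ s ∈ Fam k R, f (fun i => (avec s i : ℝ)/M)*((Sol (ZMod Y) d b s).card/Y) -
      M^k*∫ x, f x| ≤ M^k*((2*X+3)^k*L*(Y/M)) := by
  have hY0 : (0:ℝ) < Y := mod_cast Nat.pos_of_neZero Y
  have hM : 0 < M := hY0.trans_le hY
  set Bx := piFinset fun _ : Fin k => Icc (-(R:ℤ)) R with hBx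
  set η := (Y:ℝ)/M with hη
  have hη0 : 0 < η := div_pos hY0 hM
  have hη1 : η ≤ 1 := (div_le_one hM).2 hY
  have hcls : ∀ c : Fin k → ZMod Y,
      |η^k*∑ a ∈ Bx.filter (fun a => ∀ i, (a i : ZMod Y) = c i), f (fun i => (a i : ℝ)/M) -
        ∫ x, f x| ≤ (2*X+3)^k*L*η := by
    intro c
    let c' : Fin k → ℤ := fun i => ((c i).val : ℤ)
    have hc' : ∀ i, ((c' i : ℤ) : ZMod Y) = c i := fun i => by simp [c']
    let T := (Bx.filter (fun a => ∀ i, (a i : ZMod Y) = c i)).image (fun a i => (a i-c' i)/(Y:ℤ))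
    have hdiv : ∀ a ∈ Bx.filter (fun a => ∀ i, (a i : ZMod Y) = c i), ∀ i,
        (Y:ℤ)*((a i-c' i)/(Y:ℤ))+c' i = a i := by
      intro a ha i
      have h1 := (mem_filter.1 ha).2 i
      have h2 : (Y:ℤ) ∣ a i-c' i := by
        rw [← ZMod.intCast_zmod_eq_zero_iff_dvd]
        push_cast
        rw [h1, hc', sub_self]
      rw [Int.mul_ediv_cancel' h2]
      ring
    have hpt : ∀ ℓ : Fin k → ℤ, (fun i => η*(ℓ i : ℝ)+(c' i : ℝ)/M) =
        fun i => (((Y:ℤ)*ℓ i+c' i : ℤ) : ℝ)/M := by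
      intro ℓ
      funext i
      push_cast
      rw [hη]
      ring
    have hr := riemann hL0 hX0 hL hX hint hη0 hη1 (fun i => (c' i : ℝ)/M) T ?_
    · have hs : ∑ ℓ ∈ T, f (fun i => η*(ℓ i : ℝ)+(c' i : ℝ)/M) =
          ∑ a ∈ Bx.filter (fun a => ∀ i, (a i : ZMod Y) = c i), f (fun i => (a i : ℝ)/M) := by
        rw [sum_image]
        · refine sum_congr rfl fun a ha => ?_
          rw [hpt]
          congr 1
          funext i
          rw [hdiv a ha i]
        · intro a ha a' ha' h
          funext i
          rw [← hdiv a ha i, ← hdiv a' ha' i]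
          have := congrFun h i
          dsimp only at this
          rw [this]
      rwa [hs] at hr
    · intro ℓ hℓ
      rw [hpt] at hℓ
      refine mem_image.2 ⟨fun i => (Y:ℤ)*ℓ i+c' i, ?_, ?_⟩
      · rw [mem_filter, mem_piFinset]
        refine ⟨fun i => ?_, fun i => ?_⟩
        · have h1 := hX _ hℓ i
          rw [abs_div, abs_of_pos hM, div_le_iff₀ hM] at h1
          rw [mem_Icc, ← abs_le]
          exact_mod_cast h1.trans hXR
        · push_cast
          rw [hc', ZMod.natCast_self]
          ring
      · funext i
        dsimp only
        rw [add_sub_cancel_right, Int.mul_ediv_cancel_left]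
        exact_mod_cast NeZero.ne Y
  -- the classes modulo `Y` attached to the vectors `n`
  let c : (Fin (k+1) → ZMod Y) → Fin k → ZMod Y := fun n i =>
    (b:ZMod Y)*(n i.castSucc^d-n i.succ^d)
  have hmain : ∑ s ∈ Fam k R, f (fun i => (avec s i : ℝ)/M)*((Sol (ZMod Y) d b s).card/Y) =
      (1/(Y:ℝ))*∑ n : Fin (k+1) → ZMod Y,
        ∑ a ∈ Bx.filter (fun a => ∀ i, (a i : ZMod Y) = c n i), f (fun i => (a i : ℝ)/M) := by
    rw [sum_Fam_eq hM hX hR (fun s => ((Sol (ZMod Y) d b s).card : ℝ)/Y)]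
    simp only [sum_filter]
    rw [sum_comm, mul_sum]
    refine sum_congr rfl fun a _ => ?_
    rw [← sum_filter, sum_const, nsmul_eq_mul]
    have : (univ.filter fun n : Fin (k+1) → ZMod Y => ∀ i, (a i : ZMod Y) = c n i) =
        Sol (ZMod Y) d b (svec a) := by
      ext n
      rw [mem_filter, mem_Sol_iff, avec_svec]
      simp only [mem_univ, true_and, c]
      exact forall_congr' fun i => eq_comm
    rw [this]
    ring
  have hk : M^k = η⁻¹^k*((1/(Y:ℝ))*(Y:ℝ)^(k+1)) := by
    rw [hη, inv_div, div_pow]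
    field_simp
    ring
  have hcardn : ∑ _n : Fin (k+1) → ZMod Y, (1:ℝ) = (Y:ℝ)^(k+1) := by
    rw [sum_const, card_univ, Fintype.card_fun, card_fin, ZMod.card]
    simp
  have hdiff : ∑ s ∈ Fam k R, f (fun i => (avec s i : ℝ)/M)*((Sol (ZMod Y) d b s).card/Y) -
      M^k*∫ x, f x = η⁻¹^k*(1/(Y:ℝ))*∑ n : Fin (k+1) → ZMod Y,
        (η^k*∑ a ∈ Bx.filter (fun a => ∀ i, (a i : ZMod Y) = c n i), f (fun i => (a i : ℝ)/M) -
          ∫ x, f x) := by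
    have hone : η⁻¹^k*η^k = 1 := by rw [← mul_pow, inv_mul_cancel₀ hη0.ne', one_pow]
    have hconst : ∑ _n : Fin (k+1) → ZMod Y, ∫ x, f x = (Y:ℝ)^(k+1)*∫ x, f x := by
      rw [← hcardn, sum_mul]; simp only [one_mul]
    rw [hmain, sum_sub_distrib, ← mul_sum, hconst, hk]
    generalize (∑ n : Fin (k+1) → ZMod Y,
      ∑ a ∈ Bx.filter (fun a => ∀ i, (a i : ZMod Y) = c n i), f (fun i => (a i : ℝ)/M)) = S
    linear_combination (-(1/(Y:ℝ))*S)*hone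
  rw [hdiff, abs_mul, abs_of_nonneg (by positivity)]
  calc _ ≤ η⁻¹^k*(1/(Y:ℝ))*∑ n : Fin (k+1) → ZMod Y, (2*X+3)^k*L*η := by
        refine mul_le_mul_of_nonneg_left ?_ (by positivity)
        exact (abs_sum_le_sum_abs _ _).trans (sum_le_sum fun n _ => hcls _)
    _ = _ := by
      have : ∑ n : Fin (k+1) → ZMod Y, (2*X+3)^k*L*η =
          (2*X+3)^k*L*η*∑ _n : Fin (k+1) → ZMod Y, (1:ℝ) := by
        rw [mul_sum]; simp only [mul_one]
      rw [this, hcardn, hk]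
      ring

end SmallModuli

/-! ### Local densities -/

section Densities

variable {k d : ℕ}

/-- The normalised number of solutions modulo `Q` (equal to `1` on average over `s`). -/
noncomputable def dens (d:ℕ) (b:ℤ) (s : Fin (k+1) → ℤ) (Q:ℕ) : ℝ :=
  (Nat.card {n : Fin (k+1) → ZMod Q //
    ∀ i j, (b:ZMod Q)*(n i^d-n j^d) = ((s i-s j : ℤ) : ZMod Q)} : ℝ)/Q

lemma dens_eq (b:ℤ) (s : Fin (k+1) → ℤ) (Q:ℕ) [NeZero Q] :
    dens d b s Q = ((Sol (ZMod Q) d b s).card : ℝ)/Q := by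
  rw [dens, Nat.subtype_card (Sol (ZMod Q) d b s) (fun n => mem_Sol)]

lemma dens_nonneg (b:ℤ) (s : Fin (k+1) → ℤ) (Q:ℕ) : 0 ≤ dens d b s Q := by
  rw [dens]; positivity

lemma dens_mul (b:ℤ) (s : Fin (k+1) → ℤ) {Q Q' : ℕ} (hQ : Q ≠ 0) (hQ' : Q' ≠ 0)
    (hcop : Q.Coprime Q') : dens d b s (Q*Q') = dens d b s Q*dens d b s Q' := by
  have h1 : NeZero Q := ⟨hQ⟩
  have h2 : NeZero Q' := ⟨hQ'⟩
  rw [dens_eq, dens_eq, dens_eq, card_Sol_prod (chineseRemainder hcop)]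
  push_cast
  rw [mul_div_mul_comm]

lemma dens_one (b:ℤ) (s : Fin (k+1) → ℤ) : dens d b s 1 = 1 := by
  have : Nat.card {n : Fin (k+1) → ZMod 1 //
    ∀ i j, (b:ZMod 1)*(n i^d-n j^d) = ((s i-s j : ℤ) : ZMod 1)} = 1 := by
    rw [Nat.subtype_card univ]
    · simp
    · grind
  rw [dens, this]
  simp

lemma coprime_prod_of_not_mem {p : ℕ} {T : Finset ℕ} (hp : p.Prime) (hT : ∀ q ∈ T, q.Prime)
    (h : p ∉ T) : p.Coprime (∏ q ∈ T, q) :=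
  Nat.Coprime.prod_right fun q hq => (Nat.coprime_primes hp (hT q hq)).2 fun e => h (e ▸ hq)

lemma prod_primes_ne_zero {T : Finset ℕ} (hT : ∀ q ∈ T, q.Prime) : ∏ q ∈ T, q ≠ 0 :=
  prod_ne_zero_iff.2 fun q hq => (hT q hq).ne_zero

lemma dens_prod (b:ℤ) (s : Fin (k+1) → ℤ) (T : Finset ℕ) (hT : ∀ q ∈ T, q.Prime) :
    dens d b s (∏ q ∈ T, q) = ∏ q ∈ T, dens d b s q := by
  induction T using Finset.induction_on with
  | empty => simp [dens_one]
  | insert p T hp ih =>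
    have hT' : ∀ q ∈ T, q.Prime := fun q hq => hT q (mem_insert_of_mem hq)
    have hpp := hT p (mem_insert_self _ _)
    rw [prod_insert hp, prod_insert hp, dens_mul b s hpp.ne_zero
      (prod_primes_ne_zero hT') (coprime_prod_of_not_mem hpp hT' hp), ih hT']

lemma gc_prod (x:ℤ) (T : Finset ℕ) (hT : ∀ q ∈ T, q.Prime) :
    gc x (∏ q ∈ T, q) = ∏ q ∈ T, gc x q := by
  induction T using Finset.induction_on with
  | empty => simp [gc]
  | insert p T hp ih =>
    have hT' : ∀ q ∈ T, q.Prime := fun q hq => hT q (mem_insert_of_mem hq)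
    have hpp := hT p (mem_insert_self _ _)
    rw [prod_insert hp, prod_insert hp, gc_mul (coprime_prod_of_not_mem hpp hT' hp), ih hT']

/-- The product of the gcds of `Q` with all differences of the entries of `s`. -/
def gpr (s : Fin (k+1) → ℤ) (Q:ℕ) : ℝ :=
  ∏ z : Fin (k+1) × Fin k, (gc (s (z.1.succAbove z.2)-s z.1) Q : ℝ)

lemma gpr_prod (s : Fin (k+1) → ℤ) (T : Finset ℕ) (hT : ∀ q ∈ T, q.Prime) :
    gpr s (∏ q ∈ T, q) = ∏ q ∈ T, gpr s q := by
  simp only [gpr]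
  rw [Finset.prod_comm]
  refine prod_congr rfl fun z _ => ?_
  rw [gc_prod _ T hT]
  push_cast
  rfl

lemma gpr_pos (s : Fin (k+1) → ℤ) {Q : ℕ} (hQ : 0 < Q) : 0 < gpr s Q :=
  prod_pos fun _ _ => mod_cast one_le_gc _ hQ

lemma one_le_gpr (s : Fin (k+1) → ℤ) {Q : ℕ} (hQ : 0 < Q) : 1 ≤ gpr s Q := by
  have : ∏ z : Fin (k+1) × Fin k, (1:ℝ) ≤ gpr s Q :=
    prod_le_prod (fun _ _ => zero_le_one) fun _ _ => mod_cast one_le_gc _ hQ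
  simpa using this

variable [NeZero d]

lemma dens_prime_le {p : ℕ} [Fact p.Prime] {b : ℤ} (hb : (b:ZMod p) ≠ 0)
    (s : Fin (k+1) → ℤ) : |dens d b s p-1| ≤ (d:ℝ)^k := by
  have hp0 : (0:ℝ) < p := mod_cast (Fact.out : p.Prime).pos
  have h1 : dens d b s p ≤ (d:ℝ)^k := by
    rw [dens_eq, div_le_iff₀ hp0]
    exact_mod_cast card_Sol_prime p hb s
  have h2 := dens_nonneg (d := d) b s p
  have h3 : (1:ℝ) ≤ (d:ℝ)^k := one_le_pow₀ (mod_cast NeZero.one_le)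
  rw [abs_le]
  constructor <;> linarith

/-- The local densities are close to `1` unless two entries of `s` agree modulo `p`. -/
lemma dens_prime (hk : 1 ≤ k) : ∃ C : ℝ, 1 ≤ C ∧ ∀ (p:ℕ) [Fact p.Prime] (b:ℤ),
    (b:ZMod p) ≠ 0 → ∀ s : Fin (k+1) → ℤ,
    |dens d b s p-1| ≤ C*(gpr s p/p)^(1/(2*((k+1 : ℕ)*k : ℝ))) := by
  obtain ⟨C, hC, hloc⟩ := local_count (d := d) k
  refine ⟨C+d^k+1, by linarith [pow_nonneg (cast_nonneg d : (0:ℝ) ≤ d) k], ?_⟩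
  intro p hp b hb s
  have hp0 : (0:ℝ) < p := mod_cast hp.out.pos
  have hp1 : (1:ℝ) ≤ p := mod_cast hp.out.one_lt.le
  have hkk : (1:ℝ) ≤ (k+1 : ℕ)*k := by
    have : 1 ≤ (k+1)*k := Nat.mul_pos (Nat.succ_pos _) hk
    exact_mod_cast this
  set θ : ℝ := 1/(2*((k+1 : ℕ)*k : ℝ)) with hθ
  have hθ0 : 0 < θ := by positivity
  have hθ1 : θ ≤ 1/2 := by
    rw [hθ]
    apply one_div_le_one_div_of_le <;> linarith
  have hdk : (0:ℝ) ≤ (d:ℝ)^k := by positivity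
  have hg1 := one_le_gpr s hp.out.pos
  by_cases hinj : ∀ i j, i ≠ j → ((s i-s j : ℤ) : ZMod p) ≠ 0
  · have hcard : ((Sol (ZMod p) d b s).card : ℝ) = (Pts d (fun _ => 1) (fun j : Fin k =>
          (b:ZMod p)⁻¹*((s ((0 : Fin (k+1)).succAbove j)-s 0 : ℤ) : ZMod p))).card := by
      have := sum_Sol_field (d := d) hb s 0 (fun _ => 1)
      simp only [sum_const, nsmul_eq_mul, mul_one] at this
      exact_mod_cast this
    have h1 := hloc p (fun j : Fin k =>
          (b:ZMod p)⁻¹*((s ((0 : Fin (k+1)).succAbove j)-s 0 : ℤ) : ZMod p))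
        (fun j => mul_ne_zero (inv_ne_zero hb) (hinj _ _ (Fin.succAbove_ne 0 j))) (by
          intro j j' h
          by_contra hne
          have h2 := mul_left_cancel₀ (inv_ne_zero hb) h
          refine hinj ((0 : Fin (k+1)).succAbove j) ((0 : Fin (k+1)).succAbove j')
            (fun e => hne (Fin.succAbove_right_injective e)) ?_
          push_cast at h2 ⊢
          linear_combination h2)
    rw [← hcard] at h1
    have h2 : |dens d b s p-1| ≤ C*(√p/p) := by
      rw [dens_eq, div_sub_one hp0.ne', abs_div, abs_of_pos hp0, ← mul_div_assoc]
      exact div_le_div_of_nonneg_right h1 hp0.le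
    have h3 : √p/p ≤ (gpr s p/p)^θ := by
      calc √p/p = (1/(p:ℝ))^(1/2 : ℝ) := by
            rw [← sqrt_eq_rpow, sqrt_div zero_le_one, sqrt_one, sqrt_div_self']
        _ ≤ (1/(p:ℝ))^θ := by
            refine rpow_le_rpow_of_exponent_ge (by positivity) ?_ hθ1
            rw [div_le_one hp0]; exact hp1
        _ ≤ _ := by
            refine rpow_le_rpow (by positivity) ?_ hθ0.le
            exact div_le_div_of_nonneg_right hg1 hp0.le
    refine h2.trans (mul_le_mul (by linarith) h3 (by positivity) (by linarith))
  · push Not at hinj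
    obtain ⟨i, j, hij, h0⟩ := hinj
    obtain ⟨j', rfl⟩ := Fin.exists_succAbove_eq hij
    have h1 : (p:ℝ) ≤ gpr s p := by
      have := prod_le_prod (s := (univ : Finset (Fin (k+1) × Fin k)))
        (f := fun z => if z = (j, j') then (p:ℝ) else 1)
        (g := fun z => (gc (s (z.1.succAbove z.2)-s z.1) p : ℝ))
        (fun z _ => by split_ifs <;> positivity) (fun z _ => by
          split_ifs with hz
          · rw [hz, gc_prime hp.out h0]
          · exact_mod_cast one_le_gc _ hp.out.pos)
      simpa [gpr] using this
    have h2 : 1 ≤ (gpr s p/p)^θ := by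
      refine one_le_rpow ?_ hθ0.le
      rwa [le_div_iff₀ hp0, one_mul]
    refine (dens_prime_le hb s).trans ?_
    nlinarith

/-- The product of the deviations over the primes in `T`. -/
noncomputable def devi (d:ℕ) (b:ℤ) (s : Fin (k+1) → ℤ) (T : Finset ℕ) : ℝ :=
  ∏ p ∈ T, (dens d b s p-1)

lemma dens_eq_sum_devi (b:ℤ) (s : Fin (k+1) → ℤ) {q₁ : ℕ} (hsq : Squarefree q₁) :
    dens d b s q₁ = ∑ T ∈ q₁.primeFactors.powerset, devi d b s T := by
  conv_lhs => rw [← Nat.prod_primeFactors_of_squarefree hsq]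
  rw [dens_prod _ _ _ (fun q hq => Nat.prime_of_mem_primeFactors hq)]
  simp only [devi]
  rw [← prod_add_one]
  simp

/-- Averaging the deviations over the differences. -/
lemma sum_devi_le (hk : 1 ≤ k) : ∃ C : ℝ, 1 ≤ C ∧ ∀ (b:ℤ) (T : Finset ℕ),
    (∀ p ∈ T, p.Prime ∧ (b:ZMod p) ≠ 0) → ∀ R : ℕ, ∑ s ∈ NFam k R, |devi d b s T| ≤
      (k+1 : ℕ)*k*(C^T.card*2^T.card*(2*R)^k *
        ((∏ p ∈ T, p : ℕ) : ℝ)^(-(1/(2*((k+1 : ℕ)*k : ℝ))))) := by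
  obtain ⟨C, hC, hpr⟩ := dens_prime (d := d) hk
  refine ⟨C, hC, fun b T hT R => ?_⟩
  set D := ∏ p ∈ T, p with hD
  have hTp : ∀ p ∈ T, p.Prime := fun p hp => (hT p hp).1
  have hD0 : 0 < D := pos_of_ne_zero (prod_primes_ne_zero hTp)
  have hkk : (0:ℝ) < (k+1 : ℕ)*k := by
    have : 0 < (k+1)*k := Nat.mul_pos (Nat.succ_pos _) hk
    exact_mod_cast this
  set θ : ℝ := 1/(2*((k+1 : ℕ)*k : ℝ)) with hθ
  have hθ0 : 0 < θ := by positivity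
  have hsqD : Squarefree D := by
    refine squarefree_prod_of_pairwise_isCoprime (fun p hp q hq hpq => ?_)
      fun p hp => (hTp p hp).squarefree
    exact Nat.coprime_iff_isRelPrime.1 ((Nat.coprime_primes (hTp p hp) (hTp q hq)).2 hpq)
  have hcardD : D.divisors.card = 2^T.card := by
    rw [card_divisors_squarefree D hsqD, om, hD, Nat.primeFactors_prod hTp]
  have h1 : ∀ s : Fin (k+1) → ℤ, |devi d b s T| ≤ C^T.card*(D:ℝ)^(-θ) *
      ∑ z : Fin (k+1) × Fin k, √(gc (s (z.1.succAbove z.2)-s z.1) D) := by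
    intro s
    have h2 : |devi d b s T| ≤ C^T.card*(gpr s D/D)^θ := by
      rw [devi, abs_prod, hD, gpr_prod s T hTp, Nat.cast_prod, ← prod_div_distrib,
        ← finsetProd_rpow _ _ (fun p hp => div_nonneg
          (gpr_pos s (hTp p hp).pos).le (cast_nonneg _)),
        ← prod_const, ← prod_mul_distrib]
      refine prod_le_prod (fun _ _ => abs_nonneg _) fun p hp => ?_
      have : Fact p.Prime := ⟨hTp p hp⟩
      exact hpr p b (hT p hp).2 s
    refine h2.trans ?_
    rw [mul_assoc]
    refine mul_le_mul_of_nonneg_left ?_ (by positivity)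
    rw [div_rpow (gpr_pos s hD0).le (cast_nonneg _), rpow_neg (cast_nonneg _),
      div_eq_inv_mul]
    refine mul_le_mul_of_nonneg_left ?_ (by positivity)
    set S := ∑ z : Fin (k+1) × Fin k, √(gc (s (z.1.succAbove z.2)-s z.1) D) with hS
    have hS0 : 0 ≤ S := sum_nonneg fun _ _ => sqrt_nonneg _
    rw [gpr, ← finsetProd_rpow _ _ (fun z _ => cast_nonneg _)]
    have h3 : ∏ z : Fin (k+1) × Fin k, (gc (s (z.1.succAbove z.2)-s z.1) D : ℝ)^θ ≤
        ∏ z : Fin (k+1) × Fin k, S^(2*θ) := by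
      refine prod_le_prod (fun z _ => by positivity) fun z _ => ?_
      have : (gc (s (z.1.succAbove z.2)-s z.1) D : ℝ) ≤ S^2 := by
        rw [← sq_sqrt (cast_nonneg (gc (s (z.1.succAbove z.2)-s z.1) D))]
        refine pow_le_pow_left₀ (sqrt_nonneg _) ?_ 2
        exact single_le_sum (f := fun z : Fin (k+1) × Fin k =>
          √(gc (s (z.1.succAbove z.2)-s z.1) D)) (fun _ _ => sqrt_nonneg _)
          (mem_univ z)
      refine (rpow_le_rpow (cast_nonneg _) this hθ0.le).trans (le_of_eq ?_)
      rw [rpow_mul hS0, rpow_two]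
    refine h3.trans (le_of_eq ?_)
    rw [prod_const, card_univ, Fintype.card_prod, card_fin, card_fin,
      ← rpow_natCast, ← rpow_mul hS0]
    have : 2*θ*(((k+1)*k : ℕ) : ℝ) = 1 := by grind
    rw [this, rpow_one]
  refine (sum_le_sum fun s _ => h1 s).trans ?_
  rw [← mul_sum, sum_comm]
  have h4 : ∀ z : Fin (k+1) × Fin k, ∑ s ∈ NFam k R, √(gc (s (z.1.succAbove z.2)-s z.1) D) ≤
        2^T.card*(2*(R:ℝ))^k := by
    intro z
    refine (sum_diffs_le (NFam k R) (fun s hs => (mem_NFam.1 hs).1.1) z.1 _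
      (fun s hs => diffs_mem_punc hs z.1) (fun u => √(gc (u z.2) D))
      (fun u => by positivity)).trans ?_
    have h5 := sum_prod_piFinset (punc R) (fun (i : Fin k) t => if i = z.2 then √(gc t D) else 1)
    have h6 : ∀ u : Fin k → ℤ, ∏ i, (if i = z.2 then √(gc (u i) D) else 1) =
        √(gc (u z.2) D) := fun u => by simp
    simp only [h6] at h5
    rw [h5]
    have hpc : ∑ t ∈ punc R, (1:ℝ) = 2*R := by
      rw [sum_punc R (fun _ => 1) (fun _ => rfl)]; simp
    have h7 : ∀ i : Fin k, ∑ t ∈ punc R, (if i = z.2 then √(gc t D) else 1) ≤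
        (if i = z.2 then (2:ℝ)^T.card else 1)*(2*R) := by
      intro i
      split_ifs
      · refine (sum_punc_sqrt_gc hD0 R).trans (le_of_eq ?_)
        rw [hcardD]; push_cast; ring
      · rw [hpc, one_mul]
    refine (prod_le_prod (fun i _ => sum_nonneg fun t _ => by
      split_ifs <;> positivity) fun i _ => h7 i).trans (le_of_eq ?_)
    rw [prod_mul_distrib]
    simp
  refine (mul_le_mul_of_nonneg_left (sum_le_sum fun z _ => h4 z) (by positivity)).trans
    (le_of_eq ?_)
  rw [sum_const, card_univ, Fintype.card_prod, card_fin, card_fin, nsmul_eq_mul]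
  push_cast
  ring

end Densities

/-! ### Equidistribution of the densities -/

section MainTerm

variable {k d : ℕ}

lemma dens_le (b:ℤ) (s : Fin (k+1) → ℤ) {Q : ℕ} (hQ : Q ≠ 0) : dens d b s Q ≤ (Q:ℝ)^k := by
  have h1 : NeZero Q := ⟨hQ⟩
  have hQ0 : (0:ℝ) < Q := mod_cast pos_of_ne_zero hQ
  rw [dens_eq, div_le_iff₀ hQ0, ← pow_succ]
  have : (Sol (ZMod Q) d b s).card ≤ Q^(k+1) := by
    refine (card_le_univ _).trans (le_of_eq ?_)
    rw [Fintype.card_fun, card_fin, ZMod.card]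
  exact_mod_cast this

lemma sum_powerset_pow (P : Finset ℕ) (c:ℝ) : ∑ T ∈ P.powerset, c^T.card = (c+1)^P.card := by
  have := prod_add_one (f := fun _ : ℕ => c) P
  simp only [prod_const] at this
  exact this.symm

/-- For a small set of primes, the average of the deviations is computed from averages of densities
to small moduli; only the empty set contributes a main term. -/
lemma sum_devi_small {f : (Fin k → ℝ) → ℝ} {L X : ℝ} (hL0 : 0 ≤ L) (hX0 : 0 ≤ X)
    (hL : ∀ x y, |f x-f y| ≤ L*‖x-y‖) (hX : ∀ x, f x ≠ 0 → ∀ i, |x i| ≤ X)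
    (hint : Integrable f) {M : ℝ} {R : ℕ} (hXR : X*M ≤ R) (hR : k*(X*M) ≤ R) (b:ℤ)
    {q₂ : ℕ} (hq₂ : q₂ ≠ 0) (T : Finset ℕ) (hT : ∀ p ∈ T, p.Prime ∧ p.Coprime q₂)
    (hM : (q₂:ℝ)*(∏ p ∈ T, p : ℕ) ≤ M) :
    |∑ s ∈ Fam k R, f (fun i => (avec s i : ℝ)/M)*(dens d b s q₂*devi d b s T) -
      (if T = ∅ then M^k*∫ x, f x else 0)| ≤
      2^T.card*(M^k*((2*X+3)^k*L*((q₂:ℝ)*(∏ p ∈ T, p : ℕ)/M))) := by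
  have hTp : ∀ p ∈ T, p.Prime := fun p hp => (hT p hp).1
  have hM0 : 0 < M := by
    refine lt_of_lt_of_le ?_ hM
    have : 0 < q₂*∏ p ∈ T, p :=
      Nat.mul_pos (pos_of_ne_zero hq₂) (pos_of_ne_zero (prod_primes_ne_zero hTp))
    exact_mod_cast this
  have hexp : ∀ s : Fin (k+1) → ℤ, dens d b s q₂*devi d b s T =
      ∑ t ∈ T.powerset, (-1)^t.card*dens d b s (q₂*∏ p ∈ T \ t, p) := by
    intro s
    rw [devi, prod_sub, mul_sum]
    refine sum_congr rfl fun t _ => ?_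
    have hp : ∀ p ∈ T \ t, p.Prime := fun p hp => hTp p (mem_sdiff.1 hp).1
    rw [dens_mul b s hq₂ (prod_primes_ne_zero hp) (Nat.Coprime.prod_right fun p hp =>
      ((hT p (mem_sdiff.1 hp).1).2).symm), dens_prod b s _ hp, prod_const_one]
    ring
  have hI : (if T = ∅ then M^k*∫ x, f x else 0) = ∑ t ∈ T.powerset, (-1)^t.card*(M^k*∫ x, f x) := by
    have h1 := sum_powerset_neg_one_pow_card (x := T)
    have h2 : ∑ t ∈ T.powerset, (-1 : ℝ)^t.card = if T = ∅ then 1 else 0 := by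
      exact_mod_cast h1
    rw [← sum_mul, h2]
    split_ifs <;> simp
  have hsum : ∑ s ∈ Fam k R, f (fun i => (avec s i : ℝ)/M)*(dens d b s q₂*devi d b s T) =
      ∑ t ∈ T.powerset, (-1)^t.card*∑ s ∈ Fam k R, f (fun i => (avec s i : ℝ)/M) *
        dens d b s (q₂*∏ p ∈ T \ t, p) := by
    simp only [hexp, mul_sum]
    rw [sum_comm]
    refine sum_congr rfl fun t _ => sum_congr rfl fun s _ => ?_
    ring
  rw [hsum, hI, ← sum_sub_distrib]
  refine (abs_sum_le_sum_abs _ _).trans ?_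
  have hb : ∀ t ∈ T.powerset, |(-1)^t.card*(∑ s ∈ Fam k R, f (fun i => (avec s i : ℝ)/M) *
        dens d b s (q₂*∏ p ∈ T \ t, p))-(-1)^t.card*(M^k*∫ x, f x)| ≤
      M^k*((2*X+3)^k*L*((q₂:ℝ)*(∏ p ∈ T, p : ℕ)/M)) := by
    intro t _
    have hp : ∀ p ∈ T \ t, p.Prime := fun p hp => hTp p (mem_sdiff.1 hp).1
    have hne : NeZero (q₂*∏ p ∈ T \ t, p) := ⟨mul_ne_zero hq₂ (prod_primes_ne_zero hp)⟩
    have hle : ((q₂*∏ p ∈ T \ t, p : ℕ) : ℝ) ≤ (q₂:ℝ)*(∏ p ∈ T, p : ℕ) := by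
      have : ∏ p ∈ T \ t, p ≤ ∏ p ∈ T, p :=
        Nat.le_of_dvd (pos_of_ne_zero (prod_primes_ne_zero hTp))
          (prod_dvd_prod_of_subset _ _ _ sdiff_subset)
      exact_mod_cast Nat.mul_le_mul_left q₂ this
    rw [← mul_sub, abs_mul, abs_pow, abs_neg, abs_one, one_pow, one_mul]
    have := sum_small (d := d) hL0 hX0 hL hX hint (Y := q₂*∏ p ∈ T \ t, p) (hle.trans hM) hXR hR b
    simp only [← dens_eq] at this
    refine this.trans ?_
    have h3 := div_le_div_of_nonneg_right hle hM0.le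
    gcongr
  refine (sum_le_card_nsmul _ _ _ hb).trans (le_of_eq ?_)
  rw [card_powerset, nsmul_eq_mul]
  push_cast
  rfl

variable [NeZero d]

/-- The main term: the density of solutions modulo `q₁ q₂` equidistributes with respect to the
differences. -/
theorem main_term (hk : 1 ≤ k) {f : (Fin k → ℝ) → ℝ} {L X B : ℝ} (hL0 : 0 ≤ L) (hX0 : 0 ≤ X)
    (hL : ∀ x y, |f x-f y| ≤ L*‖x-y‖) (hX : ∀ x, f x ≠ 0 → ∀ i, |x i| ≤ X)
    (hB : ∀ x, |f x| ≤ B) (hint : Integrable f) :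
    ∃ C₀ : ℝ, 1 ≤ C₀ ∧ ∃ K : ℝ, 0 ≤ K ∧ ∀ (q₁ q₂ : ℕ) (b:ℤ), Squarefree q₁ → q₂ ≠ 0 →
      q₁.Coprime q₂ → (∀ p, p.Prime → p ∣ q₁ → (b:ZMod p) ≠ 0) →
      ∀ U : ℝ, C₀^om q₁ ≤ U → (q₂:ℝ) ≤ U → ∀ M : ℝ, 1 ≤ M → U^2 ≤ M →
      ∀ R : ℕ, M ≤ R → X*M ≤ R → k*(X*M) ≤ R →
      |∑ s ∈ NFam k R, f (fun i => (avec s i : ℝ)/M)*dens d b s (q₁*q₂)-M^k*∫ x, f x| ≤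
        K*U^(k+2)*(R:ℝ)^k*M^(-(1/(4*((k+1 : ℕ)*k : ℝ)))) := by
  obtain ⟨C, hC, hdev⟩ := sum_devi_le (d := d) hk
  have hB0 : 0 ≤ B := (abs_nonneg _).trans (hB 0)
  have hdk : (1:ℝ) ≤ (d:ℝ)^k := one_le_pow₀ (mod_cast NeZero.one_le)
  refine ⟨2*C+d^k+1, by linarith, (2*X+3)^k*L+(k+1 : ℕ)*k*3^k*B +
    (k+1 : ℕ)*k*2^k*B, by positivity, ?_⟩
  intro q₁ q₂ b hsq hq₂ hcop hb U hCU hqU M hM1 hUM R hMR hXR hR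
  set P := q₁.primeFactors with hP
  have hPp : ∀ p ∈ P, p.Prime := fun p hp => Nat.prime_of_mem_primeFactors hp
  have hPd : ∀ p ∈ P, p ∣ q₁ := fun p hp => Nat.dvd_of_mem_primeFactors hp
  have hM0 : 0 < M := by linarith
  have hU1 : 1 ≤ U := le_trans (one_le_pow₀ (by linarith)) hCU
  have hkk : (1:ℝ) ≤ (k+1 : ℕ)*k := by
    have : 1 ≤ (k+1)*k := Nat.mul_pos (Nat.succ_pos _) hk
    exact_mod_cast this
  set κ : ℝ := 1/(4*((k+1 : ℕ)*k : ℝ)) with hκ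
  have hκ0 : 0 < κ := by positivity
  have hκ1 : κ ≤ 1/4 := by
    rw [hκ]
    apply one_div_le_one_div_of_le <;> linarith
  have hMκ : 0 ≤ M^(-κ) := by positivity
  have hR1 : (1:ℝ) ≤ R := hM1.trans hMR
  have hsM0 : 0 < √M := sqrt_pos.2 hM0
  have hsM : √M*√M = M := mul_self_sqrt hM0.le
  have hUs : U ≤ √M := le_sqrt_of_sq_le hUM
  -- comparison of the two savings
  have hsave : √M/M ≤ M^(-κ) := by
    rw [sqrt_div_self', ← sqrt_one, ← sqrt_div zero_le_one, sqrt_eq_rpow,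
      div_rpow zero_le_one hM0.le, one_rpow, one_div, ← rpow_neg hM0.le]
    exact rpow_le_rpow_of_exponent_le hM1 (by linarith)
  have hsave1 : 1/M ≤ M^(-κ) := by
    refine le_trans ?_ hsave
    exact div_le_div_of_nonneg_right (one_le_sqrt.2 hM1) hM0.le
  have hcP : om q₁ = P.card := rfl
  have hpowU : ∀ c : ℝ, 0 ≤ c → c ≤ 2*C+d^k+1 → c^P.card ≤ U := fun c h0 h1 =>
    (pow_le_pow_left₀ h0 h1 _).trans hCU
  set small := P.powerset.filter fun T => ((∏ p ∈ T, p : ℕ) : ℝ) ≤ √M with hsmall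
  set big := P.powerset.filter fun T => ¬ ((∏ p ∈ T, p : ℕ) : ℝ) ≤ √M with hbig
  have hsub : ∀ T ∈ P.powerset, T ⊆ P := fun T hT => mem_powerset.1 hT
  let w : (Fin (k+1) → ℤ) → ℝ := fun s => f (fun i => (avec s i : ℝ)/M)*dens d b s q₂
  have hw : ∀ s, |w s| ≤ B*U^k := by
    intro s
    simp only [w]
    rw [abs_mul, abs_of_nonneg (dens_nonneg b s q₂)]
    exact mul_le_mul (hB _) ((dens_le b s hq₂).trans (pow_le_pow_left₀ (cast_nonneg _) hqU k))
      (dens_nonneg b s q₂) hB0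
  have hdecomp : ∑ s ∈ NFam k R, f (fun i => (avec s i : ℝ)/M)*dens d b s (q₁*q₂) =
      ∑ T ∈ small, ∑ s ∈ Fam k R, w s*devi d b s T -
      ∑ s ∈ (Fam k R).filter (fun s => ¬ Injective s), w s*∑ T ∈ small, devi d b s T +
      ∑ T ∈ big, ∑ s ∈ NFam k R, w s*devi d b s T := by
    have h1 : ∀ s : Fin (k+1) → ℤ, f (fun i => (avec s i : ℝ)/M)*dens d b s (q₁*q₂) =
        ∑ T ∈ small, w s*devi d b s T+∑ T ∈ big, w s*devi d b s T := by
      intro s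
      rw [hsmall, hbig, sum_filter_add_sum_filter_not, ← mul_sum,
        dens_mul b s hsq.ne_zero hq₂ hcop, dens_eq_sum_devi b s hsq]
      simp only [w]
      ring
    simp only [h1]
    rw [sum_add_distrib, sum_comm (s := NFam k R) (t := big), sum_comm (s := small) (t := Fam k R)]
    congr 1
    rw [← sum_filter_add_sum_filter_not (Fam k R) (fun s => Injective s), NFam]
    simp only [mul_sum]
    ring
  have ha : |∑ T ∈ small, ∑ s ∈ Fam k R, w s*devi d b s T-M^k*∫ x, f x| ≤
      (2*X+3)^k*L*U^(k+2)*(R:ℝ)^k*M^(-κ) := by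
    have h0 : (∅ : Finset ℕ) ∈ small := by
      rw [hsmall, mem_filter]
      refine ⟨empty_mem_powerset _, ?_⟩
      rw [prod_empty, Nat.cast_one]
      exact one_le_sqrt.2 hM1
    have h1 : M^k*∫ x, f x = ∑ T ∈ small, if T = ∅ then M^k*∫ x, f x else 0 := by
      rw [sum_ite_eq' small ∅, if_pos h0]
    rw [h1, ← sum_sub_distrib]
    refine (abs_sum_le_sum_abs _ _).trans ?_
    have h2 : ∀ T ∈ small, |∑ s ∈ Fam k R, w s*devi d b s T - (if T = ∅ then M^k*∫ x, f x else 0)| ≤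
        2^T.card*(M^k*((2*X+3)^k*L*(U*M^(-κ)))) := by
      intro T hT
      rw [hsmall, mem_filter] at hT
      have hTP := hsub T hT.1
      have h3 := sum_devi_small (d := d) hL0 hX0 hL hX hint hXR hR b hq₂ T
        (fun p hp => ⟨hPp p (hTP hp), Nat.Coprime.coprime_dvd_left (hPd p (hTP hp)) hcop⟩) (by
          rw [← hsM]
          exact mul_le_mul (hqU.trans hUs) hT.2 (cast_nonneg _) hsM0.le)
      simp only [w, mul_assoc] at h3 ⊢
      refine h3.trans ?_
      have h4 : (q₂:ℝ)*(∏ p ∈ T, p : ℕ)/M ≤ U*M^(-κ) := by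
        rw [mul_div_assoc]
        exact mul_le_mul hqU ((div_le_div_of_nonneg_right hT.2 hM0.le).trans hsave)
          (by positivity) (by linarith)
      simp only [mul_div_assoc] at h4 ⊢
      gcongr
    refine (sum_le_sum h2).trans ?_
    rw [← sum_mul]
    have h5 : ∑ T ∈ small, (2:ℝ)^T.card ≤ U := by
      refine (sum_le_sum_of_subset_of_nonneg (filter_subset _ _)
        (fun _ _ _ => by positivity)).trans ?_
      rw [sum_powerset_pow]
      exact hpowU _ (by norm_num) (by linarith)
    have h6 : M^k ≤ (R:ℝ)^k := pow_le_pow_left₀ hM0.le hMR k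
    have h7 : U*U ≤ U^(k+2) := by
      rw [← pow_two]; exact pow_le_pow_right₀ hU1 (by omega)
    calc _ ≤ U*((R:ℝ)^k*((2*X+3)^k*L*(U*M^(-κ)))) := by gcongr
      _ = (2*X+3)^k*L*(U*U)*(R:ℝ)^k*M^(-κ) := by ring
      _ ≤ _ := by gcongr
  have hb1 : |∑ s ∈ (Fam k R).filter (fun s => ¬ Injective s), w s*∑ T ∈ small, devi d b s T| ≤
      (k+1 : ℕ)*k*3^k*B*U^(k+2)*(R:ℝ)^k*M^(-κ) := by
    refine (abs_sum_le_sum_abs _ _).trans ?_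
    have h1 : ∀ s ∈ (Fam k R).filter (fun s => ¬ Injective s),
        |w s*∑ T ∈ small, devi d b s T| ≤ B*U^k*U := by
      intro s _
      rw [abs_mul]
      refine mul_le_mul (hw s) ?_ (abs_nonneg _) (by positivity)
      refine (abs_sum_le_sum_abs _ _).trans ?_
      have h2 : ∀ T ∈ small, |devi d b s T| ≤ ((d:ℝ)^k)^T.card := by
        intro T hT
        rw [hsmall, mem_filter] at hT
        have hTP := hsub T hT.1
        rw [devi, abs_prod, ← prod_const]
        refine prod_le_prod (fun _ _ => abs_nonneg _) fun p hp => ?_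
        have : Fact p.Prime := ⟨hPp p (hTP hp)⟩
        exact dens_prime_le (hb p (hPp p (hTP hp)) (hPd p (hTP hp))) s
      refine (sum_le_sum h2).trans ?_
      refine (sum_le_sum_of_subset_of_nonneg (filter_subset _ _)
        (fun _ _ _ => by positivity)).trans ?_
      rw [sum_powerset_pow]
      exact hpowU _ (by positivity) (by linarith)
    refine (sum_le_card_nsmul _ _ _ h1).trans ?_
    rw [nsmul_eq_mul]
    have h3 : (((Fam k R).filter (fun s => ¬ Injective s)).card : ℝ) ≤
        (k+1 : ℕ)*k*(2*R+1)^(k-1) := by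
      exact_mod_cast card_deg_le R
    have h4 : (2*(R:ℝ)+1)^(k-1) ≤ 3^k*(R:ℝ)^k*M^(-κ) := by
      have h5 : (2*(R:ℝ)+1)^(k-1) ≤ (3*R)^(k-1) := pow_le_pow_left₀ (by positivity) (by linarith) _
      have h6 : (3*(R:ℝ))^(k-1)*M ≤ (3*R)^k := by
        obtain ⟨k', rfl⟩ : ∃ k', k = k'+1 := ⟨k-1, by omega⟩
        rw [Nat.add_sub_cancel, pow_succ]
        exact mul_le_mul_of_nonneg_left (by linarith) (by positivity)
      rw [← mul_pow]
      calc _ ≤ (3*(R:ℝ))^(k-1) := h5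
        _ = (3*(R:ℝ))^(k-1)*M*(1/M) := by field_simp
        _ ≤ _ := mul_le_mul h6 hsave1 (by positivity) (by positivity)
    have h7 : U^k*U ≤ U^(k+2) := by
      rw [← pow_succ]; exact pow_le_pow_right₀ hU1 (by omega)
    calc _ ≤ (k+1 : ℕ)*k*(3^k*(R:ℝ)^k*M^(-κ))*(B*U^k*U) := by
          refine mul_le_mul_of_nonneg_right (h3.trans ?_) (by positivity)
          exact mul_le_mul_of_nonneg_left h4 (by positivity)
      _ = (k+1 : ℕ)*k*3^k*B*(U^k*U)*(R:ℝ)^k*M^(-κ) := by ring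
      _ ≤ _ := by gcongr
  have hc : |∑ T ∈ big, ∑ s ∈ NFam k R, w s*devi d b s T| ≤
      (k+1 : ℕ)*k*2^k*B*U^(k+2)*(R:ℝ)^k*M^(-κ) := by
    refine (abs_sum_le_sum_abs _ _).trans ?_
    have h1 : ∀ T ∈ big, |∑ s ∈ NFam k R, w s*devi d b s T| ≤
        (2*C)^T.card*(B*U^k*((k+1 : ℕ)*k*((2*R)^k*M^(-κ)))) := by
      intro T hT
      rw [hbig, mem_filter, not_le] at hT
      have hTP := hsub T hT.1
      refine (abs_sum_le_sum_abs _ _).trans ?_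
      have h2 : ∀ s ∈ NFam k R, |w s*devi d b s T| ≤ B*U^k*|devi d b s T| := fun s _ => by
        rw [abs_mul]; exact mul_le_mul_of_nonneg_right (hw s) (abs_nonneg _)
      refine (sum_le_sum h2).trans ?_
      rw [← mul_sum]
      have h3 := hdev b T (fun p hp => ⟨hPp p (hTP hp), hb p (hPp p (hTP hp)) (hPd p (hTP hp))⟩) R
      have h4 : ((∏ p ∈ T, p : ℕ) : ℝ)^(-(1/(2*((k+1 : ℕ)*k : ℝ)))) ≤ M^(-κ) := by
        have h5 : M^(-κ) = √M^(-(1/(2*((k+1 : ℕ)*k : ℝ)))) := by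
          rw [sqrt_eq_rpow, ← rpow_mul hM0.le]
          congr 1
          rw [hκ]
          field_simp
          norm_num
        rw [h5]
        exact rpow_le_rpow_of_nonpos hsM0 hT.2.le (by
          rw [neg_nonpos]; positivity)
      calc _ ≤ B*U^k*((k+1 : ℕ)*k*(C^T.card*2^T.card*(2*R)^k*M^(-κ))) := by
            refine mul_le_mul_of_nonneg_left (h3.trans ?_) (by positivity)
            gcongr
        _ = _ := by rw [mul_pow]; ring
    refine (sum_le_sum h1).trans ?_
    rw [← sum_mul]
    have h5 : ∑ T ∈ big, (2*C)^T.card ≤ U := by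
      refine (sum_le_sum_of_subset_of_nonneg (filter_subset _ _)
        (fun _ _ _ => by positivity)).trans ?_
      rw [sum_powerset_pow]
      exact hpowU _ (by positivity) (by linarith)
    have h7 : U^k*U ≤ U^(k+2) := by
      rw [← pow_succ]; exact pow_le_pow_right₀ hU1 (by omega)
    calc _ ≤ U*(B*U^k*((k+1 : ℕ)*k*((2*R)^k*M^(-κ)))) := by gcongr
      _ = (k+1 : ℕ)*k*2^k*B*(U^k*U)*(R:ℝ)^k*M^(-κ) := by
        rw [mul_pow]; ring
      _ ≤ _ := by gcongr
  rw [hdecomp]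
  generalize (∑ T ∈ small, ∑ s ∈ Fam k R, w s*devi d b s T) = S1 at ha ⊢
  generalize (∑ s ∈ (Fam k R).filter (fun s => ¬ Injective s),
      w s*∑ T ∈ small, devi d b s T) = S2 at hb1 ⊢
  generalize (∑ T ∈ big, ∑ s ∈ NFam k R, w s*devi d b s T) = S3 at hc ⊢
  have hfin : S1-S2+S3-M^k*∫ x, f x = (S1-M^k*∫ x, f x)-S2+S3 := by ring
  rw [hfin]
  refine (abs_add_le _ _).trans ((add_le_add ((abs_sub _ _).trans (add_le_add ha hb1)) hc).trans
    (le_of_eq ?_))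
  ring

end MainTerm

/-! ### Congruent powers -/

section Roots

variable {d : ℕ}

lemma card_roots_sqfree [NeZero d] : ∀ Q : ℕ, Squarefree Q → ∀ [NeZero Q] (c:ZMod Q),
    (univ.filter fun x : ZMod Q => x^d = c).card ≤ d^om Q := by
  apply squarefree_induction
  · intro _ c
    refine (card_le_univ _).trans ?_
    simp [om]
  · intro p Q hp hcop hsq ih hne c
    have hpf : Fact p.Prime := ⟨hp⟩
    have hQ0 : NeZero Q := ⟨hsq.ne_zero⟩
    let e := chineseRemainder hcop
    have h1 : (univ.filter fun x : ZMod p => x^d = (e c).1).card ≤ d := by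
      convert card_pow_eq_le (F := ZMod p) (NeZero.ne d) (e c).1
    have h2 := ih (e c).2
    rw [om_mul hp hcop, pow_succ, mul_comm (d^om Q) d]
    refine le_trans ?_ (Nat.mul_le_mul h1 h2)
    rw [← card_product]
    refine card_le_card_of_injOn e ?_ e.injective.injOn
    intro x hx
    have hx' : x^d = c := (mem_filter.1 hx).2
    refine mem_product.2 ⟨(mem_filter_univ _).2 ?_, (mem_filter_univ _).2 ?_⟩
    · rw [← hx', map_pow]; rfl
    · rw [← hx', map_pow]; rfl

/-- Few integers of size at most `q₁ q₂` have a given `d`-th power modulo `q₁ q₂`. -/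
lemma card_roots_le [NeZero d] {q₁ q₂ : ℕ} (hsq : Squarefree q₁) (hcop : q₁.Coprime q₂)
    [NeZero (q₁*q₂)] {N : ℕ} (hN : N ≤ q₁*q₂) (c : ZMod (q₁*q₂)) :
    ((Icc 1 N).filter fun n : ℕ => (n : ZMod (q₁*q₂))^d = c).card ≤ d^om q₁*q₂ := by
  have hQ0 : NeZero q₁ := ⟨hsq.ne_zero⟩
  have hQ2 : NeZero q₂ := ⟨fun h0 => NeZero.ne (q₁*q₂) (by rw [h0, mul_zero])⟩
  let e := chineseRemainder hcop
  have h1 := card_roots_sqfree (d := d) q₁ hsq (e c).1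
  have h2 : (univ : Finset (ZMod q₂)).card = q₂ := by rw [card_univ, ZMod.card]
  refine le_trans ?_ (Nat.mul_le_mul h1 h2.le)
  rw [← card_product]
  refine card_le_card_of_injOn (fun n : ℕ => e (n : ZMod (q₁*q₂))) ?_ ?_
  · intro x hx
    have hx' := (mem_filter.1 hx).2
    refine mem_product.2 ⟨(mem_filter_univ _).2 ?_, mem_univ _⟩
    rw [← hx', map_pow]; rfl
  · intro x hx y hy h
    have hx' := mem_Icc.1 (mem_filter.1 hx).1
    have hy' := mem_Icc.1 (mem_filter.1 hy).1
    have h3 : (x : ZMod (q₁*q₂)) = y := e.injective h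
    rw [ZMod.natCast_eq_natCast_iff] at h3
    have h4 : (q₁*q₂ : ℕ) ∣ ((x:ℤ)-y).natAbs := by
      have := (Nat.modEq_iff_dvd.1 h3.symm)
      exact Int.natCast_dvd.1 this
    have h5 := Nat.eq_zero_of_dvd_of_lt h4 (by omega)
    omega

/-- Equal `d`-th powers modulo a squarefree number differ by a `d`-th root of unity. -/
lemma exists_root_unity (hd : d ≠ 0) : ∀ Q : ℕ, Squarefree Q → ∀ x y : ZMod Q, x^d = y^d →
    ∃ ζ : ZMod Q, ζ^d = 1 ∧ x = ζ*y := by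
  apply squarefree_induction
  · intro x y _
    exact ⟨1, one_pow _, Subsingleton.elim _ _⟩
  · intro p Q hp hcop hsq ih x y h
    have hpf : Fact p.Prime := ⟨hp⟩
    let e := chineseRemainder hcop
    have he : (e x)^d = (e y)^d := by rw [← map_pow, h, map_pow]
    have h1 : (e x).1^d = (e y).1^d := congrArg Prod.fst he
    obtain ⟨ζ₂, h2, h2'⟩ := ih _ _ (congrArg Prod.snd he : (e x).2^d = (e y).2^d)
    obtain ⟨ζ₁, h3, h3'⟩ : ∃ ζ : ZMod p, ζ^d = 1 ∧ (e x).1 = ζ*(e y).1 := by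
      by_cases hy : (e y).1 = 0
      · refine ⟨1, one_pow _, ?_⟩
        rw [hy, zero_pow hd] at h1
        rw [hy, mul_zero]
        exact eq_zero_of_pow_eq_zero h1
      · refine ⟨(e x).1/(e y).1, ?_, (div_mul_cancel₀ _ hy).symm⟩
        rw [div_pow, h1, div_self (pow_ne_zero _ hy)]
    refine ⟨e.symm (ζ₁, ζ₂), e.injective ?_, e.injective ?_⟩
    · rw [map_pow, RingEquiv.apply_symm_apply, map_one]
      exact Prod.ext h3 h2
    · rw [map_mul, RingEquiv.apply_symm_apply]
      exact Prod.ext h3' h2'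

/-- The off-diagonal points of the lattice `x ≡ ζ y` in a square. -/
noncomputable def latPts (N Q : ℕ) (ζ:ZMod Q) : Finset (ℕ × ℕ) :=
  (Icc 1 N ×ˢ Icc 1 N).filter fun z => z.1 ≠ z.2 ∧ (z.1 : ZMod Q) = ζ*z.2

lemma mem_latPts {N Q : ℕ} {ζ : ZMod Q} {z : ℕ × ℕ} : z ∈ latPts N Q ζ ↔
    ((1 ≤ z.1 ∧ z.1 ≤ N) ∧ 1 ≤ z.2 ∧ z.2 ≤ N) ∧ z.1 ≠ z.2 ∧ (z.1 : ZMod Q) = ζ*z.2 := by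
  rw [latPts, mem_filter, mem_product, mem_Icc, mem_Icc]

/-- Points of the lattice lie on few lines parallel to a shortest off-diagonal point `z₀`, and
are well spaced on each line. -/
lemma card_latPts_le (hd : d ≠ 0) {N Q : ℕ} (hQ : 0 < Q) {ζ : ZMod Q} (hζ : ζ^d = 1) :
    ((latPts N Q ζ).card : ℝ) ≤ 8*(N:ℝ)^2/Q+2*N*(Q:ℝ)^(-(1/(d:ℝ)))+1 := by
  have hQ0 : (0:ℝ) < Q := mod_cast hQ
  by_cases hne : (latPts N Q ζ).Nonempty
  swap
  · rw [not_nonempty_iff_eq_empty.1 hne, card_empty, Nat.cast_zero]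
    positivity
  obtain ⟨z₀, hz₀, hmin⟩ := exists_min_image (latPts N Q ζ) (fun z => z.1+z.2) hne
  obtain ⟨⟨hx0, hy0⟩, hxy0, hc0⟩ := mem_latPts.1 hz₀
  set Y := z₀.1+z₀.2 with hY
  have hYpos : 0 < Y := by omega
  -- the height of the shortest point
  have hQY : Q ≤ Y^d := by
    have h1 : (z₀.1 : ZMod Q)^d = (z₀.2 : ZMod Q)^d := by rw [hc0, mul_pow, hζ, one_mul]
    have h2 : ((z₀.1^d : ℕ) : ZMod Q) = ((z₀.2^d : ℕ) : ZMod Q) := by push_cast; exact h1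
    rw [ZMod.natCast_eq_natCast_iff] at h2
    have h3 : (Q:ℕ) ∣ (((z₀.1^d : ℕ) : ℤ)-(z₀.2^d : ℕ)).natAbs :=
      Int.natCast_dvd.1 (Nat.modEq_iff_dvd.1 h2.symm)
    have h4 : z₀.1^d ≠ z₀.2^d := fun h => hxy0 (Nat.pow_left_injective hd h)
    have h5 := Nat.le_of_dvd (by omega) h3
    have h6 : z₀.1^d ≤ Y^d := Nat.pow_le_pow_left (by omega) d
    have h7 : z₀.2^d ≤ Y^d := Nat.pow_le_pow_left (by omega) d
    omega
  have hQne : NeZero Q := ⟨hQ.ne'⟩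
  let det : ℕ × ℕ → ℤ := fun z => (z₀.1 : ℤ)*z.2-z₀.2*z.1
  have hdet : ∀ z ∈ latPts N Q ζ, (Q:ℤ) ∣ det z := by
    intro z hz
    obtain ⟨_, _, hc⟩ := mem_latPts.1 hz
    rw [← ZMod.intCast_zmod_eq_zero_iff_dvd]
    simp only [det]
    push_cast
    rw [hc, hc0]
    ring
  have hdetle : ∀ z ∈ latPts N Q ζ, |det z| ≤ (N*Y : ℕ) := by
    intro z hz
    obtain ⟨⟨hx, hy⟩, _, _⟩ := mem_latPts.1 hz
    have h1 : z₀.1*z.2 ≤ Y*N := Nat.mul_le_mul (by omega) hy.2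
    have h2 : z₀.2*z.1 ≤ Y*N := Nat.mul_le_mul (by omega) hx.2
    grind
  set J := N*Y/Q with hJ
  have hcard : (latPts N Q ζ).card ≤ (Icc (-(J:ℤ)) J ×ˢ range (2*N/Y+1)).card := by
    refine card_le_card_of_injOn (fun z => (det z/Q, (z.1+z.2)/Y)) ?_ ?_
    · intro z hz
      have h1 := hdetle z hz
      obtain ⟨j, hj⟩ := hdet z hz
      obtain ⟨⟨hx, hy⟩, _, _⟩ := mem_latPts.1 hz
      refine mem_product.2 ⟨?_, ?_⟩
      · dsimp only
        rw [hj, Int.mul_ediv_cancel_left _ (by omega), mem_Icc, ← abs_le, hJ]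
        rw [hj, abs_mul, Nat.abs_cast] at h1
        have : |j| ≤ ((N*Y : ℕ) : ℤ)/(Q:ℤ) := by
          rw [Int.le_ediv_iff_mul_le (by omega)]
          linarith
        exact_mod_cast this
      · rw [mem_range]
        exact Nat.lt_succ_of_le (Nat.div_le_div_right (by omega))
    · have key : ∀ z ∈ latPts N Q ζ, ∀ z' ∈ latPts N Q ζ, det z = det z' → z'.1 < z.1 →
          Y ≤ (z.1+z.2)-(z'.1+z'.2) := by
        intro z hz z' hz' h hlt
        obtain ⟨⟨hx, hy⟩, _, hc⟩ := mem_latPts.1 hz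
        obtain ⟨⟨hx', hy'⟩, _, hc'⟩ := mem_latPts.1 hz'
        simp only [det] at h
        have h1 : (z₀.1 : ℤ)*((z.2 : ℤ)-z'.2) = z₀.2*((z.1 : ℤ)-z'.1) := by linarith
        have h2 : z'.2 < z.2 := by
          by_contra hle
          have h3 : (z₀.1 : ℤ)*((z.2 : ℤ)-z'.2) ≤ 0 :=
            mul_nonpos_of_nonneg_of_nonpos (by omega) (by omega)
          have h4 : 0 < (z₀.2 : ℤ)*((z.1 : ℤ)-z'.1) := mul_pos (by omega) (by omega)
          omega
        have h5 : (z.1-z'.1, z.2-z'.2) ∈ latPts N Q ζ := by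
          rw [mem_latPts]
          refine ⟨by dsimp only; omega, ?_, ?_⟩
          · dsimp only
            intro he
            have h6 : (z.2 : ℤ)-z'.2 = z.1-z'.1 := by omega
            rw [h6] at h1
            have := mul_right_cancel₀ (show (z.1 : ℤ)-z'.1 ≠ 0 by omega) h1
            omega
          · dsimp only
            rw [Nat.cast_sub hlt.le, Nat.cast_sub h2.le, hc, hc']
            ring
        grind
      intro z hz z' hz' h
      have h1 : det z = det z' := by
        have := (Prod.mk.inj h).1
        rw [← Int.ediv_mul_cancel (hdet z hz), this, Int.ediv_mul_cancel (hdet z' hz')]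
      have h2 : (z.1+z.2)/Y = (z'.1+z'.2)/Y := (Prod.mk.inj h).2
      have h3 := Nat.div_add_mod (z.1+z.2) Y
      have h4 := Nat.div_add_mod (z'.1+z'.2) Y
      have h5 := Nat.mod_lt (z.1+z.2) hYpos
      have h6 := Nat.mod_lt (z'.1+z'.2) hYpos
      rw [h2] at h3
      rcases lt_trichotomy z.1 z'.1 with hlt | heq | hlt
      · have := key z' hz' z hz h1.symm hlt
        omega
      · refine Prod.ext heq ?_
        simp only [det] at h1
        rw [heq] at h1
        have h7 : (z₀.1 : ℤ)*z.2 = z₀.1*z'.2 := by linarith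
        have := mul_left_cancel₀ (show (z₀.1 : ℤ) ≠ 0 by omega) h7
        exact_mod_cast this
      · have := key z hz z' hz' h1 hlt
        omega
  rw [card_product, Int.card_Icc, card_range] at hcard
  have hY0 : (0:ℝ) < Y := mod_cast hYpos
  have hYN : (Y:ℝ) ≤ 2*N := by
    have : Y ≤ 2*N := by omega
    exact_mod_cast this
  have hJ' : (J:ℝ) ≤ N*Y/Q := by
    rw [hJ]
    refine Nat.cast_div_le.trans (le_of_eq ?_)
    push_cast; ring
  have hN' : ((2*N/Y : ℕ) : ℝ) ≤ 2*N/Y := by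
    refine Nat.cast_div_le.trans (le_of_eq ?_)
    push_cast; ring
  have hYd : (Q:ℝ)^(1/(d:ℝ)) ≤ Y := by
    have h1 : (Q:ℝ) ≤ (Y:ℝ)^d := mod_cast hQY
    have hd0 : (0:ℝ) < d := mod_cast pos_of_ne_zero hd
    calc (Q:ℝ)^(1/(d:ℝ)) ≤ ((Y:ℝ)^d)^(1/(d:ℝ)) :=
          rpow_le_rpow hQ0.le h1 (by positivity)
      _ = Y := by rw [one_div, pow_rpow_inv_natCast hY0.le hd]
  have hcard' : ((latPts N Q ζ).card : ℝ) ≤ (2*J+1)*((2*N/Y : ℕ)+1) := by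
    have h1 : ((J:ℤ)+1 - -(J:ℤ)).toNat = 2*J+1 := by omega
    rw [h1] at hcard
    exact_mod_cast hcard
  have h8 : 2*(N:ℝ)/Y ≤ 2*N*(Q:ℝ)^(-(1/(d:ℝ))) := by
    rw [rpow_neg hQ0.le, ← div_eq_mul_inv]
    exact div_le_div_of_nonneg_left (by positivity) (by positivity) hYd
  calc ((latPts N Q ζ).card : ℝ) ≤ (2*(N*Y/Q)+1)*(2*N/Y+1) := by
        refine hcard'.trans ?_
        gcongr
    _ = 4*(N:ℝ)^2/Q+2*N*Y/Q+2*N/Y+1 := by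
        field_simp; ring
    _ ≤ 4*(N:ℝ)^2/Q+2*N*(2*N)/Q+2*N*(Q:ℝ)^(-(1/(d:ℝ)))+1 := by
        gcongr
    _ = _ := by ring

/-- Distinct integers with the same `d`-th power modulo `Q`. -/
noncomputable def powPairs (d N Q : ℕ) : Finset (ℕ × ℕ) := (Icc 1 N ×ˢ Icc 1 N).filter fun z =>
    z.1 ≠ z.2 ∧ (z.1 : ZMod Q)^d = (z.2 : ZMod Q)^d

lemma card_powPairs_le [NeZero d] {N Q : ℕ} (hsq : Squarefree Q) : ((powPairs d N Q).card : ℝ) ≤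
      d^om Q*(8*(N:ℝ)^2/Q+2*N*(Q:ℝ)^(-(1/(d:ℝ)))+1) := by
  have hQ0 : NeZero Q := ⟨hsq.ne_zero⟩
  have h1 : powPairs d N Q ⊆
      (univ.filter fun ζ : ZMod Q => ζ^d = 1).biUnion fun ζ => latPts N Q ζ := by
    intro z hz
    rw [powPairs, mem_filter] at hz
    obtain ⟨ζ, hζ, h⟩ := exists_root_unity (NeZero.ne d) Q hsq _ _ hz.2.2
    rw [mem_biUnion]
    refine ⟨ζ, mem_filter.2 ⟨mem_univ _, hζ⟩, ?_⟩
    rw [latPts, mem_filter]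
    exact ⟨hz.1, hz.2.1, h⟩
  have h2 : ((powPairs d N Q).card : ℝ) ≤
      ∑ ζ ∈ univ.filter (fun ζ : ZMod Q => ζ^d = 1), ((latPts N Q ζ).card : ℝ) := by
    exact_mod_cast (card_le_card h1).trans card_biUnion_le
  refine h2.trans ((sum_le_card_nsmul _ _ _ fun ζ hζ =>
    card_latPts_le (NeZero.ne d) hsq.ne_zero.bot_lt (mem_filter.1 hζ).2).trans ?_)
  rw [nsmul_eq_mul]
  refine mul_le_mul_of_nonneg_right ?_ (by positivity)
  exact_mod_cast card_roots_sqfree (d := d) Q hsq 1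

end Roots

/-! ### Degenerate differences -/

section Degenerate

variable {k d q : ℕ}

/-- The integers `n ≤ N` with `b (n ^ d - x ^ d)` within `R` of a multiple of `q`. -/
noncomputable def near (q d : ℕ) (b:ℤ) (N R x : ℕ) : Finset ℕ :=
  (Icc 1 N).filter fun n => ∃ t : ℤ, |t| ≤ R ∧ (b:ZMod q)*((n:ZMod q)^d-(x:ZMod q)^d) = (t:ZMod q)

/-- The nonzero values attained by `b (n ^ d - x ^ d)` near a multiple of `q`. -/
noncomputable def nearVal (q d : ℕ) (b:ℤ) (N R x : ℕ) : Finset ℤ :=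
  (punc R).filter fun t => ∃ n ∈ Icc 1 N, (b:ZMod q)*((n:ZMod q)^d-(x:ZMod q)^d) = (t:ZMod q)

lemma mem_nearVal {b : ℤ} {N R x : ℕ} {t : ℤ} : t ∈ nearVal q d b N R x ↔ t ∈ punc R ∧
    ∃ n ∈ Icc 1 N, (b:ZMod q)*((n:ZMod q)^d-(x:ZMod q)^d) = (t:ZMod q) := by
  exact @mem_filter _ _ (fun _ => Classical.propDecidable _) _ _

lemma card_near_le {b : ℤ} (hb : IsUnit (b:ZMod q)) {N R β : ℕ}
    (hβ : ∀ c : ZMod q, ((Icc 1 N).filter fun n : ℕ => (n:ZMod q)^d = c).card ≤ β)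
    (x:ℕ) : (near q d b N R x).card ≤ β*(1+(nearVal q d b N R x).card) := by
  have hex : ∀ n ∈ near q d b N R x, ∃ t : ℤ, |t| ≤ R ∧
    (b:ZMod q)*((n:ZMod q)^d-(x:ZMod q)^d) = (t:ZMod q) := fun n hn =>
    (mem_filter.1 hn).2
  choose! t ht ht' using hex
  have h1 := card_le_mul_card_image_of_maps_to (s := near q d b N R x)
    (t := insert 0 (nearVal q d b N R x)) (f := t) (n := β) ?_ ?_
  · refine h1.trans (Nat.mul_le_mul_left _ ((card_insert_le _ _).trans ?_))
    rw [add_comm]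
  · intro n hn
    rw [mem_insert]
    by_cases h0 : t n = 0
    · exact Or.inl h0
    · right
      exact mem_nearVal.2 ⟨mem_punc.2 ⟨h0, ht n hn⟩, n, (mem_filter.1 hn).1, ht' n hn⟩
  · intro u _
    obtain ⟨b', hb'⟩ := hb.exists_left_inv
    refine le_trans (card_le_card ?_) (hβ (b'*(u:ZMod q)+(x:ZMod q)^d))
    intro n hn
    obtain ⟨hn, hu⟩ := mem_filter.1 hn
    refine mem_filter.2 ⟨(mem_filter.1 hn).1, ?_⟩
    grind

lemma pow_le_descFactorial (g k : ℕ) : g^k ≤ k^k*(1+g.descFactorial k) := by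
  rcases le_or_gt g k with h | h
  · exact (Nat.pow_le_pow_left h k).trans (Nat.le_mul_of_pos_right _ (by omega))
  · have h1 : g ≤ k*(g+1-k) ∨ k = 0 := by
      rcases Nat.eq_zero_or_pos k with h0 | h0
      · exact Or.inr h0
      · left
        obtain ⟨u, rfl⟩ := Nat.exists_eq_add_of_lt h
        have : k+u+1+1-k = u+2 := by omega
        rw [this]
        nlinarith
    rcases h1 with h1 | h1
    · calc g^k ≤ (k*(g+1-k))^k := Nat.pow_le_pow_left h1 k
        _ = k^k*(g+1-k)^k := mul_pow _ _ _
        _ ≤ k^k*(1+g.descFactorial k) :=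
          Nat.mul_le_mul_left _ ((Nat.pow_sub_le_descFactorial g k).trans (by omega))
    · subst h1; simp

/-- Tuples of distinct values give solutions with distinct entries. -/
lemma sum_descFactorial_le (b:ℤ) (N R : ℕ) :
    ∑ x ∈ Icc 1 N, (nearVal q d b N R x).card.descFactorial k ≤
      ∑ s ∈ NFam k (2*R), cnt q d b N s := by
  let sol : (Fin (k+1) → ℤ) → Finset (Fin (k+1) → ℕ) := fun s =>
    (piFinset fun _ : Fin (k+1) => Icc 1 N).filter fun n =>
      ∀ i j, (b:ZMod q)*((n i : ZMod q)^d-(n j : ZMod q)^d) = ((s i-s j : ℤ) : ZMod q)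
  have hx : ∀ x ∈ Icc 1 N, (nearVal q d b N R x).card.descFactorial k ≤
      ∑ s ∈ NFam k (2*R), ((sol s).filter fun n => n 0 = x).card := by
    intro x hx
    rw [← card_sigma]
    have h1 : (nearVal q d b N R x).card.descFactorial k =
        (univ : Finset (Fin k ↪ nearVal q d b N R x)).card := by
      rw [card_univ, Fintype.card_embedding_eq, Fintype.card_coe, card_fin]
    rw [h1]
    have hrep : ∀ t : nearVal q d b N R x, ∃ n ∈ Icc 1 N,
        (b:ZMod q)*((n:ZMod q)^d-(x:ZMod q)^d) = ((t:ℤ) : ZMod q) := fun t =>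
      (mem_nearVal.1 t.2).2
    choose rep hrep hrep' using hrep
    have hpunc : ∀ t : nearVal q d b N R x, (t:ℤ) ≠ 0 ∧ |(t:ℤ)| ≤ R := fun t =>
      mem_punc.1 (mem_nearVal.1 t.2).1
    refine card_le_card_of_injOn (fun e => ⟨Fin.cons 0 fun i => (e i : ℤ),
      Fin.cons x fun i => rep (e i)⟩) ?_ ?_
    · intro e _
      rw [mem_coe, mem_sigma]
      refine ⟨mem_NFam.2 ⟨⟨rfl, ?_⟩, ?_⟩, mem_filter.2 ⟨mem_filter.2 ⟨?_, ?_⟩, rfl⟩⟩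
      · have h2 : ∀ i : Fin (k+1), |(Fin.cons 0 fun i => (e i : ℤ) : Fin (k+1) → ℤ) i| ≤ R := by
          intro i
          refine Fin.cases ?_ (fun i => ?_) i
          · simp
          · simpa using (hpunc (e i)).2
        grind
      · rw [Fin.cons_injective_iff]
        refine ⟨?_, fun i j h => e.injective (Subtype.ext h)⟩
        rintro ⟨i, hi⟩
        exact (hpunc (e i)).1 hi
      · rw [mem_piFinset]
        intro i
        refine Fin.cases ?_ (fun i => ?_) i
        · exact hx
        · exact hrep (e i)
      · have h2 : ∀ i : Fin (k+1), (b:ZMod q) *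
            ((((Fin.cons x fun i => rep (e i) : Fin (k+1) → ℕ) i : ℕ) : ZMod q)^d - (x:ZMod q)^d) =
            (((Fin.cons 0 fun i => (e i : ℤ) : Fin (k+1) → ℤ) i : ℤ) : ZMod q) := by
          intro i
          refine Fin.cases ?_ (fun i => ?_) i
          · simp
          · simpa using hrep' (e i)
        grind
    · intro e _ e' _ h
      have h2 := (Sigma.mk.inj_iff.1 h).1
      ext i
      have := congrFun h2 i.succ
      simpa using this
  refine (sum_le_sum hx).trans ?_
  rw [sum_comm]
  refine sum_le_sum fun s _ => ?_
  rw [← card_eq_sum_card_fiberwise (f := fun n : Fin (k+1) → ℕ => n 0) (s := sol s)]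
  · exact le_of_eq (by simp only [sol, cnt])
  · intro n hn
    exact mem_piFinset.1 (mem_filter.1 hn).1 0

/-- The number of injective solutions attached to degenerate differences. -/
lemma degen_le (hk : 1 ≤ k) [NeZero q] {b : ℤ} (hb : IsUnit (b:ZMod q)) {N R β : ℕ} (h2R : 2*R < q)
    (hβ : ∀ c : ZMod q, ((Icc 1 N).filter fun n : ℕ => (n:ZMod q)^d = c).card ≤ β)
    {K : ℝ} (hK : 0 < K) :
    ((∑ s ∈ (Fam k R).filter (fun s => ¬ Injective s),
      ((piFinset fun _ : Fin (k+1) => Icc 1 N).filter fun n : Fin (k+1) → ℕ =>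
        Injective n ∧ ∀ i j, (b:ZMod q)*((n i : ZMod q)^d-(n j : ZMod q)^d) =
          ((s i-s j : ℤ) : ZMod q)).card : ℕ) : ℝ) ≤
    (k+1)^2*((powPairs d N q).card*K^(k-1)+β/K*((2*β)^k *
      ((1+k^k)*N+k^k*(∑ s ∈ NFam k (2*R), cnt q d b N s : ℕ)))) := by
  have hmom : ∀ x, ((near q d b N R x).card : ℝ)^k ≤ (2*β)^k *
      (1+k^k*(1+((nearVal q d b N R x).card.descFactorial k : ℕ))) := by
    intro x
    set g := (nearVal q d b N R x).card
    have h1 : (near q d b N R x).card^k ≤ (2*β)^k*(1+k^k*(1+g.descFactorial k)) := by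
      calc (near q d b N R x).card^k ≤ (β*(1+g))^k :=
            Nat.pow_le_pow_left (card_near_le hb hβ x) k
        _ ≤ (2*β)^k*(1+g^k) := by
            rcases Nat.eq_zero_or_pos g with h0 | h0
            · rw [h0]
              refine (Nat.pow_le_pow_left (by omega) k).trans
                (Nat.le_mul_of_pos_right _ (Nat.add_pos_left one_pos _))
            · calc (β*(1+g))^k ≤ (2*β*g)^k := Nat.pow_le_pow_left (by nlinarith) k
                _ = (2*β)^k*g^k := mul_pow _ _ _
                _ ≤ _ := Nat.mul_le_mul_left _ (by omega)
        _ ≤ _ := Nat.mul_le_mul_left _ (Nat.add_le_add_left (pow_le_descFactorial g k) 1)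
    exact_mod_cast h1
  have hpairs : ((∑ z ∈ powPairs d N q, (near q d b N R z.1).card^(k-1) : ℕ) : ℝ) ≤
      (powPairs d N q).card*K^(k-1)+β/K*((2*β)^k *
      ((1+k^k)*N+k^k*(∑ s ∈ NFam k (2*R), cnt q d b N s : ℕ))) := by
    have h1 : ∀ F : ℝ, 0 ≤ F → F^(k-1) ≤ K^(k-1)+1/K*F^k := by
      intro F hF
      rcases le_or_gt F K with h | h
      · exact (pow_le_pow_left₀ hF h _).trans (le_add_of_nonneg_right (by positivity))
      · refine le_trans ?_ (le_add_of_nonneg_left (by positivity))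
        obtain ⟨k', rfl⟩ : ∃ k', k = k'+1 := ⟨k-1, by omega⟩
        rw [Nat.add_sub_cancel, pow_succ, one_div, inv_mul_eq_div, mul_div_assoc]
        refine le_mul_of_one_le_right (by positivity) ?_
        rw [le_div_iff₀ hK]; linarith
    push_cast
    refine (sum_le_sum fun z _ => h1 _ (cast_nonneg _)).trans ?_
    rw [sum_add_distrib, sum_const, nsmul_eq_mul, ← mul_sum]
    refine add_le_add_right ?_ _
    have hdiv : ∀ W : ℝ, β/K*W = 1/K*(β*W) := fun W => by ring
    rw [hdiv]
    refine mul_le_mul_of_nonneg_left ?_ (by positivity)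
    have h2 : ∑ z ∈ powPairs d N q, ((near q d b N R z.1).card : ℝ)^k ≤
        ∑ x ∈ Icc 1 N, β*((near q d b N R x).card : ℝ)^k := by
      rw [← sum_fiberwise_of_maps_to (s := powPairs d N q) (t := Icc 1 N) (g := fun z => z.1)
        (fun z hz => (mem_product.1 (mem_filter.1 hz).1).1)]
      refine sum_le_sum fun x _ => ?_
      have h3 : ∀ z ∈ (powPairs d N q).filter (fun z => z.1 = x),
          ((near q d b N R z.1).card : ℝ)^k = ((near q d b N R x).card : ℝ)^k := fun z hz => by
        rw [(mem_filter.1 hz).2]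
      rw [sum_congr rfl h3, sum_const, nsmul_eq_mul]
      refine mul_le_mul_of_nonneg_right ?_ (by positivity)
      have h4 : ((powPairs d N q).filter (fun z => z.1 = x)).card ≤ β := by
        refine le_trans (card_le_card_of_injOn (fun z => z.2) ?_ ?_) (hβ ((x:ZMod q)^d))
        · intro z hz
          obtain ⟨hz, hzx⟩ := mem_filter.1 hz
          obtain ⟨hz1, _, hz3⟩ := mem_filter.1 hz
          exact mem_filter.2 ⟨(mem_product.1 hz1).2, by rw [← hz3, hzx]⟩
        · intro z hz z' hz' h
          exact Prod.ext ((mem_filter.1 hz).2.trans (mem_filter.1 hz').2.symm) h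
      exact_mod_cast h4
    refine h2.trans ?_
    rw [← mul_sum]
    refine mul_le_mul_of_nonneg_left ?_ (cast_nonneg _)
    refine (sum_le_sum fun x _ => hmom x).trans ?_
    rw [← mul_sum]
    refine mul_le_mul_of_nonneg_left ?_ (by positivity)
    have h5 : ((∑ x ∈ Icc 1 N, (nearVal q d b N R x).card.descFactorial k : ℕ) : ℝ) ≤
        (∑ s ∈ NFam k (2*R), cnt q d b N s : ℕ) := by
      exact_mod_cast sum_descFactorial_le b N R
    have h6 : ∑ x ∈ Icc 1 N, (1+(k:ℝ)^k *
        (1+((nearVal q d b N R x).card.descFactorial k : ℕ))) = (1+k^k)*N+k^k *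
        ((∑ x ∈ Icc 1 N, (nearVal q d b N R x).card.descFactorial k : ℕ) : ℝ) := by
      rw [sum_add_distrib, ← mul_sum, sum_add_distrib, sum_const,
        Nat.card_Icc, Nat.add_sub_cancel, nsmul_eq_mul]
      push_cast
      ring
    rw [h6]
    push_cast at h5 ⊢
    gcongr
  refine le_trans ?_ (mul_le_mul_of_nonneg_left hpairs (by positivity))
  have hnat : ∑ s ∈ (Fam k R).filter (fun s => ¬ Injective s),
      ((piFinset fun _ : Fin (k+1) => Icc 1 N).filter fun n : Fin (k+1) → ℕ =>
        Injective n ∧ ∀ i j, (b:ZMod q)*((n i : ZMod q)^d-(n j : ZMod q)^d) =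
          ((s i-s j : ℤ) : ZMod q)).card ≤
      (k+1)^2*∑ z ∈ powPairs d N q, (near q d b N R z.1).card^(k-1) := by
    rw [← card_sigma]
    let box : Fin (k+1) → Fin (k+1) → ℕ × ℕ → Finset (Fin (k+1) → ℕ) := fun i j z =>
      piFinset fun l => if l = i then {z.1} else if l = j then {z.2} else near q d b N R z.1
    have hbox : ∀ i j, i ≠ j → ∀ z, (box i j z).card = (near q d b N R z.1).card^(k-1) := by
      intro i j hij z
      simp only [box]
      rw [card_piFinset]
      have h1 : ∀ l : Fin (k+1), (if l = i then {z.1} else if l = j then {z.2} else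
          near q d b N R z.1).card = if l ∈ ({i, j} : Finset (Fin (k+1))) then 1 else
          (near q d b N R z.1).card := by grind
      simp only [h1]
      rw [prod_ite, prod_const_one, one_mul, prod_const]
      congr 1
      have h2 : (univ.filter fun l => l ∉ ({i, j} : Finset (Fin (k+1)))) =
          ({i, j} : Finset (Fin (k+1)))ᶜ := by ext; simp
      rw [h2, card_compl, card_pair hij, card_fin]
      omega
    let I := (univ : Finset (Fin (k+1) × Fin (k+1))).filter fun u => u.1 ≠ u.2
    have hI : I.card ≤ (k+1)^2 := by
      refine (card_filter_le _ _).trans (le_of_eq ?_)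
      rw [card_univ, Fintype.card_prod, card_fin, pow_two]
    have h3 : (I.biUnion fun u => (powPairs d N q).biUnion fun z => box u.1 u.2 z).card ≤
        (k+1)^2*∑ z ∈ powPairs d N q, (near q d b N R z.1).card^(k-1) := by
      refine (card_biUnion_le.trans (sum_le_card_nsmul I _
        (∑ z ∈ powPairs d N q, (near q d b N R z.1).card^(k-1)) fun u hu => ?_)).trans ?_
      · refine card_biUnion_le.trans (le_of_eq ?_)
        exact sum_congr rfl fun z _ => hbox _ _ (mem_filter.1 hu).2 z
      · rw [smul_eq_mul]
        exact Nat.mul_le_mul_right _ hI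
    refine le_trans (card_le_card_of_injOn (fun u => u.2) ?_ ?_) h3
    · rintro ⟨s, n⟩ hu
      rw [mem_coe, mem_sigma, mem_filter, mem_filter] at hu
      obtain ⟨⟨hs, hsi⟩, hn, hni, hsol⟩ := hu
      dsimp only at hs hsi hn hni hsol ⊢
      rw [mem_Fam] at hs
      rw [mem_piFinset] at hn
      simp only [Injective, not_forall] at hsi
      obtain ⟨i, j, hsij, hij⟩ := hsi
      have hpow : (n i : ZMod q)^d = (n j : ZMod q)^d := by
        have h4 := hsol i j
        rw [hsij, sub_self, Int.cast_zero, hb.mul_right_eq_zero, sub_eq_zero] at h4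
        exact h4
      rw [mem_coe, mem_biUnion]
      refine ⟨(i, j), mem_filter.2 ⟨mem_univ _, hij⟩, mem_biUnion.2
        ⟨(n i, n j), mem_filter.2 ⟨mem_product.2 ⟨hn i, hn j⟩, fun h => hij (hni h), hpow⟩, ?_⟩⟩
      simp only [box]
      rw [mem_piFinset]
      intro l
      split_ifs with h5 h6
      · rw [h5]; exact mem_singleton_self _
      · rw [h6]; exact mem_singleton_self _
      · exact mem_filter.2 ⟨hn l, s l-s i, hs.2 l i, hsol l i⟩
    · rintro ⟨s, n⟩ hu ⟨s', n'⟩ hu' h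
      rw [mem_coe, mem_sigma, mem_filter, mem_filter] at hu hu'
      obtain ⟨⟨hs, hsi⟩, hn, hni, hsol⟩ := hu
      obtain ⟨⟨hs', hsi'⟩, hn', hni', hsol'⟩ := hu'
      dsimp only at h hs hsol hs' hsol'
      subst h
      rw [mem_Fam] at hs hs'
      have : s = s' := by
        funext i
        have h4 := (hsol i 0).symm.trans (hsol' i 0)
        have h5 := hs.2 i 0
        have h6 := hs'.2 i 0
        rw [hs.1, hs'.1, sub_zero, sub_zero] at h4
        rw [hs.1, sub_zero, abs_le] at h5
        rw [hs'.1, sub_zero, abs_le] at h6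
        rw [ZMod.intCast_eq_intCast_iff] at h4
        have h7 := Int.natCast_dvd.1 (Int.modEq_iff_dvd.1 h4)
        have h8 := Nat.eq_zero_of_dvd_of_lt h7 (by omega)
        omega
      rw [this]
  exact_mod_cast hnat

end Degenerate

/-! ### Unfolding the correlation sum -/

section Reduction

variable {k : ℕ}

/-- Unfolding the periodization: the sum over the lattice becomes a sum over residue data `s`. -/
lemma tsum_eq_sum_Fam {f : (Fin k → ℝ) → ℝ} {X : ℝ} (hX : 0 ≤ X)
    (hsupp : ∀ x, f x ≠ 0 → ∀ i, |x i| ≤ X) {q N d R : ℕ} (hq : 0 < q) (hN : 0 < N)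
    (hR : (k:ℝ)*(X*((q:ℝ)/N)) ≤ R) (b:ℤ) (n : Fin (k+1) → ℕ) :
    ∑' ℓ : Fin k → ℤ, f (fun i => (N:ℝ)*((ℓ i : ℝ) +
      ((n i.castSucc : ℝ)^d*((b:ℝ)/q)-(n i.succ : ℝ)^d*((b:ℝ)/q)))) =
    ∑ s ∈ (Fam k R).filter (fun s => ∀ i j, (b:ZMod q) *
      ((n i : ZMod q)^d-(n j : ZMod q)^d) = ((s i-s j : ℤ) : ZMod q)),
      f (fun i => (avec s i : ℝ)/((q:ℝ)/N)) := by
  have hq' : (0:ℝ) < q := mod_cast hq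
  have hN' : (0:ℝ) < N := mod_cast hN
  let c : Fin k → ℤ := fun i => b*((n i.castSucc : ℤ)^d-(n i.succ : ℤ)^d)
  have harg : ∀ ℓ : Fin k → ℤ, (fun i => (N:ℝ)*((ℓ i : ℝ) +
      ((n i.castSucc : ℝ)^d*((b:ℝ)/q)-(n i.succ : ℝ)^d*((b:ℝ)/q)))) =
      fun i => (((q:ℤ)*ℓ i+c i : ℤ) : ℝ)/((q:ℝ)/N) := by
    intro ℓ
    funext i
    simp only [c]
    push_cast
    field_simp
  simp only [harg]
  set S := (Fam k R).filter (fun s => ∀ i j, (b:ZMod q) *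
      ((n i : ZMod q)^d-(n j : ZMod q)^d) = ((s i-s j : ℤ) : ZMod q)) with hS
  let φ : (Fin (k+1) → ℤ) → (Fin k → ℤ) := fun s i => (avec s i-c i)/q
  have hφ : ∀ s ∈ S, ∀ i, (q:ℤ)*φ s i+c i = avec s i := by
    intro s hs i
    have h1 := (mem_filter.1 hs).2 i.castSucc i.succ
    have h2 : (q:ℤ) ∣ avec s i-c i := by
      rw [← ZMod.intCast_zmod_eq_zero_iff_dvd]
      simp only [avec, c]
      push_cast at h1 ⊢
      rw [h1, sub_self]
    simp only [φ]
    rw [Int.mul_ediv_cancel' h2]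
    ring
  have hinj : Set.InjOn φ S := by
    intro s hs s' hs' h
    refine avec_injOn (mem_Fam.1 (mem_filter.1 hs).1).1 (mem_Fam.1 (mem_filter.1 hs').1).1 ?_
    funext i
    rw [← hφ s hs i, ← hφ s' hs' i, h]
  rw [tsum_eq_sum (s := S.image φ), sum_image hinj]
  · refine sum_congr rfl fun s hs => ?_
    simp only [hφ s hs]
  · intro ℓ hℓ
    by_contra hne
    apply hℓ
    let a : Fin k → ℤ := fun i => (q:ℤ)*ℓ i+c i
    have hsup := hsupp _ hne
    have ha : ∀ i, |(a i : ℝ)| ≤ X*((q:ℝ)/N) := by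
      intro i
      have h1 := hsup i
      rw [abs_div, abs_of_pos (div_pos hq' hN'), div_le_iff₀ (div_pos hq' hN')] at h1
      exact h1
    have hsol : ∀ i : Fin (k+1), (b:ZMod q)*((n 0 : ZMod q)^d-(n i : ZMod q)^d) =
        ((svec a 0-svec a i : ℤ) : ZMod q) := by
      intro i
      induction i using Fin.induction with
      | zero => simp
      | succ i ih =>
        have h1 : svec a i.castSucc-svec a i.succ = a i := congrFun (avec_svec a) i
        have h2 : ((svec a i.castSucc-svec a i.succ : ℤ) : ZMod q) =
            (b:ZMod q)*((n i.castSucc : ZMod q)^d-(n i.succ : ZMod q)^d) := by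
          rw [h1]
          simp [a, c]
        push_cast at ih h2 ⊢
        linear_combination ih-h2
    have hmem : svec a ∈ S := by
      refine mem_filter.2 ⟨mem_Fam.2 ⟨by simp [svec], fun i j => ?_⟩, fun i j => ?_⟩
      · have h1 : ((∑ l, |a l| : ℤ) : ℝ) ≤ ((R:ℤ) : ℝ) := by
          push_cast
          calc ∑ l, |(a l : ℝ)| ≤ ∑ _l : Fin k, X*((q:ℝ)/N) :=
                sum_le_sum fun l _ => ha l
            _ = k*(X*((q:ℝ)/N)) := by simp
            _ ≤ R := hR
        exact (abs_svec_sub_le a i j).trans (mod_cast h1)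
      · grind
    refine mem_image.2 ⟨svec a, hmem, ?_⟩
    funext i
    have h1 := hφ _ hmem i
    rw [avec_svec] at h1
    have h2 : (q:ℤ)*φ (svec a) i = q*ℓ i := by
      have : a i = (q:ℤ)*ℓ i+c i := rfl
      linarith
    exact mul_left_cancel₀ (mod_cast hq.ne') h2

/-- The correlation sum, split into the families of distinct and of degenerate differences. -/
lemma corrPow_eq {f : (Fin k → ℝ) → ℝ} {X B : ℝ} (hX : 0 ≤ X)
    (hsupp : ∀ x, f x ≠ 0 → ∀ i, |x i| ≤ X) (hB : ∀ x, |f x| ≤ B) {q N d R : ℕ} (hN : 0 < N)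
    (hR : (k:ℝ)*(X*((q:ℝ)/N)) ≤ R) (hRq : 2*R < q) (b:ℤ) :
    |corrPow (k+1) N d ((b:ℝ)/q) f -
      1/(N:ℝ)*∑ s ∈ NFam k R, f (fun i => (avec s i : ℝ)/((q:ℝ)/N))*cnt q d b N s| ≤
    B/N*((∑ s ∈ (Fam k R).filter (fun s => ¬ Injective s),
      ((piFinset fun _ : Fin (k+1) => Icc 1 N).filter fun n : Fin (k+1) → ℕ =>
        Injective n ∧ ∀ i j, (b:ZMod q)*((n i : ZMod q)^d-(n j : ZMod q)^d) =
          ((s i-s j : ℤ) : ZMod q)).card : ℕ) : ℝ) := by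
  have hq : 0 < q := by omega
  have hN' : (0:ℝ) < N := mod_cast hN
  set D : (Fin (k+1) → ℤ) → ℕ := fun s =>
      ((piFinset fun _ : Fin (k+1) => Icc 1 N).filter fun n : Fin (k+1) → ℕ =>
        Injective n ∧ ∀ i j, (b:ZMod q)*((n i : ZMod q)^d-(n j : ZMod q)^d) =
          ((s i-s j : ℤ) : ZMod q)).card with hD
  have h1 : corrPow (k+1) N d ((b:ℝ)/q) f =
      1/(N:ℝ)*∑ s ∈ Fam k R, f (fun i => (avec s i : ℝ)/((q:ℝ)/N))*D s := by
    have h2 : corrPow (k+1) N d ((b:ℝ)/q) f = 1/(N:ℝ) *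
        ∑ n ∈ (piFinset fun _ : Fin (k+1) => Icc 1 N).filter (fun n => Injective n),
        ∑' ℓ : Fin k → ℤ, f (fun i => (N:ℝ)*((ℓ i : ℝ) +
          ((n i.castSucc : ℝ)^d*((b:ℝ)/q)-(n i.succ : ℝ)^d*((b:ℝ)/q)))) := rfl
    rw [h2]
    congr 1
    simp only [tsum_eq_sum_Fam hX hsupp hq hN hR b, sum_filter]
    rw [← sum_filter, sum_comm]
    refine sum_congr rfl fun s _ => ?_
    rw [← sum_filter, sum_const, nsmul_eq_mul, mul_comm, filter_filter]
  have h3 : ∀ s ∈ NFam k R, D s = cnt q d b N s := by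
    intro s hs
    obtain ⟨hs, hsi⟩ := mem_NFam.1 hs
    simp only [hD, cnt]
    congr 1
    refine filter_congr fun n _ => ⟨fun h => h.2, fun h => ⟨fun i j hij => hsi ?_, h⟩⟩
    have h4 := h i j
    rw [hij, sub_self, mul_zero, eq_comm, ZMod.intCast_zmod_eq_zero_iff_dvd] at h4
    have h5 := Int.eq_zero_of_abs_lt_dvd h4 ((hs.2 i j).trans_lt (by omega))
    omega
  have h4 : ∑ s ∈ Fam k R, f (fun i => (avec s i : ℝ)/((q:ℝ)/N))*D s =
      ∑ s ∈ NFam k R, f (fun i => (avec s i : ℝ)/((q:ℝ)/N))*cnt q d b N s +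
      ∑ s ∈ (Fam k R).filter (fun s => ¬ Injective s),
        f (fun i => (avec s i : ℝ)/((q:ℝ)/N))*D s := by
    rw [← sum_filter_add_sum_filter_not (Fam k R) (fun s => Injective s)]
    congr 1
    refine sum_congr rfl fun s hs => ?_
    rw [h3 s hs]
  rw [h1, h4, mul_add, add_sub_cancel_left, abs_mul, abs_of_pos (by positivity)]
  have hassoc : ∀ x : ℝ, B/N*x = 1/(N:ℝ)*(B*x) := fun x => by ring
  rw [hassoc]
  refine mul_le_mul_of_nonneg_left ?_ (by positivity)
  refine (abs_sum_le_sum_abs _ _).trans ?_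
  push_cast
  rw [mul_sum]
  refine sum_le_sum fun s _ => ?_
  rw [abs_mul, Nat.abs_cast]
  exact mul_le_mul_of_nonneg_right (hB _) (cast_nonneg _)

end Reduction

/-! ### Assembling the estimates -/

section Assembly

variable {k d : ℕ}

lemma pow_om_le {C : ℝ} (hC : 1 ≤ C) {η : ℝ} (hη : 0 < η) :
    ∃ K : ℝ, 1 ≤ K ∧ ∀ n : ℕ, n ≠ 0 → C^om n ≤ K*(n:ℝ)^η := by
  -- Primes `p ≥ P` satisfy `C ≤ p ^ η`, and there are at most `P` smaller ones.
  obtain ⟨P, hP⟩ := exists_nat_ge (C^(1/η))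
  refine ⟨C^P, one_le_pow₀ hC, fun n hn => ?_⟩
  have h1 : ∀ p ∈ n.primeFactors, C ≤ (if p < P then C else 1)*(p:ℝ)^η := by
    intro p hp
    have hp1 : (1:ℝ) ≤ p := mod_cast (Nat.prime_of_mem_primeFactors hp).one_le
    split_ifs with h
    · exact le_mul_of_one_le_right (by linarith) (one_le_rpow hp1 hη.le)
    · rw [one_mul]
      have h2 : C^(1/η) ≤ p := hP.trans (mod_cast not_lt.1 h)
      calc C = (C^(1/η))^η := by
            rw [← rpow_mul (by linarith), one_div_mul_cancel hη.ne', rpow_one]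
        _ ≤ (p:ℝ)^η := rpow_le_rpow (rpow_nonneg (by linarith) _) h2 hη.le
  calc C^om n = ∏ _p ∈ n.primeFactors, C := by rw [prod_const, om]
    _ ≤ ∏ p ∈ n.primeFactors, (if p < P then C else 1)*(p:ℝ)^η :=
        prod_le_prod (fun _ _ => by linarith) h1
    _ = C^(n.primeFactors.filter (fun p => p < P)).card *
        (((∏ p ∈ n.primeFactors, p : ℕ) : ℝ))^η := by
        rw [prod_mul_distrib, prod_ite, prod_const, prod_const_one,
          mul_one, Nat.cast_prod, finsetProd_rpow _ _ fun _ _ => cast_nonneg _]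
    _ ≤ C^P*(n:ℝ)^η := by
        have h3 : (n.primeFactors.filter (fun p => p < P)).card ≤ P := by
          refine (card_le_card (t := range P) fun p hp => ?_).trans (card_range P).le
          exact mem_range.2 (mem_filter.1 hp).2
        have h4 : (((∏ p ∈ n.primeFactors, p : ℕ) : ℝ)) ≤ n := by
          exact_mod_cast Nat.le_of_dvd (pos_of_ne_zero hn) (Nat.prod_primeFactors_dvd n)
        have h5 : (((∏ p ∈ n.primeFactors, p : ℕ) : ℝ))^η ≤ (n:ℝ)^η :=
          rpow_le_rpow (cast_nonneg _) h4 hη.le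
        have h6 := pow_le_pow_right₀ hC h3
        gcongr

/-- The count error with every slowly growing factor absorbed into `U`. -/
lemma cnt_err [NeZero d] (hd : 2 ≤ d) (k:ℕ) : ∃ C : ℝ, 1 ≤ C ∧ ∀ q₁ q₂ : ℕ, Squarefree q₁ →
    q₁.Coprime q₂ → ∀ [NeZero (q₁*q₂)], ∀ b : ℤ, IsUnit (b : ZMod (q₁*q₂)) →
    ∀ N : ℕ, N ≤ q₁*q₂ → ∀ U : ℝ, C^om q₁ ≤ U → (q₂:ℝ) ≤ U →
    1+log (q₁*q₂ : ℕ) ≤ U → ∀ R : ℕ,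
    ∑ s ∈ NFam k R, |(cnt (q₁*q₂) d b N s : ℝ) -
      ((N:ℝ)/(q₁*q₂ : ℕ))^(k+1)*(Sol (ZMod (q₁*q₂)) d b s).card| ≤
    ((k+1)*4^k)*U^(3*k+4)*√(q₁*q₂ : ℕ)*(R:ℝ)^k := by
  obtain ⟨C, hC, h⟩ := cnt_bound hd k
  refine ⟨max C 2, le_max_of_le_left hC, fun q₁ q₂ hsq hcop _ b hb N hN U hU hq2 hlog R =>
    (h q₁ q₂ hsq hcop b hb N hN R).trans ?_⟩
  have h1 : C^om q₁ ≤ U := (pow_le_pow_left₀ (by linarith) (le_max_left _ _) _).trans hU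
  have h2 : (2:ℝ)^om q₁ ≤ U := (pow_le_pow_left₀ (by norm_num) (le_max_right _ _) _).trans hU
  have h0 : 0 ≤ U := le_trans (by positivity) h2
  have hq0 : q₁*q₂ ≠ 0 := NeZero.ne _
  have h3 : √(q₁:ℝ) ≤ √(q₁*q₂ : ℕ) := sqrt_le_sqrt (by
    exact_mod_cast Nat.le_mul_of_pos_right _ (pos_of_ne_zero (right_ne_zero_of_mul hq0)))
  have h4 : 0 ≤ 1+log (q₁*q₂ : ℕ) := by
    have := log_natCast_nonneg (q₁*q₂)
    linarith
  have h5 : 0 ≤ C := by linarith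
  calc _ ≤ (k+1)*(U*U^(k+1)*√(q₁*q₂ : ℕ))*(2^k*U*U^(k+1)) *
        (2*(U*(R:ℝ)))^k := by gcongr
    _ = _ := by
      have : (4:ℝ)^k = 2^k*2^k := by rw [← mul_pow]; norm_num
      rw [this, mul_pow, mul_pow]
      ring

/-- Coarse bound for the number of solutions with distinct differences. -/
lemma sum_cnt_le [NeZero d] {q₁ q₂ : ℕ} (hsq : Squarefree q₁) (hcop : q₁.Coprime q₂)
    [NeZero (q₁*q₂)] {b : ℤ} (hb : IsUnit (b : ZMod (q₁*q₂))) {N R : ℕ} (hN : 0 < N)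
    {U A c : ℝ} (hU1 : 1 ≤ U) (hU : (d:ℝ)^(k*om q₁) ≤ U) (hq2 : (q₂:ℝ) ≤ U)
    (hc : 1 ≤ c) (hA : 0 ≤ A) (hR1 : 1 ≤ R)
    (hR : (R:ℝ) ≤ c*(((q₁*q₂ : ℕ) : ℝ)/N))
    (hbig : √(q₁*q₂ : ℕ)*(((q₁*q₂ : ℕ) : ℝ)/N)^k ≤ N)
    (herr : ∑ s ∈ NFam k (2*R), |(cnt (q₁*q₂) d b N s : ℝ) -
      ((N:ℝ)/(q₁*q₂ : ℕ))^(k+1)*(Sol (ZMod (q₁*q₂)) d b s).card| ≤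
      A*U^(3*k+4)*√(q₁*q₂ : ℕ)*((2*R : ℕ) : ℝ)^k) :
    ((∑ s ∈ NFam k (2*R), cnt (q₁*q₂) d b N s : ℕ) : ℝ) ≤ (A*(2*c)^k+(5*c)^k)*U^(3*k+4)*N := by
  have hq0 : (0:ℝ) < (q₁*q₂ : ℕ) := mod_cast pos_of_ne_zero (NeZero.ne _)
  have hN0 : (0:ℝ) < N := mod_cast hN
  set q : ℝ := ((q₁*q₂ : ℕ) : ℝ) with hq
  set M : ℝ := q/N with hM
  have hM0 : 0 < M := div_pos hq0 hN0
  have hsol : ∀ s : Fin (k+1) → ℤ, ((Sol (ZMod (q₁*q₂)) d b s).card : ℝ) ≤ U^(k+1)*q := by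
    intro s
    have h1 : ((Sol (ZMod (q₁*q₂)) d b s).card : ℝ) ≤ ((d:ℝ)^k)^om q₁*q₁*(q₂:ℝ)^(k+1) := by
      exact_mod_cast card_Sol_full hsq hcop b hb s
    refine h1.trans ?_
    rw [← pow_mul, hq]
    push_cast
    calc (d:ℝ)^(k*om q₁)*q₁*(q₂:ℝ)^(k+1)
        = (d:ℝ)^(k*om q₁)*(q₂:ℝ)^k*(q₁*q₂) := by ring
      _ ≤ U*U^k*(q₁*q₂) := by gcongr
      _ = _ := by ring
  have hcard : ((NFam k (2*R)).card : ℝ) ≤ (5*c*M)^k := by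
    have h1 : ((NFam k (2*R)).card : ℝ) ≤ (2*(2*R)+1 : ℝ)^k := by
      exact_mod_cast (card_filter_le _ _).trans (card_Fam_le (2*R))
    have h2 : (1:ℝ) ≤ R := mod_cast hR1
    refine h1.trans (pow_le_pow_left₀ (by positivity) ?_ k)
    linarith
  have h1 : ((∑ s ∈ NFam k (2*R), cnt (q₁*q₂) d b N s : ℕ) : ℝ) ≤
      ∑ s ∈ NFam k (2*R), (|(cnt (q₁*q₂) d b N s : ℝ) -
      ((N:ℝ)/q)^(k+1)*(Sol (ZMod (q₁*q₂)) d b s).card| + ((N:ℝ)/q)^(k+1)*(U^(k+1)*q)) := by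
    push_cast
    refine sum_le_sum fun s _ => ?_
    have h2 := le_abs_self ((cnt (q₁*q₂) d b N s : ℝ) -
      ((N:ℝ)/q)^(k+1)*(Sol (ZMod (q₁*q₂)) d b s).card)
    have h3 := mul_le_mul_of_nonneg_left (hsol s) (show 0 ≤ ((N:ℝ)/q)^(k+1) by positivity)
    linarith
  rw [sum_add_distrib, sum_const, nsmul_eq_mul] at h1
  have h2 : A*U^(3*k+4)*√q*((2*R : ℕ) : ℝ)^k ≤ A*(2*c)^k*U^(3*k+4)*N := by
    have h3 : ((2*R : ℕ) : ℝ)^k ≤ (2*c)^k*M^k := by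
      rw [← mul_pow]
      refine pow_le_pow_left₀ (cast_nonneg _) ?_ k
      push_cast
      linarith
    calc A*U^(3*k+4)*√q*((2*R : ℕ) : ℝ)^k
        ≤ A*U^(3*k+4)*√q*((2*c)^k*M^k) := by gcongr
      _ = A*(2*c)^k*U^(3*k+4)*(√q*M^k) := by ring
      _ ≤ _ := by gcongr
  have h4 : ((NFam k (2*R)).card : ℝ)*(((N:ℝ)/q)^(k+1)*(U^(k+1)*q)) ≤ (5*c)^k*U^(3*k+4)*N := by
    have h5 : (N:ℝ)/q = M⁻¹ := by rw [hM, inv_div]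
    calc _ ≤ (5*c*M)^k*(((N:ℝ)/q)^(k+1)*(U^(k+1)*q)) := by gcongr
      _ = (5*c)^k*U^(k+1)*(M*M⁻¹)^k*(q*M⁻¹) := by
        rw [h5]; ring
      _ = (5*c)^k*U^(k+1)*N := by
        rw [mul_inv_cancel₀ hM0.ne', one_pow, mul_one, hM, inv_div]
        congr 1
        field_simp
      _ ≤ _ := by
        have := pow_le_pow_right₀ hU1 (show k+1 ≤ 3*k+4 by omega)
        gcongr
  linarith

/-- Distinct integers with congruent `d`-th powers are rare. -/
lemma powPairs_bound [NeZero d] {q₁ q₂ : ℕ} (hsq : Squarefree q₁) [NeZero (q₁*q₂)] {N : ℕ}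
    (hN : 0 < N) {U τ : ℝ} (hU1 : 1 ≤ U) (hU : (d:ℝ)^om q₁ ≤ U) (hq2 : (q₂:ℝ) ≤ U)
    (hτM : (N:ℝ)/(q₁*q₂ : ℕ) ≤ τ)
    (hτq : ((q₁*q₂ : ℕ) : ℝ)^(-(1/(d:ℝ))) ≤ τ) (hτN : 1/(N:ℝ) ≤ τ) :
    ((powPairs d N (q₁*q₂)).card : ℝ) ≤ 11*U^2*τ*N := by
  have hq0 : q₁*q₂ ≠ 0 := NeZero.ne _
  have hq1 : (0:ℝ) < q₁ := mod_cast pos_of_ne_zero (left_ne_zero_of_mul hq0)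
  have hq2' : (1:ℝ) ≤ q₂ := by
    exact_mod_cast Nat.one_le_iff_ne_zero.2 (right_ne_zero_of_mul hq0)
  have hd1 : (1:ℝ) ≤ d := mod_cast Nat.one_le_iff_ne_zero.2 (NeZero.ne d)
  have hN0 : (0:ℝ) < N := mod_cast hN
  have hτ0 : 0 ≤ τ := le_trans (by positivity) hτN
  have hsub : powPairs d N (q₁*q₂) ⊆ powPairs d N q₁ := by
    intro z hz
    obtain ⟨h1, h2, h3⟩ := mem_filter.1 hz
    refine mem_filter.2 ⟨h1, h2, ?_⟩
    have h4 := congrArg (castHom (Dvd.intro q₂ rfl : q₁ ∣ q₁*q₂) (ZMod q₁)) h3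
    simpa using h4
  have h1 : ((powPairs d N (q₁*q₂)).card : ℝ) ≤ _ :=
    (Nat.cast_le.2 (card_le_card hsub)).trans (card_powPairs_le (d := d) (N := N) hsq)
  refine h1.trans ?_
  have h2 : (N:ℝ)/q₁ ≤ U*τ := by
    calc (N:ℝ)/q₁ = q₂*(N/(q₁*q₂ : ℕ)) := by push_cast; field_simp
      _ ≤ U*τ := by gcongr
  have h3 : (q₁:ℝ)^(-(1/(d:ℝ))) ≤ U*τ := by
    have h4 : (q₁:ℝ)^(-(1/(d:ℝ))) = (q₂:ℝ)^(1/(d:ℝ))*((q₁*q₂ : ℕ) : ℝ)^(-(1/(d:ℝ))) := by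
      push_cast
      rw [mul_rpow hq1.le (by linarith), rpow_neg (by linarith : (0:ℝ) ≤ q₂)]
      have : (q₂:ℝ)^(1/(d:ℝ)) ≠ 0 := (rpow_pos_of_pos (by linarith) _).ne'
      field_simp
    have h5 : (q₂:ℝ)^(1/(d:ℝ)) ≤ q₂ := by
      refine (rpow_le_rpow_of_exponent_le hq2' ?_).trans (rpow_one _).le
      rw [div_le_one (by linarith)]
      exact hd1
    rw [h4]
    have h6 := h5.trans hq2
    gcongr
  have h4 : (1:ℝ) ≤ U*τ*N := by
    rw [div_le_iff₀ hN0] at hτN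
    have : τ*N ≤ U*(τ*N) := le_mul_of_one_le_left (by positivity) hU1
    linarith
  have h5 : 8*(N:ℝ)^2/q₁ = 8*N*(N/q₁) := by ring
  calc (d:ℝ)^om q₁*(8*(N:ℝ)^2/q₁+2*N*(q₁:ℝ)^(-(1/(d:ℝ)))+1)
      ≤ U*(8*N*(U*τ)+2*N*(U*τ)+U*τ*N) := by
        rw [h5]
        gcongr
    _ = 11*U^2*τ*N := by ring

/-- The whole estimate, with every slowly growing factor below `U` and every power saving
below `ν`. -/
lemma corrPow_bound [NeZero d] (hd : 2 ≤ d) (hk : 1 ≤ k) {f : (Fin k → ℝ) → ℝ} {L X B : ℝ}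
    (hL0 : 0 ≤ L) (hX0 : 0 ≤ X) (hL : ∀ x y, |f x-f y| ≤ L*‖x-y‖)
    (hX : ∀ x, f x ≠ 0 → ∀ i, |x i| ≤ X) (hB : ∀ x, |f x| ≤ B) (hint : Integrable f) :
    ∃ C₀ : ℝ, 1 ≤ C₀ ∧ ∃ c : ℝ, 1 ≤ c ∧ ∃ A : ℝ, 0 ≤ A ∧ ∀ q₁ q₂ : ℕ, Squarefree q₁ →
      q₁.Coprime q₂ → ∀ [NeZero (q₁*q₂)], ∀ b : ℤ, IsUnit (b : ZMod (q₁*q₂)) →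
      ∀ N : ℕ, 2*c < N → ∀ U : ℝ, C₀^om q₁ ≤ U → (q₂:ℝ) ≤ U →
      1+log (q₁*q₂ : ℕ) ≤ U → U^2 ≤ ((q₁*q₂ : ℕ) : ℝ)/N →
      ∀ ν : ℝ, 0 < ν → ν ≤ 1 → (N:ℝ)/(q₁*q₂ : ℕ) ≤ ν^k →
      ((q₁*q₂ : ℕ) : ℝ)^(-(1/(d:ℝ))) ≤ ν^k → 1/(N:ℝ) ≤ ν^k →
      (((q₁*q₂ : ℕ) : ℝ)/N)^(-(1/(4*((k+1 : ℕ)*k : ℝ)))) ≤ ν →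
      √(q₁*q₂ : ℕ)*(((q₁*q₂ : ℕ) : ℝ)/N)^k ≤ ν*N →
      |corrPow (k+1) N d ((b:ℝ)/(q₁*q₂ : ℕ)) f - ∫ x, f x| ≤ A*U^(5*k+6)*ν := by
  obtain ⟨C₁, hC₁, hcnt⟩ := cnt_err hd k
  obtain ⟨C₂, hC₂, K₂, hK₂, hmain⟩ := main_term (d := d) hk hL0 hX0 hL hX hB hint
  have hB0 : 0 ≤ B := (abs_nonneg _).trans (hB 0)
  have hd1 : (1:ℝ) ≤ d := mod_cast (by omega : 1 ≤ d)
  set c : ℝ := (k+1)*(X+1)+1 with hc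
  have hk0 : (0:ℝ) ≤ k := cast_nonneg k
  have hc1 : 1 ≤ c := by rw [hc]; nlinarith
  set A₁ : ℝ := (k+1)*4^k with hA₁
  set A₂ : ℝ := A₁*(2*c)^k+(5*c)^k with hA₂
  set A₃ : ℝ := (k+1)^2*(11+2^k*((1+k^k)+k^k*A₂)) with hA₃
  have hA₁0 : 0 ≤ A₁ := by positivity
  have hA₂0 : 0 ≤ A₂ := by positivity
  have hA₃0 : 0 ≤ A₃ := by positivity
  refine ⟨max C₁ (max C₂ ((d:ℝ)^k)), le_max_of_le_left hC₁, c, hc1,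
    B*A₃+(B*(A₁*c^k)+K₂*c^k), by positivity, ?_⟩
  intro q₁ q₂ hsq hcop hne b hb N hN U hU hq2 hlog hUM ν hν hν1 hνM hνq hνN hνκ hνbig
  have hq0 : (0:ℝ) < (q₁*q₂ : ℕ) := mod_cast pos_of_ne_zero (NeZero.ne _)
  have hq00 : q₁*q₂ ≠ 0 := NeZero.ne _
  have hN0 : (0:ℝ) < N := by linarith
  have hN0' : 0 < N := mod_cast hN0
  have hU₁ : C₁^om q₁ ≤ U := (pow_le_pow_left₀ (by linarith) (le_max_left _ _) _).trans hU
  have hU₂ : C₂^om q₁ ≤ U := (pow_le_pow_left₀ (by linarith)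
    ((le_max_left _ _).trans (le_max_right _ _)) _).trans hU
  have hU₃ : (d:ℝ)^(k*om q₁) ≤ U := by
    rw [pow_mul]
    exact (pow_le_pow_left₀ (by positivity)
      ((le_max_right _ _).trans (le_max_right _ _)) _).trans hU
  have hU₄ : (d:ℝ)^om q₁ ≤ U := (pow_le_pow_right₀ hd1 (Nat.le_mul_of_pos_left _ hk)).trans hU₃
  have hU1 : 1 ≤ U := (one_le_pow₀ hC₁).trans hU₁
  set M : ℝ := ((q₁*q₂ : ℕ) : ℝ)/N with hM
  have hM1 : 1 ≤ M := (one_le_pow₀ hU1).trans hUM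
  have hM0 : 0 < M := by linarith
  have hNq : N ≤ q₁*q₂ := by
    rw [hM, le_div_iff₀ hN0, one_mul] at hM1
    exact_mod_cast hM1
  -- The differences `s` range up to a constant multiple of `M`.
  set R : ℕ := ⌈(k+1)*(X+1)*M⌉₊ with hRdef
  have hR : (k+1)*(X+1)*M ≤ R := Nat.le_ceil _
  have hRc : (R:ℝ) ≤ c*M := by
    have := (Nat.ceil_lt_add_one (show 0 ≤ (k+1)*(X+1)*M by positivity)).le
    rw [hc]
    linarith
  have hXM : 0 ≤ X*M := by positivity
  have hkM : 0 ≤ k*M := by positivity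
  have hkXM : 0 ≤ k*(X*M) := by positivity
  have hexp : (k+1)*(X+1)*M = k*(X*M)+X*M+k*M+M := by ring
  have hRM : M ≤ R := by linarith
  have hRX : X*M ≤ R := by linarith
  have hRkX : k*(X*M) ≤ R := by linarith
  have hR1 : 1 ≤ R := mod_cast hM1.trans hRM
  have h2R : 2*R < q₁*q₂ := by
    have h1 : (2*R : ℝ) < (q₁*q₂ : ℕ) := by
      calc (2*R : ℝ) ≤ 2*c*M := by linarith
        _ < N*M := by gcongr
        _ = _ := by rw [hM]; field_simp
    exact_mod_cast h1
  have hred := corrPow_eq (d := d) hX0 hX hB hN0' hRkX h2R b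
  -- Degenerate part.
  have hT := sum_cnt_le (k := k) hsq hcop hb hN0' hU1 hU₃ hq2 hc1 hA₁0 hR1 hRc
    (hνbig.trans (mul_le_of_le_one_left hN0.le hν1))
    (hcnt q₁ q₂ hsq hcop b hb N hNq U hU₁ hq2 hlog (2*R))
  have hP := powPairs_bound (d := d) hsq hN0' hU1 hU₄ hq2 hνM hνq hνN
  have hdeg := degen_le (d := d) (R := R) hk hb h2R (card_roots_le hsq hcop hNq) (inv_pos.2 hν)
  have hdeg' : (k+1 : ℝ)^2*((powPairs d N (q₁*q₂)).card*ν⁻¹^(k-1) +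
      ((d^om q₁*q₂ : ℕ) : ℝ)/ν⁻¹*((2*((d^om q₁*q₂ : ℕ) : ℝ))^k *
      ((1+k^k)*N+k^k*(∑ s ∈ NFam k (2*R), cnt (q₁*q₂) d b N s : ℕ)))) ≤
      A₃*U^(5*k+6)*ν*N := by
    have h1 : ((d^om q₁*q₂ : ℕ) : ℝ) ≤ U^2 := by
      push_cast
      rw [pow_two]
      gcongr
    have h2 : ((powPairs d N (q₁*q₂)).card : ℝ)*ν⁻¹^(k-1) ≤ 11*U^(5*k+6)*ν*N := by
      have h3 : ν^k*ν⁻¹^(k-1) = ν := by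
        obtain ⟨k', rfl⟩ : ∃ k', k = k'+1 := ⟨k-1, by omega⟩
        rw [Nat.add_sub_cancel, pow_succ', mul_assoc, ← mul_pow, mul_inv_cancel₀ hν.ne', one_pow,
          mul_one]
      have h4 := pow_le_pow_right₀ hU1 (show 2 ≤ 5*k+6 by omega)
      calc ((powPairs d N (q₁*q₂)).card : ℝ)*ν⁻¹^(k-1)
          ≤ 11*U^2*ν^k*N*ν⁻¹^(k-1) := by gcongr
        _ = 11*U^2*(ν^k*ν⁻¹^(k-1))*N := by ring
        _ ≤ _ := by rw [h3]; gcongr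
    have h5 : (1+(k:ℝ)^k)*N + k^k*(∑ s ∈ NFam k (2*R), cnt (q₁*q₂) d b N s : ℕ) ≤
        ((1+k^k)+k^k*A₂)*U^(3*k+4)*N := by
      have h6 : (1+(k:ℝ)^k)*N ≤ (1+(k:ℝ)^k)*N*U^(3*k+4) :=
        le_mul_of_one_le_right (by positivity) (one_le_pow₀ hU1)
      have h7 := mul_le_mul_of_nonneg_left hT (show 0 ≤ (k:ℝ)^k by positivity)
      linarith
    have h8 : ((d^om q₁*q₂ : ℕ) : ℝ)/ν⁻¹*((2*((d^om q₁*q₂ : ℕ) : ℝ))^k *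
        ((1+k^k)*N+k^k*(∑ s ∈ NFam k (2*R), cnt (q₁*q₂) d b N s : ℕ))) ≤
        2^k*((1+k^k)+k^k*A₂)*U^(5*k+6)*ν*N := by
      rw [div_inv_eq_mul]
      calc _ ≤ U^2*ν*((2*U^2)^k *
            (((1+k^k)+k^k*A₂)*U^(3*k+4)*N)) := by gcongr
        _ = _ := by rw [mul_pow]; ring
    calc _ ≤ (k+1 : ℝ)^2*(11*U^(5*k+6)*ν*N +
          2^k*((1+k^k)+k^k*A₂)*U^(5*k+6)*ν*N) := by gcongr
      _ = _ := by rw [hA₃]; ring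
  have hpart1 := hred.trans (mul_le_mul_of_nonneg_left (hdeg.trans hdeg')
    (show 0 ≤ B/N by positivity))
  have hpart1' : B/N*(A₃*U^(5*k+6)*ν*N) = B*A₃*(U^(5*k+6)*ν) := by
    field_simp
  rw [hpart1'] at hpart1
  -- Distinct differences: the solution counts are replaced by their expected values.
  have hcR := hcnt q₁ q₂ hsq hcop b hb N hNq U hU₁ hq2 hlog R
  set S₁ : ℝ := ∑ s ∈ NFam k R, f (fun i => (avec s i : ℝ)/M)*cnt (q₁*q₂) d b N s with hS₁
  set S₂ : ℝ := ∑ s ∈ NFam k R, f (fun i => (avec s i : ℝ)/M)*dens d b s (q₁*q₂) with hS₂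
  have hscale : ((N:ℝ)/(q₁*q₂ : ℕ)) = M⁻¹ := by rw [hM, inv_div]
  have hpart2 : |1/(N:ℝ)*S₁-(M^k)⁻¹*S₂| ≤ B*(A₁*c^k)*(U^(5*k+6)*ν) := by
    have h1 : 1/(N:ℝ)*S₁-(M^k)⁻¹*S₂ = 1/(N:ℝ)*∑ s ∈ NFam k R,
        f (fun i => (avec s i : ℝ)/M)*((cnt (q₁*q₂) d b N s : ℝ) -
        ((N:ℝ)/(q₁*q₂ : ℕ))^(k+1)*(Sol (ZMod (q₁*q₂)) d b s).card) := by
      have h2 : (M^k)⁻¹*S₂ = 1/(N:ℝ)*∑ s ∈ NFam k R, f (fun i => (avec s i : ℝ)/M) *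
          (((N:ℝ)/(q₁*q₂ : ℕ))^(k+1)*(Sol (ZMod (q₁*q₂)) d b s).card) := by
        rw [hS₂, mul_sum, mul_sum]
        refine sum_congr rfl fun s _ => ?_
        rw [dens_eq, ← inv_pow, ← hscale, pow_succ]
        field_simp
      rw [h2, ← mul_sub, hS₁, ← sum_sub_distrib]
      simp only [mul_sub]
    have h3 : |∑ s ∈ NFam k R, f (fun i => (avec s i : ℝ)/M)*((cnt (q₁*q₂) d b N s : ℝ) -
        ((N:ℝ)/(q₁*q₂ : ℕ))^(k+1)*(Sol (ZMod (q₁*q₂)) d b s).card)| ≤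
        B*(A₁*U^(3*k+4)*√(q₁*q₂ : ℕ)*(R:ℝ)^k) := by
      refine le_trans ?_ (mul_le_mul_of_nonneg_left hcR hB0)
      rw [mul_sum]
      refine (abs_sum_le_sum_abs _ _).trans (sum_le_sum fun s _ => ?_)
      rw [abs_mul]
      exact mul_le_mul_of_nonneg_right (hB _) (abs_nonneg _)
    rw [h1, abs_mul, abs_of_pos (by positivity)]
    have h4 : (R:ℝ)^k ≤ c^k*M^k := by
      rw [← mul_pow]
      exact pow_le_pow_left₀ (cast_nonneg _) hRc k
    have h5 := pow_le_pow_right₀ hU1 (show 3*k+4 ≤ 5*k+6 by omega)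
    calc _ ≤ 1/(N:ℝ)*(B*(A₁*U^(5*k+6)*√(q₁*q₂ : ℕ)*(c^k*M^k))) := by
          refine mul_le_mul_of_nonneg_left (h3.trans ?_) (by positivity)
          gcongr
      _ = 1/(N:ℝ)*(B*(A₁*c^k)*U^(5*k+6))*(√(q₁*q₂ : ℕ)*M^k) := by
          ring
      _ ≤ 1/(N:ℝ)*(B*(A₁*c^k)*U^(5*k+6))*(ν*N) := by gcongr
      _ = _ := by field_simp
  have hpart3 : |(M^k)⁻¹*S₂ - ∫ x, f x| ≤ K₂*c^k*(U^(5*k+6)*ν) := by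
    have hbp : ∀ p : ℕ, p.Prime → p ∣ q₁ → (b:ZMod p) ≠ 0 := by
      intro p hp hpq
      have := Fact.mk hp
      have h1 := hb.map (castHom (hpq.trans (Dvd.intro q₂ rfl)) (ZMod p))
      rw [map_intCast] at h1
      exact h1.ne_zero
    have h1 := hmain q₁ q₂ b hsq (right_ne_zero_of_mul hq00) hcop hbp U hU₂ hq2 M hM1 hUM R
      hRM hRX hRkX
    have h2 : (M^k)⁻¹*S₂ - ∫ x, f x = (M^k)⁻¹*(S₂-M^k*∫ x, f x) := by
      field_simp
    rw [h2, abs_mul, abs_of_pos (by positivity)]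
    have h5 := pow_le_pow_right₀ hU1 (show k+2 ≤ 5*k+6 by omega)
    calc _ ≤ (M^k)⁻¹*(K₂*U^(5*k+6)*(c*M)^k*ν) := by
          refine mul_le_mul_of_nonneg_left (h1.trans ?_) (by positivity)
          gcongr
      _ = _ := by
          rw [mul_pow]
          field_simp
  calc _ = |(corrPow (k+1) N d ((b:ℝ)/(q₁*q₂ : ℕ)) f-1/(N:ℝ)*S₁) +
        ((1/(N:ℝ)*S₁-(M^k)⁻¹*S₂)+((M^k)⁻¹*S₂ - ∫ x, f x))| := by
        congr 1; ring
    _ ≤ _ := (abs_add_le _ _).trans (add_le_add hpart1 ((abs_add_le _ _).trans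
        (add_le_add hpart2 hpart3)))
    _ = _ := by ring

end Assembly

/-- The part of `q` coprime to its square factor is squarefree; its cofactor is small. -/
lemma exists_coprime_split {qt v : ℕ} (hqt : Squarefree qt) (hv : 0 < v) :
    ∃ q₁ q₂ : ℕ, qt*v^2 = q₁*q₂ ∧ Squarefree q₁ ∧ q₁.Coprime q₂ ∧ q₂ ≤ v^4 := by
  have hg : 0 < qt.gcd v := Nat.gcd_pos_of_pos_right _ hv
  obtain ⟨q₁, h₁⟩ := Nat.gcd_dvd_left qt v
  have hcop : q₁.Coprime v := by
    obtain ⟨w, hw⟩ := Nat.gcd_dvd_right qt v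
    have h2 : (qt.gcd v).Coprime q₁ := by
      rw [h₁] at hqt
      exact (Nat.squarefree_mul_iff.1 hqt).1
    have h3 : q₁.Coprime w := by
      have h4 := Nat.coprime_div_gcd_div_gcd hg
      rwa [Nat.div_eq_of_eq_mul_right hg h₁, Nat.div_eq_of_eq_mul_right hg hw] at h4
    rw [hw]
    exact Nat.Coprime.mul_right h2.symm h3
  refine ⟨q₁, qt.gcd v*v^2, ?_, hqt.squarefree_of_dvd (Dvd.intro_left _ h₁.symm), ?_, ?_⟩
  · conv_lhs => rw [h₁]
    ring
  · exact Nat.Coprime.mul_right (hcop.coprime_dvd_right (Nat.gcd_dvd_right _ _)) (hcop.pow_right 2)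
  · calc qt.gcd v*v^2 ≤ v*v^2 := Nat.mul_le_mul_right _ (Nat.gcd_le_right _ hv)
      _ = v^3 := by ring
      _ ≤ v^4 := Nat.pow_le_pow_right hv (by norm_num)

set_option maxHeartbeats 1000000 in
/-- The estimate for `k + 1` points and test functions on `Fin k → ℝ`. -/
theorem corrPow_sub_integral_le {d k : ℕ} (hd : 2 ≤ d) (hk : 1 ≤ k) {δ₀ : ℝ} (hδ₀pos : 0 < δ₀)
    (hδ₀lt : δ₀ < 1/(4*((k+1 : ℕ) : ℝ))) :
    ∃ δ : ℝ, 0 < δ ∧ ∀ f : (Fin k → ℝ) → ℝ, ContDiff ℝ (⊤ : ℕ∞) f → HasCompactSupport f →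
      ∀ ε : ℝ, 0 < ε → ∃ Q₀ : ℕ, ∀ q : ℕ, Q₀ ≤ q →
        ∀ qt : ℕ, Squarefree qt → (∃ v : ℕ, 0 < v ∧ q = qt*v^2) →
          (q:ℝ)^(1-δ) ≤ (qt:ℝ) → ∀ b : ℤ, IsCoprime b (q:ℤ) →
            ∀ N : ℕ, (q:ℝ)^(1-1/(2*((k+1 : ℕ) : ℝ))+δ₀) ≤ (N:ℝ) → (N:ℝ) ≤ (q:ℝ)^(1-δ₀) →
              |corrPow (k+1) N d ((b:ℝ)/(q:ℝ)) f - ∫ y, f y| ≤ ε := by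
  have : NeZero d := ⟨by omega⟩
  have hk1 : (1:ℝ) ≤ k := mod_cast hk
  have hd2 : (2:ℝ) ≤ d := mod_cast hd
  have hm1 : (1:ℝ) ≤ (k+1 : ℕ) := by push_cast; linarith
  have hδ1 : δ₀ < 1 := by
    refine hδ₀lt.trans ?_
    rw [div_lt_one (by positivity)]
    linarith
  set κ : ℝ := 1/(4*((k+1 : ℕ)*k : ℝ)) with hκ
  have hκ0 : 0 < κ := by positivity
  have hκk : κ*k ≤ 1 := by
    rw [hκ, div_mul_eq_mul_div, one_mul, div_le_one (by positivity)]
    nlinarith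
  -- The total saving is `q ^ (-e)`; the factors absorbed into `U` may cost `q ^ (e / 2)`.
  set e : ℝ := κ*δ₀/d with he
  have he0 : 0 < e := by positivity
  have heκ : e ≤ κ*δ₀ := div_le_self (by positivity) (by linarith)
  have hek : e*k = κ*k*δ₀/d := by rw [he]; ring
  have hek1 : e*k ≤ δ₀ := by
    rw [hek]
    refine (div_le_self (by positivity) (by linarith)).trans ?_
    exact mul_le_of_le_one_left hδ₀pos.le hκk
  have hekd : e*k ≤ 1/d := by
    rw [hek]
    have : κ*k*δ₀ ≤ 1 := mul_le_one₀ hκk hδ₀pos.le hδ1.le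
    gcongr
  have hek2 : e*k ≤ 1/2 := hekd.trans (one_div_le_one_div_of_le (by norm_num) hd2)
  have heδ : e ≤ δ₀ := (le_mul_of_one_le_right he0.le hk1).trans hek1
  set r : ℕ := 5*k+6 with hr
  have hr1 : (1:ℝ) < r := by rw [hr]; push_cast; linarith
  set η : ℝ := e/(8*r) with hη
  have hη0 : 0 < η := by positivity
  have hηr : 4*η*r = e/2 := by rw [hη]; field_simp; norm_num
  refine ⟨η, hη0, ?_⟩
  intro f hfs hfc ε hε
  obtain ⟨L, hL⟩ := hfs.lipschitzWith_of_hasCompactSupport hfc (by simp)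
  obtain ⟨B, hB⟩ := hfs.continuous.bounded_above_of_compact_support hfc
  obtain ⟨X, hX⟩ := hfc.isCompact.isBounded.exists_norm_le
  obtain ⟨C₀, hC₀, c, hc, A, hA, hmain⟩ := corrPow_bound (d := d) (L := L) (X := max X 0)
    (B := B) hd hk L.2 (le_max_right _ _)
    (fun x y => by simpa [dist_eq_norm] using hL.dist_le_mul x y)
    (fun x hx i => ((norm_le_pi_norm x i).trans (hX x (subset_tsupport f hx))).trans
      (le_max_left _ _)) hB (hfs.continuous.integrable_of_hasCompactSupport hfc)
  obtain ⟨K₁, hK₁, hom⟩ := pow_om_le hC₀ hη0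
  set K : ℝ := K₁*(1+1/η) with hK
  have hK0 : 0 < K := by positivity
  have hnat : Tendsto (fun n : ℕ => (n:ℝ)) atTop atTop := tendsto_natCast_atTop_atTop
  have hev1 : ∀ᶠ q : ℕ in atTop, 2*c < (q:ℝ)^(1/2 : ℝ) :=
    ((tendsto_rpow_atTop (by norm_num)).comp hnat).eventually_gt_atTop _
  have hev2 : ∀ᶠ q : ℕ in atTop, K^2 ≤ (q:ℝ)^(δ₀-4*η*2) := by
    refine ((tendsto_rpow_atTop ?_).comp hnat).eventually_ge_atTop _
    have : 4*η*2 < e := by nlinarith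
    linarith
  have hev3 : ∀ᶠ q : ℕ in atTop, A*K^r*(q:ℝ)^(-(e/2)) ≤ ε := by
    have h1 := ((tendsto_rpow_neg_atTop (half_pos he0)).comp hnat).const_mul (A*K^r)
    rw [mul_zero] at h1
    exact h1.eventually (eventually_le_nhds hε)
  obtain ⟨Q₀, hQ₀⟩ := eventually_atTop.1 (hev1.and (hev2.and (hev3.and (eventually_ge_atTop 1))))
  refine ⟨Q₀, fun q hqQ qt hqt ⟨v, hv, hqv⟩ hqtq b hb N hN1 hN2 => ?_⟩
  obtain ⟨hq1, hq2, hq3, hq4⟩ := hQ₀ q hqQ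
  obtain ⟨q₁, q₂, hsplit, hsq, hcop, hq₂v⟩ := exists_coprime_split hqt hv
  have hqe : q = q₁*q₂ := hqv.trans hsplit
  have hqr : (1:ℝ) ≤ q := mod_cast hq4
  have hqp : (0:ℝ) < q := by linarith
  have : NeZero (q₁*q₂) := ⟨by omega⟩
  have hunit : IsUnit (b : ZMod (q₁*q₂)) := by
    rw [ZMod.coe_int_isUnit_iff_isCoprime, ← hqe]
    exact hb.symm
  have hmono : ∀ {x y : ℝ}, x ≤ y → (q:ℝ)^x ≤ (q:ℝ)^y := fun h =>
    rpow_le_rpow_of_exponent_le hqr h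
  -- `v ^ 2 ≤ q ^ η` by the hypothesis on `qt`, and `q₂ ≤ v ^ 4`.
  have hq₂η : (q₂:ℝ) ≤ (q:ℝ)^(2*η) := by
    have hv2 : (v:ℝ)^2 ≤ (q:ℝ)^η := by
      have h1 : (q:ℝ)^(1-η)*(v:ℝ)^2 ≤ (q:ℝ)^(1-η)*(q:ℝ)^η := by
        rw [← rpow_add hqp, sub_add_cancel, rpow_one]
        calc (q:ℝ)^(1-η)*(v:ℝ)^2 ≤ qt*(v:ℝ)^2 := by gcongr
          _ = (q:ℝ) := by rw [hqv]; push_cast; ring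
      exact le_of_mul_le_mul_left h1 (rpow_pos_of_pos hqp _)
    calc (q₂:ℝ) ≤ (v:ℝ)^4 := mod_cast hq₂v
      _ = ((v:ℝ)^2)^2 := by ring
      _ ≤ ((q:ℝ)^η)^2 := by gcongr
      _ = _ := by rw [← rpow_natCast, ← rpow_mul hqp.le]; congr 1; push_cast; ring
  set u₁ : ℝ := C₀^om q₁
  set u₂ : ℝ := 1+log q
  have hu₁ : 1 ≤ u₁ := one_le_pow₀ hC₀
  have hu₂ : 1 ≤ u₂ := le_add_of_nonneg_right (log_natCast_nonneg q)
  have hu₃ : (1:ℝ) ≤ q₂ := by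
    exact_mod_cast Nat.one_le_iff_ne_zero.2 (right_ne_zero_of_mul (NeZero.ne (q₁*q₂)))
  have hu₁K : u₁ ≤ K₁*(q:ℝ)^η := by
    refine (hom q₁ (left_ne_zero_of_mul (NeZero.ne (q₁*q₂)))).trans ?_
    have h1 : (q₁:ℝ) ≤ q := by
      rw [hqe]; push_cast
      exact le_mul_of_one_le_right (cast_nonneg _) hu₃
    gcongr
  have hu₂K : u₂ ≤ (1+1/η)*(q:ℝ)^η := by
    have h1 := log_le_rpow_div hqp.le hη0
    have h2 := one_le_rpow hqr hη0.le
    calc u₂ ≤ (q:ℝ)^η+(q:ℝ)^η/η := add_le_add h2 h1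
      _ = _ := by ring
  set U : ℝ := u₁*u₂*q₂ with hU
  have hUK : U ≤ K*(q:ℝ)^(4*η) := by
    calc U ≤ (K₁*(q:ℝ)^η)*((1+1/η)*(q:ℝ)^η)*(q:ℝ)^(2*η) := by
          rw [hU]; gcongr
      _ = K*((q:ℝ)^η*(q:ℝ)^η*(q:ℝ)^(2*η)) := by rw [hK]; ring
      _ = _ := by rw [← rpow_add hqp, ← rpow_add hqp]; congr 2; ring
  have hU0 : 0 ≤ U := by positivity
  have hUn : ∀ n : ℕ, U^n ≤ K^n*(q:ℝ)^(4*η*n) := fun n => by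
    rw [rpow_mul hqp.le, rpow_natCast, ← mul_pow]
    exact pow_le_pow_left₀ hU0 hUK n
  have hNhalf : (q:ℝ)^(1/2 : ℝ) ≤ N := by
    refine (hmono ?_).trans hN1
    have h1 : 1/(2*((k+1 : ℕ) : ℝ)) ≤ 1/2 := one_div_le_one_div_of_le (by norm_num) (by linarith)
    linarith
  have hNp : (0:ℝ) < N := (rpow_pos_of_pos hqp _).trans_le hNhalf
  have hM1 : (q:ℝ)^δ₀ ≤ q/N := by
    rw [le_div_iff₀ hNp]
    calc (q:ℝ)^δ₀*N ≤ (q:ℝ)^δ₀*(q:ℝ)^(1-δ₀) := by gcongr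
      _ = q := by rw [← rpow_add hqp, add_sub_cancel, rpow_one]
  have hM2 : (q:ℝ)/N ≤ (q:ℝ)^(1/(2*((k+1 : ℕ) : ℝ))-δ₀) := by
    rw [div_le_iff₀ hNp]
    calc (q:ℝ) = (q:ℝ)^(1/(2*((k+1 : ℕ) : ℝ))-δ₀) *
          (q:ℝ)^(1-1/(2*((k+1 : ℕ) : ℝ))+δ₀) := by
          rw [← rpow_add hqp]
          conv_lhs => rw [← rpow_one (q:ℝ)]
          congr 1; ring
      _ ≤ _ := by gcongr
  have hMp : 0 < (q:ℝ)/N := div_pos hqp hNp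
  have hνk : ((q:ℝ)^(-e))^k = (q:ℝ)^(-(e*k)) := by
    rw [← rpow_natCast, ← rpow_mul hqp.le, neg_mul]
  have hfin := hmain q₁ q₂ hsq hcop b hunit N (hq1.trans_le hNhalf) U
    (by rw [hU, mul_assoc]; exact le_mul_of_one_le_right (by linarith) (one_le_mul_of_one_le_of_one_le hu₂ hu₃))
    (by rw [hU]; exact le_mul_of_one_le_left (by linarith) (one_le_mul_of_one_le_of_one_le hu₁ hu₂))
    (by
      rw [← hqe, hU, mul_comm u₁, mul_assoc]
      exact le_mul_of_one_le_right (by linarith) (one_le_mul_of_one_le_of_one_le hu₁ hu₃))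
    (by
      rw [← hqe]
      refine le_trans ((hUn 2).trans ?_) hM1
      calc K^2*(q:ℝ)^(4*η*(2:ℕ))
          ≤ (q:ℝ)^(δ₀-4*η*2)*(q:ℝ)^(4*η*(2:ℕ)) := by gcongr
        _ = _ := by rw [← rpow_add hqp]; congr 1; push_cast; ring)
    ((q:ℝ)^(-e)) (rpow_pos_of_pos hqp _)
    (rpow_le_one_of_one_le_of_nonpos hqr (by linarith))
    (by
      rw [← hqe, hνk, ← inv_div, rpow_neg hqp.le]
      exact inv_anti₀ (rpow_pos_of_pos hqp _) ((hmono hek1).trans hM1))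
    (by rw [← hqe, hνk]; exact hmono (neg_le_neg hekd))
    (by
      rw [hνk, one_div, rpow_neg hqp.le]
      exact inv_anti₀ (rpow_pos_of_pos hqp _) ((hmono hek2).trans hNhalf))
    (by
      rw [← hqe, ← hκ]
      calc ((q:ℝ)/N)^(-κ) ≤ ((q:ℝ)^δ₀)^(-κ) :=
            rpow_le_rpow_of_nonpos (rpow_pos_of_pos hqp _) hM1 (by linarith)
        _ = (q:ℝ)^(-(κ*δ₀)) := by rw [← rpow_mul hqp.le]; congr 1; ring
        _ ≤ _ := hmono (neg_le_neg heκ))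
    (by
      rw [← hqe]
      calc √(q:ℝ)*((q:ℝ)/N)^k
          ≤ (q:ℝ)^(1/2 : ℝ)*((q:ℝ)^(1/(2*((k+1 : ℕ) : ℝ))-δ₀))^k := by
            rw [sqrt_eq_rpow]
            gcongr
        _ = (q:ℝ)^(1/2+(1/(2*((k+1 : ℕ) : ℝ))-δ₀)*k) := by
            rw [← rpow_natCast, ← rpow_mul hqp.le, ← rpow_add hqp]
        _ ≤ (q:ℝ)^(-e+(1-1/(2*((k+1 : ℕ) : ℝ))+δ₀)) := by
            refine hmono ?_
            have h1 : 1/(2*((k+1 : ℕ) : ℝ))*(k+1) = 1/2 := by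
              push_cast; field_simp
            nlinarith
        _ = (q:ℝ)^(-e)*(q:ℝ)^(1-1/(2*((k+1 : ℕ) : ℝ))+δ₀) :=
            rpow_add hqp _ _
        _ ≤ _ := by gcongr)
  rw [← hqe] at hfin
  refine hfin.trans (le_trans ?_ hq3)
  calc A*U^r*(q:ℝ)^(-e) ≤ A*(K^r*(q:ℝ)^(4*η*r))*(q:ℝ)^(-e) := by
        have := hUn r
        gcongr
    _ = A*K^r*((q:ℝ)^(4*η*r)*(q:ℝ)^(-e)) := by ring
    _ = A*K^r*(q:ℝ)^(-(e/2)) := by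
        rw [← rpow_add hqp, hηr]; congr 2; ring

end KW

theorem statement2 (d m : ℕ) (hd : 2 ≤ d) (hm : 2 ≤ m)
    (δ₀ : ℝ) (hδ₀pos : 0 < δ₀) (hδ₀lt : δ₀ < 1 / (4 * (m : ℝ))) :
    ∃ δ : ℝ, 0 < δ ∧
      ∀ f : (Fin (m - 1) → ℝ) → ℝ, SmoothCpt (m - 1) f →
        ∀ ε : ℝ, 0 < ε →
          ∃ Q₀ : ℕ, ∀ q : ℕ, Q₀ ≤ q →
            ∀ qt : ℕ, Squarefree qt → (∃ v : ℕ, 0 < v ∧ q = qt * v ^ 2) →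
              (q : ℝ) ^ ((1 : ℝ) - δ) ≤ (qt : ℝ) →
              ∀ b : ℤ, IsCoprime b ((q : ℤ)) →
                ∀ N : ℕ, (q : ℝ) ^ ((1 : ℝ) - 1 / (2 * (m : ℝ)) + δ₀) ≤ (N : ℝ) →
                  (N : ℝ) ≤ (q : ℝ) ^ ((1 : ℝ) - δ₀) →
                  |corrPow m N d ((b : ℝ) / (q : ℝ)) f -
                      ∫ y : Fin (m - 1) → ℝ, f y| ≤ ε := by
  obtain ⟨k, rfl⟩ : ∃ k, m = k + 1 := ⟨m - 1, by omega⟩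
  obtain ⟨δ, hδ, h⟩ := KW.corrPow_sub_integral_le hd (by omega : 1 ≤ k) hδ₀pos hδ₀lt
  exact ⟨δ, hδ, fun f hf => h f hf.1 hf.2⟩
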